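/- Let Ω be a bounded C² domain, F satisfy (F1)–(F4), and b, c be continuous on Ω̄. Then there exists a function φ > 0 on Ω̄ which is a viscosity solution of F(x,Dφ,D²φ) + b(x)·Dφ|Dφ|^α + (c(x) + λ̄)φ^{α+1} = 0 in Ω with the Neumann condition ⟨Dφ, n(x)⟩ = 0 on ∂Ω; moreover, φ is Lipschitz continuous on Ω̄. -/

import Mathlib

/-!
The eigenfunction is a limit of normalized solutions of the problem with right-hand side `-1` for
parameters `lam` increasing to `λ̄`; the argument needs comparison, Lipschitz bounds, existence and
a strong maximum principle for the degenerate or singular operator `F + b·p|p|^α`.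

*Reformulation.* Sub- and supersolutions are rewritten through second order superjets
(`Setup.VSub`, `Setup.VSuper`, a supersolution being minus a subsolution of the dual problem).
Besides the usual condition at nonzero gradients they satisfy a condition at zero gradients,
tested with `C|x - x₀|^(2m)` where `m` is so large that the operator applied to this function tends
to `0` at `x₀`. The equivalence with `C²` test functions and local constancy is
`Setup.VSub_of_IsSubSol`, `Setup.IsSubSol_of_VSub` and their duals.

*Two-point estimate* (`Setup.main_est`). If the zeroth order term is strictly decreasing in `u`,
then a subsolution `u` and a supersolution `v` satisfy `u x - v y ≤ 3L|x - y|` with `L` depending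
only on bounds for the data. Taking `x = y` gives the comparison principle and `u = v` a Lipschitz
bound. The proof maximizes `u x - v y - L(1 + σ x + σ y) f(|x - y|²)`, where the weight `σ` excludes
boundary maxima, and uses the theorem on sums, proved by sup/inf-convolution, Rademacher's theorem
and Jensen's lemma. The exponents `θ, ν > 1/2` make the dependence of `F` on `x` and `p` of lower
order. For `t = |x - y|` not too small, `f` is a concave profile `t - B t²`, whose second derivative
excludes a maximum (`Setup.no_concave`); for small `t` it is a flat power `k t^(2m)`, and the
maximum is excluded by the gap of the zeroth order term (`Setup.no_flat`).

*Existence.* Perron's method (`Setup.perron`) solves proper problems. If `lam0` is admissible and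
`lam < lam0`, monotone iteration below a large multiple of the admissible supersolution gives a
positive solution with right-hand side `-1` (`Setup.exists_sol`).

*Barriers.* The functions `exp(-k|x - y|^(2m))` are strict subsolutions on annuli for large `k`
(`Setup.barrier`). They bound the set of admissible parameters (`Setup.lam_bound`) and give the
strong maximum principle together with Hopf's lemma (`Setup.strong_max`).

*Conclusion* (`Setup.eigen`). The solutions `u_n` for `lam_n = λ̄ - 1/(n+1)` satisfy
`(max u_n)^(1+α) ≥ (n+1)/2`, since otherwise `u_n` would be a supersolution for a parameter larger
than `λ̄`. Hence `u_n / max u_n` is equi-Lipschitz with right-hand sides tending to `0`, and a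
uniform limit along a subsequence is a nonnegative solution for `λ̄` with maximum `1`, which is
positive by the strong maximum principle.
-/

open Filter Set Metric
open scoped RealInnerProductSpace Topology NNReal

noncomputable section

/-- Euclidean space `ℝ^N`. -/
abbrev EN (N : ℕ) := EuclideanSpace ℝ (Fin N)

/-- The space of `N × N` real matrices. -/
abbrev Mat (N : ℕ) := Matrix (Fin N) (Fin N) ℝ

/-- Operator (spectral) norm of a matrix, viewed as a linear map on Euclidean space. -/
noncomputable def matNorm {N : ℕ} (X : Mat N) : ℝ :=
  ‖LinearMap.toContinuousLinearMap (Matrix.toEuclideanLin X)‖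

/-- The Hessian matrix of `φ : ℝ^N → ℝ` at `x`. -/
noncomputable def hess {N : ℕ} (φ : EN N → ℝ) (x : EN N) : Mat N :=
  Matrix.of fun i j =>
    iteratedFDeriv ℝ 2 φ x ![EuclideanSpace.single i 1, EuclideanSpace.single j 1]

/-- `ρ` is a `C²` defining function for the domain `Ω` with exterior unit normal `nv`. -/
def IsC2DefiningFun {N : ℕ} (Ω : Set (EN N)) (nv : EN N → EN N) (ρ : EN N → ℝ) : Prop :=
  ContDiff ℝ 2 ρ ∧ Ω = {x | ρ x < 0} ∧ frontier Ω = {x | ρ x = 0} ∧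
    ∀ x ∈ frontier Ω, gradient ρ x ≠ 0 ∧ nv x = ‖gradient ρ x‖⁻¹ • gradient ρ x

/-- `Ω` is a bounded domain of class `C²` with exterior unit normal `nv` on `∂Ω`. -/
def IsC2Domain {N : ℕ} (Ω : Set (EN N)) (nv : EN N → EN N) : Prop :=
  IsOpen Ω ∧ IsConnected Ω ∧ Bornology.IsBounded Ω ∧ ∃ ρ : EN N → ℝ, IsC2DefiningFun Ω nv ρ

/-- `Ω` is a bounded domain of class `C¹` with exterior unit normal `nv` on `∂Ω`. -/
def IsC1Domain {N : ℕ} (Ω : Set (EN N)) (nv : EN N → EN N) : Prop :=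
  IsOpen Ω ∧ IsConnected Ω ∧ Bornology.IsBounded Ω ∧
    ∃ ρ : EN N → ℝ, ContDiff ℝ 1 ρ ∧ Ω = {x | ρ x < 0} ∧ frontier Ω = {x | ρ x = 0} ∧
      ∀ x ∈ frontier Ω, gradient ρ x ≠ 0 ∧ nv x = ‖gradient ρ x‖⁻¹ • gradient ρ x

/-- Interior sphere condition (Ω1). -/
def InteriorSphereCond {N : ℕ} (Ω : Set (EN N)) : Prop :=
  ∀ x ∈ frontier Ω, ∃ R > (0 : ℝ), ∃ y ∈ Ω, ‖x - y‖ = R ∧ Metric.ball y R ⊆ Ω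

/-- (F1): homogeneity of `F`. -/
def CondF1 {N : ℕ} (Ω : Set (EN N)) (α : ℝ) (F : EN N → EN N → Mat N → ℝ) : Prop :=
  ∀ x ∈ closure Ω, ∀ t : ℝ, t ≠ 0 → ∀ μ : ℝ, 0 ≤ μ → ∀ p : EN N, p ≠ 0 → ∀ X : Mat N,
    X.IsSymm → F x (t • p) (μ • X) = |t| ^ α * μ * F x p X

/-- (F2): uniform ellipticity of `F` with ellipticity constants `0 < a ≤ A`. -/
def CondF2 {N : ℕ} (Ω : Set (EN N)) (α a A : ℝ) (F : EN N → EN N → Mat N → ℝ) : Prop :=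
  0 < a ∧ a ≤ A ∧ ∀ x ∈ closure Ω, ∀ p : EN N, p ≠ 0 → ∀ M P : Mat N, M.IsSymm →
    P.PosSemidef →
      a * ‖p‖ ^ α * P.trace ≤ F x p (M + P) - F x p M ∧
      F x p (M + P) - F x p M ≤ A * ‖p‖ ^ α * P.trace

/-- (F3): Hölder continuity of `F` in the `x` variable. -/
def CondF3 {N : ℕ} (Ω : Set (EN N)) (α C₁ θ : ℝ) (F : EN N → EN N → Mat N → ℝ) : Prop :=
  0 < C₁ ∧ θ ∈ Set.Ioc (1/2 : ℝ) 1 ∧ ∀ x ∈ closure Ω, ∀ y ∈ closure Ω, ∀ p : EN N, p ≠ 0 →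
    ∀ X : Mat N, X.IsSymm → |F x p X - F y p X| ≤ C₁ * ‖x - y‖ ^ θ * ‖p‖ ^ α * matNorm X

/-- (F4): Hölder continuity of `F` in the gradient variable. -/
def CondF4 {N : ℕ} (Ω : Set (EN N)) (α C₂ ν : ℝ) (F : EN N → EN N → Mat N → ℝ) : Prop :=
  0 < C₂ ∧ ν ∈ Set.Ioc (1/2 : ℝ) 1 ∧ ∀ x ∈ closure Ω, ∀ p : EN N, p ≠ 0 → ∀ q : EN N,
    ‖q‖ ≤ ‖p‖ / 2 → ∀ X : Mat N, X.IsSymm →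
      |F x (p + q) X - F x p X| ≤ C₂ * ‖p‖ ^ (α - ν) * ‖q‖ ^ ν * matNorm X

/-- The Neumann boundary operator `B(x,r,p) = ⟨p, n(x)⟩`. -/
def BNeu {N : ℕ} (nv : EN N → EN N) : EN N → ℝ → EN N → ℝ := fun x _ p => ⟪p, nv x⟫

/-- Viscosity subsolution of
`F(x,Du,D²u) + b(x)·Du |Du|^α + c₀(x, u) = g(x)` in `Ω`, `B(x,u,Du) = 0` on `∂Ω`. -/
def IsSubSol {N : ℕ} (Ω : Set (EN N)) (F : EN N → EN N → Mat N → ℝ) (b : EN N → EN N)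
    (α : ℝ) (c₀ : EN N → ℝ → ℝ) (g : EN N → ℝ) (B : EN N → ℝ → EN N → ℝ)
    (u : EN N → ℝ) : Prop :=
  (∀ x₀ ∈ Ω, ∀ φ : EN N → ℝ, ContDiff ℝ 2 φ →
      IsLocalMaxOn (fun x => u x - φ x) (closure Ω) x₀ → gradient φ x₀ ≠ 0 →
      g x₀ ≤ F x₀ (gradient φ x₀) (hess φ x₀)
        + ⟪b x₀, gradient φ x₀⟫ * ‖gradient φ x₀‖ ^ α + c₀ x₀ (u x₀)) ∧
  (∀ x₀ ∈ Ω, ∀ k : ℝ, (∀ᶠ x in nhdsWithin x₀ (closure Ω), u x = k) → g x₀ ≤ c₀ x₀ k) ∧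
  (∀ x₀ ∈ frontier Ω, ∀ φ : EN N → ℝ, ContDiff ℝ 2 φ →
      IsLocalMaxOn (fun x => u x - φ x) (closure Ω) x₀ → gradient φ x₀ ≠ 0 →
      min (g x₀ - (F x₀ (gradient φ x₀) (hess φ x₀)
          + ⟪b x₀, gradient φ x₀⟫ * ‖gradient φ x₀‖ ^ α + c₀ x₀ (u x₀)))
        (B x₀ (u x₀) (gradient φ x₀)) ≤ 0) ∧
  (∀ x₀ ∈ frontier Ω, ∀ k : ℝ, (∀ᶠ x in nhdsWithin x₀ (closure Ω), u x = k) →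
      min (g x₀ - c₀ x₀ k) (B x₀ k 0) ≤ 0)

/-- Viscosity supersolution of
`F(x,Dv,D²v) + b(x)·Dv |Dv|^α + c₀(x, v) = g(x)` in `Ω`, `B(x,v,Dv) = 0` on `∂Ω`. -/
def IsSuperSol {N : ℕ} (Ω : Set (EN N)) (F : EN N → EN N → Mat N → ℝ) (b : EN N → EN N)
    (α : ℝ) (c₀ : EN N → ℝ → ℝ) (g : EN N → ℝ) (B : EN N → ℝ → EN N → ℝ)
    (v : EN N → ℝ) : Prop :=
  (∀ x₀ ∈ Ω, ∀ φ : EN N → ℝ, ContDiff ℝ 2 φ →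
      IsLocalMinOn (fun x => v x - φ x) (closure Ω) x₀ → gradient φ x₀ ≠ 0 →
      F x₀ (gradient φ x₀) (hess φ x₀)
        + ⟪b x₀, gradient φ x₀⟫ * ‖gradient φ x₀‖ ^ α + c₀ x₀ (v x₀) ≤ g x₀) ∧
  (∀ x₀ ∈ Ω, ∀ k : ℝ, (∀ᶠ x in nhdsWithin x₀ (closure Ω), v x = k) → c₀ x₀ k ≤ g x₀) ∧
  (∀ x₀ ∈ frontier Ω, ∀ φ : EN N → ℝ, ContDiff ℝ 2 φ →
      IsLocalMinOn (fun x => v x - φ x) (closure Ω) x₀ → gradient φ x₀ ≠ 0 →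
      0 ≤ max (g x₀ - (F x₀ (gradient φ x₀) (hess φ x₀)
          + ⟪b x₀, gradient φ x₀⟫ * ‖gradient φ x₀‖ ^ α + c₀ x₀ (v x₀)))
        (B x₀ (v x₀) (gradient φ x₀))) ∧
  (∀ x₀ ∈ frontier Ω, ∀ k : ℝ, (∀ᶠ x in nhdsWithin x₀ (closure Ω), v x = k) →
      0 ≤ max (g x₀ - c₀ x₀ k) (B x₀ k 0))

/-- The admissible set for the principal eigenvalue `λ̄`:
all `λ` such that there is a bounded positive supersolution of
`G(x,v,Dv,D²v) + λ v^{α+1} ≤ 0` in `Ω`, `⟨Dv, n⟩ ≥ 0` on `∂Ω`. -/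
def lamBarSet {N : ℕ} (Ω : Set (EN N)) (nv : EN N → EN N) (F : EN N → EN N → Mat N → ℝ)
    (b : EN N → EN N) (c : EN N → ℝ) (α : ℝ) : Set ℝ :=
  {lam | ∃ v : EN N → ℝ, LowerSemicontinuousOn v (closure Ω) ∧
    (∀ x ∈ closure Ω, 0 < v x) ∧ (∃ M, ∀ x ∈ closure Ω, v x ≤ M) ∧
    IsSuperSol Ω F b α (fun x r => (c x + lam) * |r| ^ α * r) (fun _ => 0) (BNeu nv) v}

/-- The admissible set for the principal eigenvalue `λ̲`:
all `λ` such that there is a bounded negative subsolution of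
`G(x,u,Du,D²u) + λ |u|^α u ≥ 0` in `Ω`, `⟨Du, n⟩ ≤ 0` on `∂Ω`. -/
def lamLowSet {N : ℕ} (Ω : Set (EN N)) (nv : EN N → EN N) (F : EN N → EN N → Mat N → ℝ)
    (b : EN N → EN N) (c : EN N → ℝ) (α : ℝ) : Set ℝ :=
  {lam | ∃ u : EN N → ℝ, UpperSemicontinuousOn u (closure Ω) ∧
    (∀ x ∈ closure Ω, u x < 0) ∧ (∃ M, ∀ x ∈ closure Ω, M ≤ u x) ∧
    IsSubSol Ω F b α (fun x r => (c x + lam) * |r| ^ α * r) (fun _ => 0) (BNeu nv) u}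

/-! ### Second-order expansions and Jensen's lemma -/

section

section Jensen
set_option linter.unusedSectionVars false
variable {E : Type*} [NormedAddCommGroup E] [InnerProductSpace ℝ E] [CompleteSpace E]

theorem hasGradientAt_of_fderiv {f : E → ℝ} {L : E →L[ℝ] ℝ} {g z : E} (h : HasFDerivAt f L z)
    (hL : ∀ v, L v = ⟪g, v⟫) : HasGradientAt f g z := by
  have e : L = InnerProductSpace.toDual ℝ E g := by
    ext v; rw [hL, InnerProductSpace.toDual_apply_apply]
  rw [e] at h
  exact h

theorem HasGradientAt.fderivInner {f : E → ℝ} {g z : E} (h : HasGradientAt f g z) :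
    HasFDerivAt f (innerSL ℝ g) z := by
  have e : (innerSL ℝ g : E →L[ℝ] ℝ) = InnerProductSpace.toDual ℝ E g := by
    ext v; simp
  rw [e]
  exact h

theorem taylor2 {f : E → ℝ} {g : E → E} {D : E →L[ℝ] E} {z : E}
    (hf : ∀ᶠ x in 𝓝 z, HasGradientAt f (g x) x) (hg : HasFDerivAt g D z) {η : ℝ} (hη : 0 < η) :
    ∀ᶠ h in 𝓝 (0 : E), |f (z + h) - f z - ⟪g z, h⟫ - 1 / 2 * ⟪D h, h⟫| ≤ η * ‖h‖ ^ 2 := by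
  have h1 : ∀ᶠ x in 𝓝 z, ‖g x - g z - D (x - z)‖ ≤ η * ‖x - z‖ :=
    (hasFDerivAt_iff_isLittleO.1 hg).def hη
  obtain ⟨r, hr, hb⟩ := Metric.eventually_nhds_iff_ball.1 (hf.and h1)
  filter_upwards [Metric.ball_mem_nhds (0 : E) hr] with h hh
  have hh' : ‖h‖ < r := by simpa using hh
  have hin : ∀ t ∈ Icc (0 : ℝ) 1, z + t • h ∈ ball z r := by
    intro t ht
    simp only [mem_ball, dist_eq_norm, add_sub_cancel_left, norm_smul, Real.norm_eq_abs,
      abs_of_nonneg ht.1]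
    nlinarith [ht.1, ht.2, norm_nonneg h]
  have key := norm_image_sub_le_of_norm_deriv_le_segment_01'
    (f := fun t : ℝ => f (z + t • h) - t * ⟪g z, h⟫ - t ^ 2 / 2 * ⟪D h, h⟫)
    (f' := fun t : ℝ => ⟪g (z + t • h), h⟫ - ⟪g z, h⟫ - t * ⟪D h, h⟫) (C := η * ‖h‖ ^ 2)
    (by
      intro t ht
      apply HasDerivAt.hasDerivWithinAt
      have e1 : HasDerivAt (fun t : ℝ => f (z + t • h)) (⟪g (z + t • h), h⟫) t := by
        have e0 : HasDerivAt (fun t : ℝ => z + t • h) h t := by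
          simpa using ((hasDerivAt_id t).smul_const h).const_add z
        exact (hb _ (hin t ht)).1.fderivInner.comp_hasDerivAt t e0
      have e2 : HasDerivAt (fun t : ℝ => t * ⟪g z, h⟫) (⟪g z, h⟫) t := by
        simpa using (hasDerivAt_id t).mul_const (⟪g z, h⟫)
      have e3 : HasDerivAt (fun t : ℝ => t ^ 2 / 2 * ⟪D h, h⟫) (t * ⟪D h, h⟫) t := by
        have := (((hasDerivAt_id t).pow 2).div_const 2).mul_const (⟪D h, h⟫)
        simpa using this
      exact (e1.sub e2).sub e3)
    (by
      intro t ht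
      have ht' : t ∈ Icc (0 : ℝ) 1 := ⟨ht.1, ht.2.le⟩
      have h2 := (hb _ (hin t ht')).2
      have e : ⟪g (z + t • h), h⟫ - ⟪g z, h⟫ - t * ⟪D h, h⟫
          = ⟪g (z + t • h) - g z - D (z + t • h - z), h⟫ := by
        simp [inner_sub_left, inner_smul_left]
      simp only [e]
      refine (norm_inner_le_norm _ _).trans ?_
      have : ‖z + t • h - z‖ ≤ ‖h‖ := by
        simp only [add_sub_cancel_left, norm_smul, Real.norm_eq_abs, abs_of_nonneg ht'.1]
        nlinarith [ht'.1, ht'.2, norm_nonneg h]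
      calc _ ≤ η * ‖z + t • h - z‖ * ‖h‖ := by gcongr
        _ ≤ η * ‖h‖ * ‖h‖ := by gcongr
        _ = _ := by ring)
  simp only [one_smul, zero_smul, add_zero, Real.norm_eq_abs] at key
  refine le_trans (le_of_eq ?_) key
  congr 1; ring

theorem deriv_grad_symm {f : E → ℝ} {g : E → E} {D : E →L[ℝ] E} {z : E}
    (hf : ∀ᶠ x in 𝓝 z, HasGradientAt f (g x) x) (hg : HasFDerivAt g D z) (v w : E) :
    ⟪D v, w⟫ = ⟪D w, v⟫ := by
  have h1 : ∀ᶠ y in 𝓝 z, HasFDerivAt f (innerSL ℝ (g y)) y := by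
    filter_upwards [hf] with y hy
    exact hy.hasFDerivAt
  have h2 : HasFDerivAt (fun y => innerSL ℝ (g y)) ((innerSL ℝ).comp D) z :=
    (innerSL ℝ).hasFDerivAt.comp z hg
  have := second_derivative_symmetric_of_eventually h1 h2 v w
  simpa using this

theorem quad_hasGradientAt {T : E →L[ℝ] E} (hT : ∀ v w, ⟪T v, w⟫ = ⟪v, T w⟫) (z : E) :
    HasGradientAt (fun z => 1 / 2 * ⟪T z, z⟫) (T z) z := by
  refine hasGradientAt_of_fderiv
    (((T.hasFDerivAt (x := z)).inner ℝ (hasFDerivAt_id z)).const_mul (1 / 2)) fun v => ?_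
  simp [fderivInnerCLM_apply, hT v z, real_inner_comm (T z) v]
  ring

theorem normsq_hasGradientAt (c : ℝ) (w z : E) :
    HasGradientAt (fun z => c * ‖z - w‖ ^ 2) ((2 * c) • (z - w)) z := by
  refine hasGradientAt_of_fderiv ((((hasFDerivAt_id z).sub_const w).norm_sq).const_mul c)
    fun v => ?_
  simp [inner_smul_left, inner_sub_left]
  ring

theorem inner_hasGradientAt (p z : E) : HasGradientAt (fun z => ⟪p, z⟫) p z :=
  hasGradientAt_of_fderiv ((innerSL ℝ p).hasFDerivAt (x := z)) fun v => by simp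

theorem HasGradientAt.sub' {f g : E → ℝ} {a b z : E} (hf : HasGradientAt f a z)
    (hg : HasGradientAt g b z) : HasGradientAt (fun x => f x - g x) (a - b) z :=
  hasGradientAt_of_fderiv (hf.fderivInner.sub hg.fderivInner) fun v => by simp [inner_sub_left]

theorem HasGradientAt.add' {f g : E → ℝ} {a b z : E} (hf : HasGradientAt f a z)
    (hg : HasGradientAt g b z) : HasGradientAt (fun x => f x + g x) (a + b) z :=
  hasGradientAt_of_fderiv (hf.fderivInner.add hg.fderivInner) fun v => by simp [inner_add_left]

/-- A quadratic inequality valid up to `o(|h|²)` holds for all `h` by homogeneity. -/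
theorem quad_le_of_eventually {T : E →L[ℝ] E} {c : ℝ}
    (h : ∀ᶠ x in 𝓝 (0 : E), ⟪T x, x⟫ ≤ c * ‖x‖ ^ 2) (x : E) : ⟪T x, x⟫ ≤ c * ‖x‖ ^ 2 := by
  have ht : Tendsto (fun t : ℝ => t • x) (𝓝[>] 0) (𝓝 (0 : E)) := by
    have : Tendsto (fun t : ℝ => t • x) (𝓝 0) (𝓝 ((0 : ℝ) • x)) :=
      (continuous_id.smul continuous_const).tendsto 0
    rw [zero_smul] at this
    exact this.mono_left nhdsWithin_le_nhds
  obtain ⟨t, h1, h2⟩ := ((ht.eventually h).and self_mem_nhdsWithin).exists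
  have h2 : 0 < t := h2
  simp only [map_smul, inner_smul_left, inner_smul_right, norm_smul, Real.norm_eq_abs,
    abs_of_pos h2, conj_trivial] at h1
  have : t ^ 2 * ⟪T x, x⟫ ≤ t ^ 2 * (c * ‖x‖ ^ 2) := by nlinarith
  exact le_of_mul_le_mul_left this (by positivity)

theorem jensen [FiniteDimensional ℝ E] {W : E → ℝ} {g : E → E} {C : ℝ≥0} {T : E →L[ℝ] E}
    (hW : ∀ z, HasGradientAt W (g z) z) (hg : LipschitzWith C g)
    (hT : ∀ v w, ⟪T v, w⟫ = ⟪v, T w⟫) (hle : ∀ z, W z ≤ 1 / 2 * ⟪T z, z⟫) (h0 : W 0 = 0)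
    {η ε : ℝ} (hη : 0 < η) (hε : 0 < ε) :
    ∃ z : E, ‖z‖ < ε ∧ ∃ D : E →L[ℝ] E, HasFDerivAt g D z ∧
      ∀ h, ⟪D h, h⟫ ≤ ⟪T h, h⟫ + η * ‖h‖ ^ 2 := by
  obtain ⟨η', hη', rfl⟩ : ∃ η' > 0, η = 2 * η' := ⟨η / 2, by positivity, by ring⟩
  clear hη
  borelize E
  set μ : MeasureTheory.Measure E := MeasureTheory.Measure.hausdorffMeasure (Module.finrank ℝ E)
  set G : E → E := fun z => g z - T z - (2 * (η' / 2)) • (z - 0)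
  have hGl : ∃ C', LipschitzWith C' G :=
    ⟨_, (hg.sub T.lipschitz).sub
      ((lipschitzWith_smul (2 * (η' / 2))).comp
        (LipschitzWith.id.sub (LipschitzWith.const (0 : E))))⟩
  obtain ⟨C', hGl⟩ := hGl
  set V : E → ℝ := fun z => W z - 1 / 2 * ⟪T z, z⟫ - η' / 2 * ‖z - 0‖ ^ 2
  have hV : ∀ z, HasGradientAt V (G z) z := fun z =>
    ((hW z).sub' (quad_hasGradientAt hT z)).sub' (normsq_hasGradientAt _ 0 z)
  have hVle : ∀ z, V z ≤ -(η' / 2 * ‖z‖ ^ 2) := by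
    intro z
    have := hle z
    simp only [V, sub_zero]; linarith
  have hV0 : V 0 = 0 := by simp [V, h0]
  have hVc : Continuous V := continuous_iff_continuousAt.2 fun z => (hV z).hasFDerivAt.continuousAt
  have hmax : ∀ p : E, ∃ z, ‖z‖ ≤ 2 * ‖p‖ / η' ∧ ∀ z', V z' - ⟪p, z'⟫ ≤ V z - ⟪p, z⟫ := by
    intro p
    obtain ⟨z, hz, hzm⟩ := (isCompact_closedBall (0 : E) (2 * ‖p‖ / η')).exists_isMaxOn
      ⟨0, mem_closedBall_self (by positivity)⟩
      (f := fun z => V z - ⟪p, z⟫) (by fun_prop)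
    refine ⟨z, by simpa using hz, fun z' => ?_⟩
    by_cases hz' : z' ∈ closedBall (0 : E) (2 * ‖p‖ / η')
    · exact hzm hz'
    · have h1 : (0:ℝ) ≤ V z - ⟪p, z⟫ := by
        have := hzm (show (0:E) ∈ closedBall (0 : E) (2 * ‖p‖ / η') from
          mem_closedBall_self (by positivity))
        simpa [hV0] using this
      refine le_trans ?_ h1
      have h2 : 2 * ‖p‖ / η' < ‖z'‖ := by simpa using hz'
      have h3 := hVle z'
      have h4 := (abs_le.1 (abs_real_inner_le_norm p z')).1
      rw [div_lt_iff₀ hη'] at h2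
      nlinarith [norm_nonneg z']
  set δ := ε * η' / 4
  have hδ : 0 < δ := by positivity
  have hnull : μ (G '' {z | ¬ DifferentiableAt ℝ g z}) = 0 := by
    have h1 : μ {z | ¬ DifferentiableAt ℝ g z} = 0 := hg.ae_differentiableAt (μ := μ)
    have h2 := hGl.hausdorffMeasure_image_le (d := Module.finrank ℝ E) (by positivity)
      {z | ¬ DifferentiableAt ℝ g z}
    have h3 : MeasureTheory.Measure.hausdorffMeasure (Module.finrank ℝ E : ℝ)
      {z | ¬ DifferentiableAt ℝ g z} = 0 := h1
    rw [h3, mul_zero] at h2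
    exact le_antisymm h2 (by simp)
  have hpos : μ (ball 0 δ) ≠ 0 := (Metric.measure_ball_pos μ (0 : E) hδ).ne'
  obtain ⟨p, hp, hpG⟩ : ∃ p ∈ ball (0:E) δ, p ∉ G '' {z | ¬ DifferentiableAt ℝ g z} := by
    by_contra! hcon
    exact hpos (MeasureTheory.measure_mono_null hcon hnull)
  obtain ⟨z, hz, hzm⟩ := hmax p
  have hpn : ‖p‖ < δ := by simpa using hp
  have hgrad : G z = p := by
    have h1 : HasGradientAt (fun z => V z - ⟪p, z⟫) (G z - p) z :=
      (hV z).sub' (inner_hasGradientAt p z)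
    have h2 : IsLocalMax (fun z => V z - ⟪p, z⟫) z := Filter.Eventually.of_forall hzm
    have h3 := h2.hasFDerivAt_eq_zero h1.fderivInner
    have h4 : ⟪G z - p, G z - p⟫ = 0 := by
      have h5 := congrArg (fun L : E →L[ℝ] ℝ => L (G z - p)) h3
      rwa [innerSL_apply_apply] at h5
    exact sub_eq_zero.1 (inner_self_eq_zero.1 h4)
  have hdiff : DifferentiableAt ℝ g z := by
    by_contra hcon
    exact hpG ⟨z, hcon, hgrad⟩
  refine ⟨z, ?_, fderiv ℝ g z, hdiff.hasFDerivAt, ?_⟩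
  · refine hz.trans_lt ?_
    rw [div_lt_iff₀ hη']
    simp only [δ] at hpn
    nlinarith
  · have ht := taylor2 (Filter.Eventually.of_forall hW) hdiff.hasFDerivAt (half_pos hη')
    have : ∀ᶠ h in 𝓝 (0:E), ⟪(fderiv ℝ g z - T) h, h⟫ ≤ 2 * η' * ‖h‖ ^ 2 := by
      filter_upwards [ht] with h hh
      have h1 := hzm (z + h)
      have h2 := (abs_le.1 hh).1
      have h3 : ⟪p, h⟫ = ⟪g z, h⟫ - ⟪T z, h⟫ - η' * ⟪z, h⟫ := by
        rw [← hgrad]; simp only [G, inner_sub_left, inner_smul_left, sub_zero, conj_trivial]; ring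
      simp only [V, sub_zero, inner_add_right, map_add, inner_add_left] at h1
      have h4 : ⟪T h, z⟫ = ⟪T z, h⟫ := by rw [hT, real_inner_comm]
      rw [@norm_add_sq_real, h4] at h1
      simp only [_root_.sub_apply, inner_sub_left]
      nlinarith
    intro h
    have := quad_le_of_eventually this h
    simp only [_root_.sub_apply, inner_sub_left] at this
    linarith

end Jensen

end

/-! ### Regularisation by sup- and inf-convolution -/

section

section Reg
set_option linter.unusedSectionVars false
variable {E : Type*} [NormedAddCommGroup E] [InnerProductSpace ℝ E] [CompleteSpace E]

theorem hasGradientAt_of_quad {f : E → ℝ} {g z : E} {C : ℝ}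
    (h : ∀ z', |f z' - f z - ⟪g, z' - z⟫| ≤ C * ‖z' - z‖ ^ 2) : HasGradientAt f g z := by
  refine hasGradientAt_of_fderiv (L := innerSL ℝ g) ?_ fun v => by simp
  rw [hasFDerivAt_iff_isLittleO]
  have h1 : (fun x' => f x' - f z - (innerSL ℝ g) (x' - z)) =O[𝓝 z] fun x' => ‖x' - z‖ ^ 2 := by
    refine Asymptotics.IsBigO.of_bound C (Eventually.of_forall fun x' => ?_)
    rw [innerSL_apply_apply, Real.norm_eq_abs, norm_pow, norm_norm]
    exact h x'
  refine h1.trans_isLittleO ?_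
  exact Asymptotics.isLittleO_pow_sub_sub z one_lt_two

variable [FiniteDimensional ℝ E]

/-- Double regularisation: the inf-convolution `U` of the sup-convolution of `u`. It is `C^{1,1}`,
and at points where its gradient is differentiable with second derivative at most `3c`, its
second-order expansion transfers to an upper jet of `u` at a nearby point. -/
theorem reg_lemma {K : Set E} (hK : IsCompact K) {u : E → ℝ} (hu : UpperSemicontinuousOn u K)
    (h0K : (0 : E) ∈ K) (hu0 : u 0 = 0) {c : ℝ} (hc : 0 < c) (hle : ∀ y ∈ K, u y ≤ c * ‖y‖ ^ 2) :
    ∃ (U : E → ℝ) (g : E → E), (∀ z, HasGradientAt U (g z) z) ∧ (∃ C, LipschitzWith C g) ∧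
      U 0 = 0 ∧ (∀ z, ‖g z‖ ≤ 12 * c * ‖z‖) ∧ (∀ z, ∃ y ∈ K, U z ≤ u y - c * ‖z - y‖ ^ 2) ∧
      ∀ (z : E) (D : E →L[ℝ] E), HasFDerivAt g D z → (∀ h, ⟪D h, h⟫ ≤ 3 * c * ‖h‖ ^ 2) →
        ∃ y ∈ K, ‖y‖ ≤ 4 * ‖z‖ ∧ |u y| ≤ 24 * c * ‖z‖ ^ 2 ∧
          ∀ η > 0, ∀ᶠ y' in 𝓝[K] y,
            u y' ≤ u y + ⟪g z, y' - y⟫ + 1 / 2 * ⟪D (y' - y), y' - y⟫ + η * ‖y' - y‖ ^ 2 := by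
  -- the sup-convolution is attained
  have hY : ∀ x : E, ∃ y ∈ K, ∀ y' ∈ K, u y' - c * ‖x - y'‖ ^ 2 ≤ u y - c * ‖x - y‖ ^ 2 := by
    intro x
    have h1 : UpperSemicontinuousOn (fun y => u y + -(c * ‖x - y‖ ^ 2)) K :=
      hu.add (by
        have : Continuous fun y : E => -(c * ‖x - y‖ ^ 2) := by fun_prop
        exact this.upperSemicontinuous.upperSemicontinuousOn K)
    obtain ⟨y, hy, hm⟩ := h1.exists_isMaxOn ⟨0, h0K⟩ hK
    refine ⟨y, hy, fun y' hy' => ?_⟩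
    have := hm hy'
    have : u y' + -(c * ‖x - y'‖ ^ 2) ≤ u y + -(c * ‖x - y‖ ^ 2) := this
    linarith
  choose Y hYK hYm using hY
  set û : E → ℝ := fun x => u (Y x) - c * ‖x - Y x‖ ^ 2 with hû
  have hû_ge : ∀ x, ∀ y ∈ K, u y - c * ‖x - y‖ ^ 2 ≤ û x := fun x y hy => hYm x y hy
  have hû0 : û 0 = 0 := by
    apply le_antisymm
    · have := hle _ (hYK 0)
      simp only [û, zero_sub, norm_neg]; linarith
    · have := hû_ge 0 0 h0K
      simpa [hu0] using this
  have hû_lb : ∀ x, -(c * ‖x‖ ^ 2) ≤ û x := fun x => by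
    have := hû_ge x 0 h0K
    simpa [hu0] using this
  have hconv : ConvexOn ℝ univ fun x => û x + c * ‖x‖ ^ 2 := by
    refine ⟨convex_univ, fun x _ x' _ s t hs ht hst => ?_⟩
    set w := s • x + t • x'
    have h1 := hû_ge x (Y w) (hYK w)
    have h2 := hû_ge x' (Y w) (hYK w)
    have e : û w = u (Y w) - c * ‖w - Y w‖ ^ 2 := rfl
    simp only [smul_eq_mul]
    rw [e]
    have e2 : ⟪w, Y w⟫ = s * ⟪x, Y w⟫ + t * ⟪x', Y w⟫ := by
      simp [w, inner_add_left, inner_smul_left]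
    rw [@norm_sub_sq_real] at h1 h2 ⊢
    rw [e2]
    have ht' : t = 1 - s := by linarith
    subst ht'
    nlinarith [mul_le_mul_of_nonneg_left h1 hs, mul_le_mul_of_nonneg_left h2 ht]
  have hcont : Continuous û := by
    have h1 : Continuous fun x => û x + c * ‖x‖ ^ 2 := by
      rw [← continuousOn_univ]; exact hconv.continuousOn isOpen_univ
    have h2 : Continuous fun x => (û x + c * ‖x‖ ^ 2) - c * ‖x‖ ^ 2 := h1.sub (by fun_prop)
    simpa using h2
  set q : E → E → ℝ := fun z x => û x + 2 * c * ‖x - z‖ ^ 2 with hq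
  have hJ : ∀ z, ∃ x, ∀ x', q z x ≤ q z x' := by
    intro z
    have h0 : (0 : E) ∈ closedBall ((2 : ℝ) • z) (2 * ‖z‖) := by
      simp [norm_smul]
    obtain ⟨x, -, hx⟩ := (isCompact_closedBall ((2 : ℝ) • z) (2 * ‖z‖)).exists_isMinOn
      ⟨0, h0⟩ (f := q z) (by simp only [hq]; fun_prop)
    refine ⟨x, fun x' => ?_⟩
    by_cases hx' : x' ∈ closedBall ((2 : ℝ) • z) (2 * ‖z‖)
    · exact hx hx'
    · refine (hx h0 : q z x ≤ q z 0).trans ?_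
      have h1 : 2 * ‖z‖ < ‖x' - (2 : ℝ) • z‖ := by simpa [dist_eq_norm] using hx'
      have h2 : (2 * ‖z‖) ^ 2 < ‖x' - (2 : ℝ) • z‖ ^ 2 := by gcongr
      have h3 := hû_lb x'
      simp only [hq, hû0, zero_sub, norm_neg]
      rw [@norm_sub_sq_real, inner_smul_right, norm_smul] at h2
      rw [@norm_sub_sq_real]
      simp only [Real.norm_ofNat] at h2
      nlinarith
  choose J hJm using hJ
  -- strong convexity of `q z`
  have hsc : ∀ z x', q z (J z) + c * ‖x' - J z‖ ^ 2 ≤ q z x' := by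
    intro z x'
    set x := J z
    have hx : ∀ t : ℝ, 0 < t → t < 1 →
        q z x + c * (1 - t) * ‖x' - x‖ ^ 2 ≤ q z x' := by
      intro t ht0 ht1
      have h1 := hJm z ((1 - t) • x + t • x')
      have h2 := hconv.2 (mem_univ x) (mem_univ x') (by linarith : (0:ℝ) ≤ 1 - t) ht0.le (by ring)
      simp only [smul_eq_mul] at h2
      simp only [hq] at h1 ⊢
      have e1 : ‖(1 - t) • x + t • x' - z‖ ^ 2 =
          (1 - t) * ‖x - z‖ ^ 2 + t * ‖x' - z‖ ^ 2 - t * (1 - t) * ‖x' - x‖ ^ 2 := by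
        simp only [← real_inner_self_eq_norm_sq, inner_sub_left, inner_sub_right, inner_add_left,
          inner_add_right, inner_smul_left, inner_smul_right, conj_trivial]
        rw [real_inner_comm x x', real_inner_comm z x', real_inner_comm z x]; ring
      have e2 : ‖(1 - t) • x + t • x'‖ ^ 2 =
          (1 - t) * ‖x‖ ^ 2 + t * ‖x'‖ ^ 2 - t * (1 - t) * ‖x' - x‖ ^ 2 := by
        simp only [← real_inner_self_eq_norm_sq, inner_sub_left, inner_sub_right, inner_add_left,
          inner_add_right, inner_smul_left, inner_smul_right, conj_trivial]
        rw [real_inner_comm x x']; ring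
      rw [e1] at h1
      rw [e2] at h2
      have h3 : t * (û x + 2 * c * ‖x - z‖ ^ 2 + c * (1 - t) * ‖x' - x‖ ^ 2) ≤
          t * (û x' + 2 * c * ‖x' - z‖ ^ 2) := by
        have h1' : û x + 2 * c * ‖x - z‖ ^ 2 ≤ û ((1 - t) • x + t • x') + 2 * c *
          ((1 - t) * ‖x - z‖ ^ 2 + t * ‖x' - z‖ ^ 2 - t * (1 - t) * ‖x' - x‖ ^ 2) := h1
        linarith
      exact le_of_mul_le_mul_left h3 ht0
    by_contra! hcon
    have hB : 0 < c * ‖x' - x‖ ^ 2 := by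
      have := hJm z x'
      have h2 : q z x ≤ q z x' := this
      linarith
    set B := c * ‖x' - x‖ ^ 2 with hBdef
    set t := (q z x + B - q z x') / (2 * B)
    have ht0 : 0 < t := by apply div_pos <;> linarith
    have ht1 : t < 1 := by
      rw [div_lt_one (by positivity)]
      have h2 : q z x ≤ q z x' := hJm z x'
      linarith
    have h3 := hx t ht0 ht1
    have h4 : t * (2 * B) = q z x + B - q z x' := div_mul_cancel₀ _ (by positivity)
    have h5 : c * (1 - t) * ‖x' - x‖ ^ 2 = B - t * B := by rw [hBdef]; ring
    linarith
  have huniq : ∀ z x, (∀ x', q z x ≤ q z x') → J z = x := by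
    intro z x hx
    have h1 := hsc z x
    have h2 := hx (J z)
    have h3 : c * ‖x - J z‖ ^ 2 ≤ 0 := by linarith
    have h4 : ‖x - J z‖ ^ 2 ≤ 0 := by
      by_contra! h; nlinarith
    have h5 : ‖x - J z‖ = 0 := by
      have := sq_nonneg ‖x - J z‖
      exact pow_eq_zero_iff two_ne_zero |>.1 (le_antisymm h4 this)
    exact (sub_eq_zero.1 (norm_eq_zero.1 h5)).symm
  have hJL : ∀ z z', ‖J z - J z'‖ ≤ 2 * ‖z - z'‖ := by
    intro z z'
    have h1 := hsc z (J z')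
    have h2 := hsc z' (J z)
    have e : ‖J z' - z‖ ^ 2 + ‖J z - z'‖ ^ 2 - ‖J z - z‖ ^ 2 - ‖J z' - z'‖ ^ 2
        = 2 * ⟪J z - J z', z - z'⟫ := by
      simp only [@norm_sub_sq_real, inner_sub_left, inner_sub_right]; ring
    rw [norm_sub_rev] at h1
    simp only [hq] at h1 h2
    have h3 := real_inner_le_norm (J z - J z') (z - z')
    have h4 : c * (‖J z - J z'‖ * ‖J z - J z'‖) ≤ c * (‖J z - J z'‖ * (2 * ‖z - z'‖)) := by
      nlinarith
    have h5 := le_of_mul_le_mul_left h4 hc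
    rcases (norm_nonneg (J z - J z')).eq_or_lt with h6 | h6
    · rw [← h6]; positivity
    · exact le_of_mul_le_mul_left h5 h6
  have hJ0 : J 0 = 0 := by
    refine huniq 0 0 fun x' => ?_
    have := hû_lb x'
    simp only [hq, hû0, sub_zero, norm_zero]
    nlinarith [sq_nonneg ‖x'‖]
  have hJz : ∀ z, ‖J z‖ ≤ 2 * ‖z‖ := fun z => by
    have := hJL z 0
    simpa [hJ0] using this
  set U : E → ℝ := fun z => q z (J z) with hU
  set g : E → E := fun z => (4 * c) • (z - J z) with hg
  have hup : ∀ z z', U z' ≤ U z + ⟪g z, z' - z⟫ + 2 * c * ‖z' - z‖ ^ 2 := by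
    intro z z'
    refine (hJm z' (J z)).trans (le_of_eq ?_)
    simp only [hU, hq, hg, inner_smul_left, @norm_sub_sq_real, inner_sub_left, inner_sub_right,
      conj_trivial]
    rw [real_inner_self_eq_norm_sq, real_inner_comm z z']
    ring
  have hgq : ∀ z z', |U z' - U z - ⟪g z, z' - z⟫| ≤ 6 * c * ‖z' - z‖ ^ 2 := by
    intro z z'
    have h1 := hup z z'
    have h2 := hup z' z
    have h3 : ⟪g z', z - z'⟫ = - ⟪g z, z' - z⟫ - 4 * c * ‖z' - z‖ ^ 2
        + 4 * c * ⟪J z' - J z, z' - z⟫ := by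
      rw [← neg_sub z' z, inner_neg_right]
      have : g z' = g z + (4 * c) • (z' - z) - (4 * c) • (J z' - J z) := by
        simp only [hg]; module
      rw [this]
      simp only [inner_sub_left, inner_add_left, inner_smul_left, conj_trivial,
        ← real_inner_self_eq_norm_sq]
      ring
    have h4 := real_inner_le_norm (J z' - J z) (z' - z)
    have h5 := hJL z' z
    have h6 : ⟪J z' - J z, z' - z⟫ ≤ 2 * ‖z' - z‖ ^ 2 := by
      nlinarith [norm_nonneg (z' - z)]
    rw [norm_sub_rev z z'] at h2
    have h7 : 0 ≤ c * ‖z' - z‖ ^ 2 := by positivity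
    have h8 := mul_le_mul_of_nonneg_left h6 hc.le
    rw [abs_le]
    constructor <;> linarith
  have hUg : ∀ z, HasGradientAt U (g z) z := fun z => hasGradientAt_of_quad (hgq z)
  have hU0 : U 0 = 0 := by simp [hU, hq, hJ0, hû0]
  have hg0 : g 0 = 0 := by simp [hg, hJ0]
  have he : ∀ z, ‖z - J z‖ ≤ 3 * ‖z‖ := fun z => by
    have := norm_sub_le z (J z)
    have := hJz z
    linarith
  have hgb : ∀ z, ‖g z‖ ≤ 12 * c * ‖z‖ := by
    intro z
    simp only [hg, norm_smul, Real.norm_eq_abs]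
    rw [abs_of_pos (by positivity)]
    nlinarith [he z]
  refine ⟨U, g, hUg, ?_, hU0, hgb, ?_, ?_⟩
  · refine ⟨_, (lipschitzWith_smul (4 * c)).comp (LipschitzWith.id.sub
      (LipschitzWith.of_dist_le_mul (K := 2) (f := J) fun z z' => ?_))⟩
    simpa [dist_eq_norm] using hJL z z'
  · intro z
    refine ⟨Y z, hYK z, ?_⟩
    have := hJm z z
    simpa [hU, hq] using this
  · intro z D hD hDle
    set x := J z with hx
    set y := Y x with hy
    set h := (1 / 2 : ℝ) • (x + y) - z with hh
    have hmin : ∀ s : ℝ, 0 ≤ s → s ≤ 1 → J (z + s • h) = x := by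
      intro s hs0 hs1
      refine huniq _ _ fun x' => ?_
      have h1 := hsc z x'
      have h2 : û x + c * ‖x - y‖ ^ 2 - c * ‖x' - y‖ ^ 2 ≤ û x' := by
        have := hû_ge x' y (hYK x)
        have e : û x = u y - c * ‖x - y‖ ^ 2 := rfl
        linarith
      have h3 : q z x ≤ q z x' := hJm z x'
      simp only [hq] at h3 ⊢
      have h4 : ‖x' - (z + s • h)‖ ^ 2 - ‖x - (z + s • h)‖ ^ 2 =
          (1 - s) * (‖x' - z‖ ^ 2 - ‖x - z‖ ^ 2) +
          s * (1 / 2 * (‖x' - y‖ ^ 2 - ‖x - y‖ ^ 2) + 1 / 2 * ‖x' - x‖ ^ 2) := by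
        simp only [hh, ← real_inner_self_eq_norm_sq, inner_sub_left, inner_sub_right,
          inner_add_left, inner_add_right, inner_smul_left, inner_smul_right, conj_trivial]
        rw [real_inner_comm x x', real_inner_comm z x', real_inner_comm z x,
          real_inner_comm y x', real_inner_comm y x]
        ring
      have h5 := mul_le_mul_of_nonneg_left h3 (sub_nonneg.2 hs1)
      have h6 := mul_le_mul_of_nonneg_left h2 hs0
      have h7 : 0 ≤ s * (c * ‖x' - x‖ ^ 2) := by positivity
      linear_combination h5 + h6 + h7 - 2 * c * h4
    have hDh : D h = (4 * c) • h := by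
      have h1 : HasDerivAt (fun s : ℝ => g (z + s • h)) (D h) 0 := by
        have e0 : HasDerivAt (fun t : ℝ => z + t • h) h 0 := by
          simpa using ((hasDerivAt_id (0:ℝ)).smul_const h).const_add z
        have hD' : HasFDerivAt g D (z + (0:ℝ) • h) := by simpa using hD
        have := HasFDerivAt.comp_hasDerivAt (l := g) (f := fun t : ℝ => z + t • h) 0 hD' e0
        exact this
      have h2 : HasDerivAt (fun s : ℝ => (4 * c) • (z + s • h - x)) ((4 * c) • h) 0 := by
        have e0 : HasDerivAt (fun t : ℝ => z + t • h - x) h 0 := by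
          simpa using (((hasDerivAt_id (0:ℝ)).smul_const h).const_add z).sub_const x
        exact e0.const_smul (4 * c)
      have h3 := h1.hasDerivWithinAt (s := Ici 0)
      have h4 : HasDerivWithinAt (fun s : ℝ => g (z + s • h)) ((4 * c) • h) (Ici 0) 0 := by
        refine (h2.hasDerivWithinAt (s := Ici 0)).congr_of_eventuallyEq ?_ ?_
        · filter_upwards [Icc_mem_nhdsGE (show (0:ℝ) < 1 by norm_num)] with s hs
          simp only [hg, hmin s hs.1 hs.2]
        · simp only [hg, hmin 0 le_rfl zero_le_one]
      exact (uniqueDiffOn_Ici (0:ℝ) 0 (by simp)).eq_deriv _ h3 h4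
    have hzero : h = 0 := by
      have h1 := hDle h
      rw [hDh, inner_smul_left, real_inner_self_eq_norm_sq, conj_trivial] at h1
      have h2 : c * ‖h‖ ^ 2 ≤ 0 := by linarith
      by_contra hne
      have : 0 < ‖h‖ := norm_pos_iff.2 hne
      have : 0 < c * ‖h‖ ^ 2 := by positivity
      linarith
    have hyx : y = (2 : ℝ) • z - x := by
      have h1 : (1 / 2 : ℝ) • (x + y) = z := sub_eq_zero.1 hzero
      rw [← h1]; module
    have heq : u y = U z + 2 * c * ‖z - x‖ ^ 2 := by
      have e : û x = u y - c * ‖x - y‖ ^ 2 := rfl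
      have e2 : x - y = (2 : ℝ) • (x - z) := by rw [hyx]; module
      have e3 : U z = û x + 2 * c * ‖x - z‖ ^ 2 := rfl
      rw [e3, e, e2, norm_smul, norm_sub_rev z x, Real.norm_ofNat]; ring
    have hineq : ∀ y' ∈ K, u y' ≤ U (z + (y' - y)) + 2 * c * ‖z - x‖ ^ 2 := by
      intro y' hy'
      set w := z + (y' - y)
      have h1 := hû_ge (J w) y' hy'
      have e3 : U w = û (J w) + 2 * c * ‖J w - w‖ ^ 2 := rfl
      have e4 : J w - y' = (J w - w) - (z - x) := by
        simp only [w, hyx]; module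
      rw [e4, @norm_sub_sq_real] at h1
      have h5 : 2 * ⟪J w - w, z - x⟫ ≥ -(‖J w - w‖ ^ 2 + ‖z - x‖ ^ 2) := by
        have := @norm_add_sq_real _ _ _ (J w - w) (z - x)
        nlinarith [sq_nonneg ‖J w - w + (z - x)‖]
      rw [e3]
      nlinarith
    have hzx := he z
    refine ⟨y, hYK x, ?_, ?_, ?_⟩
    · rw [hyx]
      have := norm_sub_le ((2:ℝ) • z) x
      rw [norm_smul, Real.norm_ofNat] at this
      have := hJz z
      linarith
    · have h1 := hgq 0 z
      simp only [hU0, hg0, inner_zero_left, sub_zero] at h1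
      have h2 : ‖z - x‖ ^ 2 ≤ (3 * ‖z‖) ^ 2 := by gcongr
      have h3 := mul_le_mul_of_nonneg_left h2 hc.le
      rw [heq]
      rw [abs_le] at *
      have h4 : 0 ≤ c * ‖z - x‖ ^ 2 := by positivity
      have h5 : 0 ≤ c * ‖z‖ ^ 2 := by positivity
      constructor <;> nlinarith
    · intro η hη
      have ht := taylor2 (Eventually.of_forall hUg) hD hη
      have hto : Tendsto (fun y' => y' - y) (𝓝[K] y) (𝓝 0) := by
        have : Tendsto (fun y' => y' - y) (𝓝 y) (𝓝 (y - y)) :=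
          (continuous_id.sub continuous_const).tendsto y
        rw [sub_self] at this
        exact this.mono_left nhdsWithin_le_nhds
      filter_upwards [hto.eventually ht, self_mem_nhdsWithin] with y' h1 h2
      have h3 := hineq y' h2
      have h4 := (abs_le.1 h1).2
      linarith

end Reg

end

/-! ### The theorem on sums -/

section

section Sums
set_option linter.unusedSectionVars false
variable {E : Type*} [NormedAddCommGroup E] [InnerProductSpace ℝ E] [CompleteSpace E]

/-- `(p, X)` is a second-order upper jet of `u` at `x`, relative to the set `K`. -/
def UpJet (K : Set E) (u : E → ℝ) (x p : E) (X : E →L[ℝ] E) : Prop :=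
  ∀ η > 0, ∀ᶠ x' in 𝓝[K] x,
    u x' ≤ u x + ⟪p, x' - x⟫ + 1 / 2 * ⟪X (x' - x), x' - x⟫ + η * ‖x' - x‖ ^ 2

variable [FiniteDimensional ℝ E]

/-- `reg_lemma` recentred at a point `x₀` and applied to `u` minus an affine function. -/
theorem reg_at {K : Set E} (hK : IsCompact K) {u : E → ℝ} (hu : UpperSemicontinuousOn u K)
    {x₀ : E} (hx₀ : x₀ ∈ K) (p₁ : E) {r c : ℝ} (hr : 0 < r) (hc : 0 < c)
    (hle : ∀ x ∈ K, ‖x - x₀‖ ≤ r → u x - u x₀ - ⟪p₁, x - x₀⟫ ≤ c * ‖x - x₀‖ ^ 2) :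
    ∃ (U : E → ℝ) (g : E → E), (∀ z, HasGradientAt U (g z) z) ∧ (∃ C, LipschitzWith C g) ∧
      U 0 = 0 ∧ (∀ z, ‖g z‖ ≤ 12 * c * ‖z‖) ∧
      (∀ z, ∃ x ∈ K, ‖x - x₀‖ ≤ r ∧
        U z ≤ u x - u x₀ - ⟪p₁, x - x₀⟫ - c * ‖z - (x - x₀)‖ ^ 2) ∧
      ∀ (z : E) (D : E →L[ℝ] E), ‖z‖ < r / 4 → HasFDerivAt g D z →
        (∀ h, ⟪D h, h⟫ ≤ 3 * c * ‖h‖ ^ 2) →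
        ∃ x ∈ K, ‖x - x₀‖ ≤ 4 * ‖z‖ ∧ |u x - u x₀ - ⟪p₁, x - x₀⟫| ≤ 24 * c * ‖z‖ ^ 2 ∧
          UpJet K u x (p₁ + g z) D := by
  set K₁ : Set E := (fun ξ => x₀ + ξ) ⁻¹' K ∩ closedBall 0 r
  have hK₁ : IsCompact K₁ := by
    refine ((Homeomorph.addLeft x₀).isCompact_preimage.2 hK).inter_right isClosed_closedBall
  set u₁ : E → ℝ := fun ξ => u (x₀ + ξ) + -(u x₀ + ⟪p₁, ξ⟫)
  have hu₁ : UpperSemicontinuousOn u₁ K₁ := by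
    refine UpperSemicontinuousOn.add ?_ ?_
    · intro ξ hξ y hy
      have ht : Tendsto (fun ξ => x₀ + ξ) (𝓝[K₁] ξ) (𝓝[K] (x₀ + ξ)) := by
        refine tendsto_nhdsWithin_iff.2 ⟨?_, ?_⟩
        · exact ((continuous_const.add continuous_id).tendsto ξ).mono_left nhdsWithin_le_nhds
        · filter_upwards [self_mem_nhdsWithin] with ξ' h using h.1
      exact ht.eventually (hu _ hξ.1 y hy)
    · have : Continuous fun ξ : E => -(u x₀ + ⟪p₁, ξ⟫) := by fun_prop
      exact this.upperSemicontinuous.upperSemicontinuousOn _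
  obtain ⟨U, g, h1, h2, h3, h4, h5, h6⟩ := reg_lemma hK₁ hu₁ (by simp [K₁, hx₀, hr.le])
    (by simp [u₁]) hc (by
      intro y hy
      have hyr : ‖y‖ ≤ r := by simpa using hy.2
      have := hle (x₀ + y) hy.1 (by simpa using hyr)
      simp only [add_sub_cancel_left] at this
      simp only [u₁]; linarith)
  refine ⟨U, g, h1, h2, h3, h4, ?_, ?_⟩
  · intro z
    obtain ⟨y, hy, hyU⟩ := h5 z
    refine ⟨x₀ + y, hy.1, by simpa using hy.2, ?_⟩
    simp only [add_sub_cancel_left]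
    simp only [u₁] at hyU; linarith
  · intro z D hz hD hDle
    obtain ⟨y, hy, hyz, huy, hjet⟩ := h6 z D hD hDle
    refine ⟨x₀ + y, hy.1, by simpa using hyz, ?_, ?_⟩
    · simp only [add_sub_cancel_left]
      simp only [u₁] at huy
      convert huy using 2; ring
    · intro η hη
      have ht : Tendsto (fun x => x - x₀) (𝓝[K] (x₀ + y)) (𝓝[K₁] y) := by
        have h7 : Tendsto (fun x => x - x₀) (𝓝[K] (x₀ + y)) (𝓝 y) := by
          have : Tendsto (fun x => x - x₀) (𝓝 (x₀ + y)) (𝓝 (x₀ + y - x₀)) :=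
            (continuous_id.sub continuous_const).tendsto _
          rw [add_sub_cancel_left] at this
          exact this.mono_left nhdsWithin_le_nhds
        refine tendsto_nhdsWithin_iff.2 ⟨h7, ?_⟩
        have h8 : ∀ᶠ ξ in 𝓝 y, ξ ∈ ball (0 : E) r :=
          isOpen_ball.mem_nhds (by rw [mem_ball_zero_iff]; linarith)
        filter_upwards [self_mem_nhdsWithin, h7.eventually h8] with x hx hx2
        exact ⟨by simpa using hx, ball_subset_closedBall hx2⟩
      filter_upwards [ht.eventually (hjet η hη)] with x hx
      simp only [u₁, add_sub_cancel] at hx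
      rw [show x - x₀ - y = x - (x₀ + y) by abel] at hx
      have e : ⟪p₁, x - x₀⟫ = ⟪p₁, x - (x₀ + y)⟫ + ⟪p₁, y⟫ := by
        rw [← inner_add_right]; congr 1; abel
      rw [inner_add_left]
      linarith

/-- The product Hilbert space `E × E`. -/
abbrev E2 (E : Type*) := WithLp 2 (E × E)

/-- The pair `(ξ, ζ)` as an element of the product Hilbert space. -/
abbrev pr (ξ ζ : E) : E2 E := WithLp.toLp 2 (ξ, ζ)

theorem E2_ext {z w : E2 E} (h1 : z.fst = w.fst) (h2 : z.snd = w.snd) : z = w :=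
  (WithLp.equiv 2 (E × E)).injective (Prod.ext h1 h2)

theorem inner_E2 (z w : E2 E) : ⟪z, w⟫ = ⟪z.fst, w.fst⟫ + ⟪z.snd, w.snd⟫ :=
  WithLp.prod_inner_apply z w

theorem normsq_E2 (z : E2 E) : ‖z‖ ^ 2 = ‖z.fst‖ ^ 2 + ‖z.snd‖ ^ 2 := by
  rw [← real_inner_self_eq_norm_sq, inner_E2, real_inner_self_eq_norm_sq,
    real_inner_self_eq_norm_sq]

theorem norm_fst_le_E2 (z : E2 E) : ‖z.fst‖ ≤ ‖z‖ := by
  have := normsq_E2 z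
  exact abs_le_of_sq_le_sq' (by nlinarith [sq_nonneg ‖z.snd‖]) (norm_nonneg _) |>.2

theorem norm_snd_le_E2 (z : E2 E) : ‖z.snd‖ ≤ ‖z‖ := by
  have := normsq_E2 z
  exact abs_le_of_sq_le_sq' (by nlinarith [sq_nonneg ‖z.fst‖]) (norm_nonneg _) |>.2

theorem quad_perturb {H : Type*} [NormedAddCommGroup H] [InnerProductSpace ℝ H] {T : H →L[ℝ] H}
    (hT : ∀ v w, ⟪T v, w⟫ = ⟪v, T w⟫) {η : ℝ} (hη : 0 < η) (x z : H) :
    1 / 2 * ⟪T x, x⟫ + η * ‖x‖ ^ 2 ≤ 1 / 2 * ⟪T z, z⟫ + 3 * η * ‖z‖ ^ 2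
      + (‖T‖ + ‖T‖ ^ 2 / η + 2 * η) * ‖x - z‖ ^ 2 := by
  obtain ⟨d, rfl⟩ : ∃ d, x = z + d := ⟨x - z, by abel⟩
  have e1 : ⟪T (z + d), z + d⟫ = ⟪T z, z⟫ + 2 * ⟪T z, d⟫ + ⟪T d, d⟫ := by
    rw [map_add, inner_add_left, inner_add_right, inner_add_right, hT d z, real_inner_comm d (T z)]
    ring
  have h1 : ⟪T z, d⟫ ≤ ‖T‖ * ‖z‖ * ‖d‖ :=
    (real_inner_le_norm _ _).trans (by gcongr; exact T.le_opNorm z)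
  have h2 : ⟪T d, d⟫ ≤ ‖T‖ * ‖d‖ * ‖d‖ :=
    (real_inner_le_norm _ _).trans (by gcongr; exact T.le_opNorm d)
  have h3 : ‖z + d‖ ^ 2 ≤ 2 * ‖z‖ ^ 2 + 2 * ‖d‖ ^ 2 := by
    have := norm_add_le z d
    have h4 : ‖z + d‖ ^ 2 ≤ (‖z‖ + ‖d‖) ^ 2 := by gcongr
    nlinarith [sq_nonneg (‖z‖ - ‖d‖)]
  have h5 : ‖T‖ * ‖z‖ * ‖d‖ ≤ η * ‖z‖ ^ 2 + ‖T‖ ^ 2 / η * ‖d‖ ^ 2 := by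
    have : ‖T‖ ^ 2 / η * ‖d‖ ^ 2 = (‖T‖ * ‖d‖) ^ 2 / η := by ring
    rw [this, ← sub_nonneg]
    have e : η * ‖z‖ ^ 2 + (‖T‖ * ‖d‖) ^ 2 / η - ‖T‖ * ‖z‖ * ‖d‖
      = ((η * ‖z‖ - ‖T‖ * ‖d‖ / 2) ^ 2 + 3 / 4 * (‖T‖ * ‖d‖) ^ 2) / η := by
      field_simp; ring
    rw [e]; positivity
  have h6 := mul_le_mul_of_nonneg_left h3 hη.le
  have h7 : 0 ≤ ‖T‖ * ‖d‖ ^ 2 := by positivity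
  rw [e1, add_sub_cancel_left]
  nlinarith

set_option maxHeartbeats 1600000 in
theorem theorem_on_sums {K : Set E} (hK : IsCompact K) {u w : E → ℝ}
    (hu : UpperSemicontinuousOn u K) (hw : UpperSemicontinuousOn w K)
    {x₀ y₀ : E} (hx₀ : x₀ ∈ K) (hy₀ : y₀ ∈ K) (p₁ p₂ : E) {T : E2 E →L[ℝ] E2 E}
    (hT : ∀ v w, ⟪T v, w⟫ = ⟪v, T w⟫)
    (hmax : ∀ η > 0, ∃ r > 0, ∀ x ∈ K, ∀ y ∈ K, ‖x - x₀‖ ≤ r → ‖y - y₀‖ ≤ r →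
      u x + w y ≤ u x₀ + w y₀ + ⟪p₁, x - x₀⟫ + ⟪p₂, y - y₀⟫
        + 1 / 2 * ⟪T (pr (x - x₀) (y - y₀)), pr (x - x₀) (y - y₀)⟫
        + η * ‖pr (x - x₀) (y - y₀)‖ ^ 2) {η : ℝ} (hη : 0 < η) :
    ∃ x ∈ K, ∃ y ∈ K, ∃ (p q : E) (X Z : E →L[ℝ] E), ‖x - x₀‖ ≤ η ∧ ‖y - y₀‖ ≤ η ∧
      |u x - u x₀| ≤ η ∧ |w y - w y₀| ≤ η ∧ ‖p - p₁‖ ≤ η ∧ ‖q - p₂‖ ≤ η ∧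
      (∀ v w, ⟪X v, w⟫ = ⟪X w, v⟫) ∧ (∀ v w, ⟪Z v, w⟫ = ⟪Z w, v⟫) ∧
      UpJet K u x p X ∧ UpJet K w y q Z ∧
      ∀ ξ ζ : E, ⟪X ξ, ξ⟫ + ⟪Z ζ, ζ⟫ ≤ ⟪T (pr ξ ζ), pr ξ ζ⟫ + η * (‖ξ‖ ^ 2 + ‖ζ‖ ^ 2) := by
  obtain ⟨η', hη', rfl⟩ : ∃ η' > 0, η = 7 * η' := ⟨η / 7, by positivity, by ring⟩
  clear hη
  obtain ⟨r, hr, hmx⟩ := hmax η' hη'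
  set T' : E2 E →L[ℝ] E2 E := T + (6 * η') • ContinuousLinearMap.id ℝ (E2 E) with hT'def
  have hT' : ∀ v w, ⟪T' v, w⟫ = ⟪v, T' w⟫ := fun v w => by
    simp [T', inner_add_left, inner_add_right, inner_smul_left, inner_smul_right, hT v w]
  set c := ‖T‖ + ‖T‖ ^ 2 / η' + 8 * η' with hcdef
  have hc : 0 < c := by positivity
  have hc1 : ‖T‖ + ‖T‖ ^ 2 / η' + 2 * η' ≤ c := by simp only [c]; linarith
  have hkey : ∀ x ∈ K, ∀ y ∈ K, ‖x - x₀‖ ≤ r → ‖y - y₀‖ ≤ r → ∀ z : E2 E,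
      (u x - u x₀ - ⟪p₁, x - x₀⟫) + (w y - w y₀ - ⟪p₂, y - y₀⟫) ≤ 1 / 2 * ⟪T' z, z⟫
        + c * (‖z.fst - (x - x₀)‖ ^ 2 + ‖z.snd - (y - y₀)‖ ^ 2) := by
    intro x hx y hy hxr hyr z
    have h1 := hmx x hx y hy hxr hyr
    have h2 := quad_perturb hT hη' (pr (x - x₀) (y - y₀)) z
    have h3 : 1 / 2 * ⟪T' z, z⟫ = 1 / 2 * ⟪T z, z⟫ + 3 * η' * ‖z‖ ^ 2 := by
      simp [T', inner_add_left, inner_smul_left]; ring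
    have h4 : ‖pr (x - x₀) (y - y₀) - z‖ ^ 2 =
        ‖z.fst - (x - x₀)‖ ^ 2 + ‖z.snd - (y - y₀)‖ ^ 2 := by
      rw [norm_sub_rev, normsq_E2]; simp
    have h5 := mul_le_mul_of_nonneg_right hc1 (sq_nonneg ‖pr (x - x₀) (y - y₀) - z‖)
    rw [← h4, h3]
    linarith
  obtain ⟨U₁, g₁, hU₁, ⟨C₁, hg₁⟩, hU₁0, hg₁b, hU₁le, htr₁⟩ :=
    reg_at hK hu hx₀ p₁ hr hc (by
      intro x hx hxr
      have := hkey x hx y₀ hy₀ hxr (by simp [hr.le]) 0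
      simpa [norm_sub_rev x₀ x] using this)
  obtain ⟨U₂, g₂, hU₂, ⟨C₂, hg₂⟩, hU₂0, hg₂b, hU₂le, htr₂⟩ :=
    reg_at hK hw hy₀ p₂ hr hc (by
      intro y hy hyr
      have := hkey x₀ hx₀ y hy (by simp [hr.le]) hyr 0
      simpa [norm_sub_rev y₀ y] using this)
  set W : E2 E → ℝ := fun z => U₁ z.fst + U₂ z.snd
  set G : E2 E → E2 E := fun z => pr (g₁ z.fst) (g₂ z.snd)
  let F1 : E2 E →L[ℝ] E := WithLp.fstL 2 ℝ E E
  let F2 : E2 E →L[ℝ] E := WithLp.sndL 2 ℝ E E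
  have hWg : ∀ z, HasGradientAt W (G z) z := by
    intro z
    have h1 : HasFDerivAt (fun z : E2 E => U₁ z.fst) ((innerSL ℝ (g₁ z.fst)).comp F1) z :=
      HasFDerivAt.comp z (hU₁ z.fst).fderivInner F1.hasFDerivAt
    have h2 : HasFDerivAt (fun z : E2 E => U₂ z.snd) ((innerSL ℝ (g₂ z.snd)).comp F2) z :=
      HasFDerivAt.comp z (hU₂ z.snd).fderivInner F2.hasFDerivAt
    refine hasGradientAt_of_fderiv (h1.add h2) fun v => ?_
    rw [inner_E2]
    simp [F1, F2, G]
  have hGl : LipschitzWith (C₁ + C₂) G := by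
    refine LipschitzWith.of_dist_le_mul fun z z' => ?_
    have h1 := hg₁.dist_le_mul z.fst z'.fst
    have h2 := hg₂.dist_le_mul z.snd z'.snd
    rw [dist_eq_norm, dist_eq_norm] at *
    have h3 := norm_fst_le_E2 (z - z')
    have h4 := norm_snd_le_E2 (z - z')
    have h5 := normsq_E2 (G z - G z')
    simp only [WithLp.sub_fst, WithLp.sub_snd] at h3 h4 h5
    have h6 : ‖g₁ z.fst - g₁ z'.fst‖ ≤ C₁ * ‖z - z'‖ := h1.trans (by gcongr)
    have h7 : ‖g₂ z.snd - g₂ z'.snd‖ ≤ C₂ * ‖z - z'‖ := h2.trans (by gcongr)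
    have h8 : 0 ≤ (C₁ : ℝ) * ‖z - z'‖ := by positivity
    have h9 : 0 ≤ (C₂ : ℝ) * ‖z - z'‖ := by positivity
    refine abs_le_of_sq_le_sq' ?_ (by positivity) |>.2
    have h5' : ‖G z - G z'‖ ^ 2 = ‖g₁ z.fst - g₁ z'.fst‖ ^ 2 + ‖g₂ z.snd - g₂ z'.snd‖ ^ 2 := h5
    rw [h5']
    push_cast
    nlinarith [norm_nonneg (g₁ z.fst - g₁ z'.fst), norm_nonneg (g₂ z.snd - g₂ z'.snd)]
  have hWle : ∀ z, W z ≤ 1 / 2 * ⟪T' z, z⟫ := by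
    intro z
    obtain ⟨x, hx, hxr, h1⟩ := hU₁le z.fst
    obtain ⟨y, hy, hyr, h2⟩ := hU₂le z.snd
    have := hkey x hx y hy hxr hyr z
    simp only [W]; linarith
  -- closeness scale for the Jensen point
  set B := 4 + 12 * c + 24 * c + 4 * ‖p₁‖ + 4 * ‖p₂‖
  have hB : 0 < B := by positivity
  obtain ⟨ε, hε, hεr, hε1, hεB⟩ : ∃ ε > 0, ε ≤ r / 4 ∧ ε ≤ 1 ∧ B * ε ≤ 7 * η' := by
    refine ⟨min (r / 4) (min 1 (7 * η' / B)), by positivity, min_le_left _ _,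
      (min_le_right _ _).trans (min_le_left _ _), ?_⟩
    calc B * min (r / 4) (min 1 (7 * η' / B)) ≤ B * (7 * η' / B) := by
          gcongr; exact (min_le_right _ _).trans (min_le_right _ _)
      _ = 7 * η' := by field_simp
  obtain ⟨z, hz, D, hD, hDle⟩ := jensen hWg hGl hT' hWle (by simp [W, hU₁0, hU₂0]) hη' hε
  have hz1 : ‖z.fst‖ < ε := (norm_fst_le_E2 z).trans_lt hz
  have hz2 : ‖z.snd‖ < ε := (norm_snd_le_E2 z).trans_lt hz
  -- the two diagonal blocks of `D`
  let I1 : E →L[ℝ] E2 E := LinearMap.toContinuousLinearMap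
    { toFun := fun ξ => pr ξ 0, map_add' := fun a b => by apply E2_ext <;> simp [pr],
      map_smul' := fun a b => by apply E2_ext <;> simp [pr] }
  let I2 : E →L[ℝ] E2 E := LinearMap.toContinuousLinearMap
    { toFun := fun ξ => pr 0 ξ, map_add' := fun a b => by apply E2_ext <;> simp [pr],
      map_smul' := fun a b => by apply E2_ext <;> simp [pr] }
  have hI1 : ∀ ξ, I1 ξ = pr ξ 0 := fun _ => rfl
  have hI2 : ∀ ξ, I2 ξ = pr 0 ξ := fun _ => rfl
  set D₁ : E →L[ℝ] E := F1.comp (D.comp I1) with hD₁def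
  set D₂ : E →L[ℝ] E := F2.comp (D.comp I2) with hD₂def
  have hD₁ : HasFDerivAt g₁ D₁ z.fst := by
    have e0 : HasFDerivAt (fun ξ => I1 ξ + pr 0 z.snd) I1 z.fst := I1.hasFDerivAt.add_const _
    have e1 : I1 z.fst + pr 0 z.snd = z := by apply E2_ext <;> simp [hI1]
    have e2 : HasFDerivAt G D (I1 z.fst + pr 0 z.snd) := by rw [e1]; exact hD
    have e3 := F1.hasFDerivAt.comp z.fst (HasFDerivAt.comp z.fst e2 e0)
    refine e3.congr_of_eventuallyEq (Eventually.of_forall fun ξ => ?_)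
    simp [F1, G, hI1]
  have hD₂ : HasFDerivAt g₂ D₂ z.snd := by
    have e0 : HasFDerivAt (fun ξ => I2 ξ + pr z.fst 0) I2 z.snd := I2.hasFDerivAt.add_const _
    have e1 : I2 z.snd + pr z.fst 0 = z := by apply E2_ext <;> simp [hI2]
    have e2 : HasFDerivAt G D (I2 z.snd + pr z.fst 0) := by rw [e1]; exact hD
    have e3 := F2.hasFDerivAt.comp z.snd (HasFDerivAt.comp z.snd e2 e0)
    refine e3.congr_of_eventuallyEq (Eventually.of_forall fun ξ => ?_)
    simp [F2, G, hI2]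
  have hsplit : ∀ ξ ζ : E, ⟪D (pr ξ ζ), pr ξ ζ⟫ = ⟪D₁ ξ, ξ⟫ + ⟪D₂ ζ, ζ⟫ := by
    intro ξ ζ
    have e1 : F1.comp D = D₁.comp F1 :=
      (F1.hasFDerivAt.comp z hD).unique (HasFDerivAt.comp z hD₁ F1.hasFDerivAt)
    have e2 : F2.comp D = D₂.comp F2 :=
      (F2.hasFDerivAt.comp z hD).unique (HasFDerivAt.comp z hD₂ F2.hasFDerivAt)
    have e3 : (D (pr ξ ζ)).fst = D₁ ξ := by
      simpa [F1] using congrArg (fun L : E2 E →L[ℝ] E => L (pr ξ ζ)) e1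
    have e4 : (D (pr ξ ζ)).snd = D₂ ζ := by
      simpa [F2] using congrArg (fun L : E2 E →L[ℝ] E => L (pr ξ ζ)) e2
    rw [inner_E2, e3, e4]
    rfl
  have hquad : ∀ ξ ζ : E, ⟪D₁ ξ, ξ⟫ + ⟪D₂ ζ, ζ⟫ ≤
      ⟪T (pr ξ ζ), pr ξ ζ⟫ + 7 * η' * (‖ξ‖ ^ 2 + ‖ζ‖ ^ 2) := by
    intro ξ ζ
    have h1 := hDle (pr ξ ζ)
    have h3 : ⟪T' (pr ξ ζ), pr ξ ζ⟫ = ⟪T (pr ξ ζ), pr ξ ζ⟫ + 6 * η' * ‖pr ξ ζ‖ ^ 2 := by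
      rw [← real_inner_self_eq_norm_sq]
      simp [T', inner_add_left, inner_smul_left]
    have h4 : ‖pr ξ ζ‖ ^ 2 = ‖ξ‖ ^ 2 + ‖ζ‖ ^ 2 := normsq_E2 _
    rw [h3, hsplit, h4] at h1
    linarith
  have hTb : ∀ ξ ζ : E, ⟪T (pr ξ ζ), pr ξ ζ⟫ ≤ ‖T‖ * (‖ξ‖ ^ 2 + ‖ζ‖ ^ 2) := by
    intro ξ ζ
    have h4 : ‖pr ξ ζ‖ ^ 2 = ‖ξ‖ ^ 2 + ‖ζ‖ ^ 2 := normsq_E2 _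
    rw [← h4]
    calc _ ≤ ‖T (pr ξ ζ)‖ * ‖pr ξ ζ‖ := real_inner_le_norm _ _
      _ ≤ ‖T‖ * ‖pr ξ ζ‖ * ‖pr ξ ζ‖ := by gcongr; exact T.le_opNorm _
      _ = _ := by ring
  have h3c : ‖T‖ + 7 * η' ≤ 3 * c := by
    have : 0 ≤ ‖T‖ ^ 2 / η' := by positivity
    simp only [c]; nlinarith [norm_nonneg T]
  obtain ⟨x, hxK, hx, hux, hjx⟩ := htr₁ z.fst D₁ (hz1.trans_le hεr) hD₁ (by
    intro h
    have h1 := hquad h 0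
    have h2 := hTb h 0
    have h3 := mul_le_mul_of_nonneg_right h3c (sq_nonneg ‖h‖)
    simp only [map_zero, inner_zero_left, norm_zero] at h1 h2
    nlinarith)
  obtain ⟨y, hyK, hy, huy, hjy⟩ := htr₂ z.snd D₂ (hz2.trans_le hεr) hD₂ (by
    intro h
    have h1 := hquad 0 h
    have h2 := hTb 0 h
    have h3 := mul_le_mul_of_nonneg_right h3c (sq_nonneg ‖h‖)
    simp only [map_zero, inner_zero_left, norm_zero] at h1 h2
    nlinarith)
  have hval : ∀ (f : ℝ) (p d e : E), ‖d‖ ≤ 4 * ‖e‖ → ‖e‖ < ε → ‖p‖ ≤ ‖p₁‖ + ‖p₂‖ →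
      |f - ⟪p, d⟫| ≤ 24 * c * ‖e‖ ^ 2 → |f| ≤ 7 * η' := by
    intro f p d e hd he hp hf
    have h1 := abs_real_inner_le_norm p d
    have h2 : |f| ≤ |f - ⟪p, d⟫| + |⟪p, d⟫| := by
      have := abs_add_le (f - ⟪p, d⟫) ⟪p, d⟫
      simpa using this
    have h3 : ‖p‖ * ‖d‖ ≤ (‖p₁‖ + ‖p₂‖) * (4 * ε) := by
      gcongr; linarith
    have h4 : ‖e‖ ^ 2 ≤ 1 * ε := by nlinarith [norm_nonneg e]
    have h5 : 24 * c * ‖e‖ ^ 2 ≤ 24 * c * (1 * ε) := by gcongr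
    have h6 : (4 + 12 * c) * ε ≥ 0 := by positivity
    have : B * ε = (4 + 12 * c) * ε + 24 * c * (1 * ε) + (‖p₁‖ + ‖p₂‖) * (4 * ε) := by
      simp only [B]; ring
    linarith
  have h4ε : 4 * ε ≤ 7 * η' := by
    have : 0 ≤ (12 * c + 24 * c + 4 * ‖p₁‖ + 4 * ‖p₂‖) * ε := by positivity
    simp only [B] at hεB; nlinarith
  have h12ε : 12 * c * ε ≤ 7 * η' := by
    have : 0 ≤ (4 + 24 * c + 4 * ‖p₁‖ + 4 * ‖p₂‖) * ε := by positivity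
    simp only [B] at hεB; nlinarith
  refine ⟨x, hxK, y, hyK, _, _, D₁, D₂, ?_, ?_, ?_, ?_, ?_, ?_, ?_, ?_, hjx, hjy, hquad⟩
  · linarith
  · linarith
  · exact hval _ _ _ _ hx hz1 (by linarith [norm_nonneg p₂]) hux
  · exact hval _ _ _ _ hy hz2 (by linarith [norm_nonneg p₁]) huy
  · rw [add_sub_cancel_left]
    exact (hg₁b _).trans ((by gcongr : 12 * c * ‖z.fst‖ ≤ 12 * c * ε).trans h12ε)
  · rw [add_sub_cancel_left]
    exact (hg₂b _).trans ((by gcongr : 12 * c * ‖z.snd‖ ≤ 12 * c * ε).trans h12ε)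
  · exact deriv_grad_symm (Eventually.of_forall hU₁) hD₁
  · exact deriv_grad_symm (Eventually.of_forall hU₂) hD₂

end Sums

end

/-! ### Matrices of operators -/

section

section MatTools
variable {N : ℕ}

/-- The matrix of an operator on `ℝ^N` in the standard basis (transposed; this is immaterial for
the symmetric operators considered below). -/
def mat (T : EN N →L[ℝ] EN N) : Mat N :=
  Matrix.of fun i j => ⟪T (EuclideanSpace.single i 1), EuclideanSpace.single j 1⟫

/-- Symmetry of an operator, in the form produced by second derivatives. -/
def SymOp (T : EN N →L[ℝ] EN N) : Prop := ∀ v w, ⟪T v, w⟫ = ⟪T w, v⟫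

theorem mat_add (S T : EN N →L[ℝ] EN N) : mat (S + T) = mat S + mat T := by
  ext i j; simp [mat, inner_add_left]

theorem mat_sub (S T : EN N →L[ℝ] EN N) : mat (S - T) = mat S - mat T := by
  ext i j; simp [mat, inner_sub_left]

theorem mat_neg (T : EN N →L[ℝ] EN N) : mat (-T) = -mat T := by
  ext i j; simp [mat]

theorem mat_smul (c : ℝ) (T : EN N →L[ℝ] EN N) : mat (c • T) = c • mat T := by
  ext i j; simp [mat, inner_smul_left]

theorem mat_zero : mat (0 : EN N →L[ℝ] EN N) = 0 := by
  ext i j; simp [mat]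

theorem SymOp.isSymm {T : EN N →L[ℝ] EN N} (h : SymOp T) : (mat T).IsSymm := by
  ext i j; simpa [mat] using h _ _

theorem SymOp.add {S T : EN N →L[ℝ] EN N} (h : SymOp S) (h' : SymOp T) : SymOp (S + T) := fun v w => by
  simp [inner_add_left, h v w, h' v w]

theorem SymOp.neg {T : EN N →L[ℝ] EN N} (h : SymOp T) : SymOp (-T) := fun v w => by
  simp [inner_neg_left, h v w]

theorem SymOp.smul {T : EN N →L[ℝ] EN N} (h : SymOp T) (c : ℝ) : SymOp (c • T) := fun v w => by
  simp [inner_smul_left, h v w]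

theorem SymOp.sub {S T : EN N →L[ℝ] EN N} (h : SymOp S) (h' : SymOp T) : SymOp (S - T) := fun v w => by
  simp [inner_sub_left, h v w, h' v w]

theorem SymOp.id : SymOp (ContinuousLinearMap.id ℝ (EN N)) := fun v w => by
  simp [real_inner_comm]

theorem mat_apply_vec (T : EN N →L[ℝ] EN N) (h : SymOp T) :
    LinearMap.toContinuousLinearMap (Matrix.toEuclideanLin (mat T)) = T := by
  ext v i
  have e : v = ∑ j, v j • EuclideanSpace.single j (1 : ℝ) := by
    ext k; simp [Finset.sum_apply, Pi.single_apply]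
  simp only [LinearMap.coe_toContinuousLinearMap', Matrix.toLpLin_apply, Matrix.mulVec,
    dotProduct, mat, Matrix.of_apply]
  have h2 : T v i = ⟪T v, EuclideanSpace.single i 1⟫ := by
    simp [EuclideanSpace.inner_single_right]
  rw [h2, h v]
  conv_rhs => rw [e, inner_sum]
  simp only [inner_smul_right]
  exact Finset.sum_congr rfl fun j _ => by ring

theorem matNorm_mat {T : EN N →L[ℝ] EN N} (h : SymOp T) : matNorm (mat T) = ‖T‖ := by
  rw [matNorm, mat_apply_vec T h]

theorem inner_mat (T : EN N →L[ℝ] EN N) (h : SymOp T) (v : EN N) :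
    ⟪T v, v⟫ = ∑ i, ∑ j, v i * (mat T i j * v j) := by
  conv_lhs => rw [← mat_apply_vec T h]
  simp only [LinearMap.coe_toContinuousLinearMap', Matrix.toLpLin_apply, Matrix.mulVec,
    dotProduct, PiLp.inner_apply, Finset.mul_sum]
  simp [Finset.mul_sum]

theorem mat_posSemidef {T : EN N →L[ℝ] EN N} (h : SymOp T) (hp : ∀ v, 0 ≤ ⟪T v, v⟫) :
    (mat T).PosSemidef := by
  refine Matrix.PosSemidef.of_dotProduct_mulVec_nonneg ?_ fun x => ?_
  · have := h.isSymm
    rw [Matrix.IsHermitian, Matrix.conjTranspose_eq_transpose_of_trivial]; exact this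
  · have := hp (WithLp.toLp 2 x)
    rw [inner_mat T h] at this
    simpa [dotProduct, Matrix.mulVec, Finset.mul_sum] using this

theorem trace_mat_le (T : EN N →L[ℝ] EN N) : (mat T).trace ≤ N * ‖T‖ := by
  have : ∀ i, mat T i i ≤ ‖T‖ := fun i => by
    simp only [mat, Matrix.of_apply]
    refine (real_inner_le_norm _ _).trans ?_
    have := T.le_opNorm (EuclideanSpace.single i 1)
    simp only [PiLp.norm_single, norm_one, mul_one] at this ⊢
    exact this
  calc (mat T).trace = ∑ i, mat T i i := rfl
    _ ≤ ∑ _i : Fin N, ‖T‖ := Finset.sum_le_sum fun i _ => this i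
    _ = N * ‖T‖ := by simp

theorem trace_mat_id : (mat (ContinuousLinearMap.id ℝ (EN N))).trace = N := by
  simp [Matrix.trace, mat, EuclideanSpace.inner_single_left]

theorem inner_le_trace {T : EN N →L[ℝ] EN N} (h : SymOp T) (hp : ∀ v, 0 ≤ ⟪T v, v⟫) (v : EN N) :
    ⟪T v, v⟫ ≤ (mat T).trace * ‖v‖ ^ 2 := by
  obtain ⟨n, B, hB⟩ := Matrix.posSemidef_iff_eq_sum_vecMulVec.1 (mat_posSemidef h hp)
  have e1 : ⟪T v, v⟫ = ∑ k, (∑ i, B k i * v i) ^ 2 := by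
    rw [inner_mat T h, hB]
    simp only [Matrix.sum_apply, Matrix.vecMulVec_apply, star_trivial, pow_two,
      Finset.sum_mul_sum]
    simp only [Finset.sum_mul, Finset.mul_sum]
    calc _ = ∑ i, ∑ k, ∑ j, v i * (B k i * B k j * v j) :=
          Finset.sum_congr rfl fun i _ => Finset.sum_comm
      _ = ∑ k, ∑ i, ∑ j, v i * (B k i * B k j * v j) := Finset.sum_comm
      _ = _ := by
        refine Finset.sum_congr rfl fun k _ => Finset.sum_congr rfl fun i _ =>
          Finset.sum_congr rfl fun j _ => by ring
  have e2 : (mat T).trace = ∑ k, ∑ i, B k i ^ 2 := by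
    rw [hB, Matrix.trace]
    simp only [Matrix.diag_apply, Matrix.sum_apply, Matrix.vecMulVec_apply, star_trivial]
    rw [Finset.sum_comm]
    exact Finset.sum_congr rfl fun k _ => Finset.sum_congr rfl fun i _ => by ring
  have e3 : ‖v‖ ^ 2 = ∑ i, v i ^ 2 := by simp [EuclideanSpace.norm_sq_eq]
  rw [e1, e2, e3, Finset.sum_mul]
  exact Finset.sum_le_sum fun k _ => Finset.sum_mul_sq_le_sq_mul_sq _ _ _

theorem trace_nonneg_of_psd {T : EN N →L[ℝ] EN N} (hp : ∀ v, 0 ≤ ⟪T v, v⟫) :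
    0 ≤ (mat T).trace :=
  Finset.sum_nonneg fun i _ => hp _

/-- A symmetric operator is bounded by its quadratic form. -/
theorem SymOp.norm_le {T : EN N →L[ℝ] EN N} (h : SymOp T) {M : ℝ} (hM : 0 ≤ M)
    (hq : ∀ v, |⟪T v, v⟫| ≤ M * ‖v‖ ^ 2) : ‖T‖ ≤ M := by
  refine T.opNorm_le_bound hM fun x => ?_
  by_cases hx : T x = 0
  · rw [hx, norm_zero]; positivity
  have hTx : 0 < ‖T x‖ := norm_pos_iff.2 hx
  set y : EN N := (‖x‖ / ‖T x‖) • T x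
  have hy : ‖y‖ = ‖x‖ := by
    simp only [y, norm_smul, norm_div, norm_norm]; field_simp
  have e : 4 * ⟪T x, y⟫ = ⟪T (x + y), x + y⟫ - ⟪T (x - y), x - y⟫ := by
    simp only [map_add, map_sub, inner_add_left, inner_add_right, inner_sub_left, inner_sub_right]
    rw [h y x]; ring
  have h1 := (abs_le.1 (hq (x + y))).2
  have h2 := (abs_le.1 (hq (x - y))).1
  have h3 := parallelogram_law_with_norm ℝ x y
  have h4 : ⟪T x, y⟫ = ‖x‖ * ‖T x‖ := by
    simp only [y, inner_smul_right, real_inner_self_eq_norm_sq]; field_simp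
  rw [hy] at h3
  have h5 : ‖x‖ * ‖T x‖ ≤ ‖x‖ * (M * ‖x‖) := by nlinarith
  have hx0 : 0 < ‖x‖ := norm_pos_iff.2 (by rintro rfl; simp at hx)
  exact le_of_mul_le_mul_left h5 hx0

/-- Rank-one operator `v ↦ ⟪z, v⟫ z`. -/
def rk (z : EN N) : EN N →L[ℝ] EN N := (innerSL ℝ z).smulRight z

theorem rk_apply (z v : EN N) : rk z v = ⟪z, v⟫ • z := by simp [rk]

theorem rk_sym (z : EN N) : SymOp (rk z) := fun v w => by
  simp [rk_apply, inner_smul_left]; ring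

theorem rk_quad (z v : EN N) : ⟪rk z v, v⟫ = ⟪z, v⟫ ^ 2 := by
  simp [rk_apply, inner_smul_left]; ring

theorem rk_norm_le (z : EN N) : ‖rk z‖ ≤ ‖z‖ ^ 2 := by
  refine (rk z).opNorm_le_bound (by positivity) fun v => ?_
  rw [rk_apply, norm_smul]
  have := abs_real_inner_le_norm z v
  calc ‖⟪z, v⟫‖ * ‖z‖ ≤ (‖z‖ * ‖v‖) * ‖z‖ := by gcongr; exact this
    _ = _ := by ring

/-- The Hessian matrix computed from a gradient field. -/
theorem hess_eq {φ : EN N → ℝ} {g : EN N → EN N} {x : EN N} {D : EN N →L[ℝ] EN N}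
    (hg : ∀ᶠ y in 𝓝 x, HasGradientAt φ (g y) y) (hD : HasFDerivAt g D x) : hess φ x = mat D := by
  ext i j
  simp only [hess, mat, Matrix.of_apply, iteratedFDeriv_two_apply]
  have h1 : fderiv ℝ φ =ᶠ[𝓝 x] fun y => innerSL ℝ (g y) := by
    filter_upwards [hg] with y hy using hy.fderivInner.fderiv
  have h2 : HasFDerivAt (fun y => innerSL ℝ (g y)) ((innerSL ℝ).comp D) x :=
    (innerSL ℝ : EN N →L[ℝ] EN N →L[ℝ] ℝ).hasFDerivAt.comp x hD
  rw [h1.fderiv_eq, h2.fderiv]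
  simp

theorem c2_gradient {φ : EN N → ℝ} (hφ : ContDiff ℝ 2 φ) :
    (∀ y, HasGradientAt φ (gradient φ y) y) ∧ ContDiff ℝ 1 (gradient φ) := by
  have h1 : Differentiable ℝ φ := hφ.differentiable (by norm_num)
  refine ⟨fun y => (h1 y).hasGradientAt, ?_⟩
  have h2 : ContDiff ℝ 1 (fderiv ℝ φ) := hφ.fderiv_right (by norm_num)
  exact (InnerProductSpace.toDual ℝ (EN N)).symm.contDiff.comp h2

end MatTools

end

/-! ### The data of the problem -/

/-- The data of the Neumann problem together with their structural assumptions. The integer `m`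
is an exponent large enough for `|x - y|^(2m)` to be an admissible test function with vanishing
gradient: the operator applied to it tends to `0` as `x → y`. -/
structure Setup (N : ℕ) where
  Ω : Set (EN N)
  nv : EN N → EN N
  ρ : EN N → ℝ
  F : EN N → EN N → Mat N → ℝ
  b : EN N → EN N
  α : ℝ
  a : ℝ
  A : ℝ
  C₁ : ℝ
  θ : ℝ
  C₂ : ℝ
  ν : ℝ
  m : ℕ
  isOpen : IsOpen Ω
  conn : IsConnected Ω
  bdd : Bornology.IsBounded Ω
  hρ : IsC2DefiningFun Ω nv ρ
  hα : -1 < α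
  hF1 : CondF1 Ω α F
  hF2 : CondF2 Ω α a A F
  hF3 : CondF3 Ω α C₁ θ F
  hF4 : CondF4 Ω α C₂ ν F
  hb : ContinuousOn b (closure Ω)
  hm : 2 ≤ m
  hmα : 1 < (2 * (m : ℝ) - 1) * (1 + α)

namespace Setup
variable {N : ℕ} (S : Setup N)

/-- The closed domain. -/
abbrev K : Set (EN N) := closure S.Ω

/-- The principal part evaluated on an operator. -/
def Fo (x p : EN N) (T : EN N →L[ℝ] EN N) : ℝ := S.F x p (mat T)

/-- The drift term. -/
def Bo (x p : EN N) : ℝ := ⟪S.b x, p⟫ * ‖p‖ ^ S.α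

/-- Principal part plus drift. -/
def H (x p : EN N) (T : EN N →L[ℝ] EN N) : ℝ := S.Fo x p T + S.Bo x p

theorem a_pos : 0 < S.a := S.hF2.1
theorem A_pos : 0 < S.A := S.hF2.1.trans_le S.hF2.2.1
theorem θ_pos : 0 < S.θ := by have := S.hF3.2.1.1; linarith
theorem ν_pos : 0 < S.ν := by have := S.hF4.2.1.1; linarith
theorem isCompact_K : IsCompact S.K := S.bdd.isCompact_closure

variable {S}
variable {x y p q : EN N} {X Y P : EN N →L[ℝ] EN N}

theorem Fo_hom (hx : x ∈ S.K) (hp : p ≠ 0) (hX : SymOp X) {t μ : ℝ} (ht : t ≠ 0) (hμ : 0 ≤ μ) :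
    S.Fo x (t • p) (μ • X) = |t| ^ S.α * μ * S.Fo x p X := by
  rw [Fo, mat_smul]; exact S.hF1 x hx t ht μ hμ p hp _ hX.isSymm

theorem Fo_neg (hx : x ∈ S.K) (hp : p ≠ 0) (hX : SymOp X) : S.Fo x (-p) X = S.Fo x p X := by
  have := Fo_hom hx hp hX (t := -1) (μ := 1) (by norm_num) zero_le_one
  simpa using this

theorem smul_zero_op (T : EN N →L[ℝ] EN N) : (0 : ℝ) • T = 0 := zero_smul ℝ T

theorem Fo_zero (hx : x ∈ S.K) (hp : p ≠ 0) : S.Fo x p 0 = 0 := by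
  have := Fo_hom hx hp (SymOp.id) (t := 1) (μ := 0) (by norm_num) le_rfl
  rw [smul_zero_op] at this
  simpa using this

/-- Ellipticity in the form used for comparing two Hessians: if `X + P = Y + ε I` with `P ≥ 0`
then `F(X) - F(Y)` is at most `-a tr P + A N ε`, up to the factor `|p|^α`. -/
theorem Fo_sub_le (hx : x ∈ S.K) (hp : p ≠ 0) (hX : SymOp X) (hY : SymOp Y) (hP : SymOp P)
    (hP0 : ∀ v, 0 ≤ ⟪P v, v⟫) {ε : ℝ} (hε : 0 ≤ ε)
    (he : X + P = Y + ε • ContinuousLinearMap.id ℝ (EN N)) :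
    S.Fo x p X - S.Fo x p Y ≤ ‖p‖ ^ S.α * (S.A * N * ε - S.a * (mat P).trace) := by
  have h1 := (S.hF2.2.2 x hx p hp (mat X) (mat P) hX.isSymm (mat_posSemidef hP hP0)).1
  have h2 := (S.hF2.2.2 x hx p hp (mat Y) (mat (ε • ContinuousLinearMap.id ℝ (EN N))) hY.isSymm
    (mat_posSemidef (SymOp.id.smul ε) (fun v => by
      simp only [_root_.smul_apply, ContinuousLinearMap.id_apply, inner_smul_left, conj_trivial]
      exact mul_nonneg hε real_inner_self_nonneg))).2
  rw [← mat_add] at h1 h2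
  rw [← he] at h2
  have h3 : (mat (ε • ContinuousLinearMap.id ℝ (EN N))).trace = ε * N := by
    rw [mat_smul, Matrix.trace_smul, trace_mat_id, smul_eq_mul]
  rw [h3] at h2
  simp only [Fo]
  linear_combination h1 + h2

theorem Fo_sub_le_norm (hx : x ∈ S.K) (hp : p ≠ 0) (hX : SymOp X) (hY : SymOp Y) :
    S.Fo x p X - S.Fo x p Y ≤ S.A * N * ‖p‖ ^ S.α * ‖X - Y‖ := by
  have hP0 : ∀ v, 0 ≤ ⟪(Y - X + ‖X - Y‖ • ContinuousLinearMap.id ℝ (EN N)) v, v⟫ := fun v => by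
    have h1 := real_inner_le_norm ((X - Y) v) v
    have h2 : ‖(X - Y) v‖ * ‖v‖ ≤ ‖X - Y‖ * ‖v‖ * ‖v‖ := by
      gcongr; exact (X - Y).le_opNorm v
    simp only [_root_.add_apply, _root_.sub_apply, _root_.smul_apply,
      ContinuousLinearMap.id_apply, inner_add_left, inner_sub_left, inner_smul_left, conj_trivial,
      real_inner_self_eq_norm_sq] at h1 h2 ⊢
    nlinarith
  have h := Fo_sub_le hx hp hX hY ((hY.sub hX).add (SymOp.id.smul ‖X - Y‖)) hP0
    (norm_nonneg (X - Y)) (by abel)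
  have ht := trace_nonneg_of_psd hP0
  have := mul_nonneg (mul_nonneg (Real.rpow_nonneg (norm_nonneg p) S.α) S.a_pos.le) ht
  linarith

theorem Fo_lip (hx : x ∈ S.K) (hp : p ≠ 0) (hX : SymOp X) (hY : SymOp Y) :
    |S.Fo x p X - S.Fo x p Y| ≤ S.A * N * ‖p‖ ^ S.α * ‖X - Y‖ := by
  rw [abs_le]
  have h1 := Fo_sub_le_norm hx hp hX hY
  have h2 := Fo_sub_le_norm hx hp hY hX
  rw [norm_sub_rev] at h2
  constructor <;> linarith

theorem Fo_abs (hx : x ∈ S.K) (hp : p ≠ 0) (hX : SymOp X) :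
    |S.Fo x p X| ≤ S.A * N * ‖p‖ ^ S.α * ‖X‖ := by
  have h0 : SymOp (0 : EN N →L[ℝ] EN N) := fun v w => by simp
  have := Fo_lip hx hp hX h0
  simpa [Fo_zero hx hp] using this

theorem Fo_lip_x (hx : x ∈ S.K) (hy : y ∈ S.K) (hp : p ≠ 0) (hX : SymOp X) :
    |S.Fo x p X - S.Fo y p X| ≤ S.C₁ * ‖x - y‖ ^ S.θ * ‖p‖ ^ S.α * ‖X‖ := by
  have := S.hF3.2.2 x hx y hy p hp (mat X) hX.isSymm
  rwa [matNorm_mat hX] at this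

theorem Fo_lip_p (hx : x ∈ S.K) (hp : p ≠ 0) (hq : ‖q - p‖ ≤ ‖p‖ / 2) (hX : SymOp X) :
    |S.Fo x q X - S.Fo x p X| ≤ S.C₂ * ‖p‖ ^ (S.α - S.ν) * ‖q - p‖ ^ S.ν * ‖X‖ := by
  have := S.hF4.2.2 x hx p hp (q - p) hq (mat X) hX.isSymm
  rw [matNorm_mat hX] at this
  simpa [Fo] using this

theorem continuous_norm_rpow_smul {α : ℝ} (hα : -1 < α) :
    Continuous fun p : EN N => ‖p‖ ^ α • p := by
  rw [continuous_iff_continuousAt]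
  intro p
  by_cases hp : p = 0
  · subst hp
    rw [ContinuousAt, smul_zero, tendsto_zero_iff_norm_tendsto_zero]
    have h1 : Tendsto (fun p : EN N => ‖p‖ ^ (α + 1)) (𝓝 0) (𝓝 0) := by
      have : ContinuousAt (fun p : EN N => ‖p‖ ^ (α + 1)) 0 :=
        continuous_norm.continuousAt.rpow_const (Or.inr (by linarith))
      have h2 : (‖(0 : EN N)‖ ^ (α + 1) : ℝ) = 0 := by
        rw [norm_zero, Real.zero_rpow (by linarith)]
      rw [ContinuousAt, h2] at this; exact this
    refine h1.congr fun p => ?_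
    rw [norm_smul, Real.norm_of_nonneg (Real.rpow_nonneg (norm_nonneg _) _)]
    by_cases hp : p = 0
    · subst hp; rw [norm_zero, Real.zero_rpow (by linarith)]; simp
    · rw [Real.rpow_add_one (norm_ne_zero_iff.2 hp)]
  · exact (continuous_norm.continuousAt.rpow_const (Or.inl (norm_ne_zero_iff.2 hp))).smul
      continuousAt_id

theorem Bo_continuousOn : ContinuousOn (fun z : EN N × EN N => S.Bo z.1 z.2) (S.K ×ˢ univ) := by
  have e : (fun z : EN N × EN N => S.Bo z.1 z.2) =
      fun z => ⟪S.b z.1, ‖z.2‖ ^ S.α • z.2⟫ := by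
    funext z; simp only [Bo, inner_smul_right]; ring
  rw [e]
  refine ContinuousOn.inner (𝕜 := ℝ) ?_ ?_
  · exact S.hb.comp continuousOn_fst fun z hz => hz.1
  · exact ((continuous_norm_rpow_smul S.hα).comp continuous_snd).continuousOn

theorem Bo_abs (x : EN N) (hp : p ≠ 0) : |S.Bo x p| ≤ ‖S.b x‖ * ‖p‖ ^ (1 + S.α) := by
  rw [Bo, abs_mul, abs_of_nonneg (Real.rpow_nonneg (norm_nonneg _) _),
    Real.rpow_add (norm_pos_iff.2 hp), Real.rpow_one, ← mul_assoc]
  gcongr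
  exact abs_real_inner_le_norm _ _

theorem exists_b_bound (S : Setup N) : ∃ B > 0, ∀ x ∈ S.K, ‖S.b x‖ ≤ B := by
  obtain ⟨B, hB⟩ := S.isCompact_K.exists_bound_of_continuousOn S.hb
  exact ⟨max B 1, by positivity, fun x hx => (hB x hx).trans (le_max_left _ _)⟩

theorem H_abs {Bb : ℝ} (hB : ∀ x ∈ S.K, ‖S.b x‖ ≤ Bb) (hx : x ∈ S.K) (hp : p ≠ 0)
    (hX : SymOp X) : |S.H x p X| ≤ ‖p‖ ^ S.α * (S.A * N * ‖X‖ + Bb * ‖p‖) := by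
  have h1 := Fo_abs hx hp hX
  have h2 := Bo_abs (S := S) x hp
  rw [Real.rpow_add (norm_pos_iff.2 hp), Real.rpow_one] at h2
  have h3 : ‖S.b x‖ * (‖p‖ * ‖p‖ ^ S.α) ≤ Bb * (‖p‖ * ‖p‖ ^ S.α) := by
    have := hB x hx; gcongr
  rw [H]
  have := abs_add_le (S.Fo x p X) (S.Bo x p)
  linarith

theorem H_hom (hx : x ∈ S.K) (hp : p ≠ 0) (hX : SymOp X) {t : ℝ} (ht : 0 < t) :
    S.H x (t • p) (t • X) = t ^ (1 + S.α) * S.H x p X := by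
  rw [H, H, Fo_hom hx hp hX ht.ne' ht.le, Bo, Bo, inner_smul_right, norm_smul,
    Real.norm_of_nonneg ht.le, Real.mul_rpow ht.le (norm_nonneg _), abs_of_pos ht,
    Real.rpow_add ht, Real.rpow_one]
  ring

theorem H_mono (hx : x ∈ S.K) (hp : p ≠ 0) (hX : SymOp X) (hY : SymOp Y)
    (h : ∀ v, ⟪X v, v⟫ ≤ ⟪Y v, v⟫) : S.H x p X ≤ S.H x p Y := by
  have hP0 : ∀ v, 0 ≤ ⟪(Y - X) v, v⟫ := fun v => by
    rw [_root_.sub_apply, inner_sub_left]; linarith [h v]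
  have h1 := Fo_sub_le hx hp hX hY (hY.sub hX) hP0 le_rfl (by rw [smul_zero_op]; abel)
  have ht := trace_nonneg_of_psd hP0
  have := mul_nonneg (mul_nonneg (Real.rpow_nonneg (norm_nonneg p) S.α) S.a_pos.le) ht
  rw [H, H]; linarith

/-- Joint continuity of the operator away from vanishing gradients. -/
theorem H_tendsto {ι : Type*} {l : Filter ι} {xs ps : ι → EN N} {Xs : ι → EN N →L[ℝ] EN N}
    (hx : x ∈ S.K) (hxs : ∀ᶠ i in l, xs i ∈ S.K) (hxl : Tendsto xs l (𝓝 x)) (hp : p ≠ 0)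
    (hpl : Tendsto ps l (𝓝 p)) (hX : SymOp X) (hXs : ∀ᶠ i in l, SymOp (Xs i))
    (hXl : Tendsto Xs l (𝓝 X)) :
    Tendsto (fun i => S.H (xs i) (ps i) (Xs i)) l (𝓝 (S.H x p X)) := by
  have hB : Tendsto (fun i => S.Bo (xs i) (ps i)) l (𝓝 (S.Bo x p)) := by
    have h1 : Tendsto (fun z : EN N × EN N => S.Bo z.1 z.2) (𝓝[S.K ×ˢ univ] (x, p))
        (𝓝 (S.Bo x p)) := (Bo_continuousOn (S := S)) (x, p) ⟨hx, mem_univ _⟩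
    exact h1.comp (f := fun i => (xs i, ps i)) (tendsto_nhdsWithin_iff.2 ⟨hxl.prodMk_nhds hpl,
      hxs.mono fun i hi => ⟨hi, mem_univ _⟩⟩)
  refine Tendsto.add ?_ hB
  have hpn : 0 < ‖p‖ := norm_pos_iff.2 hp
  have hpe : ∀ᶠ i in l, ‖ps i - p‖ ≤ ‖p‖ / 2 := by
    have := (tendsto_iff_norm_sub_tendsto_zero.1 hpl).eventually (gt_mem_nhds (half_pos hpn))
    filter_upwards [this] with i hi using hi.le
  rw [tendsto_iff_norm_sub_tendsto_zero]
  have hlim : Tendsto (fun i => S.A * N * ‖ps i‖ ^ S.α * ‖Xs i - X‖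
      + S.C₂ * ‖p‖ ^ (S.α - S.ν) * ‖ps i - p‖ ^ S.ν * ‖X‖
      + S.C₁ * ‖xs i - x‖ ^ S.θ * ‖p‖ ^ S.α * ‖X‖) l (𝓝 (S.A * N * ‖p‖ ^ S.α * 0
      + S.C₂ * ‖p‖ ^ (S.α - S.ν) * 0 ^ S.ν * ‖X‖
      + S.C₁ * 0 ^ S.θ * ‖p‖ ^ S.α * ‖X‖)) := by
    refine Tendsto.add (Tendsto.add ?_ ?_) ?_
    · exact (tendsto_const_nhds.mul (hpl.norm.rpow_const (Or.inl hpn.ne'))).mul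
        (tendsto_iff_norm_sub_tendsto_zero.1 hXl)
    · exact (tendsto_const_nhds.mul ((tendsto_iff_norm_sub_tendsto_zero.1 hpl).rpow_const
        (Or.inr S.ν_pos.le))).mul tendsto_const_nhds
    · exact ((tendsto_const_nhds.mul ((tendsto_iff_norm_sub_tendsto_zero.1 hxl).rpow_const
        (Or.inr S.θ_pos.le))).mul tendsto_const_nhds).mul tendsto_const_nhds
  rw [Real.zero_rpow S.ν_pos.ne', Real.zero_rpow S.θ_pos.ne'] at hlim
  simp only [mul_zero, zero_mul, add_zero] at hlim
  refine squeeze_zero' (Eventually.of_forall fun _ => norm_nonneg _) ?_ hlim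
  filter_upwards [hxs, hpe, hXs] with i h1 h2 h3
  have hpi : ps i ≠ 0 := by
    intro h0; rw [h0, zero_sub, norm_neg] at h2; linarith
  have e1 := Fo_lip h1 hpi h3 hX
  have e2 := Fo_lip_p h1 hp h2 hX
  have e3 := Fo_lip_x h1 hx hp hX
  rw [Real.norm_eq_abs]
  have t1 := abs_sub_le (S.Fo (xs i) (ps i) (Xs i)) (S.Fo (xs i) (ps i) X) (S.Fo x p X)
  have t2 := abs_sub_le (S.Fo (xs i) (ps i) X) (S.Fo (xs i) p X) (S.Fo x p X)
  linarith

/-! ### The two-point estimate for the operator -/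

/-- If two Hessians satisfy the inequality produced by doubling variables with a penalization of
Hessian size `β`, then `Y` is controlled by `tr (Y - X + 2ε)` and only a small multiple of `β`. -/
theorem norm_le_of_doubling (hX : SymOp X) (hY : SymOp Y) {β ε t : ℝ} (hβ : 0 ≤ β) (hε : 0 ≤ ε)
    (ht : 0 < t)
    (hXY : ∀ ξ ζ, ⟪X ξ, ξ⟫ - ⟪Y ζ, ζ⟫ ≤ β * ‖ξ - ζ‖ ^ 2 + ε * (‖ξ‖ ^ 2 + ‖ζ‖ ^ 2))
    (hP : P = Y - X + (2 * ε) • ContinuousLinearMap.id ℝ (EN N)) (hP0 : ∀ v, 0 ≤ ⟪P v, v⟫) :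
    ‖Y‖ ≤ (β + ε + (mat P).trace) * t + ((mat P).trace + ε) / t := by
  set τ := (mat P).trace
  have hPs : SymOp P := by rw [hP]; exact (hY.sub hX).add (SymOp.id.smul _)
  have hτ : 0 ≤ τ := trace_nonneg_of_psd hP0
  refine Y.opNorm_le_bound (by positivity) fun ζ => ?_
  by_cases hY0 : Y ζ = 0
  · rw [hY0, norm_zero]; positivity
  have hYn : 0 < ‖Y ζ‖ := norm_pos_iff.2 hY0
  have hζn : 0 < ‖ζ‖ := norm_pos_iff.2 (by rintro rfl; simp at hY0)
  set h : EN N := (t * ‖ζ‖ / ‖Y ζ‖) • Y ζ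
  have hh : ‖h‖ = t * ‖ζ‖ := by
    rw [norm_smul, Real.norm_of_nonneg (by positivity)]; field_simp
  have hYh : ⟪Y ζ, h⟫ = t * ‖ζ‖ * ‖Y ζ‖ := by
    rw [inner_smul_right, real_inner_self_eq_norm_sq]; field_simp
  have e1 := hXY (ζ + h) ζ
  have e2 := hXY 0 h
  have e3 := inner_le_trace hPs hP0 (ζ + h)
  have e4 : ⟪P (ζ + h), ζ + h⟫ = ⟪Y ζ, ζ⟫ + 2 * ⟪Y ζ, h⟫ + ⟪Y h, h⟫ - ⟪X (ζ + h), ζ + h⟫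
      + 2 * ε * ‖ζ + h‖ ^ 2 := by
    rw [hP]
    simp only [_root_.add_apply, _root_.sub_apply, _root_.smul_apply,
      ContinuousLinearMap.id_apply, inner_add_left (_ - _), inner_sub_left, inner_smul_left,
      conj_trivial, real_inner_self_eq_norm_sq]
    rw [map_add Y, inner_add_left (Y ζ), inner_add_right, inner_add_right, hY h ζ]
    ring
  rw [add_sub_cancel_left, hh] at e1
  simp only [map_zero, inner_zero_left, zero_sub, norm_neg, norm_zero, hh] at e2
  have h5 : ‖ζ + h‖ ^ 2 ≤ 2 * ‖ζ‖ ^ 2 + 2 * (t * ‖ζ‖) ^ 2 := by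
    have h4 : ‖ζ + h‖ ^ 2 ≤ (‖ζ‖ + ‖h‖) ^ 2 := by gcongr; exact norm_add_le _ _
    rw [hh] at h4
    nlinarith [sq_nonneg (‖ζ‖ - t * ‖ζ‖)]
  have h6 := mul_le_mul_of_nonneg_left h5 hτ
  have h7 : 0 ≤ ε * ‖ζ + h‖ ^ 2 := by positivity
  rw [hYh] at e4
  have h8 : 2 * (t * ‖ζ‖ * ‖Y ζ‖) ≤
      2 * (t * ‖ζ‖ * (((β + ε + τ) * t + (τ + ε) / t) * ‖ζ‖)) := by
    have e : 2 * (t * ‖ζ‖ * (((β + ε + τ) * t + (τ + ε) / t) * ‖ζ‖)) =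
        2 * (β + ε + τ) * (t * ‖ζ‖) ^ 2 + 2 * (τ + ε) * ‖ζ‖ ^ 2 := by
      field_simp
    rw [e]
    nlinarith [mul_nonneg hε (sq_nonneg (t * ‖ζ‖)), mul_nonneg hε (sq_nonneg ‖ζ‖)]
  have : 0 < t * ‖ζ‖ := by positivity
  exact le_of_mul_le_mul_left (by linarith) this

/-- The constant of the two-point estimate. -/
def Cc (S : Setup N) : ℝ := 4 * (S.C₁ + S.C₂) ^ 2 / S.a + 2 * S.A * N + S.a

theorem Cc_pos : 0 < S.Cc := by
  have := S.a_pos; have := S.A_pos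
  unfold Cc; positivity

/-- The two-point estimate: the Hölder errors in `x` and `p` are absorbed by ellipticity. -/
theorem core (hx : x ∈ S.K) (hy : y ∈ S.K) (hp : p ≠ 0) {κ ω β ε G : ℝ} (hκ0 : 0 ≤ κ)
    (hκ : κ ≤ 1 / 2) (hpq : ‖q - p‖ ≤ κ * ‖p‖) (hω : 0 ≤ ω) (hω1 : ‖x - y‖ ^ S.θ ≤ ω)
    (hω2 : κ ^ S.ν ≤ ω)
    (hω3 : (S.C₁ + S.C₂) * ω ≤ S.a / 4) (hX : SymOp X) (hY : SymOp Y) (hβ : 0 ≤ β) (hε : 0 ≤ ε)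
    (hXY : ∀ ξ ζ, ⟪X ξ, ξ⟫ - ⟪Y ζ, ζ⟫ ≤ β * ‖ξ - ζ‖ ^ 2 + ε * (‖ξ‖ ^ 2 + ‖ζ‖ ^ 2))
    (hG : G ≤ 0 ∨ ∃ e : EN N, ‖e‖ = 1 ∧ ⟪X e, e⟫ - ⟪Y e, e⟫ ≤ -G) :
    S.Fo x p X - S.Fo y q Y ≤ ‖p‖ ^ S.α * (S.Cc * (ω ^ 2 * β + ε) - S.a / 2 * G) := by
  have ha := S.a_pos
  have hA := S.A_pos
  have hC₁ := S.hF3.1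
  have hC₂ := S.hF4.1
  set P : EN N →L[ℝ] EN N := Y - X + (2 * ε) • ContinuousLinearMap.id ℝ (EN N) with hPdef
  have hPs : SymOp P := (hY.sub hX).add (SymOp.id.smul _)
  have hPq : ∀ v, ⟪P v, v⟫ = ⟪Y v, v⟫ - ⟪X v, v⟫ + 2 * ε * ‖v‖ ^ 2 := fun v => by
    simp only [P, _root_.add_apply, _root_.sub_apply, _root_.smul_apply,
      ContinuousLinearMap.id_apply, inner_add_left, inner_sub_left, inner_smul_left,
      conj_trivial, real_inner_self_eq_norm_sq]
  have hP0 : ∀ v, 0 ≤ ⟪P v, v⟫ := fun v => by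
    have := hXY v v
    rw [sub_self, norm_zero] at this
    rw [hPq]; linarith
  set τ := (mat P).trace with hτdef
  have hτ : 0 ≤ τ := trace_nonneg_of_psd hP0
  have hτG : G ≤ τ := by
    rcases hG with h | ⟨e, he, h⟩
    · exact h.trans hτ
    · have h1 := inner_le_trace hPs hP0 e
      rw [he, hPq, he] at h1
      have : 0 ≤ ε := hε
      linarith
  have hpn : 0 < ‖p‖ := norm_pos_iff.2 hp
  have hpa : 0 < ‖p‖ ^ S.α := Real.rpow_pos_of_pos hpn _
  have f1 := Fo_sub_le hx hp hX hY hPs hP0 (ε := 2 * ε) (by positivity) (by rw [hPdef]; abel)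
  have f2 := (abs_le.1 (Fo_lip_x hx hy hp hY)).2
  have f3 := (abs_le.1 (Fo_lip_p hy hp (q := q) (hpq.trans (by nlinarith)) hY)).1
  have f4 : S.C₁ * ‖x - y‖ ^ S.θ * ‖p‖ ^ S.α * ‖Y‖ ≤ ‖p‖ ^ S.α * (S.C₁ * ω * ‖Y‖) := by
    calc _ ≤ S.C₁ * ω * ‖p‖ ^ S.α * ‖Y‖ := by gcongr
      _ = _ := by ring
  have f5 : S.C₂ * ‖p‖ ^ (S.α - S.ν) * ‖q - p‖ ^ S.ν * ‖Y‖ ≤ ‖p‖ ^ S.α * (S.C₂ * ω * ‖Y‖) := by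
    have e1 : ‖q - p‖ ^ S.ν ≤ κ ^ S.ν * ‖p‖ ^ S.ν := by
      rw [← Real.mul_rpow hκ0 hpn.le]
      exact Real.rpow_le_rpow (norm_nonneg _) hpq S.ν_pos.le
    have e2 : ‖q - p‖ ^ S.ν ≤ ω * ‖p‖ ^ S.ν := e1.trans (by gcongr)
    calc _ ≤ S.C₂ * ‖p‖ ^ (S.α - S.ν) * (ω * ‖p‖ ^ S.ν) * ‖Y‖ := by gcongr
      _ = (‖p‖ ^ (S.α - S.ν) * ‖p‖ ^ S.ν) * (S.C₂ * ω * ‖Y‖) := by ring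
      _ = _ := by rw [← Real.rpow_add hpn, sub_add_cancel]
  -- the Hölder errors, bounded through the two-point control of `‖Y‖`
  have f6 : (S.C₁ + S.C₂) * ω * ‖Y‖ ≤
      4 * (S.C₁ + S.C₂) ^ 2 / S.a * (ω ^ 2 * β) + S.a / 2 * (ε + τ) := by
    set D := S.C₁ + S.C₂
    have hD : 0 < D := by positivity
    rcases hω.eq_or_lt with h0 | h0
    · rw [← h0]; simp only [mul_zero, zero_mul]; positivity
    have ht : 0 < 4 * D * ω / S.a := by positivity
    have g1 := norm_le_of_doubling hX hY hβ hε ht hXY hPdef hP0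
    have g2 : D * ω * ‖Y‖ ≤ D * ω * ((β + ε + τ) * (4 * D * ω / S.a) +
        (τ + ε) / (4 * D * ω / S.a)) := by gcongr
    have g3 : D * ω * ((β + ε + τ) * (4 * D * ω / S.a) + (τ + ε) / (4 * D * ω / S.a)) =
        4 * D ^ 2 / S.a * (ω ^ 2 * β) + 4 * (D * ω) ^ 2 / S.a * (ε + τ)
          + S.a / 4 * (τ + ε) := by
      field_simp
      ring
    have g4 : 4 * (D * ω) ^ 2 / S.a ≤ S.a / 4 := by
      rw [div_le_iff₀ ha]
      have : (D * ω) ^ 2 ≤ (S.a / 4) ^ 2 := by gcongr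
      nlinarith
    have g5 := mul_le_mul_of_nonneg_right g4 (add_nonneg hε hτ)
    linarith
  have f7 : S.Fo x p X - S.Fo y q Y ≤ ‖p‖ ^ S.α * (S.A * N * (2 * ε) - S.a * τ
      + (S.C₁ + S.C₂) * ω * ‖Y‖) := by
    nlinarith
  refine f7.trans (mul_le_mul_of_nonneg_left ?_ hpa.le)
  unfold Cc
  have h1 : 0 ≤ 4 * (S.C₁ + S.C₂) ^ 2 / S.a * ε := by positivity
  have h2 : 0 ≤ 2 * S.A * N * (ω ^ 2 * β) := by positivity
  have h3 : 0 ≤ S.a * (ω ^ 2 * β) := by positivity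
  have h4 : S.a / 2 * G ≤ S.a / 2 * τ := by gcongr
  nlinarith

end Setup

/-! ### Smooth test functions and jets -/

section

section Jets
variable {N : ℕ}

theorem upJet_of_c2 {K : Set (EN N)} {u φ : EN N → ℝ} {g : EN N → EN N} {x₀ : EN N}
    {D : EN N →L[ℝ] EN N} (hg : ∀ᶠ x in 𝓝 x₀, HasGradientAt φ (g x) x) (hD : HasFDerivAt g D x₀)
    (h : ∀ᶠ x in 𝓝[K] x₀, u x ≤ u x₀ + (φ x - φ x₀)) : UpJet K u x₀ (g x₀) D := by
  intro η hη
  have h1 := taylor2 hg hD hη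
  have h2 : Tendsto (fun x => x - x₀) (𝓝[K] x₀) (𝓝 0) := by
    have : Tendsto (fun x => x - x₀) (𝓝 x₀) (𝓝 (x₀ - x₀)) := tendsto_id.sub_const x₀
    rw [sub_self] at this
    exact this.mono_left nhdsWithin_le_nhds
  filter_upwards [h, h2.eventually h1] with x hx hx2
  rw [add_sub_cancel] at hx2
  have := (abs_le.1 hx2).2
  linarith

theorem radial_c2 {f f' : ℝ → ℝ} {f2 : ℝ} {x₀ y : EN N}
    (hf : ∀ᶠ s in 𝓝 (‖x₀ - y‖ ^ 2), HasDerivAt f (f' s) s)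
    (hf' : HasDerivAt f' f2 (‖x₀ - y‖ ^ 2)) :
    (∀ᶠ x in 𝓝 x₀, HasGradientAt (fun x => f (‖x - y‖ ^ 2)) ((2 * f' (‖x - y‖ ^ 2)) • (x - y)) x) ∧
    HasFDerivAt (fun x => (2 * f' (‖x - y‖ ^ 2)) • (x - y))
      ((2 * f' (‖x₀ - y‖ ^ 2)) • ContinuousLinearMap.id ℝ (EN N) + (4 * f2) • rk (x₀ - y)) x₀ := by
  have hs : ∀ x : EN N, HasFDerivAt (fun x => ‖x - y‖ ^ 2) (innerSL ℝ ((2 : ℝ) • (x - y))) x := by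
    intro x
    have h := (normsq_hasGradientAt 1 y x).hasFDerivAt
    simp only [one_mul, mul_one] at h
    exact h
  have hc : Tendsto (fun x : EN N => ‖x - y‖ ^ 2) (𝓝 x₀) (𝓝 (‖x₀ - y‖ ^ 2)) :=
    (hs x₀).continuousAt
  constructor
  · filter_upwards [hc.eventually hf] with x hx
    refine hasGradientAt_of_fderiv (hx.comp_hasFDerivAt x (hs x)) fun v => ?_
    simp only [_root_.smul_apply, innerSL_apply_apply, inner_smul_left, conj_trivial, smul_eq_mul]
    ring
  · have h1 : HasFDerivAt (fun x : EN N => 2 * f' (‖x - y‖ ^ 2))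
        ((2 : ℝ) • (f2 • innerSL ℝ ((2 : ℝ) • (x₀ - y)))) x₀ :=
      (hf'.comp_hasFDerivAt x₀ (hs x₀)).const_mul 2
    have h2 : HasFDerivAt (fun x : EN N => x - y) (ContinuousLinearMap.id ℝ (EN N)) x₀ :=
      (hasFDerivAt_id x₀).sub_const y
    have h3 := h1.smul h2
    refine h3.congr_fderiv ?_
    ext1 v
    simp only [_root_.add_apply, _root_.smul_apply, ContinuousLinearMap.id_apply,
      ContinuousLinearMap.smulRight_apply, innerSL_apply_apply, inner_smul_left, conj_trivial,
      smul_eq_mul, rk_apply, smul_smul]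
    congr 2
    ring

theorem upJet_radial {K : Set (EN N)} {u : EN N → ℝ} {f f' : ℝ → ℝ} {f2 : ℝ} {x₀ y : EN N}
    (hf : ∀ᶠ s in 𝓝 (‖x₀ - y‖ ^ 2), HasDerivAt f (f' s) s)
    (hf' : HasDerivAt f' f2 (‖x₀ - y‖ ^ 2))
    (h : ∀ᶠ x in 𝓝[K] x₀, u x ≤ u x₀ + (f (‖x - y‖ ^ 2) - f (‖x₀ - y‖ ^ 2))) :
    UpJet K u x₀ ((2 * f' (‖x₀ - y‖ ^ 2)) • (x₀ - y))
      ((2 * f' (‖x₀ - y‖ ^ 2)) • ContinuousLinearMap.id ℝ (EN N) + (4 * f2) • rk (x₀ - y)) :=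
  upJet_of_c2 (φ := fun x => f (‖x - y‖ ^ 2)) (g := fun x => (2 * f' (‖x - y‖ ^ 2)) • (x - y))
    (radial_c2 hf hf').1 (radial_c2 hf hf').2 h

theorem radial_sym (s t : ℝ) (w : EN N) :
    SymOp (s • ContinuousLinearMap.id ℝ (EN N) + t • rk w) :=
  (SymOp.id.smul _).add ((rk_sym w).smul _)

theorem hasDerivAt_mul_pow (C s : ℝ) (m : ℕ) :
    HasDerivAt (fun s : ℝ => C * s ^ m) (C * (m * s ^ (m - 1))) s :=
  (hasDerivAt_pow m s).const_mul C

theorem hasDerivAt_mul_pow' (C s : ℝ) (m : ℕ) :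
    HasDerivAt (fun s : ℝ => C * (m * s ^ (m - 1))) (C * (m * ((m - 1 : ℕ) * s ^ (m - 1 - 1)))) s :=
  ((hasDerivAt_pow (m - 1) s).const_mul (m : ℝ)).const_mul C

/-- A function that is flat to order `2m` at `x₀` can be touched from above near `x₀` by
translates of a multiple of `|x - y|^{2m}`, with control of the contact points. -/
theorem flat_aux {K : Set (EN N)} (hK : IsCompact K) {u : EN N → ℝ}
    (hu : UpperSemicontinuousOn u K) {x₀ : EN N} (hx₀ : x₀ ∈ K) {C : ℝ} (hC : 0 < C) {m : ℕ}
    (hm : 1 ≤ m) (h : ∀ᶠ y in 𝓝[K] x₀, u y ≤ u x₀ + C * (‖y - x₀‖ ^ 2) ^ m) :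
    ∃ C' > 0, ∃ δ > 0, ∀ y, ‖y - x₀‖ < δ → ∃ x ∈ K, ‖x - y‖ ≤ 2 * ‖y - x₀‖ ∧
      |u x - u x₀| ≤ C' * (‖y - x₀‖ ^ 2) ^ m ∧
      ∀ x' ∈ K, ‖x' - x₀‖ < 4 * δ →
        u x' ≤ u x + (C' * (‖x' - y‖ ^ 2) ^ m - C' * (‖x - y‖ ^ 2) ^ m) := by
  obtain ⟨r, hr, hr2⟩ := Metric.mem_nhdsWithin_iff.1 h
  have hr3 : ∀ x ∈ K, ‖x - x₀‖ < r → u x ≤ u x₀ + C * (‖x - x₀‖ ^ 2) ^ m := fun x hx hxr =>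
    hr2 ⟨mem_ball_iff_norm.2 hxr, hx⟩
  set D : ℝ := 4 * C * 4 ^ m with hD
  have hDp : 0 < D := by positivity
  set C' : ℝ := D * 9 ^ m + D with hC'
  refine ⟨D * 9 ^ m, by positivity, r / 8, by positivity, fun y hy => ?_⟩
  set E : ℝ := D * 9 ^ m with hE
  have hED : 4 * C * 4 ^ m ≤ E := by
    rw [hE, ← hD]; exact le_mul_of_one_le_right hDp.le (one_le_pow₀ (by norm_num))
  have hE0 : 0 < E := by positivity
  have hKb : IsCompact (K ∩ closedBall x₀ (r / 2)) := hK.inter_right isClosed_closedBall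
  have hcont : Continuous fun x : EN N => -(E * (‖x - y‖ ^ 2) ^ m) := by fun_prop
  have husc : UpperSemicontinuousOn (fun x => u x + -(E * (‖x - y‖ ^ 2) ^ m))
      (K ∩ closedBall x₀ (r / 2)) :=
    (hu.mono inter_subset_left).add (hcont.upperSemicontinuous.upperSemicontinuousOn _)
  have hx₀' : x₀ ∈ K ∩ closedBall x₀ (r / 2) := ⟨hx₀, mem_closedBall_self (by positivity)⟩
  obtain ⟨x, hx, hxm⟩ := husc.exists_isMaxOn ⟨x₀, hx₀'⟩ hKb
  have hmax : ∀ x' ∈ K ∩ closedBall x₀ (r / 2),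
      u x' + -(E * (‖x' - y‖ ^ 2) ^ m) ≤ u x + -(E * (‖x - y‖ ^ 2) ^ m) := fun x' h' => hxm h'
  have hxr : ‖x - x₀‖ < r := by
    have := mem_closedBall_iff_norm.1 hx.2; linarith
  have h1 := hmax x₀ hx₀'
  have h2 := hr3 x hx.1 hxr
  set t := ‖y - x₀‖ with ht
  have ht0 : 0 ≤ t := norm_nonneg _
  have e1 : ‖x₀ - y‖ = t := norm_sub_rev _ _
  rw [e1] at h1
  have htri : ‖x - x₀‖ ≤ ‖x - y‖ + t := by
    have := norm_add_le (x - y) (y - x₀); simpa using this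
  have hs : ‖x - y‖ ≤ 2 * t := by
    by_contra hcon
    push Not at hcon
    set s := ‖x - y‖ with hsdef
    have hs0 : 0 < s := by linarith
    have h3 : (‖x - x₀‖ ^ 2) ^ m ≤ 4 ^ m * (s ^ 2) ^ m := by
      rw [← mul_pow]
      have : ‖x - x₀‖ ≤ 2 * s := by linarith
      have h0 := norm_nonneg (x - x₀)
      gcongr
      nlinarith
    have h4 : (t ^ 2) ^ m ≤ (s ^ 2) ^ m / 2 := by
      have : (t ^ 2) ^ m ≤ (s ^ 2 / 4) ^ m := by
        gcongr; nlinarith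
      rw [div_pow] at this
      have h5 : (4 : ℝ) ≤ 4 ^ m := le_self_pow₀ (by norm_num) (by omega)
      have h6 : (s ^ 2) ^ m / 4 ^ m ≤ (s ^ 2) ^ m / 2 := by
        gcongr; linarith
      linarith
    have hsm : 0 < (s ^ 2) ^ m := by positivity
    have h7 : E * (s ^ 2) ^ m ≤ C * (4 ^ m * (s ^ 2) ^ m) + E * ((s ^ 2) ^ m / 2) := by
      have i1 : C * (‖x - x₀‖ ^ 2) ^ m ≤ C * (4 ^ m * (s ^ 2) ^ m) := by gcongr
      have i2 : E * (t ^ 2) ^ m ≤ E * ((s ^ 2) ^ m / 2) := by gcongr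
      linarith
    have h8 : (4 * C * 4 ^ m) * (s ^ 2) ^ m ≤ E * (s ^ 2) ^ m := by gcongr
    have h9 : 0 < C * 4 ^ m * (s ^ 2) ^ m := by positivity
    linarith
  have hxy0 : 0 ≤ E * (‖x - y‖ ^ 2) ^ m := by positivity
  refine ⟨x, hx.1, hs, ?_, fun x' hx' hxr' => ?_⟩
  · have h3 : C * (‖x - x₀‖ ^ 2) ^ m ≤ E * (t ^ 2) ^ m := by
      have i1 : (‖x - x₀‖ ^ 2) ^ m ≤ 9 ^ m * (t ^ 2) ^ m := by
        rw [← mul_pow]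
        have h0 := norm_nonneg (x - x₀)
        gcongr
        nlinarith
      calc C * (‖x - x₀‖ ^ 2) ^ m ≤ C * (9 ^ m * (t ^ 2) ^ m) := by gcongr
        _ ≤ D * (9 ^ m * (t ^ 2) ^ m) := by
            have : C ≤ D := by
              have h5 : (1 : ℝ) ≤ 4 ^ m := one_le_pow₀ (by norm_num)
              rw [hD]; nlinarith
            gcongr
        _ = E * (t ^ 2) ^ m := by rw [hE]; ring
    rw [abs_le]; constructor <;> linarith
  · have := hmax x' ⟨hx', mem_closedBall_iff_norm.2 (by linarith)⟩
    linarith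

end Jets

/-! ### Geometry of the domain -/

section Geometry
variable {N : ℕ}

theorem c2_bounds {σ : EN N → ℝ} (hσ : ContDiff ℝ 2 σ) (R : ℝ) : ∃ M > 0,
    (∀ x ∈ closedBall (0 : EN N) R, ‖gradient σ x‖ ≤ M) ∧
    ∀ x ∈ closedBall (0 : EN N) R, ∀ y ∈ closedBall (0 : EN N) R,
      ‖gradient σ x - gradient σ y‖ ≤ M * ‖x - y‖ ∧
      |σ y - σ x - ⟪gradient σ x, y - x⟫| ≤ M * ‖y - x‖ ^ 2 := by
  obtain ⟨hg, hg1⟩ := c2_gradient hσ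
  have hcpt : IsCompact (closedBall (0 : EN N) R) := isCompact_closedBall _ _
  obtain ⟨M1, hM1⟩ := hcpt.exists_bound_of_continuousOn hg1.continuous.continuousOn
  obtain ⟨M2, hM2⟩ := hcpt.exists_bound_of_continuousOn
    (hg1.continuous_fderiv one_ne_zero).continuousOn
  set M := max (max M1 M2) 1
  have hMM1 : M1 ≤ M := (le_max_left _ _).trans (le_max_left _ _)
  have hMM2 : M2 ≤ M := (le_max_right _ _).trans (le_max_left _ _)
  have hconv : Convex ℝ (closedBall (0 : EN N) R) := convex_closedBall _ _
  have hlip : ∀ x ∈ closedBall (0 : EN N) R, ∀ y ∈ closedBall (0 : EN N) R,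
      ‖gradient σ x - gradient σ y‖ ≤ M * ‖x - y‖ := fun x hx y hy =>
    hconv.norm_image_sub_le_of_norm_fderiv_le
      (fun z _ => hg1.differentiable one_ne_zero z) (fun z hz => (hM2 z hz).trans hMM2) hy hx
  refine ⟨M, lt_of_lt_of_le one_pos (le_max_right _ _), fun x hx => (hM1 x hx).trans hMM1,
    fun x hx y hy => ⟨hlip x hx y hy, ?_⟩⟩
  have hseg : segment ℝ x y ⊆ closedBall (0 : EN N) R := hconv.segment_subset hx hy
  have h := (convex_segment x y).norm_image_sub_le_of_norm_hasFDerivWithin_le'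
    (f := σ) (f' := fun z => innerSL ℝ (gradient σ z)) (φ := innerSL ℝ (gradient σ x))
    (C := M * ‖y - x‖) (fun z _ => (hg z).hasFDerivAt.hasFDerivWithinAt) (fun z hz => ?_)
    (left_mem_segment ℝ x y) (right_mem_segment ℝ x y)
  · simp only [innerSL_apply_apply, Real.norm_eq_abs] at h
    rw [pow_two, ← mul_assoc]; exact h
  · rw [← map_sub, innerSL_apply_norm]
    refine (hlip z (hseg hz) x hx).trans ?_
    have := norm_sub_le_of_mem_segment hz
    gcongr

namespace Setup
variable {S : Setup N} {x : EN N}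

theorem ρ_nonpos (hx : x ∈ S.K) : S.ρ x ≤ 0 := by
  have hc : IsClosed {x | S.ρ x ≤ 0} := isClosed_le S.hρ.1.continuous continuous_const
  refine closure_minimal (fun y hy => ?_) hc hx
  rw [S.hρ.2.1] at hy
  have hy : S.ρ y < 0 := hy
  exact hy.le

theorem mem_Ω_iff : x ∈ S.Ω ↔ S.ρ x < 0 := by
  constructor <;> intro h
  · rw [S.hρ.2.1] at h; exact h
  · rw [S.hρ.2.1]; exact h

theorem mem_frontier_iff : x ∈ frontier S.Ω ↔ S.ρ x = 0 := by
  constructor <;> intro h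
  · rw [S.hρ.2.2.1] at h; exact h
  · rw [S.hρ.2.2.1]; exact h

theorem Ω_sub : S.Ω ⊆ S.K := subset_closure
theorem frontier_sub : frontier S.Ω ⊆ S.K := frontier_subset_closure

theorem mem_K (hx : x ∈ S.K) : x ∈ S.Ω ∨ x ∈ frontier S.Ω := by
  rcases (ρ_nonpos hx).lt_or_eq with h | h
  · exact Or.inl (mem_Ω_iff.2 h)
  · exact Or.inr (mem_frontier_iff.2 h)

theorem not_frontier (hx : x ∈ S.Ω) : x ∉ frontier S.Ω := fun h => by
  have h1 := mem_Ω_iff.1 hx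
  rw [mem_frontier_iff.1 h] at h1
  exact lt_irrefl _ h1

theorem nv_pos_iff (hx : x ∈ frontier S.Ω) (p : EN N) :
    0 < ⟪p, S.nv x⟫ ↔ 0 < ⟪p, gradient S.ρ x⟫ := by
  obtain ⟨h1, h2⟩ := S.hρ.2.2.2 x hx
  rw [h2, inner_smul_right]
  exact mul_pos_iff_of_pos_left (inv_pos.2 (norm_pos_iff.2 h1))

theorem K_sub_ball (S : Setup N) : ∃ R > 0, S.K ⊆ closedBall 0 R := by
  obtain ⟨R, hR⟩ := S.isCompact_K.isBounded.subset_closedBall 0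
  exact ⟨max R 1, by positivity, hR.trans (closedBall_subset_closedBall (le_max_left _ _))⟩

theorem exists_grad_lower (S : Setup N) : ∃ g > 0, ∀ x ∈ frontier S.Ω, g ≤ ‖gradient S.ρ x‖ := by
  rcases (frontier S.Ω).eq_empty_or_nonempty with h | h
  · exact ⟨1, one_pos, fun x hx => by rw [h] at hx; exact absurd hx (notMem_empty x)⟩
  · have hc : IsCompact (frontier S.Ω) := S.isCompact_K.of_isClosed_subset isClosed_frontier
      frontier_sub
    obtain ⟨x, hx, hm⟩ := hc.exists_isMinOn h
      (c2_gradient S.hρ.1).2.continuous.norm.continuousOn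
    exact ⟨_, norm_pos_iff.2 (S.hρ.2.2.2 x hx).1, fun y hy => hm hy⟩

/-- Moving inwards from a boundary point enters the domain at a linear rate. -/
theorem inward (hx : x ∈ frontier S.Ω) : ∀ᶠ t in 𝓝[>] (0 : ℝ),
    S.ρ (x - t • gradient S.ρ x) ≤ -(t * ‖gradient S.ρ x‖ ^ 2 / 2) := by
  set w := gradient S.ρ x
  have hw : 0 < ‖w‖ := norm_pos_iff.2 (S.hρ.2.2.2 x hx).1
  obtain ⟨M, hM, -, hb⟩ := c2_bounds S.hρ.1 (‖x‖ + ‖w‖)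
  have e1 : ∀ᶠ t in 𝓝[>] (0 : ℝ), t < min 1 (1 / (2 * M)) :=
    Filter.Eventually.filter_mono nhdsWithin_le_nhds (gt_mem_nhds (by positivity))
  filter_upwards [e1, self_mem_nhdsWithin] with t ht ht0
  have ht0 : 0 < t := ht0
  have ht1 : t < 1 := ht.trans_le (min_le_left _ _)
  have ht2 : t < 1 / (2 * M) := ht.trans_le (min_le_right _ _)
  have hn : ‖t • w‖ = t * ‖w‖ := by rw [norm_smul, Real.norm_of_nonneg ht0.le]
  have h := (hb x (by simp) (x - t • w) (by
    rw [mem_closedBall_zero_iff]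
    refine (norm_sub_le _ _).trans ?_
    rw [hn]; nlinarith)).2
  have h2 := (abs_le.1 h).2
  have e : x - t • w - x = -(t • w) := by abel
  rw [e, norm_neg, hn, inner_neg_right, inner_smul_right, real_inner_self_eq_norm_sq,
    mem_frontier_iff.1 hx] at h2
  rw [lt_div_iff₀ (by positivity)] at ht2
  have hw2 : 0 < ‖w‖ ^ 2 := by positivity
  have : M * (t * ‖w‖) ^ 2 ≤ t * ‖w‖ ^ 2 / 2 := by
    have : (t * (2 * M)) * (t * ‖w‖ ^ 2) ≤ 1 * (t * ‖w‖ ^ 2) := by gcongr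
    nlinarith
  linarith

/-- Interior ball condition. -/
theorem interior_ball (hx : x ∈ frontier S.Ω) :
    ∃ R > 0, ball (x - R • gradient S.ρ x) (R * ‖gradient S.ρ x‖) ⊆ S.Ω := by
  set w := gradient S.ρ x
  have hw : 0 < ‖w‖ := norm_pos_iff.2 (S.hρ.2.2.2 x hx).1
  obtain ⟨M, hM, -, hb⟩ := c2_bounds S.hρ.1 (‖x‖ + 2 * ‖w‖)
  set R := min 1 (1 / (2 * M)) with hR
  have hR0 : 0 < R := by positivity
  have hR1 : R ≤ 1 := min_le_left _ _
  have hR2 : R * (2 * M) ≤ 1 := by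
    rw [← le_div_iff₀ (by positivity)]; exact min_le_right _ _
  refine ⟨R, hR0, fun y hy => mem_Ω_iff.2 ?_⟩
  rw [mem_ball_iff_norm] at hy
  have hn : ‖R • w‖ = R * ‖w‖ := by rw [norm_smul, Real.norm_of_nonneg hR0.le]
  have e : y - (x - R • w) = (y - x) + R • w := by abel
  rw [e] at hy
  have hyx : ‖y - x‖ ≤ 2 * ‖w‖ := by
    have h1 := norm_sub_le ((y - x) + R • w) (R • w)
    rw [add_sub_cancel_right, hn] at h1
    nlinarith
  have hyb : ‖y‖ ≤ ‖x‖ + 2 * ‖w‖ := by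
    have := norm_add_le x (y - x); rw [add_sub_cancel] at this; linarith
  have hsq : ‖(y - x) + R • w‖ ^ 2 < (R * ‖w‖) ^ 2 := by gcongr
  rw [norm_add_sq_real, hn, inner_smul_right] at hsq
  have h2 := (abs_le.1 (hb x (by rw [mem_closedBall_zero_iff]; linarith) y
    (by rw [mem_closedBall_zero_iff]; exact hyb)).2).2
  rw [mem_frontier_iff.1 hx, real_inner_comm] at h2
  have hne : 0 < ‖y - x‖ ^ 2 ∨ ‖y - x‖ ^ 2 = 0 := by
    rcases (sq_nonneg ‖y - x‖).lt_or_eq with h | h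
    · exact Or.inl h
    · exact Or.inr h.symm
  have h3 : R * (2 * M) * ‖y - x‖ ^ 2 ≤ 1 * ‖y - x‖ ^ 2 := by gcongr
  have h4 : R * S.ρ y < 0 := by nlinarith
  by_contra hcon
  push Not at hcon
  have := mul_nonneg hR0.le hcon
  linarith

end Setup
end Geometry

end

/-! ### Sub- and supersolutions through jets -/

namespace Setup
variable {N : ℕ}

/-- The operator `-F(x, p, -X)`; it turns supersolutions into subsolutions. -/
def dual (S : Setup N) : Setup N :=
  { S with
    F := fun x p X => -S.F x p (-X)
    hF1 := fun x hx t ht μ hμ p hp X hX => by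
      have h := S.hF1 x hx t ht μ hμ p hp (-X) hX.neg
      simp only [← smul_neg, h]; ring
    hF2 := by
      refine ⟨S.hF2.1, S.hF2.2.1, fun x hx p hp M P hM hP => ?_⟩
      have hPs : P.IsSymm := by
        have := hP.1
        rwa [Matrix.IsHermitian, Matrix.conjTranspose_eq_transpose_of_trivial] at this
      have h := S.hF2.2.2 x hx p hp (-M - P) P (hM.neg.sub hPs) hP
      rw [sub_add_cancel, show -M - P = -(M + P) by abel] at h
      constructor <;> linarith [h.1, h.2]
    hF3 := by
      refine ⟨S.hF3.1, S.hF3.2.1, fun x hx y hy p hp X hX => ?_⟩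
      have h := S.hF3.2.2 x hx y hy p hp (-X) hX.neg
      rw [neg_sub_neg, abs_sub_comm]
      have e : matNorm (-X) = matNorm X := by simp [matNorm]
      rwa [e] at h
    hF4 := by
      refine ⟨S.hF4.1, S.hF4.2.1, fun x hx p hp q hq X hX => ?_⟩
      have h := S.hF4.2.2 x hx p hp q hq (-X) hX.neg
      rw [neg_sub_neg, abs_sub_comm]
      have e : matNorm (-X) = matNorm X := by simp [matNorm]
      rwa [e] at h }

variable {S : Setup N} {z : EN N → ℝ → ℝ} {u : EN N → ℝ} {x x₀ y p : EN N} {X : EN N →L[ℝ] EN N}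

theorem dual_H (hx : x ∈ S.K) (hp : p ≠ 0) (hX : SymOp X) :
    S.dual.H x p X = -S.H x (-p) (-X) := by
  have h := Fo_neg hx hp hX.neg
  have e : S.dual.Fo x p X = -S.Fo x p (-X) := by
    unfold Fo; rw [mat_neg]; rfl
  have e2 : S.dual.Bo x p = -S.Bo x (-p) := by
    unfold Bo; rw [inner_neg_right, norm_neg, neg_mul, neg_neg]; rfl
  unfold H
  rw [e, e2, h]; ring

variable (S z u x) in
/-- The subsolution inequality at `x` for all second order superjets with nonzero gradient. At
boundary points only gradients pointing strictly outwards are tested. -/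
def JetSub : Prop :=
  ∀ p X, SymOp X → p ≠ 0 → UpJet S.K u x p X → (x ∈ frontier S.Ω → 0 < ⟪p, S.nv x⟫) →
    0 ≤ S.H x p X + z x (u x)

variable (S z u x) in
/-- The subsolution property at `x`: jets, and tests of vanishing gradient of the form
`C |y - x|^{2m}` at interior points. -/
def SubAt : Prop :=
  S.JetSub z u x ∧ (x ∈ S.Ω → ∀ C > 0,
    (∀ᶠ y in 𝓝[S.K] x, u y ≤ u x + C * (‖y - x‖ ^ 2) ^ S.m) → 0 ≤ z x (u x))

variable (S z u) in
/-- Upper semicontinuous subsolutions of `H(x, Du, D²u) + z(x, u) = 0` with the Neumann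
condition. -/
def VSub : Prop := UpperSemicontinuousOn u S.K ∧ ∀ x ∈ S.K, S.SubAt z u x

variable (S z) in
/-- Lower semicontinuous supersolutions of `H(x, Dv, D²v) + z(x, v) = 0` with the Neumann
condition: `-v` is a subsolution of the dual problem. -/
def VSuper (v : EN N → ℝ) : Prop := S.dual.VSub (fun x r => -z x (-r)) (fun x => -v x)

variable (S z) in
/-- Joint continuity of the zeroth order term. -/
def ZCont : Prop := ContinuousOn (fun q : EN N × ℝ => z q.1 q.2) (S.K ×ˢ univ)

theorem ZCont.dual (h : S.ZCont z) : S.dual.ZCont (fun x r => -z x (-r)) := by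
  have h2 : ContinuousOn (fun q : EN N × ℝ => (q.1, -q.2)) (S.K ×ˢ univ) := by fun_prop
  exact (ContinuousOn.comp h h2 fun q hq => ⟨hq.1, mem_univ _⟩).neg

theorem limit_z (hz : S.ZCont z) (hx₀ : x₀ ∈ S.K)
    (h : ∀ δ > 0, ∃ x ∈ S.K, ‖x - x₀‖ ≤ δ ∧ |u x - u x₀| ≤ δ ∧ -δ ≤ z x (u x)) :
    0 ≤ z x₀ (u x₀) := by
  by_contra hneg
  push Not at hneg
  have h1 : ∀ᶠ q in 𝓝[S.K ×ˢ univ] (x₀, u x₀), z q.1 q.2 < z x₀ (u x₀) / 2 :=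
    (hz (x₀, u x₀) ⟨hx₀, mem_univ _⟩).eventually (gt_mem_nhds (by dsimp; linarith))
  obtain ⟨δ, hδ, hδ2⟩ := Metric.mem_nhdsWithin_iff.1 h1
  obtain ⟨x, hx, hx1, hx2, hx3⟩ := h (min (δ / 2) (-(z x₀ (u x₀)) / 4))
    (lt_min (by positivity) (by linarith))
  have i1 : min (δ / 2) (-(z x₀ (u x₀)) / 4) ≤ δ / 2 := min_le_left _ _
  have i2 : min (δ / 2) (-(z x₀ (u x₀)) / 4) ≤ -(z x₀ (u x₀)) / 4 := min_le_right _ _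
  have h2 : z x (u x) < z x₀ (u x₀) / 2 := hδ2 (a := (x, u x)) ⟨by
    rw [mem_ball, Prod.dist_eq, max_lt_iff, dist_eq_norm, Real.dist_eq]
    constructor <;> dsimp <;> linarith, hx, mem_univ _⟩
  linarith

/-- First derivative of `C s^m`. -/
def pw1 (C : ℝ) (m : ℕ) (s : ℝ) : ℝ := C * (m * s ^ (m - 1))
/-- Second derivative of `C s^m`. -/
def pw2 (C : ℝ) (m : ℕ) (s : ℝ) : ℝ := C * (m * ((m - 1 : ℕ) * s ^ (m - 1 - 1)))

/-- The Hessian at `w = x - y` of a radial function of `s = |x - y|²` with derivatives `f₁, f₂`. -/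
def radX (f1 f2 : ℝ) (w : EN N) : EN N →L[ℝ] EN N :=
  (2 * f1) • ContinuousLinearMap.id ℝ (EN N) + (4 * f2) • rk w

theorem radX_sym (f1 f2 : ℝ) (w : EN N) : SymOp (radX f1 f2 w) := radial_sym _ _ _

theorem radX_norm (f1 f2 : ℝ) (w : EN N) : ‖radX f1 f2 w‖ ≤ 2 * |f1| + 4 * |f2| * ‖w‖ ^ 2 := by
  refine (norm_add_le _ _).trans ?_
  rw [norm_smul, norm_smul, Real.norm_eq_abs, Real.norm_eq_abs, abs_mul, abs_mul]
  have h1 : ‖ContinuousLinearMap.id ℝ (EN N)‖ ≤ 1 := ContinuousLinearMap.norm_id_le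
  have h2 := rk_norm_le w
  have h3 : |(2:ℝ)| = 2 := abs_of_pos two_pos
  have h4 : |(4:ℝ)| = 4 := abs_of_pos four_pos
  rw [h3, h4]
  have i1 : 2 * |f1| * ‖ContinuousLinearMap.id ℝ (EN N)‖ ≤ 2 * |f1| * 1 := by gcongr
  have i2 : 4 * |f2| * ‖rk w‖ ≤ 4 * |f2| * ‖w‖ ^ 2 := by gcongr
  linarith

theorem pw1_pos {C : ℝ} (hC : 0 < C) {m : ℕ} (hm : 2 ≤ m) {s : ℝ} (hs : 0 < s) :
    0 < pw1 C m s := by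
  unfold pw1
  have : (0:ℝ) < m := by exact_mod_cast (by omega : 0 < m)
  positivity

theorem pw2_mul {C : ℝ} {m : ℕ} (hm : 2 ≤ m) (s : ℝ) : pw2 C m s * s = (m - 1) * pw1 C m s := by
  unfold pw2 pw1
  have e1 : m - 1 = m - 1 - 1 + 1 := by omega
  have e2 : ((m - 1 : ℕ) : ℝ) = m - 1 := by rw [Nat.cast_sub (by omega)]; simp
  have e3 : s ^ (m - 1) = s ^ (m - 1 - 1) * s := by
    conv_lhs => rw [e1]
    rw [pow_succ]
  rw [e3, e2]; ring

theorem pw2_nonneg {C : ℝ} (hC : 0 < C) {m : ℕ} {s : ℝ} (hs : 0 ≤ s) : 0 ≤ pw2 C m s := by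
  unfold pw2; positivity

/-- The operator vanishes in the limit on `C|x - y|^{2m}` as `x → y`. -/
theorem pw_small (S : Setup N) {C : ℝ} (hC : 0 < C) {ε : ℝ} (hε : 0 < ε) : ∃ δ > 0, ∀ x ∈ S.K, ∀ y,
    x ≠ y → ‖x - y‖ < δ →
    |S.H x ((2 * pw1 C S.m (‖x - y‖ ^ 2)) • (x - y))
      (radX (pw1 C S.m (‖x - y‖ ^ 2)) (pw2 C S.m (‖x - y‖ ^ 2)) (x - y))| ≤ ε := by
  obtain ⟨Bb, hBb, hB⟩ := exists_b_bound S
  have hm := S.hm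
  have hmα := S.hmα
  have hm1 : (2:ℝ) ≤ S.m := by exact_mod_cast hm
  set D : ℝ := 2 * S.m * C with hD
  have hD0 : 0 < D := by positivity
  set γ : ℝ := (2 * S.m - 1) * (1 + S.α) - 1 with hγ
  have hγ0 : 0 < γ := by linarith
  set E : ℝ → ℝ := fun r => D ^ (1 + S.α) * (S.A * N * (2 * S.m - 1) * r ^ γ + Bb * (r * r ^ γ))
  have hE : Tendsto E (𝓝 0) (𝓝 0) := by
    have h1 : Tendsto (fun r : ℝ => r ^ γ) (𝓝 0) (𝓝 0) := by
      have := Real.continuousAt_rpow_const 0 γ (Or.inr hγ0.le)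
      rwa [ContinuousAt, Real.zero_rpow hγ0.ne'] at this
    have h2 : Tendsto (fun r : ℝ => r * r ^ γ) (𝓝 0) (𝓝 (0 * 0)) := Tendsto.mul tendsto_id h1
    have h3 := ((h1.const_mul (S.A * N * (2 * S.m - 1))).add (h2.const_mul Bb)).const_mul
      (D ^ (1 + S.α))
    simpa using h3
  obtain ⟨δ, hδ, hδ2⟩ := Metric.eventually_nhds_iff.1 (hE.eventually (gt_mem_nhds hε))
  refine ⟨δ, hδ, fun x hx y hxy hxyd => ?_⟩
  set w := x - y
  have hw : w ≠ 0 := sub_ne_zero.2 hxy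
  set r := ‖w‖ with hr
  have hr0 : 0 < r := norm_pos_iff.2 hw
  have hE2 : E r < ε := hδ2 (by simpa [abs_of_pos hr0] using hxyd)
  have hp1 := pw1_pos hC hm (show 0 < r ^ 2 by positivity)
  have hp2 := pw2_nonneg hC (m := S.m) (sq_nonneg r)
  have hpm := pw2_mul (C := C) hm (r ^ 2)
  set f1 := pw1 C S.m (r ^ 2) with hf1
  set f2 := pw2 C S.m (r ^ 2)
  set p := (2 * f1) • w with hp
  have hpn : ‖p‖ = 2 * f1 * r := by rw [hp, norm_smul, Real.norm_of_nonneg (by positivity)]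
  have hp0 : p ≠ 0 := smul_ne_zero (by positivity) hw
  have hX : ‖radX f1 f2 w‖ ≤ (2 * S.m - 1) * (‖p‖ / r) := by
    refine (radX_norm f1 f2 w).trans ?_
    rw [hpn, abs_of_pos hp1, abs_of_nonneg hp2, mul_div_assoc, div_self hr0.ne']
    nlinarith
  refine (H_abs hB hx hp0 (radX_sym f1 f2 w)).trans ?_
  have hA := S.A_pos
  have e1 : ‖p‖ ^ S.α * ‖p‖ = D ^ (1 + S.α) * (r * r ^ γ) := by
    have e2 : ‖p‖ = D * r ^ (2 * (S.m:ℝ) - 1) := by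
      have e3 : r ^ (2 * (S.m:ℝ) - 1) = (r ^ 2) ^ (S.m - 1) * r := by
        rw [← pow_mul, ← pow_succ, ← Real.rpow_natCast]
        congr 1
        push_cast [Nat.cast_sub (show 1 ≤ S.m by omega)]
        ring
      rw [hpn, e3, hf1, pw1, hD]; ring
    have e4 : ‖p‖ ^ S.α * ‖p‖ = ‖p‖ ^ (1 + S.α) := by
      rw [Real.rpow_add (norm_pos_iff.2 hp0), Real.rpow_one, mul_comm]
    have e5 : r * r ^ γ = r ^ (1 + γ) := by rw [Real.rpow_add hr0, Real.rpow_one]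
    rw [e4, e2, Real.mul_rpow hD0.le (by positivity), ← Real.rpow_mul hr0.le, e5, hγ]
    congr 2; ring
  have hpα : 0 ≤ ‖p‖ ^ S.α := by positivity
  calc ‖p‖ ^ S.α * (S.A * N * ‖radX f1 f2 w‖ + Bb * ‖p‖)
      ≤ ‖p‖ ^ S.α * (S.A * N * ((2 * S.m - 1) * (‖p‖ / r)) + Bb * ‖p‖) := by gcongr
    _ = (‖p‖ ^ S.α * ‖p‖) * (S.A * N * (2 * S.m - 1) / r + Bb) := by field_simp
    _ = E r := by rw [e1]; simp only [E]; field_simp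
    _ ≤ ε := hE2.le

theorem radial_test {C : ℝ} (hC : 0 < C) (hj : S.JetSub z u x) (hxy : x ≠ y)
    (hfr : x ∈ frontier S.Ω → 0 < ⟪x - y, gradient S.ρ x⟫)
    (h : ∀ᶠ x' in 𝓝[S.K] x, u x' ≤ u x + (C * (‖x' - y‖ ^ 2) ^ S.m - C * (‖x - y‖ ^ 2) ^ S.m)) :
    0 ≤ S.H x ((2 * pw1 C S.m (‖x - y‖ ^ 2)) • (x - y))
      (radX (pw1 C S.m (‖x - y‖ ^ 2)) (pw2 C S.m (‖x - y‖ ^ 2)) (x - y)) + z x (u x) := by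
  have hs : 0 < ‖x - y‖ ^ 2 := by have := norm_pos_iff.2 (sub_ne_zero.2 hxy); positivity
  have hp1 := pw1_pos hC S.hm hs
  have hjet : UpJet S.K u x ((2 * pw1 C S.m (‖x - y‖ ^ 2)) • (x - y))
      (radX (pw1 C S.m (‖x - y‖ ^ 2)) (pw2 C S.m (‖x - y‖ ^ 2)) (x - y)) :=
    upJet_radial (f := fun s => C * s ^ S.m) (f' := pw1 C S.m)
      (Eventually.of_forall fun s => hasDerivAt_mul_pow C s S.m) (hasDerivAt_mul_pow' C _ S.m) h
  refine hj _ _ (radX_sym _ _ _) (smul_ne_zero (by positivity) (sub_ne_zero.2 hxy)) hjet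
    fun hf => ?_
  rw [nv_pos_iff hf, inner_smul_left]
  exact mul_pos (by simpa using hp1) (hfr hf)

theorem pow_le_self_of_small {t δ C : ℝ} {m : ℕ} (hm : 1 ≤ m) (hC : 0 < C) (ht0 : 0 ≤ t)
    (ht1 : t ≤ 1) (h : C * t ≤ δ) : C * (t ^ 2) ^ m ≤ δ := by
  have h1 : (t ^ 2) ^ m ≤ t := by
    rw [← pow_mul]
    exact pow_le_of_le_one ht0 ht1 (by omega)
  exact (mul_le_mul_of_nonneg_left h1 hC.le).trans h

/-- At an interior point where a function satisfying the jet inequalities is touched from above by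
`C|y - x₀|^{2m}`, either the zeroth order inequality holds or the function is locally constant. -/
theorem flat_interior (hz : S.ZCont z) (hu : UpperSemicontinuousOn u S.K) (hx₀ : x₀ ∈ S.Ω)
    (hj : ∀ x ∈ S.Ω, S.JetSub z u x) {C : ℝ} (hC : 0 < C)
    (h : ∀ᶠ y in 𝓝[S.K] x₀, u y ≤ u x₀ + C * (‖y - x₀‖ ^ 2) ^ S.m) :
    0 ≤ z x₀ (u x₀) ∨ ∀ᶠ y in 𝓝[S.K] x₀, u y = u x₀ := by
  have hm := S.hm
  obtain ⟨C', hC', δ, hδ, hfl⟩ := flat_aux S.isCompact_K hu (Ω_sub hx₀) hC (by omega) h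
  by_cases hcase : ∃ d > 0, d ≤ δ ∧ ∀ y, ‖y - x₀‖ < d → y ∈ S.K ∧
      ∀ x' ∈ S.K, ‖x' - x₀‖ < 4 * δ → u x' ≤ u y + C' * (‖x' - y‖ ^ 2) ^ S.m
  · obtain ⟨d, hd, hdδ, hd2⟩ := hcase
    right
    have hder : ∀ y ∈ ball x₀ d, HasFDerivAt u (0 : EN N →L[ℝ] ℝ) y := by
      intro y hy
      have hy' := mem_ball_iff_norm.1 hy
      rw [hasFDerivAt_iff_isLittleO_nhds_zero]
      have hO : (fun h : EN N => u (y + h) - u y - (0 : EN N →L[ℝ] ℝ) h) =O[𝓝 0]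
          fun h : EN N => ‖h‖ ^ (2 * S.m) := by
        refine Asymptotics.IsBigO.of_bound C' ?_
        have hev : ∀ᶠ h : EN N in 𝓝 0, y + h ∈ ball x₀ d := by
          have : Tendsto (fun h : EN N => y + h) (𝓝 0) (𝓝 (y + 0)) := tendsto_id.const_add y
          rw [add_zero] at this
          exact this.eventually (isOpen_ball.mem_nhds hy)
        filter_upwards [hev] with h hh
        have hh' := mem_ball_iff_norm.1 hh
        have i1 := (hd2 y hy').2 (y + h) (hd2 _ hh').1 (by linarith)
        have i2 := (hd2 (y + h) hh').2 y (hd2 _ hy').1 (by linarith)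
        rw [show y - (y + h) = -h by abel, norm_neg] at i2
        rw [add_sub_cancel_left] at i1
        simp only [zero_apply, sub_zero, Real.norm_eq_abs, abs_pow, abs_norm, pow_mul]
        rw [abs_le]; constructor <;> linarith
      exact hO.trans_isLittleO (Asymptotics.isLittleO_norm_pow_id (by omega))
    filter_upwards [nhdsWithin_le_nhds (isOpen_ball.mem_nhds (mem_ball_self hd))] with y hy
    exact (isOpen_ball (x := x₀) (ε := d)).is_const_of_fderiv_eq_zero
      (𝕜 := ℝ) (f := u) (convex_ball x₀ d).isPreconnected
      (fun y hy => (hder y hy).differentiableAt.differentiableWithinAt)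
      (fun y hy => (hder y hy).fderiv) hy (mem_ball_self hd)
  · left
    push Not at hcase
    refine limit_z hz (Ω_sub hx₀) fun ε hε => ?_
    obtain ⟨δ1, hδ1, hsm⟩ := pw_small S hC' hε
    obtain ⟨r, hr, hrΩ⟩ := Metric.isOpen_iff.1 S.isOpen x₀ hx₀
    set d := min (min δ (δ1 / 3)) (min (min (ε / 3) (ε / C')) (min (r / 4) 1)) with hd
    have hd0 : 0 < d := by positivity
    have d1 : d ≤ δ := (min_le_left _ _).trans (min_le_left _ _)
    have d2 : d ≤ δ1 / 3 := (min_le_left _ _).trans (min_le_right _ _)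
    have d3 : d ≤ ε / 3 := (min_le_right _ _).trans ((min_le_left _ _).trans (min_le_left _ _))
    have d4 : d ≤ ε / C' := (min_le_right _ _).trans ((min_le_left _ _).trans (min_le_right _ _))
    have d5 : d ≤ r / 4 := (min_le_right _ _).trans ((min_le_right _ _).trans (min_le_left _ _))
    have d6 : d ≤ 1 := (min_le_right _ _).trans ((min_le_right _ _).trans (min_le_right _ _))
    obtain ⟨y, hy, hy2⟩ := hcase d hd0 d1
    have hyK : y ∈ S.K := Ω_sub (hrΩ (mem_ball_iff_norm.2 (by linarith)))
    obtain ⟨x', hx', hx'2, hx'3⟩ := hy2 hyK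
    obtain ⟨x, hx, hxy, hux, htouch⟩ := hfl y (hy.trans_le d1)
    have hne : x ≠ y := by
      rintro rfl
      have := htouch x' hx' hx'2
      rw [sub_self, norm_zero] at this
      rw [show (0:ℝ) ^ 2 = 0 by norm_num, zero_pow (by omega)] at this
      linarith
    have htri : ‖x - x₀‖ ≤ ‖x - y‖ + ‖y - x₀‖ := by
      have := norm_add_le (x - y) (y - x₀); simpa using this
    have hxΩ : x ∈ S.Ω := hrΩ (mem_ball_iff_norm.2 (by linarith))
    have htest := radial_test hC' (hj x hxΩ) hne (fun hf => absurd hf (not_frontier hxΩ)) (by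
      have : ∀ᶠ x'' in 𝓝[S.K] x, ‖x'' - x₀‖ < 4 * δ := by
        refine Filter.Eventually.filter_mono nhdsWithin_le_nhds ?_
        have : Continuous fun x'' : EN N => ‖x'' - x₀‖ := by fun_prop
        exact this.continuousAt.eventually (gt_mem_nhds (by linarith))
      filter_upwards [this, self_mem_nhdsWithin] with x'' h1 h2
      exact htouch x'' h2 h1)
    have hH := (abs_le.1 (hsm x hx y hne (by linarith))).2
    refine ⟨x, hx, by linarith, hux.trans ?_, by linarith⟩
    refine pow_le_self_of_small (by omega) hC' (norm_nonneg _) (by linarith) ?_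
    have : C' * ‖y - x₀‖ ≤ C' * (ε / C') := by gcongr; linarith
    rwa [mul_div_cancel₀ _ hC'.ne'] at this

/-- Tests with vanishing gradient are also allowed at boundary points. -/
theorem flat_boundary (hz : S.ZCont z) (hu : S.VSub z u) (hx₀ : x₀ ∈ frontier S.Ω)
    {C : ℝ} (hC : 0 < C)
    (h : ∀ᶠ y in 𝓝[S.K] x₀, u y ≤ u x₀ + C * (‖y - x₀‖ ^ 2) ^ S.m) :
    0 ≤ z x₀ (u x₀) := by
  have hm := S.hm
  obtain ⟨C', hC', δ, hδ, hfl⟩ := flat_aux S.isCompact_K hu.1 (frontier_sub hx₀) hC (by omega) h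
  refine limit_z hz (frontier_sub hx₀) fun ε hε => ?_
  obtain ⟨δ1, hδ1, hsm⟩ := pw_small S hC' hε
  set w := gradient S.ρ x₀ with hw
  have hw0 : 0 < ‖w‖ := norm_pos_iff.2 (S.hρ.2.2.2 x₀ hx₀).1
  obtain ⟨R, hR, hKR⟩ := K_sub_ball S
  obtain ⟨M, hM, -, hMb⟩ := c2_bounds S.hρ.1 R
  set d := min (min δ (δ1 / 3)) (min (min (ε / 3) (ε / C')) (min (1 / (16 * M)) 1)) with hd
  have hd0 : 0 < d := by positivity
  have d1 : d ≤ δ := (min_le_left _ _).trans (min_le_left _ _)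
  have d2 : d ≤ δ1 / 3 := (min_le_left _ _).trans (min_le_right _ _)
  have d3 : d ≤ ε / 3 := (min_le_right _ _).trans ((min_le_left _ _).trans (min_le_left _ _))
  have d4 : d ≤ ε / C' := (min_le_right _ _).trans ((min_le_left _ _).trans (min_le_right _ _))
  have d5 : d ≤ 1 / (16 * M) :=
    (min_le_right _ _).trans ((min_le_right _ _).trans (min_le_left _ _))
  have d6 : d ≤ 1 := (min_le_right _ _).trans ((min_le_right _ _).trans (min_le_right _ _))
  have e1 : ∀ᶠ t in 𝓝[>] (0 : ℝ), t < min (d / ‖w‖) (1 / (16 * M)) :=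
    Filter.Eventually.filter_mono nhdsWithin_le_nhds (gt_mem_nhds (by positivity))
  obtain ⟨t, ⟨htρ, htd⟩, ht0⟩ := ((inward hx₀).and e1 |>.and self_mem_nhdsWithin).exists
  have ht0 : 0 < t := ht0
  have ht1 : t * ‖w‖ < d := by
    have := htd.trans_le (min_le_left _ _); rwa [lt_div_iff₀ hw0] at this
  have ht2 : t * (16 * M) < 1 := by
    have := htd.trans_le (min_le_right _ _); rwa [lt_div_iff₀ (by positivity)] at this
  rw [← hw] at htρ
  set y := x₀ - t • w with hy
  have hyn : ‖y - x₀‖ = t * ‖w‖ := by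
    rw [hy, sub_sub_cancel_left, norm_neg, norm_smul, Real.norm_of_nonneg ht0.le]
  have hyΩ : y ∈ S.Ω := mem_Ω_iff.2 (by
    have : 0 < t * ‖w‖ ^ 2 / 2 := by positivity
    linarith)
  have hyK : y ∈ S.K := Ω_sub hyΩ
  obtain ⟨x, hx, hxy, hux, htouch⟩ := hfl y (by rw [hyn]; linarith)
  rw [hyn] at hxy hux
  have htri : ‖x - x₀‖ ≤ ‖x - y‖ + t * ‖w‖ := by
    have := norm_add_le (x - y) (y - x₀); rw [hyn] at this; simpa using this
  have htouch' : ∀ᶠ x'' in 𝓝[S.K] x,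
      u x'' ≤ u x + (C' * (‖x'' - y‖ ^ 2) ^ S.m - C' * (‖x - y‖ ^ 2) ^ S.m) := by
    have : ∀ᶠ x'' in 𝓝[S.K] x, ‖x'' - x₀‖ < 4 * δ := by
      refine Filter.Eventually.filter_mono nhdsWithin_le_nhds ?_
      have : Continuous fun x'' : EN N => ‖x'' - x₀‖ := by fun_prop
      exact this.continuousAt.eventually (gt_mem_nhds (by linarith))
    filter_upwards [this, self_mem_nhdsWithin] with x'' h1 h2
    exact htouch x'' h2 h1
  have hux' : |u x - u x₀| ≤ ε := by
    refine hux.trans (pow_le_self_of_small (by omega) hC' (by positivity) (by linarith) ?_)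
    have : C' * (t * ‖w‖) ≤ C' * (ε / C') := by gcongr; linarith
    rwa [mul_div_cancel₀ _ hC'.ne'] at this
  refine ⟨x, hx, by linarith, hux', ?_⟩
  by_cases hne : x = y
  · rw [hne] at htouch' ⊢
    have := (hu.2 y hyK).2 hyΩ C' hC' (by
      filter_upwards [htouch'] with x'' h1
      rw [sub_self, norm_zero, show (0:ℝ) ^ 2 = 0 by norm_num, zero_pow (by omega)] at h1
      linarith)
    linarith
  · have htest := radial_test hC' (hu.2 x hx).1 hne (fun hf => by
      have h1 := (abs_le.1 (hMb x (hKR hx) y (hKR hyK)).2).1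
      rw [mem_frontier_iff.1 hf, ← neg_sub x y, inner_neg_right, norm_neg] at h1
      rw [real_inner_comm]
      have h2 : M * ‖x - y‖ ^ 2 ≤ M * (2 * (t * ‖w‖)) ^ 2 := by gcongr
      have h3 : t * (16 * M) * (t * ‖w‖ ^ 2) < 1 * (t * ‖w‖ ^ 2) := by gcongr
      nlinarith) htouch'
    have hH := (abs_le.1 (hsm x hx y hne (by linarith))).2
    linarith

theorem VSub.flat (hz : S.ZCont z) (hu : S.VSub z u) (hx₀ : x₀ ∈ S.K) {C : ℝ} (hC : 0 < C)
    (h : ∀ᶠ y in 𝓝[S.K] x₀, u y ≤ u x₀ + C * (‖y - x₀‖ ^ 2) ^ S.m) : 0 ≤ z x₀ (u x₀) := by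
  rcases mem_K hx₀ with h1 | h1
  · exact (hu.2 x₀ hx₀).2 h1 C hC h
  · exact flat_boundary hz hu h1 hC h

end Setup

/-! ### Comparison with the definition through `C²` test functions -/

namespace Setup
variable {N : ℕ}
variable {S : Setup N} {z : EN N → ℝ → ℝ} {u : EN N → ℝ} {x x₀ y p : EN N} {X : EN N →L[ℝ] EN N}

/-- The quadratic test function attached to a jet. -/
theorem quad_test (hX : SymOp X) (p x₀ : EN N) :
    ContDiff ℝ 2 (fun x : EN N => ⟪p, x⟫ + 1 / 2 * ⟪X (x - x₀), x - x₀⟫) ∧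
    gradient (fun x : EN N => ⟪p, x⟫ + 1 / 2 * ⟪X (x - x₀), x - x₀⟫) x₀ = p ∧
    hess (fun x : EN N => ⟪p, x⟫ + 1 / 2 * ⟪X (x - x₀), x - x₀⟫) x₀ = mat X := by
  have hsym : ∀ v w, ⟪X v, w⟫ = ⟪v, X w⟫ := fun v w => by rw [hX v w, real_inner_comm]
  have hg : ∀ x, HasGradientAt (fun x : EN N => ⟪p, x⟫ + 1 / 2 * ⟪X (x - x₀), x - x₀⟫)
      (p + X (x - x₀)) x := by
    intro x
    refine (inner_hasGradientAt p x).add' ?_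
    have h1 := (quad_hasGradientAt hsym (x - x₀)).hasFDerivAt
    have h2 : HasFDerivAt (fun x : EN N => x - x₀) (ContinuousLinearMap.id ℝ (EN N)) x :=
      (hasFDerivAt_id x).sub_const x₀
    exact hasGradientAt_of_fderiv (HasFDerivAt.comp (f := fun x : EN N => x - x₀)
      (g := fun z => 1 / 2 * ⟪X z, z⟫) x h1 h2) fun v => rfl
  have hD : HasFDerivAt (fun x => p + X (x - x₀)) X x₀ := by
    have h2 : HasFDerivAt (fun x : EN N => x - x₀) (ContinuousLinearMap.id ℝ (EN N)) x₀ :=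
      (hasFDerivAt_id x₀).sub_const x₀
    have h3 := (HasFDerivAt.comp (f := fun x : EN N => x - x₀) (g := fun z => X z) x₀
      X.hasFDerivAt h2).const_add p
    exact h3
  refine ⟨?_, ?_, hess_eq (Eventually.of_forall hg) hD⟩
  · have h1 : ContDiff ℝ 2 fun x : EN N => X (x - x₀) :=
      X.contDiff.comp (contDiff_id.sub contDiff_const)
    have h2 : ContDiff ℝ 2 fun x : EN N => x - x₀ := contDiff_id.sub contDiff_const
    exact (contDiff_const.inner ℝ contDiff_id).add (contDiff_const.mul (h1.inner ℝ h2))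
  · rw [(hg x₀).gradient]; simp

theorem jetSub_of_perturb (hx : x ∈ S.K) (hX : SymOp X) (hp : p ≠ 0) {r : ℝ}
    (h : ∀ η > (0:ℝ), 0 ≤ S.H x p (X + η • ContinuousLinearMap.id ℝ (EN N)) + r) :
    0 ≤ S.H x p X + r := by
  have ht : Tendsto (fun η : ℝ => S.H x p (X + η • ContinuousLinearMap.id ℝ (EN N)) + r)
      (𝓝[>] 0) (𝓝 (S.H x p X + r)) := by
    refine Tendsto.add_const r (H_tendsto hx (Eventually.of_forall fun _ => hx) tendsto_const_nhds
      hp tendsto_const_nhds hX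
      (Eventually.of_forall fun η => hX.add (SymOp.id.smul η)) ?_)
    have : Tendsto (fun η : ℝ => X + η • ContinuousLinearMap.id ℝ (EN N)) (𝓝 0)
        (𝓝 (X + (0:ℝ) • ContinuousLinearMap.id ℝ (EN N))) :=
      (tendsto_id.smul_const _).const_add X
    rw [smul_zero_op, add_zero] at this
    exact this.mono_left nhdsWithin_le_nhds
  refine ge_of_tendsto ht ?_
  filter_upwards [self_mem_nhdsWithin] with η hη
  exact h η hη

theorem VSub_of_IsSubSol (hz : S.ZCont z) (hu : UpperSemicontinuousOn u S.K)
    (h : IsSubSol S.Ω S.F S.b S.α z (fun _ => 0) (BNeu S.nv) u) : S.VSub z u := by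
  obtain ⟨h1, h2, h3, -⟩ := h
  have hj : ∀ x ∈ S.K, S.JetSub z u x := by
    intro x hx p X hX hp hjet hfr
    refine jetSub_of_perturb hx hX hp fun η hη => ?_
    have hX' : SymOp (X + η • ContinuousLinearMap.id ℝ (EN N)) := hX.add (SymOp.id.smul η)
    obtain ⟨q1, q2, q3⟩ := quad_test hX' p x
    have hmax : IsLocalMaxOn (fun y => u y - (⟪p, y⟫ +
        1 / 2 * ⟪(X + η • ContinuousLinearMap.id ℝ (EN N)) (y - x), y - x⟫)) (closure S.Ω) x := by
      have := hjet (η / 2) (by positivity)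
      rw [IsLocalMaxOn, IsMaxFilter]
      filter_upwards [this] with y hy
      rw [inner_sub_right] at hy
      simp only [sub_self, map_zero, inner_zero_left, _root_.add_apply, _root_.smul_apply,
        ContinuousLinearMap.id_apply, inner_add_left, inner_smul_left, conj_trivial,
        real_inner_self_eq_norm_sq]
      linarith
    rcases mem_K hx with hΩ | hf
    · have := h1 x hΩ _ q1 hmax (by rw [q2]; exact hp)
      rw [q2, q3] at this
      exact this
    · have := h3 x hf _ q1 hmax (by rw [q2]; exact hp)
      rw [q2, q3, min_le_iff] at this
      rcases this with h | h
      · rw [zero_sub, neg_nonpos] at h; exact h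
      · exact absurd (hfr hf) (not_lt.2 h)
  refine ⟨hu, fun x hx => ⟨hj x hx, fun hΩ C hC hflat => ?_⟩⟩
  rcases flat_interior hz hu hΩ (fun x hx => hj x (Ω_sub hx)) hC hflat with h | h
  · exact h
  · exact h2 x hΩ _ h

theorem IsSubSol_of_VSub (h : S.VSub z u) :
    IsSubSol S.Ω S.F S.b S.α z (fun _ => 0) (BNeu S.nv) u := by
  have key : ∀ x ∈ S.K, ∀ φ : EN N → ℝ, ContDiff ℝ 2 φ →
      IsLocalMaxOn (fun x => u x - φ x) (closure S.Ω) x → gradient φ x ≠ 0 →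
      (x ∈ frontier S.Ω → 0 < ⟪gradient φ x, S.nv x⟫) →
      0 ≤ S.F x (gradient φ x) (hess φ x)
        + ⟪S.b x, gradient φ x⟫ * ‖gradient φ x‖ ^ S.α + z x (u x) := by
    intro x hx φ hφ hmax hg hfr
    obtain ⟨g1, g2⟩ := c2_gradient hφ
    have hD := (g2.differentiable one_ne_zero x).hasFDerivAt
    have hs : SymOp (fderiv ℝ (gradient φ) x) := fun v w =>
      deriv_grad_symm (Eventually.of_forall g1) hD v w
    have hjet : UpJet S.K u x (gradient φ x) (fderiv ℝ (gradient φ) x) := by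
      refine upJet_of_c2 (Eventually.of_forall g1) hD ?_
      filter_upwards [hmax] with y hy
      linarith
    have := (h.2 x hx).1 _ _ hs hg hjet hfr
    rw [hess_eq (Eventually.of_forall g1) hD]
    exact this
  refine ⟨fun x hx φ hφ hmax hg => key x (Ω_sub hx) φ hφ hmax hg
    fun hf => absurd hf (not_frontier hx), fun x hx k hk => ?_, fun x hx φ hφ hmax hg => ?_,
    fun x hx k hk => ?_⟩
  · have hk0 : u x = k := hk.self_of_nhdsWithin (Ω_sub hx)
    rw [← hk0]
    refine (h.2 x (Ω_sub hx)).2 hx 1 one_pos ?_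
    filter_upwards [hk] with y hy
    rw [hy, hk0]
    have : 0 ≤ 1 * (‖y - x‖ ^ 2) ^ S.m := by positivity
    linarith
  · by_cases hn : 0 < ⟪gradient φ x, S.nv x⟫
    · have := key x (frontier_sub hx) φ hφ hmax hg fun _ => hn
      exact min_le_iff.2 (Or.inl (by linarith))
    · exact min_le_iff.2 (Or.inr (not_lt.1 hn))
  · exact min_le_iff.2 (Or.inr (by simp [BNeu]))

theorem hess_symm_of_c2 {φ : EN N → ℝ} (hφ : ContDiff ℝ 2 φ) (x : EN N) :
    ∃ D : EN N →L[ℝ] EN N, SymOp D ∧ hess φ x = mat D ∧ hess (fun y => -φ y) x = mat (-D) ∧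
      gradient (fun y => -φ y) x = -gradient φ x := by
  obtain ⟨g1, g2⟩ := c2_gradient hφ
  have hD := (g2.differentiable one_ne_zero x).hasFDerivAt
  have g1' : ∀ y, HasGradientAt (fun y => -φ y) (-gradient φ y) y := fun y =>
    hasGradientAt_of_fderiv (g1 y).hasFDerivAt.neg fun v => by
      simp [InnerProductSpace.toDual_apply_apply]
  exact ⟨_, fun v w => deriv_grad_symm (Eventually.of_forall g1) hD v w,
    hess_eq (Eventually.of_forall g1) hD, hess_eq (Eventually.of_forall g1') hD.neg,
    (g1' x).gradient⟩

theorem dual_value {φ : EN N → ℝ} (hφ : ContDiff ℝ 2 φ) (hx : x ∈ S.K) (hp : gradient φ x ≠ 0) :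
    S.dual.F x (gradient (fun y => -φ y) x) (hess (fun y => -φ y) x)
        + ⟪S.b x, gradient (fun y => -φ y) x⟫ * ‖gradient (fun y => -φ y) x‖ ^ S.α =
    -(S.F x (gradient φ x) (hess φ x) + ⟪S.b x, gradient φ x⟫ * ‖gradient φ x‖ ^ S.α) := by
  obtain ⟨D, hD, e1, e2, e3⟩ := hess_symm_of_c2 hφ x
  rw [e1, e2, e3]
  have h := dual_H (S := S) hx (p := -gradient φ x) (neg_ne_zero.2 hp) hD.neg
  rw [neg_neg, neg_neg] at h
  exact h

theorem isSuperSol_iff {v : EN N → ℝ} :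
    IsSuperSol S.Ω S.F S.b S.α z (fun _ => 0) (BNeu S.nv) v ↔
    IsSubSol S.dual.Ω S.dual.F S.dual.b S.dual.α (fun x r => -z x (-r)) (fun _ => 0)
      (BNeu S.dual.nv) (fun x => -v x) := by
  have key : ∀ φ ψ : EN N → ℝ, ψ = (fun y => -φ y) → ∀ x, IsLocalMinOn (fun x => v x - φ x)
      (closure S.Ω) x → IsLocalMaxOn (fun x => -v x - ψ x) (closure S.Ω) x := by
    rintro φ ψ rfl x h
    rw [IsLocalMaxOn, IsMaxFilter]
    filter_upwards [h] with y hy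
    linarith
  have key2 : ∀ φ ψ : EN N → ℝ, ψ = (fun y => -φ y) → ∀ x, IsLocalMaxOn (fun x => -v x - φ x)
      (closure S.Ω) x → IsLocalMinOn (fun x => v x - ψ x) (closure S.Ω) x := by
    rintro φ ψ rfl x h
    rw [IsLocalMinOn, IsMinFilter]
    filter_upwards [h] with y hy
    linarith
  have nn : ∀ φ : EN N → ℝ, (fun y => - -φ y) = φ := fun φ => by funext y; exact neg_neg _
  constructor
  · rintro ⟨h1, h2, h3, h4⟩
    refine ⟨fun x hx φ hφ hm hg => ?_, fun x hx k hk => ?_, fun x hx φ hφ hm hg => ?_,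
      fun x hx k hk => ?_⟩
    · obtain ⟨D, hD, e1, e2, e3⟩ := hess_symm_of_c2 hφ x
      have hg' : gradient (fun y => -φ y) x ≠ 0 := by rw [e3]; exact neg_ne_zero.2 hg
      have i1 := h1 x hx _ hφ.neg (key2 φ _ rfl x hm) hg'
      have i2 := dual_value (S := S) hφ.neg (Ω_sub hx) hg'
      rw [nn] at i2
      have i2' : S.dual.F x (gradient φ x) (hess φ x) +
        ⟪S.dual.b x, gradient φ x⟫ * ‖gradient φ x‖ ^ S.dual.α = _ := i2
      rw [i2']
      simp only [neg_neg] at i1 ⊢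
      linarith
    · have := h2 x hx (-k) (by filter_upwards [hk] with y hy; linarith)
      linarith
    · obtain ⟨D, hD, e1, e2, e3⟩ := hess_symm_of_c2 hφ x
      have hg' : gradient (fun y => -φ y) x ≠ 0 := by rw [e3]; exact neg_ne_zero.2 hg
      have i1 := h3 x hx _ hφ.neg (key2 φ _ rfl x hm) hg'
      have i2 := dual_value (S := S) hφ.neg (frontier_sub hx) hg'
      rw [nn] at i2
      have i2' : S.dual.F x (gradient φ x) (hess φ x) +
        ⟪S.dual.b x, gradient φ x⟫ * ‖gradient φ x‖ ^ S.dual.α = _ := i2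
      rw [i2']
      simp only [neg_neg] at i1 ⊢
      rw [le_max_iff] at i1
      rw [min_le_iff]
      rcases i1 with i1 | i1
      · left; linarith
      · right
        rw [e3] at i1
        simp only [BNeu, inner_neg_left] at i1 ⊢
        exact neg_nonneg.1 i1
    · exact min_le_iff.2 (Or.inr (by simp [BNeu]))
  · rintro ⟨h1, h2, h3, h4⟩
    refine ⟨fun x hx φ hφ hm hg => ?_, fun x hx k hk => ?_, fun x hx φ hφ hm hg => ?_,
      fun x hx k hk => ?_⟩
    · obtain ⟨D, hD, e1, e2, e3⟩ := hess_symm_of_c2 hφ x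
      have hg' : gradient (fun y => -φ y) x ≠ 0 := by rw [e3]; exact neg_ne_zero.2 hg
      have i1 := h1 x hx _ hφ.neg (key φ _ rfl x hm) hg'
      have i2 := dual_value (S := S) hφ (Ω_sub hx) hg
      have i2' : S.dual.F x (gradient (fun y => -φ y) x) (hess (fun y => -φ y) x) +
        ⟪S.dual.b x, gradient (fun y => -φ y) x⟫ * ‖gradient (fun y => -φ y) x‖ ^ S.dual.α = _ := i2
      rw [i2'] at i1
      simp only [neg_neg] at i1 ⊢
      linarith
    · have := h2 x hx (-k) (by filter_upwards [hk] with y hy; rw [hy])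
      simp only [neg_neg] at this
      linarith
    · obtain ⟨D, hD, e1, e2, e3⟩ := hess_symm_of_c2 hφ x
      have hg' : gradient (fun y => -φ y) x ≠ 0 := by rw [e3]; exact neg_ne_zero.2 hg
      have i1 := h3 x hx _ hφ.neg (key φ _ rfl x hm) hg'
      have i2 := dual_value (S := S) hφ (frontier_sub hx) hg
      have i2' : S.dual.F x (gradient (fun y => -φ y) x) (hess (fun y => -φ y) x) +
        ⟪S.dual.b x, gradient (fun y => -φ y) x⟫ * ‖gradient (fun y => -φ y) x‖ ^ S.dual.α = _ := i2
      rw [i2'] at i1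
      simp only [neg_neg] at i1 ⊢
      rw [min_le_iff] at i1
      rw [le_max_iff]
      rcases i1 with i1 | i1
      · left; linarith
      · right
        rw [e3] at i1
        simp only [BNeu, inner_neg_left] at i1 ⊢
        exact neg_nonpos.1 i1
    · exact le_max_iff.2 (Or.inr (by simp [BNeu]))

theorem VSuper_of_IsSuperSol {v : EN N → ℝ} (hz : S.ZCont z) (hv : LowerSemicontinuousOn v S.K)
    (h : IsSuperSol S.Ω S.F S.b S.α z (fun _ => 0) (BNeu S.nv) v) : S.VSuper z v :=
  VSub_of_IsSubSol (S := S.dual) hz.dual hv.neg (isSuperSol_iff.1 h)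

theorem IsSuperSol_of_VSuper {v : EN N → ℝ} (h : S.VSuper z v) :
    IsSuperSol S.Ω S.F S.b S.α z (fun _ => 0) (BNeu S.nv) v :=
  isSuperSol_iff.2 (IsSubSol_of_VSub h)

end Setup

/-! ### Doubling of variables -/

set_option maxHeartbeats 1600000 in
/-- Second order expansion of a product `e f` where `e` is affine up to `M n²` and `f` has a second
order expansion in `s = t + D`; all remainders are absorbed in `η n²`. -/
theorem taylor_alg {e0 M φ0 φ1 φ2 r η : ℝ} (he0 : 0 ≤ e0) (hM : 0 ≤ M) (hr : 0 ≤ r) (hη : 0 < η) :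
    ∃ η' > 0, ∃ n0 > 0, ∀ n t D l : ℝ, 0 ≤ n → n ≤ n0 → |t| ≤ 4 * r * n → 0 ≤ D → D ≤ 4 * n ^ 2 →
      |l| ≤ 2 * M * n →
      (e0 + l + M * n ^ 2) * (φ0 + φ1 * (t + D) + 1 / 2 * φ2 * (t + D) ^ 2 + η' * (t + D) ^ 2) ≤
        e0 * φ0 + φ0 * l + e0 * φ1 * t + e0 * φ1 * D + 1 / 2 * e0 * φ2 * t ^ 2 + φ1 * l * t
          + φ0 * M * n ^ 2 + η * n ^ 2 := by
  set R := 4 * r + 4 with hRdef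
  have hR : 0 < R := by positivity
  set C := 4 * e0 * |φ2| * R + 8 * M * |φ1| + 3 * M * (|φ2| + 1) * R ^ 2 + M * |φ1| * R with hCdef
  have hC : 0 ≤ C := by positivity
  refine ⟨min 1 (η / (2 * (e0 * R ^ 2 + 1))), lt_min one_pos (by positivity),
    min 1 (η / (2 * (C + 1))), lt_min one_pos (by positivity), fun n t D l hn hn0 ht hD0 hD hl => ?_⟩
  set η' := min 1 (η / (2 * (e0 * R ^ 2 + 1))) with hη'def
  have hη'0 : 0 < η' := lt_min one_pos (by positivity)
  have hη'1 : η' ≤ 1 := min_le_left _ _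
  have hη'2 : η' * (2 * (e0 * R ^ 2 + 1)) ≤ η := (le_div_iff₀ (by positivity)).1 (min_le_right _ _)
  have hn1 : n ≤ 1 := hn0.trans (min_le_left _ _)
  have hn2 : n * (2 * (C + 1)) ≤ η := (le_div_iff₀ (by positivity)).1 (hn0.trans (min_le_right _ _))
  have hn3 : n ^ 2 ≤ n := by nlinarith
  have htD : |t + D| ≤ R * n := by
    calc |t + D| ≤ |t| + |D| := abs_add_le _ _
      _ ≤ 4 * r * n + 4 * n ^ 2 := by rw [abs_of_nonneg hD0]; linarith
      _ ≤ R * n := by simp only [R]; nlinarith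
  have htD2 : (t + D) ^ 2 ≤ R ^ 2 * n ^ 2 := by
    rw [← mul_pow, ← sq_abs (t + D)]; exact pow_le_pow_left₀ (abs_nonneg _) htD 2
  have h2tD : |2 * t + D| ≤ 2 * R * n := by
    calc |2 * t + D| ≤ |2 * t| + |D| := abs_add_le _ _
      _ ≤ 2 * (4 * r * n) + 4 * n ^ 2 := by
        rw [abs_of_nonneg hD0, abs_mul, abs_of_pos (two_pos)]; linarith
      _ ≤ 2 * R * n := by simp only [R]; nlinarith
  have hE : |1 / 2 * φ2 + η'| ≤ |φ2| + 1 := by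
    calc _ ≤ |1 / 2 * φ2| + |η'| := abs_add_le _ _
      _ ≤ |φ2| + 1 := by
        rw [abs_mul, abs_of_pos hη'0, abs_of_pos (by norm_num : (0 : ℝ) < 1 / 2)]
        linarith [abs_nonneg φ2]
  have t1 : e0 * (1 / 2 * φ2) * (D * (2 * t + D)) ≤ 4 * e0 * |φ2| * R * n ^ 3 := by
    refine (le_abs_self _).trans ?_
    rw [abs_mul, abs_mul, abs_mul, abs_mul, abs_of_nonneg he0, abs_of_nonneg hD0,
      abs_of_pos (by norm_num : (0 : ℝ) < 1 / 2)]
    calc e0 * (1 / 2 * |φ2|) * (D * |2 * t + D|) ≤ e0 * (1 / 2 * |φ2|) * ((4 * n ^ 2) * (2 * R * n)) := by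
          gcongr
      _ = _ := by ring
  have t2 : l * φ1 * D ≤ 8 * M * |φ1| * n ^ 3 := by
    refine (le_abs_self _).trans ?_
    rw [abs_mul, abs_mul, abs_of_nonneg hD0]
    calc |l| * |φ1| * D ≤ (2 * M * n) * |φ1| * (4 * n ^ 2) := by gcongr
      _ = _ := by ring
  have t3 : l * ((1 / 2 * φ2 + η') * (t + D) ^ 2) ≤ 2 * M * (|φ2| + 1) * R ^ 2 * n ^ 3 := by
    refine (le_abs_self _).trans ?_
    rw [abs_mul, abs_mul, abs_of_nonneg (sq_nonneg (t + D))]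
    calc |l| * (|1 / 2 * φ2 + η'| * (t + D) ^ 2) ≤ (2 * M * n) * ((|φ2| + 1) * (R ^ 2 * n ^ 2)) := by
          gcongr
      _ = _ := by ring
  have t4 : M * n ^ 2 * (φ1 * (t + D)) ≤ M * |φ1| * R * n ^ 3 := by
    refine (le_abs_self _).trans ?_
    rw [abs_mul, abs_mul φ1, abs_of_nonneg (by positivity : 0 ≤ M * n ^ 2)]
    calc M * n ^ 2 * (|φ1| * |t + D|) ≤ M * n ^ 2 * (|φ1| * (R * n)) := by gcongr
      _ = _ := by ring
  have t5 : M * n ^ 2 * ((1 / 2 * φ2 + η') * (t + D) ^ 2) ≤ M * (|φ2| + 1) * R ^ 2 * n ^ 3 := by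
    refine (le_abs_self _).trans ?_
    rw [abs_mul, abs_mul (1 / 2 * φ2 + η'), abs_of_nonneg (sq_nonneg (t + D)),
      abs_of_nonneg (by positivity : 0 ≤ M * n ^ 2)]
    calc M * n ^ 2 * (|1 / 2 * φ2 + η'| * (t + D) ^ 2)
        ≤ M * n * ((|φ2| + 1) * (R ^ 2 * n ^ 2)) := by gcongr
      _ = _ := by ring
  have t6 : e0 * η' * (t + D) ^ 2 ≤ η / 2 * n ^ 2 := by
    calc e0 * η' * (t + D) ^ 2 ≤ e0 * η' * (R ^ 2 * n ^ 2) := by gcongr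
      _ = (η' * (e0 * R ^ 2)) * n ^ 2 := by ring
      _ ≤ η / 2 * n ^ 2 := by gcongr; nlinarith
  have t7 : C * n ^ 3 ≤ η / 2 * n ^ 2 := by
    calc C * n ^ 3 = (n * C) * n ^ 2 := by ring
      _ ≤ η / 2 * n ^ 2 := by gcongr; nlinarith
  have t8 : C * n ^ 3 = 4 * e0 * |φ2| * R * n ^ 3 + 8 * M * |φ1| * n ^ 3
      + 2 * M * (|φ2| + 1) * R ^ 2 * n ^ 3 + M * (|φ2| + 1) * R ^ 2 * n ^ 3 + M * |φ1| * R * n ^ 3 := by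
    simp only [C]; ring
  have key : (e0 + l + M * n ^ 2) *
      (φ0 + φ1 * (t + D) + 1 / 2 * φ2 * (t + D) ^ 2 + η' * (t + D) ^ 2) =
        e0 * φ0 + φ0 * l + e0 * φ1 * t + e0 * φ1 * D + 1 / 2 * e0 * φ2 * t ^ 2 + φ1 * l * t
          + φ0 * M * n ^ 2 + (e0 * (1 / 2 * φ2) * (D * (2 * t + D)) + l * φ1 * D
          + l * ((1 / 2 * φ2 + η') * (t + D) ^ 2) + M * n ^ 2 * (φ1 * (t + D))
          + M * n ^ 2 * ((1 / 2 * φ2 + η') * (t + D) ^ 2) + e0 * η' * (t + D) ^ 2) := by ring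
  rw [key]; linarith

/-- One-dimensional second order expansion. -/
theorem taylor2_real {f f' : ℝ → ℝ} {f2 s₀ : ℝ} (hf : ∀ᶠ s in 𝓝 s₀, HasDerivAt f (f' s) s)
    (hf' : HasDerivAt f' f2 s₀) {η : ℝ} (hη : 0 < η) :
    ∃ δ > 0, ∀ h : ℝ, |h| ≤ δ →
      f (s₀ + h) ≤ f s₀ + f' s₀ * h + 1 / 2 * f2 * h ^ 2 + η * h ^ 2 := by
  have h1 : ∀ᶠ s in 𝓝 s₀, HasGradientAt f (f' s) s := hf.mono fun s hs => by
    simpa using hs.hasGradientAt'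
  have h2 := taylor2 h1 hf'.hasFDerivAt hη
  obtain ⟨δ, hδ, h3⟩ := Metric.eventually_nhds_iff.1 h2
  refine ⟨δ / 2, by positivity, fun h hh => ?_⟩
  have h4 := h3 (y := h) (by rw [dist_zero_right, Real.norm_eq_abs]; linarith)
  have h5 := (abs_le.1 h4).2
  have e : ∀ p q : ℝ, ⟪p, q⟫ = q * p := fun p q => by simp
  simp only [Real.norm_eq_abs, sq_abs, e, ContinuousLinearMap.toSpanSingleton_apply,
    smul_eq_mul] at h5
  nlinarith

namespace Setup
variable {N : ℕ} {S : Setup N}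

variable (S) in
/-- A boundary weight `σ`: it makes the doubled test function
`(1 + σ x + σ y) f(|x - y|²)` violate the Neumann condition at boundary points. -/
structure Aux where
  σ : EN N → ℝ
  M : ℝ
  hM : 1 ≤ M
  σ0 : ∀ x ∈ S.K, 0 ≤ σ x
  σ1 : ∀ x ∈ S.K, σ x ≤ 1
  cont : Continuous σ
  grad : ∀ x ∈ S.K, ‖gradient σ x‖ ≤ M
  up : ∀ x ∈ S.K, ∀ y ∈ S.K, σ y ≤ σ x + ⟪gradient σ x, y - x⟫ + M * ‖y - x‖ ^ 2
  bd : ∀ x ∈ frontier S.Ω, ∀ y ∈ S.K, ∀ φ0 φ1 e0 : ℝ, 0 < φ0 → 0 ≤ φ1 → 0 ≤ e0 → e0 ≤ 3 →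
    ‖x - y‖ ^ 2 * φ1 ≤ S.m * φ0 →
    0 < ⟪(2 * e0 * φ1) • (x - y) + φ0 • gradient σ x, gradient S.ρ x⟫

theorem exists_aux (S : Setup N) : Nonempty S.Aux := by
  obtain ⟨R, hR, hKR⟩ := S.K_sub_ball
  obtain ⟨g, hg, hgl⟩ := S.exists_grad_lower
  obtain ⟨Mρ, hMρ, -, hρ2⟩ := c2_bounds S.hρ.1 R
  set Kc := (6 * S.m * Mρ + 1) / g ^ 2 with hKc
  have hKc0 : 0 < Kc := by positivity
  set σ : EN N → ℝ := fun x => Real.exp (Kc * S.ρ x) with hσ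
  have hσ2 : ContDiff ℝ 2 σ := (contDiff_const.mul S.hρ.1).exp
  obtain ⟨M, hM, h1, h2⟩ := c2_bounds hσ2 R
  have hgr : ∀ x, gradient σ x = (Kc * Real.exp (Kc * S.ρ x)) • gradient S.ρ x := fun x => by
    refine HasGradientAt.gradient (hasGradientAt_of_fderiv
      (L := Real.exp (Kc * S.ρ x) • Kc • (fderiv ℝ S.ρ x)) ?_ ?_)
    · exact ((((S.hρ.1.differentiable (by norm_num)) x).hasFDerivAt.const_mul Kc)).exp
    · intro v
      have : fderiv ℝ S.ρ x v = ⟪gradient S.ρ x, v⟫ := by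
        rw [((c2_gradient S.hρ.1).1 x).fderivInner.fderiv]; rfl
      simp only [_root_.smul_apply, smul_eq_mul, inner_smul_left, conj_trivial, this]
      ring
  refine ⟨⟨σ, M + 1, by linarith, fun x _ => (Real.exp_pos _).le, fun x hx => ?_, hσ2.continuous,
    fun x hx => (h1 x (hKR hx)).trans (by linarith), fun x hx y hy => ?_, ?_⟩⟩
  · refine Real.exp_le_one_iff.2 ?_
    nlinarith [S.ρ_nonpos hx]
  · have := (abs_le.1 (h2 x (hKR hx) y (hKR hy)).2).2
    nlinarith [sq_nonneg ‖y - x‖]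
  · intro x hx y hy φ0 φ1 e0 h0 h1 he0 he h3
    have hρx : S.ρ x = 0 := S.mem_frontier_iff.1 hx
    have h4 := (abs_le.1 (hρ2 x (hKR (S.frontier_sub hx)) y (hKR hy)).2).1
    have h5 := S.ρ_nonpos hy
    have h6 : -(Mρ * ‖x - y‖ ^ 2) ≤ ⟪x - y, gradient S.ρ x⟫ := by
      have e1 : ⟪x - y, gradient S.ρ x⟫ = -⟪gradient S.ρ x, y - x⟫ := by
        rw [real_inner_comm, ← inner_neg_right, neg_sub]
      have e2 : ‖x - y‖ = ‖y - x‖ := norm_sub_rev _ _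
      rw [e1, e2]; linarith
    have h7 : g ^ 2 ≤ ‖gradient S.ρ x‖ ^ 2 := pow_le_pow_left₀ hg.le (hgl x hx) 2
    have h8 : Kc * g ^ 2 = 6 * S.m * Mρ + 1 := by simp only [Kc]; field_simp
    rw [inner_add_left, inner_smul_left, inner_smul_left, hgr, hρx, inner_smul_left,
      real_inner_self_eq_norm_sq]
    simp only [mul_zero, Real.exp_zero, mul_one, conj_trivial]
    have h9 : 6 * S.m * Mρ + 1 ≤ Kc * ‖gradient S.ρ x‖ ^ 2 := by
      rw [← h8]; gcongr
    have h10 : -(2 * e0 * φ1 * (Mρ * ‖x - y‖ ^ 2)) ≤ 2 * e0 * φ1 * ⟪x - y, gradient S.ρ x⟫ := by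
      have := mul_le_mul_of_nonneg_left h6 (by positivity : 0 ≤ 2 * e0 * φ1)
      linarith
    have h11 : 2 * e0 * φ1 * (Mρ * ‖x - y‖ ^ 2) ≤ 6 * Mρ * (S.m * φ0) := by
      calc _ = (2 * e0) * Mρ * (‖x - y‖ ^ 2 * φ1) := by ring
        _ ≤ (2 * 3) * Mρ * (S.m * φ0) := by gcongr
        _ = _ := by ring
    have h12 := mul_le_mul_of_nonneg_left h9 h0.le
    linarith

/-- Admissibility of nearby gradients: the strict boundary inequality is an open condition. -/
theorem bd_near {x₀ p₁ : EN N} (hx₀ : x₀ ∈ S.K) (hp : p₁ ≠ 0)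
    (h : x₀ ∈ frontier S.Ω → 0 < ⟪p₁, gradient S.ρ x₀⟫) :
    ∃ δ > 0, ∀ x p : EN N, ‖x - x₀‖ ≤ δ → ‖p - p₁‖ ≤ δ →
      (x ∈ frontier S.Ω → 0 < ⟪p, S.nv x⟫) ∧ p ≠ 0 := by
  have hne : ∀ᶠ q : EN N × EN N in 𝓝 (x₀, p₁), q.2 ≠ 0 :=
    (continuous_snd.continuousAt (x := (x₀, p₁))).eventually_ne hp
  have hb : ∀ᶠ q : EN N × EN N in 𝓝 (x₀, p₁), (q.1 ∈ frontier S.Ω → 0 < ⟪q.2, S.nv q.1⟫) := by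
    rcases S.mem_K hx₀ with h1 | h1
    · filter_upwards [(continuous_fst.tendsto (x₀, p₁)).eventually (S.isOpen.mem_nhds h1)] with q hq hf
      exact (S.not_frontier hq hf).elim
    · have hc : Continuous fun q : EN N × EN N => ⟪q.2, gradient S.ρ q.1⟫ :=
        continuous_snd.inner ((c2_gradient S.hρ.1).2.continuous.comp continuous_fst)
      filter_upwards [(hc.tendsto (x₀, p₁)).eventually (lt_mem_nhds (h h1))] with q hq hf
      exact (S.nv_pos_iff hf _).2 hq
  obtain ⟨δ, hδ, hδ2⟩ := Metric.eventually_nhds_iff.1 (hb.and hne)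
  refine ⟨δ / 2, by positivity, fun x p hx hp => hδ2 (y := (x, p)) ?_⟩
  rw [Prod.dist_eq, max_lt_iff, dist_eq_norm, dist_eq_norm]
  constructor <;> dsimp <;> linarith

/-- The Hessian of the doubled test function on the product space. -/
def Tdbl (β1 β2 β3 : ℝ) (w : EN N) : E2 (EN N) →L[ℝ] E2 (EN N) :=
  let d : E2 (EN N) →L[ℝ] EN N := WithLp.fstL 2 ℝ (EN N) (EN N) - WithLp.sndL 2 ℝ (EN N) (EN N)
  (ContinuousLinearMap.adjoint d).comp ((β1 • ContinuousLinearMap.id ℝ (EN N) + β2 • rk w).comp d)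
    + β3 • ContinuousLinearMap.id ℝ (E2 (EN N))

theorem Tdbl_inner (β1 β2 β3 : ℝ) (w : EN N) (v v' : E2 (EN N)) :
    ⟪Tdbl β1 β2 β3 w v, v'⟫ = β1 * ⟪v.fst - v.snd, v'.fst - v'.snd⟫
      + β2 * (⟪w, v.fst - v.snd⟫ * ⟪w, v'.fst - v'.snd⟫) + β3 * ⟪v, v'⟫ := by
  simp only [Tdbl, _root_.add_apply, _root_.smul_apply, ContinuousLinearMap.comp_apply,
    ContinuousLinearMap.id_apply, inner_add_left, ContinuousLinearMap.adjoint_inner_left,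
    inner_smul_left, rk_apply, conj_trivial, _root_.sub_apply, WithLp.fstL_apply, WithLp.sndL_apply]

theorem Tdbl_symm (β1 β2 β3 : ℝ) (w : EN N) (v v' : E2 (EN N)) :
    ⟪Tdbl β1 β2 β3 w v, v'⟫ = ⟪v, Tdbl β1 β2 β3 w v'⟫ := by
  rw [real_inner_comm (Tdbl β1 β2 β3 w v') v, Tdbl_inner, Tdbl_inner,
    real_inner_comm (v'.fst - v'.snd) (v.fst - v.snd), real_inner_comm v v']
  ring
end Setup

namespace Setup
variable {N : ℕ} {S : Setup N} {z : EN N → ℝ → ℝ} {u v : EN N → ℝ}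

theorem mixed_term {l i M a b r D n lam : ℝ} (hlam : 0 < lam) (ha : 0 ≤ a) (hb : 0 ≤ b)
    (hn : n ^ 2 = a ^ 2 + b ^ 2) (hl : |l| ≤ M * (a + b)) (hi : |i| ≤ r * D) :
    l * (2 * i) ≤ lam * D ^ 2 + 2 * M ^ 2 * r ^ 2 * n ^ 2 / lam := by
  have c1 : l ^ 2 ≤ 2 * M ^ 2 * n ^ 2 := by
    have : l ^ 2 ≤ (M * (a + b)) ^ 2 := by
      rw [← sq_abs l]; exact pow_le_pow_left₀ (abs_nonneg _) hl 2
    refine this.trans ?_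
    rw [hn, mul_pow]
    nlinarith [mul_nonneg (sq_nonneg M) (sq_nonneg (a - b))]
  have c2 : l * (2 * i) ≤ 2 * (|l| * (r * D)) := by
    have h1 : l * i ≤ |l| * |i| := by rw [← abs_mul]; exact le_abs_self _
    have h2 := mul_le_mul_of_nonneg_left hi (abs_nonneg l)
    linarith
  have c3 : 2 * (|l| * (r * D)) ≤ lam * D ^ 2 + l ^ 2 * r ^ 2 / lam := by
    have e : lam * D ^ 2 + l ^ 2 * r ^ 2 / lam - 2 * (|l| * (r * D))
        = (lam * D - |l| * r) ^ 2 / lam := by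
      rw [← sq_abs l]; field_simp; ring
    have : 0 ≤ (lam * D - |l| * r) ^ 2 / lam := by positivity
    linarith
  have c4 : l ^ 2 * r ^ 2 / lam ≤ 2 * M ^ 2 * r ^ 2 * n ^ 2 / lam := by
    apply div_le_div_of_nonneg_right _ hlam.le
    linarith [mul_le_mul_of_nonneg_right c1 (sq_nonneg r)]
  linarith

theorem pair_bounds {a b n D : ℝ} (ha : 0 ≤ a) (hb : 0 ≤ b) (hn0 : 0 ≤ n) (hD0 : 0 ≤ D)
    (hn : n ^ 2 = a ^ 2 + b ^ 2) (hD : D ≤ a + b) : n ≤ a + b ∧ D ^ 2 ≤ 2 * n ^ 2 := by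
  constructor
  · refine abs_le_of_sq_le_sq' ?_ (by positivity) |>.2
    nlinarith
  · nlinarith [sq_nonneg (a - b)]

theorem incr_bound {a b r D t C : ℝ} (hr : 0 ≤ r) (ha1 : a ≤ 1) (hb1 : b ≤ 1)
    (hD0 : 0 ≤ D) (hD : D ≤ a + b) (ht : |t| ≤ 2 * (r * D)) (hxC : a * (8 * r + 8) ≤ C)
    (hyC : b * (8 * r + 8) ≤ C) (hC : 0 ≤ C) : |t + D ^ 2| ≤ C := by
  refine (abs_add_le _ _).trans ?_
  rw [abs_of_nonneg (sq_nonneg D)]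
  have b1 : D ^ 2 ≤ 2 * D := by nlinarith
  have b3 : r * D ≤ r * (a + b) := by gcongr
  nlinarith

set_option maxHeartbeats 3200000 in
/-- The outcome of the theorem on sums at an off-diagonal maximum of
`u x - v y - L (1 + σ x + σ y) f(|x - y|²)`. -/
theorem two_point (Q : S.Aux) (hu : S.VSub z u) (hv : S.VSuper z v) {L lam r : ℝ} (hL : 0 < L)
    (hlam : 0 < lam) {f f' : ℝ → ℝ} {φ0 φ1 φ2 e0 : ℝ} {x₀ y₀ : EN N} (hx₀ : x₀ ∈ S.K) (hy₀ : y₀ ∈ S.K)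
    (hr : ‖x₀ - y₀‖ = r) (he0 : e0 = 1 + Q.σ x₀ + Q.σ y₀)
    (hf : ∀ᶠ s in 𝓝 (r ^ 2), HasDerivAt f (f' s) s) (hf2 : HasDerivAt f' φ2 (r ^ 2))
    (hf0 : ∀ᶠ s in 𝓝 (r ^ 2), 0 ≤ f s)
    (h0 : f (r ^ 2) = φ0) (h1 : f' (r ^ 2) = φ1) (hφ0 : 0 < φ0) (hφ1 : 0 ≤ φ1)
    (hmφ : r ^ 2 * φ1 ≤ S.m * φ0)
    (hmax : ∃ δ > 0, ∀ x ∈ S.K, ∀ y ∈ S.K, ‖x - x₀‖ ≤ δ → ‖y - y₀‖ ≤ δ →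
      u x - v y - L * ((1 + Q.σ x + Q.σ y) * f (‖x - y‖ ^ 2)) ≤
        u x₀ - v y₀ - L * (e0 * φ0))
    {p₁ q₁ : EN N} (hp₁ : p₁ = L • ((2 * e0 * φ1) • (x₀ - y₀) + φ0 • gradient Q.σ x₀))
    (hq₁ : q₁ = L • ((2 * e0 * φ1) • (x₀ - y₀) - φ0 • gradient Q.σ y₀))
    (hp : p₁ ≠ 0) (hq : q₁ ≠ 0) {η : ℝ} (hη : 0 < η) :
    ∃ x ∈ S.K, ∃ y ∈ S.K, ∃ (p q : EN N) (X Y : EN N →L[ℝ] EN N), ‖x - x₀‖ ≤ η ∧ ‖y - y₀‖ ≤ η ∧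
      |u x - u x₀| ≤ η ∧ |v y - v y₀| ≤ η ∧ ‖p - p₁‖ ≤ η ∧ ‖q - q₁‖ ≤ η ∧ p ≠ 0 ∧ q ≠ 0 ∧
      SymOp X ∧ SymOp Y ∧
      (∀ ξ ζ : EN N, ⟪X ξ, ξ⟫ - ⟪Y ζ, ζ⟫ ≤ (2 * L * φ1 * (e0 + lam)) * ‖ξ - ζ‖ ^ 2
        + (4 * L * e0 * φ2) * ⟪x₀ - y₀, ξ - ζ⟫ ^ 2
        + (L * (4 * φ1 * r ^ 2 * Q.M ^ 2 / lam + 2 * φ0 * Q.M) + η) * (‖ξ‖ ^ 2 + ‖ζ‖ ^ 2)) ∧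
      0 ≤ S.H x p X + z x (u x) ∧ S.H y q Y + z y (v y) ≤ 0 := by
  have hM := Q.hM
  have hσx := Q.σ0 x₀ hx₀
  have hσy := Q.σ0 y₀ hy₀
  have hσx1 := Q.σ1 x₀ hx₀
  have hσy1 := Q.σ1 y₀ hy₀
  have he1 : 1 ≤ e0 := by linarith
  have he3 : e0 ≤ 3 := by linarith
  have hr0 : 0 ≤ r := by rw [← hr]; exact norm_nonneg _
  set w := x₀ - y₀ with hw
  set p₂ : EN N := -q₁ with hp₂
  set β1 := 2 * L * φ1 * (e0 + lam)
  set β2 := 4 * L * e0 * φ2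
  set β3 := L * (4 * φ1 * r ^ 2 * Q.M ^ 2 / lam + 2 * φ0 * Q.M)
  -- admissibility of the gradients at the boundary
  have hbx : x₀ ∈ frontier S.Ω → 0 < ⟪p₁, gradient S.ρ x₀⟫ := fun hf => by
    rw [hp₁, inner_smul_left]
    exact mul_pos hL (Q.bd x₀ hf y₀ hy₀ φ0 φ1 e0 hφ0 hφ1 (by linarith) he3 (by rw [hr]; exact hmφ))
  have hby : y₀ ∈ frontier S.Ω → 0 < ⟪p₂, gradient S.ρ y₀⟫ := fun hf => by
    have e : p₂ = L • ((2 * e0 * φ1) • (y₀ - x₀) + φ0 • gradient Q.σ y₀) := by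
      rw [hp₂, hq₁, hw]; module
    rw [e, inner_smul_left]
    exact mul_pos hL (Q.bd y₀ hf x₀ hx₀ φ0 φ1 e0 hφ0 hφ1 (by linarith) he3
      (by rw [norm_sub_rev, hr]; exact hmφ))
  have hp2 : p₂ ≠ 0 := neg_ne_zero.2 hq
  obtain ⟨δ1, hδ1, hB1⟩ := bd_near hx₀ hp hbx
  obtain ⟨δ2, hδ2, hB2⟩ := bd_near hy₀ hp2 hby
  -- the second order expansion of the test function
  have hsums : ∀ η > 0, ∃ δ > 0, ∀ x ∈ S.K, ∀ y ∈ S.K, ‖x - x₀‖ ≤ δ → ‖y - y₀‖ ≤ δ →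
      u x + -v y ≤ u x₀ + -v y₀ + ⟪p₁, x - x₀⟫ + ⟪p₂, y - y₀⟫
        + 1 / 2 * ⟪Tdbl β1 β2 β3 w (pr (x - x₀) (y - y₀)), pr (x - x₀) (y - y₀)⟫
        + η * ‖pr (x - x₀) (y - y₀)‖ ^ 2 := by
    intro η hη
    obtain ⟨δ, hδ, hmx⟩ := hmax
    obtain ⟨η', hη', n0, hn0, halg⟩ := taylor_alg (e0 := e0) (M := Q.M) (φ0 := φ0) (φ1 := φ1)
      (φ2 := φ2) (r := r) (by linarith) (by linarith) hr0 (show 0 < η / L by positivity)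
    obtain ⟨δ', hδ', htay⟩ := taylor2_real hf hf2 hη'
    obtain ⟨δ'', hδ'', hnn⟩ := Metric.eventually_nhds_iff.1 hf0
    refine ⟨min δ (min (n0 / 2) (min 1 (min δ' (δ'' / 2) / (8 * r + 8)))), by positivity,
      fun x hx y hy hxd hyd => ?_⟩
    have hxδ := hxd.trans (min_le_left _ _)
    have hyδ := hyd.trans (min_le_left _ _)
    have hxn := hxd.trans ((min_le_right _ _).trans (min_le_left _ _))
    have hyn := hyd.trans ((min_le_right _ _).trans (min_le_left _ _))
    have hx1 := hxd.trans ((min_le_right _ _).trans ((min_le_right _ _).trans (min_le_left _ _)))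
    have hy1 := hyd.trans ((min_le_right _ _).trans ((min_le_right _ _).trans (min_le_left _ _)))
    have hx2 := hxd.trans ((min_le_right _ _).trans ((min_le_right _ _).trans (min_le_right _ _)))
    have hy2 := hyd.trans ((min_le_right _ _).trans ((min_le_right _ _).trans (min_le_right _ _)))
    rw [le_div_iff₀ (by positivity)] at hx2 hy2
    set ξ := x - x₀ with hξ
    set ζ := y - y₀ with hζ
    set n := ‖pr ξ ζ‖ with hn
    have hn2 : n ^ 2 = ‖ξ‖ ^ 2 + ‖ζ‖ ^ 2 := normsq_E2 _
    have hn_0 : 0 ≤ n := norm_nonneg _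
    have hξn : ‖ξ‖ ≤ n := norm_fst_le_E2 (pr ξ ζ)
    have hζn : ‖ζ‖ ≤ n := norm_snd_le_E2 (pr ξ ζ)
    set d := ξ - ζ with hd
    have hdn : ‖d‖ ≤ ‖ξ‖ + ‖ζ‖ := norm_sub_le _ _
    obtain ⟨hns, hd2⟩ := pair_bounds (norm_nonneg ξ) (norm_nonneg ζ) hn_0 (norm_nonneg d) hn2 hdn
    have hd2n : ‖d‖ ≤ 2 * n := by linarith
    set t := 2 * ⟪w, d⟫ with ht
    have hwd : |⟪w, d⟫| ≤ r * ‖d‖ := hr ▸ abs_real_inner_le_norm w d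
    have htb : |t| ≤ 4 * r * n := by
      rw [ht, abs_mul, abs_of_pos two_pos]
      linarith [mul_le_mul_of_nonneg_left hd2n hr0]
    set l := ⟪gradient Q.σ x₀, ξ⟫ + ⟪gradient Q.σ y₀, ζ⟫ with hl
    have hl1 : |l| ≤ Q.M * (‖ξ‖ + ‖ζ‖) := by
      have a1 := abs_real_inner_le_norm (gradient Q.σ x₀) ξ
      have a2 := abs_real_inner_le_norm (gradient Q.σ y₀) ζ
      have a3 := mul_le_mul_of_nonneg_right (Q.grad x₀ hx₀) (norm_nonneg ξ)
      have a4 := mul_le_mul_of_nonneg_right (Q.grad y₀ hy₀) (norm_nonneg ζ)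
      have a5 := abs_add_le ⟪gradient Q.σ x₀, ξ⟫ ⟪gradient Q.σ y₀, ζ⟫
      rw [mul_add]; linarith
    have hl2 : |l| ≤ 2 * Q.M * n := hl1.trans (by
      have := mul_le_mul_of_nonneg_left (show ‖ξ‖ + ‖ζ‖ ≤ 2 * n by linarith)
        (show 0 ≤ Q.M by linarith)
      linarith)
    have hs : ‖x - y‖ ^ 2 = r ^ 2 + (t + ‖d‖ ^ 2) := by
      have : x - y = w + d := by rw [hw, hd, hξ, hζ]; abel
      rw [this, norm_add_sq_real, hr, ht]; ring
    have htD : |t + ‖d‖ ^ 2| ≤ min δ' (δ'' / 2) :=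
      incr_bound hr0 hx1 hy1 (norm_nonneg d) hdn
        (by rw [ht, abs_mul, abs_of_pos two_pos]; linarith) hx2 hy2 (by positivity)
    have hft := htay _ (htD.trans (min_le_left _ _))
    have hfn : 0 ≤ f (r ^ 2 + (t + ‖d‖ ^ 2)) := hnn (by
      rw [Real.dist_eq, add_sub_cancel_left]
      have := htD.trans (min_le_right _ _)
      linarith)
    rw [h0, h1] at hft
    have hxy := hmx x hx y hy hxδ hyδ
    rw [hs] at hxy
    have hex := Q.up x₀ hx₀ x hx
    have hey := Q.up y₀ hy₀ y hy
    have he : 1 + Q.σ x + Q.σ y ≤ e0 + l + Q.M * n ^ 2 := by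
      rw [hn2, hl, he0]; linarith
    have hep : 0 ≤ 1 + Q.σ x + Q.σ y := by linarith [Q.σ0 x hx, Q.σ0 y hy]
    have hprod : (1 + Q.σ x + Q.σ y) * f (r ^ 2 + (t + ‖d‖ ^ 2)) ≤ (e0 + l + Q.M * n ^ 2) *
        (φ0 + φ1 * (t + ‖d‖ ^ 2) + 1 / 2 * φ2 * (t + ‖d‖ ^ 2) ^ 2 + η' * (t + ‖d‖ ^ 2) ^ 2) :=
      mul_le_mul he hft hfn (hep.trans he)
    have ha := halg n t (‖d‖ ^ 2) l hn_0 (by linarith) htb (sq_nonneg _) (by linarith [sq_nonneg n]) hl2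
    -- the mixed term `l t`
    have hlt : l * t ≤ lam * ‖d‖ ^ 2 + 2 * Q.M ^ 2 * r ^ 2 * n ^ 2 / lam :=
      mixed_term hlam (norm_nonneg _) (norm_nonneg _) hn2 hl1 hwd
    have hlt' := mul_le_mul_of_nonneg_left hlt hφ1
    have htot := mul_le_mul_of_nonneg_left (hprod.trans ha) hL.le
    have hlt'' := mul_le_mul_of_nonneg_left hlt' hL.le
    have hTe : ⟪Tdbl β1 β2 β3 w (pr ξ ζ), pr ξ ζ⟫ = β1 * ‖d‖ ^ 2 + β2 * ⟪w, d⟫ ^ 2 + β3 * n ^ 2 := by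
      rw [Tdbl_inner, real_inner_self_eq_norm_sq, real_inner_self_eq_norm_sq, ← pow_two]
      rfl
    have hpe : ⟪p₁, ξ⟫ + ⟪p₂, ζ⟫ = L * (φ0 * l + e0 * φ1 * t) := by
      rw [hp₂, hp₁, hq₁, hl, ht, hd]
      simp only [inner_neg_left, inner_smul_left, inner_add_left, inner_sub_left, inner_sub_right,
        conj_trivial]
      ring
    rw [hTe]
    have hLη : L * (η / L * n ^ 2) = η * n ^ 2 := by field_simp
    have hβ : 1 / 2 * (β1 * ‖d‖ ^ 2 + β2 * ⟪w, d⟫ ^ 2 + β3 * n ^ 2) =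
        L * (e0 * φ1 * ‖d‖ ^ 2 + 1 / 2 * e0 * φ2 * t ^ 2 + φ0 * Q.M * n ^ 2)
        + L * (φ1 * (lam * ‖d‖ ^ 2 + 2 * Q.M ^ 2 * r ^ 2 * n ^ 2 / lam)) := by
      simp only [β1, β2, β3, ht]; field_simp; ring
    rw [hβ]
    linarith
  have husc : UpperSemicontinuousOn (fun y => -v y) S.K := hv.1
  have hη₁ : 0 < min η (min δ1 δ2) := by positivity
  obtain ⟨x, hx, y, hy, p, q, X, Z, g1, g2, g3, g4, g5, g6, hX, hZ, jX, jZ, hXZ⟩ :=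
    theorem_on_sums S.isCompact_K hu.1 husc hx₀ hy₀ p₁ p₂ (Tdbl_symm β1 β2 β3 w) hsums hη₁
  have m0 : min η (min δ1 δ2) ≤ η := min_le_left _ _
  have m1 : min η (min δ1 δ2) ≤ δ1 := (min_le_right _ _).trans (min_le_left _ _)
  have m2 : min η (min δ1 δ2) ≤ δ2 := (min_le_right _ _).trans (min_le_right _ _)
  obtain ⟨hbx', hp0⟩ := hB1 x p (g1.trans m1) (g5.trans m1)
  obtain ⟨hby', hq0⟩ := hB2 y q (g2.trans m2) (g6.trans m2)
  have hZs : SymOp Z := hZ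
  refine ⟨x, hx, y, hy, p, -q, X, -Z, g1.trans m0, g2.trans m0, g3.trans m0, ?_, g5.trans m0, ?_,
    hp0, neg_ne_zero.2 hq0, hX, hZs.neg, ?_, (hu.2 x hx).1 p X hX hp0 jX hbx', ?_⟩
  · have : |-v y - -v y₀| = |v y - v y₀| := by rw [neg_sub_neg, abs_sub_comm]
    exact (this ▸ g4).trans m0
  · rw [show -q - q₁ = -(q - p₂) by rw [hp₂]; abel, norm_neg]; exact g6.trans m0
  · intro ξ ζ
    have h := hXZ ξ ζ
    rw [Tdbl_inner, real_inner_self_eq_norm_sq, real_inner_self_eq_norm_sq, normsq_E2, ← pow_two] at h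
    have h' : ⟪X ξ, ξ⟫ + ⟪Z ζ, ζ⟫ ≤ β1 * ‖ξ - ζ‖ ^ 2 + β2 * ⟪w, ξ - ζ⟫ ^ 2
      + β3 * (‖ξ‖ ^ 2 + ‖ζ‖ ^ 2) + min η (min δ1 δ2) * (‖ξ‖ ^ 2 + ‖ζ‖ ^ 2) := h
    have h2 : min η (min δ1 δ2) * (‖ξ‖ ^ 2 + ‖ζ‖ ^ 2) ≤ η * (‖ξ‖ ^ 2 + ‖ζ‖ ^ 2) := by gcongr
    rw [_root_.neg_apply, inner_neg_left]
    linarith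
  · have h := (hv.2 y hy).1 q Z hZs hq0 jZ hby'
    rw [dual_H hy hq0 hZs] at h
    simp only [neg_neg] at h
    linarith
end Setup

/-! ### Exclusion of off-diagonal maxima -/

namespace Setup
variable {N : ℕ} {S : Setup N} {z : EN N → ℝ → ℝ} {u v : EN N → ℝ}

theorem grad_bounds {L c φ0 r M : ℝ} {w g g' : EN N} (hL : 0 < L) (hc : 0 ≤ c) (hφ0 : 0 ≤ φ0)
    (hw : ‖w‖ = r) (hg : ‖g‖ ≤ M) (hg' : ‖g'‖ ≤ M) :
    L * (c * r - φ0 * M) ≤ ‖L • (c • w + φ0 • g)‖ ∧ ‖L • (c • w + φ0 • g)‖ ≤ L * (c * r + φ0 * M) ∧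
    L * (c * r - φ0 * M) ≤ ‖L • (c • w - φ0 • g')‖ ∧
    ‖L • (c • w - φ0 • g') - L • (c • w + φ0 • g)‖ ≤ 2 * (L * (φ0 * M)) := by
  have e1 : ‖c • w‖ = c * r := by rw [norm_smul, hw, Real.norm_of_nonneg hc]
  have e2 : ‖φ0 • g‖ ≤ φ0 * M := by
    rw [norm_smul, Real.norm_of_nonneg hφ0]; gcongr
  have e3 : ‖φ0 • g'‖ ≤ φ0 * M := by
    rw [norm_smul, Real.norm_of_nonneg hφ0]; gcongr
  have hn : ∀ q : EN N, ‖L • q‖ = L * ‖q‖ := fun q => by rw [norm_smul, Real.norm_of_nonneg hL.le]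
  refine ⟨?_, ?_, ?_, ?_⟩
  · rw [hn]; gcongr
    have := norm_sub_norm_le (c • w) (-(φ0 • g))
    rw [norm_neg, sub_neg_eq_add] at this; linarith
  · rw [hn]; gcongr
    have := norm_add_le (c • w) (φ0 • g); linarith
  · rw [hn]; gcongr
    have := norm_sub_norm_le (c • w) (φ0 • g'); linarith
  · rw [← smul_sub, hn, show (c • w - φ0 • g') - (c • w + φ0 • g) = -(φ0 • g' + φ0 • g) by abel,
      norm_neg]
    have := norm_add_le (φ0 • g') (φ0 • g)
    nlinarith

variable (S) in
/-- The smaller of the two Hölder exponents. -/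
def hexp : ℝ := min S.θ S.ν

theorem hexp_gt : 1 / 2 < S.hexp := lt_min S.hF3.2.1.1 S.hF4.2.1.1

theorem rpow_hexp {t : ℝ} (ht : 0 < t) (ht1 : t ≤ 1) : t ^ S.θ ≤ t ^ S.hexp ∧ t ^ S.ν ≤ t ^ S.hexp :=
  ⟨Real.rpow_le_rpow_of_exponent_ge ht ht1 (min_le_left _ _),
    Real.rpow_le_rpow_of_exponent_ge ht ht1 (min_le_right _ _)⟩

/-- A bound for the drift terms at comparable gradients. -/
theorem Bo_sub_le {Bb : ℝ} (hBb : ∀ x ∈ S.K, ‖S.b x‖ ≤ Bb) {x y p q : EN N} (hx : x ∈ S.K)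
    (hy : y ∈ S.K) (hp : p ≠ 0) (hq : q ≠ 0) (hpq : ‖q‖ ≤ 2 * ‖p‖) :
    S.Bo x p - S.Bo y q ≤ ‖p‖ ^ S.α * (‖p‖ * (Bb * (1 + 2 ^ (1 + S.α)))) := by
  have hα := S.hα
  have h1 := (abs_le.1 (S.Bo_abs x hp)).2
  have h2 := (abs_le.1 (S.Bo_abs y hq)).1
  have hpn := norm_pos_iff.2 hp
  have h3 : ‖q‖ ^ (1 + S.α) ≤ 2 ^ (1 + S.α) * ‖p‖ ^ (1 + S.α) := by
    rw [← Real.mul_rpow (by norm_num) hpn.le]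
    exact Real.rpow_le_rpow (norm_nonneg _) hpq (by linarith)
  have h4 : ‖p‖ ^ (1 + S.α) = ‖p‖ * ‖p‖ ^ S.α := by
    rw [Real.rpow_add hpn, Real.rpow_one]
  have hb0 : 0 ≤ Bb := (norm_nonneg _).trans (hBb x hx)
  have h5 : ‖S.b x‖ * ‖p‖ ^ (1 + S.α) ≤ Bb * ‖p‖ ^ (1 + S.α) := by
    gcongr; exact hBb x hx
  have h6 : ‖S.b y‖ * ‖q‖ ^ (1 + S.α) ≤ Bb * (2 ^ (1 + S.α) * ‖p‖ ^ (1 + S.α)) := by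
    gcongr; exact hBb y hy
  rw [h4] at h5 h6 h1
  have e : ‖p‖ ^ S.α * (‖p‖ * (Bb * (1 + 2 ^ (1 + S.α)))) =
    Bb * (‖p‖ * ‖p‖ ^ S.α) + Bb * (2 ^ (1 + S.α) * (‖p‖ * ‖p‖ ^ S.α)) := by ring
  linarith

theorem sqrt_profile {B r : ℝ} (hr : 0 < r) :
    (∀ᶠ s in 𝓝 (r ^ 2), HasDerivAt (fun s => √s - B * s) (1 / (2 * √s) - B) s) ∧
      HasDerivAt (fun s => 1 / (2 * √s) - B) (-1 / (4 * r ^ 3)) (r ^ 2) := by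
  have hpos : ∀ᶠ s in 𝓝 (r ^ 2), 0 < s := lt_mem_nhds (by positivity)
  constructor
  · filter_upwards [hpos] with s hs
    have := (Real.hasDerivAt_sqrt hs.ne').sub ((hasDerivAt_id s).const_mul B)
    exact this.congr_deriv (by simp)
  · have hsq : √(r ^ 2) = r := Real.sqrt_sq hr.le
    have h1 := (Real.hasDerivAt_sqrt (show r ^ 2 ≠ 0 by positivity)).const_mul 2
    have h2 := (h1.inv (by rw [hsq]; positivity)).sub_const B
    rw [hsq] at h2
    have e : (fun s : ℝ => 1 / (2 * √s) - B) = fun s => (fun y => 2 * √y)⁻¹ s - B := by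
      funext s; simp
    rw [e]
    refine h2.congr_deriv ?_
    field_simp; norm_num

set_option maxHeartbeats 3200000 in
/-- Off-diagonal maxima where the concave profile `t - B t²` is active are impossible once `B` and
then `L` are large: the second derivative of the profile produces a large negative term. -/
theorem no_concave (Q : S.Aux) {Bb : ℝ} (hBb : ∀ x ∈ S.K, ‖S.b x‖ ≤ Bb)
    (hu : S.VSub z u) (hv : S.VSuper z v) {B L Z0 r : ℝ} (hL : 0 < L) (hr0 : 0 < r)
    (hB1 : 4 * Q.M ^ 2 ≤ B)
    (hB2 : 53 * S.Cc * Q.M ^ 2 + 5 * (Bb * (1 + 2 ^ (1 + S.α))) + 1 ≤ 2 * S.a * B)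
    (hr1 : 8 * B * r ≤ 1) (hr2 : 24 * Q.M * r ≤ 1)
    (hr3 : (S.C₁ + S.C₂) * (12 * Q.M * r) ^ S.hexp ≤ S.a / 4)
    (hLZ : 2 * Z0 < (L / 4) ^ (1 + S.α) / 5)
    (hzu : ∀ x ∈ S.K, |z x (u x)| ≤ Z0) (hzv : ∀ x ∈ S.K, |z x (v x)| ≤ Z0)
    {x₀ y₀ : EN N} (hx₀ : x₀ ∈ S.K) (hy₀ : y₀ ∈ S.K) (hr : ‖x₀ - y₀‖ = r)
    (hmax : ∃ δ > 0, ∀ x ∈ S.K, ∀ y ∈ S.K, ‖x - x₀‖ ≤ δ → ‖y - y₀‖ ≤ δ →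
      u x - v y - L * ((1 + Q.σ x + Q.σ y) * (√(‖x - y‖ ^ 2) - B * ‖x - y‖ ^ 2)) ≤
        u x₀ - v y₀ - L * ((1 + Q.σ x₀ + Q.σ y₀) * (√(r ^ 2) - B * r ^ 2))) : False := by
  have hM := Q.hM
  have hα := S.hα
  have ha := S.a_pos
  have hCc := S.Cc_pos
  set M := Q.M
  have hM2 : 1 ≤ M ^ 2 := one_le_pow₀ hM
  have hMM : M ≤ M ^ 2 := le_self_pow₀ hM (by norm_num)
  have hB : 0 < B := by linarith
  have hrM0 : r ≤ M * r := le_mul_of_one_le_left hr0.le hM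
  have hr24 : r ≤ 1 / 24 := by linarith
  have hsq : √(r ^ 2) = r := Real.sqrt_sq hr0.le
  obtain ⟨hf, hf2⟩ := sqrt_profile (B := B) hr0
  set φ0 := r - B * r ^ 2 with hφ0
  set φ1 := 1 / (2 * r) - B with hφ1
  set e0 := 1 + Q.σ x₀ + Q.σ y₀ with he0
  have hσx := Q.σ0 x₀ hx₀
  have hσy := Q.σ0 y₀ hy₀
  have hσx1 := Q.σ1 x₀ hx₀
  have hσy1 := Q.σ1 y₀ hy₀
  have he1 : 1 ≤ e0 := by linarith
  have he3 : e0 ≤ 3 := by linarith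
  have hφ1r : φ1 * (2 * r) = 1 - 2 * (B * r) := by rw [hφ1]; field_simp
  have hBr : B * r ≤ 1 / 8 := by linarith
  have hBr0 : 0 < B * r := by positivity
  have hφ0r : φ0 = r * (1 - B * r) := by rw [hφ0]; ring
  have hφ0pos : 0 < φ0 := by rw [hφ0r]; apply mul_pos hr0; linarith
  have hφ0le : φ0 ≤ r := by rw [hφ0]; linarith [mul_pos hB (pow_pos hr0 2)]
  have hφ1pos : 0 < φ1 := by
    by_contra h
    have : φ1 * (2 * r) ≤ 0 := mul_nonpos_of_nonpos_of_nonneg (not_lt.1 h) (by positivity)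
    linarith
  have hφ1le : φ1 ≤ 1 / (2 * r) := by rw [hφ1]; linarith
  have hm : (2 : ℝ) ≤ S.m := by exact_mod_cast S.hm
  have hmφ : r ^ 2 * φ1 ≤ S.m * φ0 := by
    have e : r ^ 2 * φ1 = r / 2 * (1 - 2 * (B * r)) := by rw [← hφ1r]; ring
    have : r ^ 2 * φ1 ≤ 2 * φ0 := by rw [e, hφ0r]; nlinarith only [hr0, hBr, hBr0]
    exact this.trans (by gcongr)
  have hf0 : ∀ᶠ s in 𝓝 (r ^ 2), 0 ≤ √s - B * s := by
    have hc : Continuous fun s : ℝ => √s - B * s := by fun_prop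
    refine ((hc.tendsto (r ^ 2)).eventually (lt_mem_nhds ?_)).mono fun s hs => le_of_lt hs
    rw [hsq]; exact hφ0pos
  obtain ⟨b1, b2, b3, b4⟩ := grad_bounds (L := L) (c := 2 * e0 * φ1) (φ0 := φ0) (r := r) (M := M)
    (w := x₀ - y₀) (g := gradient Q.σ x₀) (g' := gradient Q.σ y₀) hL (by positivity) hφ0pos.le hr
    (Q.grad x₀ hx₀) (Q.grad y₀ hy₀)
  have hc : 2 * e0 * φ1 * r = e0 * (1 - 2 * (B * r)) := by rw [← hφ1r]; ring
  rw [hc] at b1 b2 b3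
  set p₁ := L • ((2 * e0 * φ1) • (x₀ - y₀) + φ0 • gradient Q.σ x₀) with hp₁
  set q₁ := L • ((2 * e0 * φ1) • (x₀ - y₀) - φ0 • gradient Q.σ y₀) with hq₁
  have hφM : φ0 * M ≤ r * M := by gcongr
  have hrM : r * M ≤ 1 / 24 := by linarith
  have hlow : L / 2 ≤ L * (e0 * (1 - 2 * (B * r)) - φ0 * M) := by
    have h1 : 1 * (1 - 2 * (B * r)) ≤ e0 * (1 - 2 * (B * r)) :=
      mul_le_mul_of_nonneg_right he1 (by linarith)
    have : 1 / 2 ≤ e0 * (1 - 2 * (B * r)) - φ0 * M := by linarith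
    linarith [mul_le_mul_of_nonneg_left this hL.le]
  have hhigh : L * (e0 * (1 - 2 * (B * r)) + φ0 * M) ≤ 4 * L := by
    have h1 : e0 * (1 - 2 * (B * r)) ≤ e0 * 1 :=
      mul_le_mul_of_nonneg_left (by linarith) (by linarith)
    have : e0 * (1 - 2 * (B * r)) + φ0 * M ≤ 4 := by linarith
    linarith [mul_le_mul_of_nonneg_left this hL.le]
  have hp1 : p₁ ≠ 0 := norm_pos_iff.1 (by linarith)
  have hq1 : q₁ ≠ 0 := norm_pos_iff.1 (by linarith)
  set η := min (L * r * M / 2) (min (r / 2) (L / 4)) with hη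
  have hη0 : 0 < η := by positivity
  have η1 : η ≤ L * r * M / 2 := min_le_left _ _
  have η2 : η ≤ r / 2 := (min_le_right _ _).trans (min_le_left _ _)
  have η3 : η ≤ L / 4 := (min_le_right _ _).trans (min_le_right _ _)
  obtain ⟨x, hx, y, hy, p, q, X, Y, g1, g2, -, -, g5, g6, hp, hq, hX, hY, hXY, hH1, hH2⟩ :=
    two_point Q hu hv hL hr0 hx₀ hy₀ hr he0 hf hf2 hf0 (φ0 := φ0) (φ1 := φ1)
      (by simp only [hsq]; rfl) (by simp only [hsq]; rfl) hφ0pos hφ1pos.le hmφ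
      (by simpa only [hsq, ← he0] using hmax) hp₁ hq₁ hp1 hq1 hη0
  -- size of the gradients
  have hpl : L / 4 ≤ ‖p‖ := by
    have := norm_sub_norm_le p₁ p
    rw [norm_sub_rev] at this; linarith
  have hph : ‖p‖ ≤ 5 * L := by
    have := norm_sub_norm_le p p₁
    linarith
  have hpq : ‖q - p‖ ≤ (12 * M * r) * ‖p‖ := by
    have t1 : ‖q - p‖ ≤ ‖q - q₁‖ + ‖q₁ - p₁‖ + ‖p₁ - p‖ := by
      have := norm_add₃_le (a := q - q₁) (b := q₁ - p₁) (c := p₁ - p)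
      simpa using this
    rw [norm_sub_rev p₁ p] at t1
    have t2 : 2 * (L * (φ0 * M)) ≤ 2 * (L * (r * M)) := by gcongr
    have t3 : (12 * M * r) * (L / 4) ≤ (12 * M * r) * ‖p‖ := by gcongr
    linarith
  have hκ : 12 * M * r ≤ 1 / 2 := by linarith
  have hκ0 : 0 < 12 * M * r := by positivity
  have hxy : ‖x - y‖ ≤ 2 * r := by
    have := norm_add₃_le (a := x - x₀) (b := x₀ - y₀) (c := y₀ - y)
    rw [norm_sub_rev y₀ y, hr] at this
    simp only [sub_add_sub_cancel] at this
    linarith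
  obtain ⟨w1, w2⟩ := rpow_hexp (S := S) hκ0 (by linarith)
  have hω1 : ‖x - y‖ ^ S.θ ≤ (12 * M * r) ^ S.hexp := by
    refine le_trans (Real.rpow_le_rpow (norm_nonneg _) (hxy.trans ?_) S.θ_pos.le) w1
    linarith
  have hω : ((12 * M * r) ^ S.hexp) ^ 2 ≤ 12 * M * r := by
    rw [← Real.rpow_natCast, ← Real.rpow_mul hκ0.le]
    calc _ ≤ (12 * M * r) ^ (1 : ℝ) :=
          Real.rpow_le_rpow_of_exponent_ge hκ0 (by linarith) (by
            have := S.hexp_gt; push_cast; linarith)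
      _ = _ := Real.rpow_one _
  -- the matrix inequality
  set β3 := L * (4 * φ1 * r ^ 2 * M ^ 2 / r + 2 * φ0 * M) + η with hβ3
  have hβ3le : β3 ≤ 5 * L * M ^ 2 := by
    have s1 : 4 * φ1 * r ^ 2 * M ^ 2 / r = 2 * (φ1 * (2 * r)) * M ^ 2 := by field_simp; ring
    have s2 : 2 * (φ1 * (2 * r)) * M ^ 2 ≤ 2 * M ^ 2 := by
      rw [hφ1r]
      have := mul_le_mul_of_nonneg_right (show 2 * (1 - 2 * (B * r)) ≤ 2 by linarith) (sq_nonneg M)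
      linarith
    have s3 : 2 * φ0 * M ≤ 1 * M ^ 2 := by linarith
    have s4 : η ≤ L * M ^ 2 := by
      have := mul_le_mul_of_nonneg_left hM2 hL.le
      linarith
    rw [hβ3, s1]
    have s5 := mul_le_mul_of_nonneg_left (add_le_add s2 s3) hL.le
    linarith
  have hβ30 : 0 ≤ β3 := by positivity
  have hβ1le : 2 * L * φ1 * (e0 + r) ≤ 4 * L / r := by
    rw [le_div_iff₀ hr0]
    have : 2 * L * φ1 * (e0 + r) * r = L * (φ1 * (2 * r)) * (e0 + r) := by ring
    rw [this, hφ1r]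
    have h1 : (1 - 2 * (B * r)) * (e0 + r) ≤ 1 * 4 := mul_le_mul (by linarith) (by linarith) (by linarith) (by norm_num)
    linarith [mul_le_mul_of_nonneg_left h1 hL.le]
  have hβ2 : 4 * L * e0 * (-1 / (4 * r ^ 3)) = -(L * e0 / r ^ 3) := by field_simp
  have hXY' : ∀ ξ ζ : EN N, ⟪X ξ, ξ⟫ - ⟪Y ζ, ζ⟫ ≤
      (4 * L / r) * ‖ξ - ζ‖ ^ 2 + (5 * L * M ^ 2) * (‖ξ‖ ^ 2 + ‖ζ‖ ^ 2) := fun ξ ζ => by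
    have h := hXY ξ ζ
    rw [hβ2] at h
    have h1 : 2 * L * φ1 * (e0 + r) * ‖ξ - ζ‖ ^ 2 ≤ (4 * L / r) * ‖ξ - ζ‖ ^ 2 := by gcongr
    have h2 : β3 * (‖ξ‖ ^ 2 + ‖ζ‖ ^ 2) ≤ (5 * L * M ^ 2) * (‖ξ‖ ^ 2 + ‖ζ‖ ^ 2) := by gcongr
    have h3 : 0 ≤ (L * e0 / r ^ 3) * ⟪x₀ - y₀, ξ - ζ⟫ ^ 2 := by positivity
    linarith
  have hG : (4 * L * B) ≤ 0 ∨ ∃ e : EN N, ‖e‖ = 1 ∧ ⟪X e, e⟫ - ⟪Y e, e⟫ ≤ -(4 * L * B) := by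
    right
    refine ⟨r⁻¹ • (x₀ - y₀), by rw [norm_smul, hr, norm_inv, Real.norm_of_nonneg hr0.le,
      inv_mul_cancel₀ hr0.ne'], ?_⟩
    set e := r⁻¹ • (x₀ - y₀) with he
    have hen : ‖e‖ = 1 := by
      rw [he, norm_smul, hr, norm_inv, Real.norm_of_nonneg hr0.le, inv_mul_cancel₀ hr0.ne']
    have h := hXY e (-e)
    have i1 : ‖e - -e‖ = 2 := by
      rw [sub_neg_eq_add, ← two_smul ℝ e, norm_smul, hen]; norm_num
    have i2 : ⟪x₀ - y₀, e - -e⟫ = 2 * r := by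
      rw [sub_neg_eq_add, ← two_smul ℝ e, he, inner_smul_right, inner_smul_right,
        real_inner_self_eq_norm_sq, hr]; field_simp
    rw [i1, i2, hβ2, norm_neg, hen, map_neg, inner_neg_left, inner_neg_right, neg_neg] at h
    have h' : 2 * L * φ1 * (e0 + r) * 2 ^ 2 + -(L * e0 / r ^ 3) * (2 * r) ^ 2
        = 4 * L - 8 * L * B * (e0 + r) := by
      rw [hφ1]; field_simp; ring
    have h2 : β3 * (1 ^ 2 + 1 ^ 2) ≤ 10 * L * M ^ 2 := by linarith
    have h3 : L * B ≤ L * B * (e0 + r) := by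
      have : 0 < L * B := by positivity
      exact le_mul_of_one_le_right this.le (by linarith)
    have h4 : L * (14 * M ^ 2) ≤ L * (4 * B) := by
      have : 0 ≤ M ^ 2 := sq_nonneg _
      apply mul_le_mul_of_nonneg_left _ hL.le; linarith
    have h5 : L ≤ L * M ^ 2 := le_mul_of_one_le_right hL.le hM2
    linarith
  have hcore := core hx hy hp hκ0.le hκ hpq (Real.rpow_nonneg hκ0.le _) hω1 w2 hr3 hX hY
    (by positivity) (by positivity) hXY' hG
  have hq2 : ‖q‖ ≤ 2 * ‖p‖ := by
    have h1 := norm_sub_norm_le q p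
    have h2 := mul_le_mul_of_nonneg_right hκ (norm_nonneg p)
    linarith [norm_nonneg p]
  have hBo := Bo_sub_le hBb hx hy hp hq hq2
  have hp0 : 0 < ‖p‖ ^ S.α := Real.rpow_pos_of_pos (norm_pos_iff.2 hp) _
  have hb0 : 0 ≤ Bb := (norm_nonneg _).trans (hBb x hx)
  have hBo2 : ‖p‖ * (Bb * (1 + 2 ^ (1 + S.α))) ≤ L * (5 * (Bb * (1 + 2 ^ (1 + S.α)))) := by
    have : 0 ≤ Bb * (1 + 2 ^ (1 + S.α)) := by positivity
    linarith [mul_le_mul_of_nonneg_right hph this]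
  have hC1 : S.Cc * (((12 * M * r) ^ S.hexp) ^ 2 * (4 * L / r) + 5 * L * M ^ 2) ≤
      L * (53 * S.Cc * M ^ 2) := by
    have e1 : ((12 * M * r) ^ S.hexp) ^ 2 * (4 * L / r) ≤ 48 * L * M := by
      calc _ ≤ (12 * M * r) * (4 * L / r) := by gcongr
        _ = _ := by field_simp; norm_num
    have e2 : 48 * L * M ≤ 48 * L * M ^ 2 := by
      gcongr
    calc _ ≤ S.Cc * (48 * L * M ^ 2 + 5 * L * M ^ 2) :=
          mul_le_mul_of_nonneg_left (by linarith) hCc.le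
      _ = _ := by ring
  have hfin : S.H x p X - S.H y q Y ≤ ‖p‖ ^ S.α * (-L) := by
    unfold H
    have e1 := mul_le_mul_of_nonneg_left hC1 hp0.le
    have e2 := mul_le_mul_of_nonneg_left hBo2 hp0.le
    have e3 := mul_le_mul_of_nonneg_left hB2 (mul_pos hp0 hL).le
    linarith
  have hz1 := (abs_le.1 (hzu x hx)).2
  have hz2 := (abs_le.1 (hzv y hy)).1
  have hpow : (L / 4) ^ (1 + S.α) / 5 ≤ ‖p‖ ^ S.α * L := by
    have e1 : (L / 4) ^ (1 + S.α) ≤ ‖p‖ ^ (1 + S.α) :=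
      Real.rpow_le_rpow (by positivity) hpl (by linarith)
    rw [Real.rpow_add (norm_pos_iff.2 hp), Real.rpow_one] at e1
    have e2 : ‖p‖ * ‖p‖ ^ S.α ≤ 5 * L * ‖p‖ ^ S.α := by gcongr
    linarith
  linarith
end Setup

namespace Setup
variable {N : ℕ} {S : Setup N} {z : EN N → ℝ → ℝ} {u v : EN N → ℝ}

set_option maxHeartbeats 3200000 in
/-- Off-diagonal maxima where the flat profile `k t^{2m}` is active are impossible for small `r`:
all second order errors vanish with `r` while the zeroth order term has a definite gap `c`. -/
theorem no_flat (Q : S.Aux) (hu : S.VSub z u) (hv : S.VSuper z v) {L k r c δ m0 P0 : ℝ} (hL : 0 < L)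
    (hk : 0 < k) (hr0 : 0 < r) (hMr : 6 * Q.M * r ≤ 1) (hP0 : P0 = 8 * L * S.m)
    (hr3 : (S.C₁ + S.C₂) * (3 * Q.M * r) ^ S.hexp ≤ S.a / 4)
    (hkr : k * (r ^ 2) ^ S.m ≤ r) (hc : 0 < c) (hm0 : 0 < m0)
    (hs : S.Cc * P0 ^ (1 + S.α) *
      (12 * S.m * (((3 * Q.M * r) ^ S.hexp) ^ 2 / r) + 6 * Q.M ^ 2 * r) ≤ c / 4)
    (hBo : ∀ x ∈ S.K, ∀ y ∈ S.K, ∀ p q : EN N, ‖p‖ ≤ 2 * P0 → ‖q‖ ≤ 2 * P0 → ‖x - y‖ ≤ δ →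
      ‖q - p‖ ≤ δ → S.Bo x p - S.Bo y q ≤ c / 4)
    (hd1 : 2 * r ≤ δ) (hd2 : 3 * Q.M * r * P0 ≤ δ)
    (hgap : ∀ x ∈ S.K, ∀ y ∈ S.K, ‖x - y‖ ≤ δ → m0 / 2 ≤ u x - v y →
      c ≤ z y (v y) - z x (u x))
    {x₀ y₀ : EN N} (hx₀ : x₀ ∈ S.K) (hy₀ : y₀ ∈ S.K) (hr : ‖x₀ - y₀‖ = r)
    (huv : m0 ≤ u x₀ - v y₀)
    (hmax : ∃ δ > 0, ∀ x ∈ S.K, ∀ y ∈ S.K, ‖x - x₀‖ ≤ δ → ‖y - y₀‖ ≤ δ →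
      u x - v y - L * ((1 + Q.σ x + Q.σ y) * (k * (‖x - y‖ ^ 2) ^ S.m)) ≤
        u x₀ - v y₀ - L * ((1 + Q.σ x₀ + Q.σ y₀) * (k * (r ^ 2) ^ S.m))) : False := by
  have hM := Q.hM
  have hα := S.hα
  have hCc := S.Cc_pos
  set M := Q.M
  have hM2 : 1 ≤ M ^ 2 := one_le_pow₀ hM
  have hMM : M ≤ M ^ 2 := le_self_pow₀ hM (by norm_num)
  have hrM0 : r ≤ M * r := le_mul_of_one_le_left hr0.le hM
  set φ0 := k * (r ^ 2) ^ S.m with hφ0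
  set φ1 := pw1 k S.m (r ^ 2) with hφ1
  set φ2 := pw2 k S.m (r ^ 2) with hφ2
  set e0 := 1 + Q.σ x₀ + Q.σ y₀ with he0
  have hσx := Q.σ0 x₀ hx₀
  have hσy := Q.σ0 y₀ hy₀
  have hσx1 := Q.σ1 x₀ hx₀
  have hσy1 := Q.σ1 y₀ hy₀
  have he1 : 1 ≤ e0 := by linarith
  have he3 : e0 ≤ 3 := by linarith
  have hm : (2 : ℝ) ≤ S.m := by exact_mod_cast S.hm
  have hφ0pos : 0 < φ0 := by positivity
  have hφ1pos : 0 < φ1 := pw1_pos hk S.hm (by positivity)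
  have hφ2nn : 0 ≤ φ2 := pw2_nonneg hk (by positivity)
  have hφ12 : φ2 * r ^ 2 = (S.m - 1) * φ1 := pw2_mul S.hm _
  have hφ01 : r ^ 2 * φ1 = S.m * φ0 := by
    have : (r ^ 2) ^ S.m = r ^ 2 * (r ^ 2) ^ (S.m - 1) := by
      rw [← pow_succ', Nat.sub_add_cancel (by linarith [S.hm])]
    rw [hφ1, hφ0, this]; unfold pw1; ring
  have hφ0le : 2 * φ0 ≤ r ^ 2 * φ1 := by rw [hφ01]; gcongr
  have hφ1r : φ1 * r ≤ S.m := by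
    have : r * (φ1 * r) ≤ r * S.m := by
      calc r * (φ1 * r) = S.m * φ0 := by rw [← hφ01]; ring
        _ ≤ S.m * r := by gcongr
        _ = _ := mul_comm _ _
    exact le_of_mul_le_mul_left this hr0
  have hφ1r0 : 0 < φ1 * r := by positivity
  have hf : ∀ᶠ s in 𝓝 (r ^ 2), HasDerivAt (fun s => k * s ^ S.m) (pw1 k S.m s) s :=
    Eventually.of_forall fun s => hasDerivAt_mul_pow k s S.m
  have hf2 : HasDerivAt (pw1 k S.m) φ2 (r ^ 2) := hasDerivAt_mul_pow' k _ S.m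
  have hf0 : ∀ᶠ s in 𝓝 (r ^ 2), 0 ≤ k * s ^ S.m := by
    filter_upwards [lt_mem_nhds (show 0 < r ^ 2 by positivity)] with s hs
    positivity
  obtain ⟨b1, b2, b3, b4⟩ := grad_bounds (L := L) (c := 2 * e0 * φ1) (φ0 := φ0) (r := r) (M := M)
    (w := x₀ - y₀) (g := gradient Q.σ x₀) (g' := gradient Q.σ y₀) hL (by positivity) hφ0pos.le hr
    (Q.grad x₀ hx₀) (Q.grad y₀ hy₀)
  set p₁ := L • ((2 * e0 * φ1) • (x₀ - y₀) + φ0 • gradient Q.σ x₀) with hp₁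
  set q₁ := L • ((2 * e0 * φ1) • (x₀ - y₀) - φ0 • gradient Q.σ y₀) with hq₁
  have hφM : 2 * (φ0 * M) ≤ M * r * (φ1 * r) := by
    have := mul_le_mul_of_nonneg_right hφ0le (show 0 ≤ M by linarith)
    linarith
  have hφM2 : 12 * (φ0 * M) ≤ φ1 * r := by
    have := mul_le_mul_of_nonneg_right hMr hφ1r0.le
    linarith
  have hlow : L * (φ1 * r) * (3 / 2) ≤ L * (2 * e0 * φ1 * r - φ0 * M) := by
    have h1 : 1 * (φ1 * r) ≤ e0 * (φ1 * r) := by gcongr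
    have : φ1 * r * (3 / 2) ≤ 2 * e0 * φ1 * r - φ0 * M := by linarith
    linarith [mul_le_mul_of_nonneg_left this hL.le]
  have hhigh : L * (2 * e0 * φ1 * r + φ0 * M) ≤ 7 * (L * (φ1 * r)) := by
    have h1 : e0 * (φ1 * r) ≤ 3 * (φ1 * r) := by gcongr
    have : 2 * e0 * φ1 * r + φ0 * M ≤ 7 * (φ1 * r) := by linarith
    linarith [mul_le_mul_of_nonneg_left this hL.le]
  have hLφ : 0 < L * (φ1 * r) := by positivity
  have hp1 : p₁ ≠ 0 := norm_pos_iff.1 (by linarith)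
  have hq1 : q₁ ≠ 0 := norm_pos_iff.1 (by linarith)
  set η := min (L * (φ1 * r) * (r * M) / 2) (min (r / 2) (m0 / 8)) with hη
  have hη0 : 0 < η := by positivity
  have η1 : η ≤ L * (φ1 * r) * (r * M) / 2 := min_le_left _ _
  have η2 : η ≤ r / 2 := (min_le_right _ _).trans (min_le_left _ _)
  have η3 : η ≤ m0 / 8 := (min_le_right _ _).trans (min_le_right _ _)
  have η4 : η ≤ L * (φ1 * r) / 12 := by
    have := mul_le_mul_of_nonneg_left hMr hLφ.le
    linarith
  obtain ⟨x, hx, y, hy, p, q, X, Y, g1, g2, g3, g4, g5, g6, hp, hq, hX, hY, hXY, hH1, hH2⟩ :=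
    two_point Q hu hv hL one_pos hx₀ hy₀ hr he0 hf hf2 hf0 (φ0 := φ0) (φ1 := φ1)
      rfl rfl hφ0pos hφ1pos.le hφ01.le hmax hp₁ hq₁ hp1 hq1 hη0
  have hpl : L * (φ1 * r) ≤ ‖p‖ := by
    have := norm_sub_norm_le p₁ p
    rw [norm_sub_rev] at this; linarith
  have hph : ‖p‖ ≤ P0 := by
    have := norm_sub_norm_le p p₁
    have h2 := mul_le_mul_of_nonneg_left hφ1r hL.le
    rw [hP0]
    linarith
  have hP0pos : 0 < P0 := (norm_pos_iff.2 hp).trans_le hph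
  have hpq : ‖q - p‖ ≤ (3 * M * r) * ‖p‖ := by
    have t1 : ‖q - p‖ ≤ ‖q - q₁‖ + ‖q₁ - p₁‖ + ‖p₁ - p‖ := by
      have := norm_add₃_le (a := q - q₁) (b := q₁ - p₁) (c := p₁ - p)
      simpa using this
    rw [norm_sub_rev p₁ p] at t1
    have t2 : 2 * (L * (φ0 * M)) ≤ L * (M * r * (φ1 * r)) := by
      linarith [mul_le_mul_of_nonneg_left hφM hL.le]
    have t3 : (3 * M * r) * (L * (φ1 * r)) ≤ (3 * M * r) * ‖p‖ := by gcongr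
    have t4 : 0 ≤ M * r * (L * (φ1 * r)) := by positivity
    linarith
  have hκ : 3 * M * r ≤ 1 / 2 := by linarith
  have hκ0 : 0 < 3 * M * r := by positivity
  have hxy : ‖x - y‖ ≤ 2 * r := by
    have := norm_add₃_le (a := x - x₀) (b := x₀ - y₀) (c := y₀ - y)
    rw [norm_sub_rev y₀ y, hr] at this
    simp only [sub_add_sub_cancel] at this
    linarith
  obtain ⟨w1, w2⟩ := rpow_hexp (S := S) hκ0 (by linarith)
  have hω1 : ‖x - y‖ ^ S.θ ≤ (3 * M * r) ^ S.hexp := by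
    refine le_trans (Real.rpow_le_rpow (norm_nonneg _) (hxy.trans ?_) S.θ_pos.le) w1
    linarith
  set ω := (3 * M * r) ^ S.hexp with hωdef
  have hω0 : 0 ≤ ω := Real.rpow_nonneg hκ0.le _
  -- the matrix inequality
  have hβ3le : L * (4 * φ1 * r ^ 2 * M ^ 2 / 1 + 2 * φ0 * M) + η ≤ 6 * M ^ 2 * r * (L * (φ1 * r)) := by
    have s1 : 2 * φ0 * M ≤ M ^ 2 * (r * (φ1 * r)) := by
      have := mul_le_mul_of_nonneg_right hMM (show 0 ≤ r * (φ1 * r) by positivity)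
      linarith
    have s2 := mul_le_mul_of_nonneg_left s1 hL.le
    have s3 : L * (φ1 * r) * (r * M) ≤ L * (φ1 * r) * (r * M ^ 2) := by gcongr
    have s4 : 0 ≤ L * (φ1 * r) * (r * M ^ 2) := by positivity
    rw [div_one]
    linarith
  have hXY' : ∀ ξ ζ : EN N, ⟪X ξ, ξ⟫ - ⟪Y ζ, ζ⟫ ≤
      (12 * S.m * (L * φ1)) * ‖ξ - ζ‖ ^ 2 + (6 * M ^ 2 * r * (L * (φ1 * r))) * (‖ξ‖ ^ 2 + ‖ζ‖ ^ 2) :=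
    fun ξ ζ => by
    have h := hXY ξ ζ
    have h1 : 2 * L * φ1 * (e0 + 1) * ‖ξ - ζ‖ ^ 2 ≤ 2 * L * φ1 * (3 + 1) * ‖ξ - ζ‖ ^ 2 := by gcongr
    have h2 : (L * (4 * φ1 * r ^ 2 * M ^ 2 / 1 + 2 * φ0 * M) + η) * (‖ξ‖ ^ 2 + ‖ζ‖ ^ 2) ≤
      (6 * M ^ 2 * r * (L * (φ1 * r))) * (‖ξ‖ ^ 2 + ‖ζ‖ ^ 2) := by gcongr
    have h3 : ⟪x₀ - y₀, ξ - ζ⟫ ^ 2 ≤ r ^ 2 * ‖ξ - ζ‖ ^ 2 := by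
      rw [← mul_pow, ← hr, ← sq_abs]
      exact pow_le_pow_left₀ (abs_nonneg _) (abs_real_inner_le_norm _ _) 2
    have h4 : 4 * L * e0 * φ2 * ⟪x₀ - y₀, ξ - ζ⟫ ^ 2 ≤ 12 * L * ((S.m - 1) * φ1) * ‖ξ - ζ‖ ^ 2 := by
      calc _ ≤ 4 * L * 3 * φ2 * (r ^ 2 * ‖ξ - ζ‖ ^ 2) := by gcongr
        _ = 12 * L * (φ2 * r ^ 2) * ‖ξ - ζ‖ ^ 2 := by ring
        _ = _ := by rw [hφ12]
    have h5 : 0 ≤ L * φ1 * ‖ξ - ζ‖ ^ 2 := by positivity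
    linarith
  have hcore := core hx hy hp hκ0.le hκ hpq hω0 hω1 w2 hr3 hX hY
    (by positivity) (by positivity) hXY' (Or.inl le_rfl)
  rw [mul_zero, sub_zero] at hcore
  have hpn := norm_pos_iff.2 hp
  have hp0 : 0 < ‖p‖ ^ S.α := Real.rpow_pos_of_pos hpn _
  have hFo : S.Fo x p X - S.Fo y q Y ≤ c / 4 := by
    refine hcore.trans (le_trans ?_ hs)
    have e1 : L * φ1 ≤ ‖p‖ / r := by rw [le_div_iff₀ hr0]; linarith
    have e2 : ‖p‖ ^ S.α * ‖p‖ ≤ P0 ^ (1 + S.α) := by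
      calc _ = ‖p‖ ^ (1 + S.α) := by rw [Real.rpow_add hpn, Real.rpow_one, mul_comm]
        _ ≤ _ := Real.rpow_le_rpow hpn.le hph (by linarith)
    calc ‖p‖ ^ S.α * (S.Cc * (ω ^ 2 * (12 * S.m * (L * φ1)) + 6 * M ^ 2 * r * (L * (φ1 * r))))
        ≤ ‖p‖ ^ S.α * (S.Cc * (ω ^ 2 * (12 * S.m * (‖p‖ / r)) + 6 * M ^ 2 * r * ‖p‖)) := by gcongr
      _ = S.Cc * (‖p‖ ^ S.α * ‖p‖) * (12 * S.m * (ω ^ 2 / r) + 6 * M ^ 2 * r) := by ring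
      _ ≤ S.Cc * P0 ^ (1 + S.α) * (12 * S.m * (ω ^ 2 / r) + 6 * M ^ 2 * r) := by gcongr
  have hq2 : ‖q‖ ≤ 2 * ‖p‖ := by
    have h1 := norm_sub_norm_le q p
    have h2 := mul_le_mul_of_nonneg_right hκ hpn.le
    linarith
  have hB := hBo x hx y hy p q (by linarith) (by linarith) (hxy.trans hd1)
    (hpq.trans ((mul_le_mul_of_nonneg_left hph hκ0.le).trans hd2))
  have hg := hgap x hx y hy (hxy.trans hd1) (by
    have := abs_le.1 g3; have := abs_le.1 g4
    linarith)
  unfold H at hH1 hH2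
  linarith
end Setup

/-! ### The two-point estimate: comparison and Lipschitz bound -/

namespace Setup
variable {N : ℕ} {S : Setup N} {z : EN N → ℝ → ℝ} {u v : EN N → ℝ}

/-- Strict monotonicity of `z`, made uniform by compactness. -/
theorem gap (hz : S.ZCont z) (hanti : ∀ x ∈ S.K, StrictAnti (z x)) {M0 m0 : ℝ} (hm0 : 0 < m0) :
    ∃ c > 0, ∃ δ > 0, ∀ x ∈ S.K, ∀ y ∈ S.K, ‖x - y‖ ≤ δ → ∀ r s : ℝ, |r| ≤ M0 → |s| ≤ M0 →
      m0 / 2 ≤ r - s → c ≤ z y s - z x r := by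
  set T : Set (EN N × ℝ × ℝ) :=
    (S.K ×ˢ (Icc (-M0) M0 ×ˢ Icc (-M0) M0)) ∩ {q | m0 / 2 ≤ q.2.1 - q.2.2} with hT
  have hTc : IsCompact T :=
    (S.isCompact_K.prod (isCompact_Icc.prod isCompact_Icc)).inter_right
      (isClosed_le (by fun_prop) (by fun_prop))
  have hf1 : ContinuousOn (fun q : EN N × ℝ × ℝ => z q.1 q.2.2) T :=
    ContinuousOn.comp (g := fun q : EN N × ℝ => z q.1 q.2) (f := fun q : EN N × ℝ × ℝ => (q.1, q.2.2))
      hz (by fun_prop) fun q hq => ⟨hq.1.1, mem_univ _⟩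
  have hf2 : ContinuousOn (fun q : EN N × ℝ × ℝ => z q.1 q.2.1) T :=
    ContinuousOn.comp (g := fun q : EN N × ℝ => z q.1 q.2) (f := fun q : EN N × ℝ × ℝ => (q.1, q.2.1))
      hz (by fun_prop) fun q hq => ⟨hq.1.1, mem_univ _⟩
  obtain ⟨c, hc, hcT⟩ : ∃ c > 0, ∀ q ∈ T, 2 * c ≤ z q.1 q.2.2 - z q.1 q.2.1 := by
    rcases T.eq_empty_or_nonempty with he | hne
    · exact ⟨1, one_pos, fun q hq => by rw [he] at hq; exact hq.elim⟩
    · obtain ⟨q0, hq0, hmin⟩ := hTc.exists_isMinOn hne (hf1.sub hf2)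
      have hpos : 0 < z q0.1 q0.2.2 - z q0.1 q0.2.1 := by
        have h1 : m0 / 2 ≤ q0.2.1 - q0.2.2 := hq0.2
        have := hanti q0.1 hq0.1.1 (show q0.2.2 < q0.2.1 by linarith)
        linarith
      refine ⟨(z q0.1 q0.2.2 - z q0.1 q0.2.1) / 2, by linarith, fun q hq => ?_⟩
      have : z q0.1 q0.2.2 - z q0.1 q0.2.1 ≤ z q.1 q.2.2 - z q.1 q.2.1 := hmin hq
      linarith
  have huc := (S.isCompact_K.prod (isCompact_Icc (a := -M0) (b := M0))).uniformContinuousOn_of_continuous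
    (hz.mono (prod_mono subset_rfl (subset_univ _)))
  obtain ⟨δ, hδ, hδ2⟩ := Metric.uniformContinuousOn_iff_le.1 huc c hc
  refine ⟨c, hc, δ, hδ, fun x hx y hy hxy r s hr hs hrs => ?_⟩
  have h1 := hcT (x, r, s) ⟨⟨hx, abs_le.1 hr, abs_le.1 hs⟩, hrs⟩
  have h2 := hδ2 (x, s) ⟨hx, abs_le.1 hs⟩ (y, s) ⟨hy, abs_le.1 hs⟩ (by
    rw [Prod.dist_eq, dist_self, dist_eq_norm]; exact max_le hxy hδ.le)
  rw [Real.dist_eq] at h2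
  have := (abs_le.1 h2).2
  dsimp only at *
  linarith

theorem Bo_unif (S : Setup N) (P c : ℝ) (hc : 0 < c) :
    ∃ δ > 0, ∀ x ∈ S.K, ∀ y ∈ S.K, ∀ p q : EN N, ‖p‖ ≤ P → ‖q‖ ≤ P → ‖x - y‖ ≤ δ →
      ‖q - p‖ ≤ δ → S.Bo x p - S.Bo y q ≤ c := by
  have huc := (S.isCompact_K.prod (isCompact_closedBall (0 : EN N) P)).uniformContinuousOn_of_continuous
    (S.Bo_continuousOn.mono (prod_mono subset_rfl (subset_univ _)))
  obtain ⟨δ, hδ, hδ2⟩ := Metric.uniformContinuousOn_iff_le.1 huc c hc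
  refine ⟨δ, hδ, fun x hx y hy p q hp hq hxy hpq => ?_⟩
  have h2 := hδ2 (x, p) ⟨hx, by simpa using hp⟩ (y, q) ⟨hy, by simpa using hq⟩ (by
    rw [Prod.dist_eq, dist_eq_norm, dist_eq_norm, norm_sub_rev p q]; exact max_le hxy hpq)
  rw [Real.dist_eq] at h2
  exact (abs_le.1 h2).2

theorem rpow_small {h C : ℝ} (hh : 0 < h) (D ε : ℝ) (hε : 0 < ε) :
    ∀ᶠ r in 𝓝[>] (0 : ℝ), D * (C * r) ^ h ≤ ε := by
  have h1 : Continuous fun r : ℝ => D * (C * r) ^ h :=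
    continuous_const.mul ((continuous_const.mul continuous_id).rpow_const fun _ => Or.inr hh.le)
  have h2 := (h1.tendsto 0).eventually (gt_mem_nhds (show _ < ε by
    simpa [Real.zero_rpow hh.ne'] using hε))
  exact (h2.filter_mono nhdsWithin_le_nhds).mono fun _ h => le_of_lt h

theorem lin_small (C ε : ℝ) (hε : 0 < ε) : ∀ᶠ r in 𝓝[>] (0 : ℝ), C * r ≤ ε := by
  have h1 : Continuous fun r : ℝ => C * r := by fun_prop
  have h2 := (h1.tendsto 0).eventually (gt_mem_nhds (show _ < ε by simpa using hε))
  exact (h2.filter_mono nhdsWithin_le_nhds).mono fun _ h => le_of_lt h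

theorem sq_rpow_small {h C : ℝ} (hC : 0 < C) (hh : 1 / 2 < h) (D1 D2 D3 ε : ℝ) (hε : 0 < ε) :
    ∀ᶠ r in 𝓝[>] (0 : ℝ), D1 * (D2 * (((C * r) ^ h) ^ 2 / r) + D3 * r) ≤ ε := by
  have h1 := rpow_small (C := C) (h := 2 * h - 1) (by linarith) (D1 * D2 * C) (ε / 2) (by linarith)
  have h2 := lin_small (D1 * D3) (ε / 2) (by linarith)
  filter_upwards [h1, h2, self_mem_nhdsWithin] with r h1 h2 hr
  have hr : 0 < r := hr
  have hCr : 0 < C * r := by positivity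
  have e : ((C * r) ^ h) ^ 2 / r = C * (C * r) ^ (2 * h - 1) := by
    rw [Real.rpow_sub hCr, Real.rpow_one, two_mul, Real.rpow_add hCr]
    field_simp
  rw [e]
  linarith

theorem exists_small {p : ℝ → Prop} (h : ∀ᶠ r in 𝓝[>] (0 : ℝ), p r) :
    ∃ r0 > 0, ∀ r, 0 < r → r < r0 → p r := by
  obtain ⟨r0, hr0, h⟩ := mem_nhdsGT_iff_exists_Ioo_subset.1 h
  exact ⟨r0, hr0, fun r h1 h2 => h ⟨h1, h2⟩⟩

set_option maxHeartbeats 1600000 in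
/-- The two-point estimate. Taking `x = y` it is a comparison principle; taking `u = v` it is a
Lipschitz bound. The constant depends only on bounds for `u`, `v` and the zeroth order term. -/
theorem main_est (S : Setup N) {M0 : ℝ} (hM0 : 0 < M0) (Z0 : ℝ) :
    ∃ L > 0, ∀ (z : EN N → ℝ → ℝ) (u v : EN N → ℝ), S.ZCont z → (∀ x ∈ S.K, StrictAnti (z x)) →
      S.VSub z u → S.VSuper z v → (∀ x ∈ S.K, |u x| ≤ M0) → (∀ x ∈ S.K, |v x| ≤ M0) →
      (∀ x ∈ S.K, ∀ r, |r| ≤ M0 → |z x r| ≤ Z0) → ∀ x ∈ S.K, ∀ y ∈ S.K,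
      u x - v y ≤ 3 * L * ‖x - y‖ := by
  obtain ⟨Q⟩ := S.exists_aux
  obtain ⟨Bb, hBb0, hBb⟩ := S.exists_b_bound
  have hM := Q.hM
  have ha := S.a_pos
  have hα := S.hα
  have hh := S.hexp_gt
  obtain ⟨B, hB0, hB1, hB2⟩ : ∃ B > 0, 4 * Q.M ^ 2 ≤ B ∧
      53 * S.Cc * Q.M ^ 2 + 5 * (Bb * (1 + 2 ^ (1 + S.α))) + 1 ≤ 2 * S.a * B := by
    refine ⟨max (4 * Q.M ^ 2) ((53 * S.Cc * Q.M ^ 2 + 5 * (Bb * (1 + 2 ^ (1 + S.α))) + 1) / (2 * S.a)),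
      lt_max_of_lt_left (by positivity), le_max_left _ _, ?_⟩
    rw [← div_le_iff₀' (by positivity)]
    exact le_max_right _ _
  obtain ⟨r2, hr2, hsm⟩ := exists_small ((lin_small (8 * B) 1 one_pos).and
    ((lin_small (24 * Q.M) 1 one_pos).and
    ((rpow_small (C := 12 * Q.M) (h := S.hexp) (by linarith) (S.C₁ + S.C₂) (S.a / 4) (by positivity)).and
    (rpow_small (C := 3 * Q.M) (h := S.hexp) (by linarith) (S.C₁ + S.C₂) (S.a / 4) (by positivity)))))
  obtain ⟨r0, hr0, hr02⟩ : ∃ r0 > 0, r0 < r2 := ⟨r2 / 2, by linarith, by linarith⟩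
  obtain ⟨L, hL, hLr, hLZ⟩ : ∃ L > 0, 4 * M0 ≤ L * r0 ∧ 2 * Z0 < (L / 4) ^ (1 + S.α) / 5 := by
    have t1 : Tendsto (fun L : ℝ => (L / 4) ^ (1 + S.α)) atTop atTop :=
      (tendsto_rpow_atTop (by linarith)).comp (tendsto_id.atTop_div_const (by norm_num))
    have e1 := t1.eventually (eventually_gt_atTop (10 * Z0))
    obtain ⟨L, h1, h2, h3⟩ := (e1.and ((eventually_gt_atTop 0).and
      (eventually_ge_atTop (4 * M0 / r0)))).exists
    exact ⟨L, h2, (div_le_iff₀ hr0).1 h3, by linarith⟩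
  refine ⟨L, hL, fun z u v hz hanti hu hv huM hvM hzM x1 hx1 y1 hy1 => ?_⟩
  by_contra hcon
  push Not at hcon
  set t1 := ‖x1 - y1‖ with ht1
  have ht10 : 0 ≤ t1 := norm_nonneg _
  have hb : ∀ x ∈ S.K, ∀ y ∈ S.K, u x - v y ≤ 2 * M0 := fun x hx y hy => by
    linarith [(abs_le.1 (huM x hx)).2, (abs_le.1 (hvM y hy)).1]
  have ht1r : t1 ≤ r0 := by
    by_contra h
    push Not at h
    have := mul_lt_mul_of_pos_left h hL
    linarith [hb x1 hx1 y1 hy1]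
  obtain ⟨m0, hm0, hm0e⟩ : ∃ m0 > 0, m0 = u x1 - v y1 - 3 * L * t1 := ⟨_, by linarith, rfl⟩
  obtain ⟨c, hc, δ1, hδ1, hgap⟩ := gap hz hanti (M0 := M0) hm0
  have hmpos : (0 : ℝ) < S.m := by exact_mod_cast (lt_of_lt_of_le (by norm_num) S.hm)
  set P0 := 8 * L * S.m with hP0
  have hP0p : 0 < P0 := by positivity
  obtain ⟨δ2, hδ2, hBo⟩ := S.Bo_unif (2 * P0) (c / 4) (by linarith)
  set δ := min δ1 δ2 with hδ
  have hδ0 : 0 < δ := lt_min hδ1 hδ2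
  obtain ⟨r3, hr3, hsm2⟩ := exists_small (
    (sq_rpow_small (C := 3 * Q.M) (h := S.hexp) (by linarith) hh (S.Cc * P0 ^ (1 + S.α))
      (12 * S.m) (6 * Q.M ^ 2) (c / 4) (by linarith)).and
    ((lin_small 2 δ hδ0).and (lin_small (3 * Q.M * P0) δ hδ0)))
  obtain ⟨r1, hr1, hr13, hr10⟩ : ∃ r1 > 0, r1 ≤ r3 ∧ r1 ≤ r0 :=
    ⟨min r3 r0, lt_min hr3 hr0, min_le_left _ _, min_le_right _ _⟩
  have hr1m : 0 < (r1 ^ 2) ^ S.m := by positivity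
  obtain ⟨k, hk, hkr⟩ : ∃ k > 0, r0 < k * (r1 ^ 2) ^ S.m :=
    ⟨2 * r0 / (r1 ^ 2) ^ S.m, by positivity, by rw [div_mul_cancel₀ _ hr1m.ne']; linarith⟩
  have hkbig : ∀ t, r1 ≤ t → r0 < k * (t ^ 2) ^ S.m := fun t ht =>
    lt_of_lt_of_le hkr (by gcongr)
  have hsqrt : ∀ w : EN N, √(‖w‖ ^ 2) = ‖w‖ := fun w => Real.sqrt_sq (norm_nonneg _)
  have hBr : ∀ t, 0 ≤ t → t ≤ r0 → B * t ^ 2 ≤ t / 8 := fun t h0 h1 => by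
    rcases h0.eq_or_lt with rfl | h0
    · norm_num
    · have := (hsm t h0 (by linarith)).1
      have h3 := mul_le_mul_of_nonneg_right this h0.le
      linarith [show 8 * B * t * t = 8 * (B * t ^ 2) by ring]
  set ψ : EN N → EN N → ℝ := fun x y =>
    min (√(‖x - y‖ ^ 2) - B * ‖x - y‖ ^ 2) (k * (‖x - y‖ ^ 2) ^ S.m) with hψ
  set e : EN N → EN N → ℝ := fun x y => 1 + Q.σ x + Q.σ y with he
  have he1 : ∀ x ∈ S.K, ∀ y ∈ S.K, 1 ≤ e x y ∧ e x y ≤ 3 := fun x hx y hy => by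
    have := Q.σ0 x hx; have := Q.σ0 y hy; have := Q.σ1 x hx; have := Q.σ1 y hy
    simp only [he]; constructor <;> linarith
  set T : Set (EN N × EN N) := (S.K ×ˢ S.K) ∩ {q | ‖q.1 - q.2‖ ≤ r0} with hT
  have hTc : IsCompact T := (S.isCompact_K.prod S.isCompact_K).inter_right
    (isClosed_le (by fun_prop) (by fun_prop))
  have hψc : Continuous fun q : EN N × EN N => -(L * (e q.1 q.2 * ψ q.1 q.2)) := by
    have := Q.cont
    simp only [he, hψ]
    fun_prop
  have husc : UpperSemicontinuousOn (fun q : EN N × EN N =>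
      u q.1 + -v q.2 + -(L * (e q.1 q.2 * ψ q.1 q.2))) T := by
    refine UpperSemicontinuousOn.add (UpperSemicontinuousOn.add ?_ ?_)
      (hψc.upperSemicontinuous.upperSemicontinuousOn _)
    · exact UpperSemicontinuousOn.comp (f := u) (g := Prod.fst) hu.1 continuousOn_fst
        fun q hq => hq.1.1
    · exact UpperSemicontinuousOn.comp (f := fun y => -v y) (g := Prod.snd) hv.1 continuousOn_snd
        fun q hq => hq.1.2
  have hT1 : (x1, y1) ∈ T := ⟨⟨hx1, hy1⟩, ht1r⟩
  obtain ⟨⟨x₀, y₀⟩, hq0, hmaxT⟩ := husc.exists_isMaxOn ⟨_, hT1⟩ hTc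
  have hx₀ : x₀ ∈ S.K := hq0.1.1
  have hy₀ : y₀ ∈ S.K := hq0.1.2
  have hmax : ∀ x ∈ S.K, ∀ y ∈ S.K, ‖x - y‖ ≤ r0 →
      u x - v y - L * (e x y * ψ x y) ≤ u x₀ - v y₀ - L * (e x₀ y₀ * ψ x₀ y₀) :=
    fun x hx y hy hxy => by
      have : u x + -v y + -(L * (e x y * ψ x y)) ≤ u x₀ + -v y₀ + -(L * (e x₀ y₀ * ψ x₀ y₀)) :=
        hmaxT (a := (x, y)) ⟨⟨hx, hy⟩, hxy⟩
      linarith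
  have hψ0 : ∀ x y, ‖x - y‖ ≤ r0 → 0 ≤ ψ x y := fun x y h => by
    refine le_min ?_ (by positivity)
    rw [hsqrt]
    linarith [hBr _ (norm_nonneg (x - y)) h, norm_nonneg (x - y)]
  have hψle : ∀ x y, ψ x y ≤ ‖x - y‖ := fun x y => by
    refine (min_le_left _ _).trans ?_
    rw [hsqrt]
    linarith [mul_nonneg hB0.le (sq_nonneg ‖x - y‖)]
  set r := ‖x₀ - y₀‖ with hr
  have hrr0 : r ≤ r0 := hq0.2
  have hmaxval : m0 ≤ u x₀ - v y₀ - L * (e x₀ y₀ * ψ x₀ y₀) := by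
    refine le_trans ?_ (hmax x1 hx1 y1 hy1 ht1r)
    have h1 := mul_le_mul (he1 x1 hx1 y1 hy1).2 (hψle x1 y1) (hψ0 _ _ ht1r) (by norm_num)
    have h2 := mul_le_mul_of_nonneg_left h1 hL.le
    linarith
  have hpos0 : 0 ≤ L * (e x₀ y₀ * ψ x₀ y₀) :=
    mul_nonneg hL.le (mul_nonneg (by linarith [(he1 x₀ hx₀ y₀ hy₀).1]) (hψ0 _ _ hrr0))
  have huv : m0 ≤ u x₀ - v y₀ := by linarith
  have hrlt : r < r0 := by
    refine lt_of_le_of_ne hrr0 fun hrr => ?_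
    have h1 : r0 / 2 ≤ ψ x₀ y₀ := by
      refine le_min ?_ ?_
      · rw [hsqrt, ← hr, hrr]; linarith [hBr r0 hr0.le le_rfl]
      · rw [← hr, hrr]; linarith [hkbig r0 hr10]
    have h2 := mul_le_mul (he1 x₀ hx₀ y₀ hy₀).1 h1 (by linarith)
      (by linarith [(he1 x₀ hx₀ y₀ hy₀).1])
    have h3 := mul_le_mul_of_nonneg_left h2 hL.le
    linarith [hb x₀ hx₀ y₀ hy₀]
  have hzu : ∀ x ∈ S.K, |z x (u x)| ≤ Z0 := fun x hx => hzM x hx _ (huM x hx)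
  have hzv : ∀ x ∈ S.K, |z x (v x)| ≤ Z0 := fun x hx => hzM x hx _ (hvM x hx)
  have hloc : ∀ x y, ‖x - x₀‖ ≤ (r0 - r) / 2 → ‖y - y₀‖ ≤ (r0 - r) / 2 → ‖x - y‖ ≤ r0 :=
    fun x y h1 h2 => by
      have e1 : x - y = (x - x₀) + (x₀ - y₀) - (y - y₀) := by abel
      have := norm_sub_le ((x - x₀) + (x₀ - y₀)) (y - y₀)
      have := norm_add_le (x - x₀) (x₀ - y₀)
      rw [e1]; linarith
  rcases (norm_nonneg (x₀ - y₀)).eq_or_lt with hr00 | hrpos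
  · -- on the diagonal the test function is flat
    have hxy : x₀ = y₀ := by rw [← sub_eq_zero, ← norm_eq_zero]; exact hr00.symm
    subst hxy
    have hψd : ψ x₀ x₀ = 0 := le_antisymm (by simpa using hψle x₀ x₀) (hψ0 _ _ hrr0)
    have hbd : ∀ x ∈ S.K, ∀ y ∈ S.K, ‖x - y‖ ≤ r0 →
        u x - v y ≤ u x₀ - v x₀ + 3 * L * k * (‖x - y‖ ^ 2) ^ S.m := fun x hx y hy hxy => by
      have h1 := hmax x hx y hy hxy
      rw [hψd] at h1
      have h2 := mul_le_mul (he1 x hx y hy).2 (min_le_right (√(‖x - y‖ ^ 2) - B * ‖x - y‖ ^ 2)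
        (k * (‖x - y‖ ^ 2) ^ S.m)) (hψ0 x y hxy) (by norm_num)
      have h3 := mul_le_mul_of_nonneg_left h2 hL.le
      simp only [hψ] at h1
      linarith
    have hnear : ∀ᶠ y in 𝓝[S.K] x₀, y ∈ S.K ∧ ‖y - x₀‖ ≤ r0 := by
      filter_upwards [self_mem_nhdsWithin,
        mem_nhdsWithin_of_mem_nhds (closedBall_mem_nhds x₀ hr0)] with y hyK hy
      exact ⟨hyK, by simpa [dist_eq_norm] using hy⟩
    have f1 := hu.flat hz hx₀ (C := 3 * L * k) (by positivity) (hnear.mono fun y hy => by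
      have := hbd y hy.1 x₀ hx₀ hy.2; linarith)
    have f2 := VSub.flat hz.dual hv hx₀ (C := 3 * L * k) (by positivity) (hnear.mono fun y hy => by
      have := hbd x₀ hx₀ y hy.1 (by rw [norm_sub_rev]; exact hy.2)
      rw [norm_sub_rev] at this
      show -v y ≤ -v x₀ + 3 * L * k * (‖y - x₀‖ ^ 2) ^ S.m
      linarith)
    simp only [neg_neg] at f2
    have := hanti x₀ hx₀ (show v x₀ < u x₀ by linarith)
    linarith
  · rw [← hr] at hrpos
    obtain ⟨g1, g2, g3, g4⟩ := hsm r hrpos (by linarith)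
    have hδp : 0 < (r0 - r) / 2 := by linarith
    rcases min_cases (√(‖x₀ - y₀‖ ^ 2) - B * ‖x₀ - y₀‖ ^ 2) (k * (‖x₀ - y₀‖ ^ 2) ^ S.m) with
      ⟨hact, -⟩ | ⟨hact, hact2⟩
    · refine no_concave Q hBb hu hv hL hrpos hB1 hB2 g1 g2 g3 hLZ hzu hzv hx₀ hy₀ rfl
        ⟨_, hδp, fun x hx y hy h1 h2 => ?_⟩
      have h := hmax x hx y hy (hloc x y h1 h2)
      have h3 : ψ x₀ y₀ = √(r ^ 2) - B * r ^ 2 := hact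
      rw [h3] at h
      refine le_trans ?_ h
      have := mul_le_mul_of_nonneg_left (mul_le_mul_of_nonneg_left (min_le_left
        (√(‖x - y‖ ^ 2) - B * ‖x - y‖ ^ 2) (k * (‖x - y‖ ^ 2) ^ S.m))
        (by linarith [(he1 x hx y hy).1] : 0 ≤ e x y)) hL.le
      simp only [hψ]
      simp only [he] at this ⊢
      linarith
    · have hkr' : k * (r ^ 2) ^ S.m ≤ r := by
        rw [← hr, Real.sqrt_sq hrpos.le] at hact2
        linarith [mul_nonneg hB0.le (sq_nonneg r)]
      have hrr1 : r < r1 := by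
        by_contra h
        push Not at h
        linarith [hkbig r h]
      obtain ⟨k1, k2, k3⟩ := hsm2 r hrpos (by linarith)
      refine no_flat Q hu hv (c := c) (δ := δ) (m0 := m0) (P0 := P0) hL hk hrpos (by linarith) hP0 g4
        hkr' hc hm0 k1 (fun x hx y hy p q hp hq h1 h2 => hBo x hx y hy p q hp hq
          (h1.trans (min_le_right _ _)) (h2.trans (min_le_right _ _))) k2
        (by linarith) (fun x hx y hy h1 h2 => hgap x hx y hy (h1.trans (min_le_left _ _)) _ _
          (huM x hx) (hvM y hy) h2) hx₀ hy₀ rfl huv ⟨_, hδp, fun x hx y hy h1 h2 => ?_⟩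
      have h := hmax x hx y hy (hloc x y h1 h2)
      have h3 : ψ x₀ y₀ = k * (r ^ 2) ^ S.m := hact
      rw [h3] at h
      refine le_trans ?_ h
      have := mul_le_mul_of_nonneg_left (mul_le_mul_of_nonneg_left (min_le_right
        (√(‖x - y‖ ^ 2) - B * ‖x - y‖ ^ 2) (k * (‖x - y‖ ^ 2) ^ S.m))
        (by linarith [(he1 x hx y hy).1] : 0 ≤ e x y)) hL.le
      simp only [hψ]
      simp only [he] at this ⊢
      linarith

end Setup

/-! ### Stability of subsolutions -/

namespace Setup
variable {N : ℕ} {S : Setup N} {z : EN N → ℝ → ℝ} {u v : EN N → ℝ} {x x₀ y p : EN N}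
  {X : EN N →L[ℝ] EN N}

theorem quad_c2 (hX : SymOp X) (p x₀ : EN N) :
    (∀ x, HasGradientAt (fun x : EN N => ⟪p, x - x₀⟫ + 1 / 2 * ⟪X (x - x₀), x - x₀⟫)
      (p + X (x - x₀)) x) ∧ ∀ x, HasFDerivAt (fun x => p + X (x - x₀)) X x := by
  have hsym : ∀ v w, ⟪X v, w⟫ = ⟪v, X w⟫ := fun v w => by rw [hX v w, real_inner_comm]
  have h2 : ∀ x, HasFDerivAt (fun x : EN N => x - x₀) (ContinuousLinearMap.id ℝ (EN N)) x :=
    fun x => (hasFDerivAt_id x).sub_const x₀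
  refine ⟨fun x => HasGradientAt.add' ?_ ?_, fun x => ?_⟩
  · exact hasGradientAt_of_fderiv (HasFDerivAt.comp (f := fun x : EN N => x - x₀)
      (g := fun z => ⟪p, z⟫) x (inner_hasGradientAt p (x - x₀)).hasFDerivAt (h2 x)) fun v => rfl
  · have h1 := (quad_hasGradientAt hsym (x - x₀)).hasFDerivAt
    exact hasGradientAt_of_fderiv (HasFDerivAt.comp (f := fun x : EN N => x - x₀)
      (g := fun z => 1 / 2 * ⟪X z, z⟫) x h1 (h2 x)) fun v => rfl
  · have h3 := (HasFDerivAt.comp (f := fun x : EN N => x - x₀) (g := fun z => X z) x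
      X.hasFDerivAt (h2 x)).const_add p
    exact h3

variable (S z u x₀) in
/-- `u` is approximated near `x₀` by subsolutions of nearby equations which lie almost below `u`
and almost reach the value `u x₀`. -/
def Approx : Prop := ∀ ε > 0, ∃ (w : EN N → ℝ) (z' : EN N → ℝ → ℝ), S.VSub z' w ∧
  (∀ x ∈ S.K, w x ≤ u x + ε) ∧ (∃ x ∈ S.K, ‖x - x₀‖ < ε ∧ u x₀ - ε < w x) ∧
  ∀ x ∈ S.K, ∀ r, |r - u x₀| ≤ 1 → z' x r ≤ z x r + ε

theorem Approx.points (hA : S.Approx z u x₀) {φ : EN N → ℝ}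
    (hφ : Continuous φ) (hφ0 : φ x₀ = 0) {η δ : ℝ} (hη : 0 < η) (hδ : 0 < δ) {j : ℕ} (hj : j ≠ 0)
    (h : ∀ x ∈ S.K, ‖x - x₀‖ ≤ δ → u x ≤ u x₀ + φ x - η * (‖x - x₀‖ ^ 2) ^ j) {κ : ℝ} (hκ : 0 < κ) :
    ∃ (w : EN N → ℝ) (z' : EN N → ℝ → ℝ) (x : EN N), S.VSub z' w ∧ x ∈ S.K ∧ ‖x - x₀‖ ≤ κ ∧
      |w x - u x₀| ≤ κ ∧ z' x (w x) ≤ z x (w x) + κ ∧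
      ∀ᶠ y in 𝓝[S.K] x, w y ≤ w x + (φ y - φ x) := by
  have hφt : ∀ ε > 0, ∃ d > 0, ∀ x, ‖x - x₀‖ < d → |φ x| < ε := fun ε hε => by
    obtain ⟨d, hd, hd2⟩ := Metric.continuous_iff.1 hφ x₀ ε hε
    refine ⟨d, hd, fun x hx => ?_⟩
    have := hd2 x (by rwa [dist_eq_norm])
    rwa [hφ0, Real.dist_eq, sub_zero] at this
  obtain ⟨κ1, hκ1, hk1, hk2, hk3⟩ : ∃ κ1 > 0, κ1 ≤ κ ∧ κ1 ≤ δ / 2 ∧ κ1 ≤ 1 :=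
    ⟨min κ (min (δ / 2) 1), by positivity, min_le_left _ _,
      (min_le_right _ _).trans (min_le_left _ _), (min_le_right _ _).trans (min_le_right _ _)⟩
  obtain ⟨d, hd, hdφ⟩ := hφt (κ1 / 4) (by positivity)
  obtain ⟨κ2, hκ2, hk4, hk5⟩ : ∃ κ2 > 0, κ2 ≤ κ1 ∧ κ2 ≤ d :=
    ⟨min κ1 d, by positivity, min_le_left _ _, min_le_right _ _⟩
  have hP : 0 < η * (κ2 ^ 2) ^ j := by positivity
  obtain ⟨τ, hτ, ht1, ht2⟩ : ∃ τ > 0, τ ≤ κ1 / 4 ∧ τ ≤ η * (κ2 ^ 2) ^ j / 4 :=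
    ⟨min (κ1 / 4) (η * (κ2 ^ 2) ^ j / 4), by positivity, min_le_left _ _, min_le_right _ _⟩
  obtain ⟨d1, hd1, hd1φ⟩ := hφt τ hτ
  obtain ⟨ε, hε, he1, he2, he3⟩ : ∃ ε > 0, ε ≤ τ ∧ ε ≤ d1 ∧ ε ≤ δ :=
    ⟨min τ (min d1 δ), by positivity, min_le_left _ _,
      (min_le_right _ _).trans (min_le_left _ _), (min_le_right _ _).trans (min_le_right _ _)⟩
  obtain ⟨w, z', hw, hwu, ⟨x', hx', hx'0, hx'1⟩, hz'⟩ := hA ε hε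
  have hTc : IsCompact (S.K ∩ closedBall x₀ δ) := S.isCompact_K.inter_right isClosed_closedBall
  have husc : UpperSemicontinuousOn (fun x => w x + -φ x) (S.K ∩ closedBall x₀ δ) :=
    UpperSemicontinuousOn.add (hw.1.mono inter_subset_left)
      (hφ.neg.upperSemicontinuous.upperSemicontinuousOn _)
  have hmem : ∀ x, x ∈ S.K → ‖x - x₀‖ ≤ δ → x ∈ S.K ∩ closedBall x₀ δ := fun x h1 h2 =>
    ⟨h1, by rwa [mem_closedBall, dist_eq_norm]⟩
  have hx'T := hmem x' hx' (by linarith)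
  obtain ⟨x, hxT, hmax⟩ := husc.exists_isMaxOn ⟨x', hx'T⟩ hTc
  have hxK := hxT.1
  have hxδ : ‖x - x₀‖ ≤ δ := by simpa [dist_eq_norm] using hxT.2
  have m1 : w x' + -φ x' ≤ w x + -φ x := hmax hx'T
  have m2 := (abs_lt.1 (hd1φ x' (by linarith))).2
  have m3 := hwu x hxK
  have m4 := h x hxK hxδ
  have hlt : ‖x - x₀‖ < κ2 := by
    by_contra hge
    push Not at hge
    have : η * (κ2 ^ 2) ^ j ≤ η * (‖x - x₀‖ ^ 2) ^ j := by gcongr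
    linarith
  have m5 := abs_lt.1 (hdφ x (by linarith))
  have m6 : 0 ≤ η * (‖x - x₀‖ ^ 2) ^ j := by positivity
  have hwx : |w x - u x₀| ≤ κ1 := by rw [abs_le]; constructor <;> linarith [m5.1, m5.2]
  refine ⟨w, z', x, hw, hxK, by linarith, hwx.trans hk1, ?_, ?_⟩
  · linarith [hz' x hxK (w x) (hwx.trans hk3)]
  · have hnear : ∀ᶠ y in 𝓝[S.K] x, ‖y - x₀‖ < δ := by
      refine Filter.Eventually.filter_mono nhdsWithin_le_nhds ?_
      have : Continuous fun y : EN N => ‖y - x₀‖ := by fun_prop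
      exact this.continuousAt.eventually (gt_mem_nhds (by linarith))
    filter_upwards [hnear, self_mem_nhdsWithin] with y h1 h2
    have : w y + -φ y ≤ w x + -φ x := hmax (hmem y h2 h1.le)
    linarith

theorem Approx.subAt (hz : S.ZCont z) (hx₀ : x₀ ∈ S.K) (hA : S.Approx z u x₀) :
    S.SubAt z u x₀ := by
  have hball : ∀ {P : EN N → Prop}, (∀ᶠ y in 𝓝[S.K] x₀, P y) →
      ∃ δ > 0, ∀ x ∈ S.K, ‖x - x₀‖ ≤ δ → P x := fun h => by
    obtain ⟨δ, hδ, hδ2⟩ := Metric.mem_nhdsWithin_iff.1 h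
    refine ⟨δ / 2, by positivity, fun x hx hxd => hδ2 ⟨?_, hx⟩⟩
    rw [mem_ball, dist_eq_norm]; linarith
  constructor
  · intro p X hX hp hjet hfr
    refine jetSub_of_perturb hx₀ hX hp fun η hη => ?_
    set X' := X + η • ContinuousLinearMap.id ℝ (EN N) with hX'
    have hX's : SymOp X' := hX.add (SymOp.id.smul η)
    obtain ⟨δ, hδ, hup⟩ := hball (hjet (η / 4) (by positivity))
    obtain ⟨q1, q2⟩ := quad_c2 hX's p x₀
    set φ : EN N → ℝ := fun x => ⟪p, x - x₀⟫ + 1 / 2 * ⟪X' (x - x₀), x - x₀⟫ with hφ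
    have hφc : Continuous φ := by simp only [hφ]; fun_prop
    have hpts := fun n : ℕ => hA.points (φ := φ) hφc (by simp [hφ]) (η := η / 4) (by positivity) hδ
      (j := 1) one_ne_zero (fun x hx hxd => by
        have := hup x hx hxd
        simp only [hφ, hX', _root_.add_apply, _root_.smul_apply, ContinuousLinearMap.id_apply,
          inner_add_left, inner_smul_left, conj_trivial, real_inner_self_eq_norm_sq, pow_one]
        linarith) (κ := 1 / ((n : ℝ) + 1)) (by positivity)
    choose w z' xs hw hxK hxs hwx hzz hloc using hpts
    have hκ : Tendsto (fun n : ℕ => 1 / ((n : ℝ) + 1)) atTop (𝓝 0) :=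
      tendsto_one_div_add_atTop_nhds_zero_nat
    have hxl : Tendsto xs atTop (𝓝 x₀) := by
      rw [tendsto_iff_norm_sub_tendsto_zero]
      exact squeeze_zero (fun _ => norm_nonneg _) hxs hκ
    have hwl : Tendsto (fun n => w n (xs n)) atTop (𝓝 (u x₀)) := by
      rw [tendsto_iff_norm_sub_tendsto_zero]
      exact squeeze_zero (fun _ => norm_nonneg _) hwx hκ
    have hpl : Tendsto (fun n => p + X' (xs n - x₀)) atTop (𝓝 p) := by
      have h1 : Continuous fun y => p + X' (y - x₀) := by fun_prop
      have := (h1.tendsto x₀).comp hxl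
      simpa [Function.comp_def] using this
    have hzl : Tendsto (fun n => z (xs n) (w n (xs n))) atTop (𝓝 (z x₀ (u x₀))) :=
      (hz (x₀, u x₀) ⟨hx₀, mem_univ _⟩).tendsto.comp (f := fun n => (xs n, w n (xs n)))
        (tendsto_nhdsWithin_iff.2 ⟨hxl.prodMk_nhds hwl,
          Eventually.of_forall fun n => ⟨hxK n, mem_univ _⟩⟩)
    have hHl := H_tendsto (S := S) hx₀ (Eventually.of_forall hxK) hxl hp hpl hX's
      (Eventually.of_forall fun _ => hX's) (tendsto_const_nhds (x := X'))
    have hlim := (hHl.add hzl).add hκ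
    rw [add_zero] at hlim
    refine ge_of_tendsto hlim ?_
    obtain ⟨d, hd, hbd⟩ := bd_near hx₀ hp fun hf => (nv_pos_iff hf p).1 (hfr hf)
    have e1 : ∀ᶠ n in atTop, ‖xs n - x₀‖ ≤ d :=
      ((tendsto_iff_norm_sub_tendsto_zero.1 hxl).eventually (gt_mem_nhds hd)).mono
        fun n h => le_of_lt h
    have e2 : ∀ᶠ n in atTop, ‖(p + X' (xs n - x₀)) - p‖ ≤ d :=
      ((tendsto_iff_norm_sub_tendsto_zero.1 hpl).eventually (gt_mem_nhds hd)).mono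
        fun n h => le_of_lt h
    filter_upwards [e1, e2] with n h1 h2
    obtain ⟨b1, b2⟩ := hbd _ _ h1 h2
    have := ((hw n).2 (xs n) (hxK n)).1 _ X' hX's b2
      (upJet_of_c2 (φ := φ) (g := fun x => p + X' (x - x₀)) (Eventually.of_forall q1) (q2 _) (hloc n)) b1
    linarith [hzz n]
  · intro hΩ C hC hflat
    obtain ⟨δ, hδ, hup⟩ := hball hflat
    have hm := S.hm
    set φ : EN N → ℝ := fun x => (C + 1) * (‖x - x₀‖ ^ 2) ^ S.m with hφ
    have hφc : Continuous φ := by simp only [hφ]; fun_prop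
    have hm0 : S.m ≠ 0 := by omega
    by_contra hneg
    push Not at hneg
    set ζ := -z x₀ (u x₀) with hζ
    have hζ0 : 0 < ζ := by linarith
    obtain ⟨δ1, hδ1, hsm⟩ := pw_small S (C := C + 1) (by positivity) (ε := ζ / 4) (by positivity)
    have hzc : ∀ᶠ q in 𝓝[S.K ×ˢ univ] (x₀, u x₀), z q.1 q.2 < -(ζ / 2) :=
      (hz (x₀, u x₀) ⟨hx₀, mem_univ _⟩).eventually (gt_mem_nhds (by dsimp; linarith))
    obtain ⟨δ2, hδ2, hzc2⟩ := Metric.mem_nhdsWithin_iff.1 hzc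
    obtain ⟨r, hr, hrΩ⟩ := Metric.isOpen_iff.1 S.isOpen x₀ hΩ
    set κ := min (min (δ1 / 2) (δ2 / 2)) (min (r / 2) (ζ / 8)) with hκ
    have hκ0 : 0 < κ := by positivity
    have k1 : κ ≤ δ1 / 2 := (min_le_left _ _).trans (min_le_left _ _)
    have k2 : κ ≤ δ2 / 2 := (min_le_left _ _).trans (min_le_right _ _)
    have k3 : κ ≤ r / 2 := (min_le_right _ _).trans (min_le_left _ _)
    have k4 : κ ≤ ζ / 8 := (min_le_right _ _).trans (min_le_right _ _)
    obtain ⟨w, z', x, hw, hxK, hx, hwx, hzz, hloc⟩ := hA.points (φ := φ) hφc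
      (by simp [hφ, hm0]) (η := 1) one_pos hδ (j := S.m) hm0 (fun x hx hxd => by
        have := hup x hx hxd
        simp only [hφ]; linarith) hκ0
    have hzx : z x (w x) < -(ζ / 2) := by
      refine hzc2 (a := (x, w x)) ⟨?_, hxK, mem_univ _⟩
      rw [mem_ball, Prod.dist_eq, dist_eq_norm, Real.dist_eq]
      exact max_lt (by dsimp; linarith) (by dsimp; linarith)
    have hxΩ : x ∈ S.Ω := hrΩ (by rw [mem_ball, dist_eq_norm]; linarith)
    by_cases hxx : x = x₀
    · have := (hw.2 x hxK).2 hxΩ (C + 1) (by positivity) (by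
        filter_upwards [hloc] with y hy
        rw [hxx] at hy ⊢
        simpa [hφ, hm0] using hy)
      linarith
    · have := radial_test (C := C + 1) (by positivity) (hw.2 x hxK).1 hxx
        (fun hf => absurd hf (not_frontier hxΩ)) hloc
      have := (abs_le.1 (hsm x hxK x₀ hxx (by linarith))).2
      linarith

/-! ### Functions touched from both sides -/

/-- `q, Y` is a second order subjet of `w` at `x` relative to `K`. -/
def LowJet (K : Set (EN N)) (w : EN N → ℝ) (x q : EN N) (Y : EN N →L[ℝ] EN N) : Prop :=
  ∀ η > (0 : ℝ), ∀ᶠ y in 𝓝[K] x,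
    w x + ⟪q, y - x⟫ + 1 / 2 * ⟪Y (y - x), y - x⟫ - η * ‖y - x‖ ^ 2 ≤ w y

/-- Comparison of a superjet and a subjet at the same point along a direction pointing into `K`. -/
theorem touch_dir {K : Set (EN N)} {w : EN N → ℝ} {q : EN N} {Y : EN N →L[ℝ] EN N}
    (hu : UpJet K w x p X) (hl : LowJet K w x q Y) (d : EN N)
    (hd : ∀ᶠ t in 𝓝[>] (0 : ℝ), x + t • d ∈ K) :
    0 ≤ ⟪p - q, d⟫ ∧ (⟪p - q, d⟫ = 0 → ⟪Y d, d⟫ ≤ ⟪X d, d⟫) := by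
  have key : ∀ η > (0 : ℝ), ∀ᶠ t in 𝓝[>] (0 : ℝ),
      0 ≤ ⟪p - q, d⟫ + t * (1 / 2 * (⟪X d, d⟫ - ⟪Y d, d⟫) + 2 * η * ‖d‖ ^ 2) := by
    intro η hη
    have ht : Tendsto (fun t : ℝ => x + t • d) (𝓝[>] 0) (𝓝[K] x) := by
      refine tendsto_nhdsWithin_iff.2 ⟨?_, hd⟩
      have : Continuous fun t : ℝ => x + t • d := by fun_prop
      have := this.tendsto 0
      rw [zero_smul, add_zero] at this
      exact this.mono_left nhdsWithin_le_nhds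
    filter_upwards [ht.eventually (hu η hη), ht.eventually (hl η hη), self_mem_nhdsWithin]
      with t h1 h2 h3
    have h3 : 0 < t := h3
    simp only [add_sub_cancel_left, map_smul, inner_smul_left, inner_smul_right, conj_trivial,
      norm_smul, mul_pow, Real.norm_eq_abs, sq_abs] at h1 h2
    rw [inner_sub_left]
    have h4 : 0 ≤ t * (⟪p, d⟫ - ⟪q, d⟫ + t * (1 / 2 * (⟪X d, d⟫ - ⟪Y d, d⟫) + 2 * η * ‖d‖ ^ 2)) := by
      nlinarith only [h1, h2]
    exact nonneg_of_mul_nonneg_right h4 h3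
  constructor
  · have hc : Continuous fun t : ℝ =>
        ⟪p - q, d⟫ + t * (1 / 2 * (⟪X d, d⟫ - ⟪Y d, d⟫) + 2 * 1 * ‖d‖ ^ 2) := by fun_prop
    have := (hc.tendsto 0).mono_left (nhdsWithin_le_nhds (s := Ioi 0))
    rw [zero_mul, add_zero] at this
    exact ge_of_tendsto this (key 1 one_pos)
  · intro h0
    have hη : ∀ η > (0 : ℝ), 0 ≤ 1 / 2 * (⟪X d, d⟫ - ⟪Y d, d⟫) + 2 * η * ‖d‖ ^ 2 := fun η hη => by
      obtain ⟨t, h1, h2⟩ := ((key η hη).and self_mem_nhdsWithin).exists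
      rw [h0, zero_add] at h1
      exact nonneg_of_mul_nonneg_right h1 h2
    have hc : Continuous fun η : ℝ => 1 / 2 * (⟪X d, d⟫ - ⟪Y d, d⟫) + 2 * η * ‖d‖ ^ 2 := by fun_prop
    have := (hc.tendsto 0).mono_left (nhdsWithin_le_nhds (s := Ioi 0))
    have h1 := ge_of_tendsto this (eventually_nhdsWithin_of_forall hη)
    linarith

theorem touch_interior {w : EN N → ℝ} {q : EN N} {Y : EN N →L[ℝ] EN N} (hx : x ∈ S.Ω)
    (hu : UpJet S.K w x p X) (hl : LowJet S.K w x q Y) :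
    p = q ∧ ∀ d, ⟪Y d, d⟫ ≤ ⟪X d, d⟫ := by
  have hin : ∀ d, ∀ᶠ t in 𝓝[>] (0 : ℝ), x + t • d ∈ S.K := fun d => by
    have : Continuous fun t : ℝ => x + t • d := by fun_prop
    have := (this.tendsto 0).mono_left (nhdsWithin_le_nhds (s := Ioi 0))
    rw [zero_smul, add_zero] at this
    exact (this.eventually (S.isOpen.mem_nhds hx)).mono fun t h => Ω_sub h
  have hpq : p = q := by
    have := (touch_dir hu hl (-(p - q)) (hin _)).1
    rw [inner_neg_right, real_inner_self_eq_norm_sq] at this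
    have h2 : ‖p - q‖ ^ 2 = 0 := le_antisymm (by linarith) (sq_nonneg _)
    exact sub_eq_zero.1 (norm_eq_zero.1 (pow_eq_zero_iff (two_ne_zero) |>.1 h2))
  refine ⟨hpq, fun d => (touch_dir hu hl d (hin d)).2 ?_⟩
  rw [hpq, sub_self, inner_zero_left]

theorem touch_boundary {w : EN N → ℝ} {q : EN N} {Y : EN N →L[ℝ] EN N} (hx : x ∈ frontier S.Ω)
    (hu : UpJet S.K w x p X) (hl : LowJet S.K w x q Y) :
    ⟪p, gradient S.ρ x⟫ ≤ ⟪q, gradient S.ρ x⟫ := by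
  have h := (touch_dir hu hl (-gradient S.ρ x) (by
    filter_upwards [inward hx, self_mem_nhdsWithin] with t h1 h2
    have h2 : 0 < t := h2
    refine Ω_sub ((mem_Ω_iff).2 ?_)
    have := norm_pos_iff.2 (S.hρ.2.2.2 x hx).1
    rw [smul_neg, ← sub_eq_add_neg]
    have : 0 < t * ‖gradient S.ρ x‖ ^ 2 / 2 := by positivity
    linarith)).1
  rw [inner_neg_right, inner_sub_left] at h
  linarith

/-- At a minimum point only the zeroth order inequality is tested. -/
theorem subAt_of_min (hmin : ∀ᶠ y in 𝓝[S.K] x, u x ≤ u y) (hx : x ∈ S.K) (hz : 0 ≤ z x (u x)) :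
    S.SubAt z u x := by
  refine ⟨fun p X hX hp hj hfr => ?_, fun _ _ _ _ => hz⟩
  exfalso
  have hl : LowJet S.K u x 0 0 := fun η hη => by
    filter_upwards [hmin] with y hy
    simp only [inner_zero_left, _root_.zero_apply]
    linarith [mul_nonneg hη.le (sq_nonneg ‖y - x‖)]
  rcases mem_K hx with h | h
  · exact hp (touch_interior h hj hl).1
  · have := touch_boundary h hj hl
    rw [inner_zero_left] at this
    exact absurd ((nv_pos_iff h p).1 (hfr h)) (not_lt.2 this)

theorem VSub_const {k : ℝ} (h : ∀ x ∈ S.K, 0 ≤ z x k) : S.VSub z fun _ => k :=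
  ⟨continuous_const.upperSemicontinuous.upperSemicontinuousOn _,
    fun x hx => subAt_of_min (Eventually.of_forall fun _ => le_rfl) hx (h x hx)⟩

/-- The subsolution property passes to larger functions at points of contact. -/
theorem SubAt.of_le {w : EN N → ℝ} (h : S.SubAt z u x) (hle : ∀ᶠ y in 𝓝[S.K] x, u y ≤ w y)
    (he : w x = u x) : S.SubAt z w x := by
  refine ⟨fun p X hX hp hj hfr => ?_, fun hΩ C hC hf => ?_⟩
  · rw [he]
    refine h.1 p X hX hp (fun η hη => ?_) hfr
    filter_upwards [hle, hj η hη] with y h1 h2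
    linarith
  · rw [he]
    refine h.2 hΩ C hC ?_
    filter_upwards [hle, hf] with y h1 h2
    linarith

end Setup

/-! ### Perron's method -/

namespace Setup
variable {N : ℕ} {S : Setup N} {z : EN N → ℝ → ℝ} {u v : EN N → ℝ} {x x₀ y p : EN N}
  {X : EN N →L[ℝ] EN N}

variable (S) in
/-- The upper semicontinuous envelope on `K` of the pointwise supremum of a family. -/
def env (𝓕 : Set (EN N → ℝ)) (x : EN N) : ℝ :=
  sSup {t | ∀ ε > 0, ∃ w ∈ 𝓕, ∃ y ∈ S.K, ‖y - x‖ < ε ∧ t - ε < w y}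

section Env
variable {𝓕 : Set (EN N → ℝ)} {k1 : ℝ}

theorem env_mem_le (hb : ∀ w ∈ 𝓕, ∀ y ∈ S.K, w y ≤ k1) (x : EN N) {t : ℝ}
    (ht : ∀ ε > 0, ∃ w ∈ 𝓕, ∃ y ∈ S.K, ‖y - x‖ < ε ∧ t - ε < w y) : t ≤ k1 := by
  refine le_of_forall_pos_le_add fun ε hε => ?_
  obtain ⟨w, hw, y, hy, -, h⟩ := ht ε hε
  linarith [hb w hw y hy]

theorem mem_le_env (hb : ∀ w ∈ 𝓕, ∀ y ∈ S.K, w y ≤ k1) {t : ℝ}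
    (ht : ∀ ε > 0, ∃ w ∈ 𝓕, ∃ y ∈ S.K, ‖y - x‖ < ε ∧ t - ε < w y) : t ≤ S.env 𝓕 x :=
  le_csSup ⟨k1, fun _ h => env_mem_le hb x h⟩ ht

theorem le_env (hb : ∀ w ∈ 𝓕, ∀ y ∈ S.K, w y ≤ k1) {w : EN N → ℝ} (hw : w ∈ 𝓕) (hx : x ∈ S.K) :
    w x ≤ S.env 𝓕 x :=
  mem_le_env hb fun ε hε => ⟨w, hw, x, hx, by simpa using hε, by linarith⟩

theorem env_spec (hne : 𝓕.Nonempty) (hx : x ∈ S.K) :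
    ∀ ε > 0, ∃ w ∈ 𝓕, ∃ y ∈ S.K, ‖y - x‖ < ε ∧ S.env 𝓕 x - ε < w y := by
  intro ε hε
  obtain ⟨w0, hw0⟩ := hne
  have hne : {t | ∀ ε > 0, ∃ w ∈ 𝓕, ∃ y ∈ S.K, ‖y - x‖ < ε ∧ t - ε < w y}.Nonempty :=
    ⟨w0 x, fun ε hε => ⟨w0, hw0, x, hx, by simpa using hε, by linarith⟩⟩
  obtain ⟨t, ht, h⟩ := exists_lt_of_lt_csSup hne (show S.env 𝓕 x - ε / 2 < S.env 𝓕 x by linarith)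
  obtain ⟨w, hw, y, hy, h1, h2⟩ := ht (ε / 2) (by positivity)
  exact ⟨w, hw, y, hy, by linarith, by linarith⟩

theorem env_le (hb : ∀ w ∈ 𝓕, ∀ y ∈ S.K, w y ≤ k1) (hne : 𝓕.Nonempty) (hx : x ∈ S.K) :
    S.env 𝓕 x ≤ k1 := env_mem_le hb x (env_spec hne hx)

theorem env_usc (hb : ∀ w ∈ 𝓕, ∀ y ∈ S.K, w y ≤ k1) (hne : 𝓕.Nonempty) :
    UpperSemicontinuousOn (S.env 𝓕) S.K := by
  intro x hx s hs
  by_contra hcon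
  refine absurd (mem_le_env (t := s) hb fun ε hε => ?_) (not_le.2 hs)
  obtain ⟨y, hy, h1, hyK⟩ := ((not_eventually.1 hcon).and_eventually
    ((eventually_nhdsWithin_of_eventually_nhds
      (ball_mem_nhds x (show 0 < ε / 2 by positivity))).and self_mem_nhdsWithin)).exists
  have h1 : ‖y - x‖ < ε / 2 := by simpa [dist_eq_norm] using h1
  obtain ⟨w, hw, y', hy', h2, h3⟩ := env_spec hne hyK (ε / 2) (by positivity)
  refine ⟨w, hw, y', hy', ?_, by linarith⟩
  have := norm_add_le (y' - y) (y - x)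
  rw [sub_add_sub_cancel] at this
  linarith

end Env

theorem lowJet_of_c2 {K : Set (EN N)} {w φ : EN N → ℝ} {g : EN N → EN N}
    {D : EN N →L[ℝ] EN N} (hg : ∀ᶠ x in 𝓝 x₀, HasGradientAt φ (g x) x) (hD : HasFDerivAt g D x₀)
    (h : ∀ᶠ x in 𝓝[K] x₀, w x₀ + (φ x - φ x₀) ≤ w x) : LowJet K w x₀ (g x₀) D := by
  intro η hη
  have h1 := taylor2 hg hD hη
  have h2 : Tendsto (fun x => x - x₀) (𝓝[K] x₀) (𝓝 0) := by
    have : Tendsto (fun x => x - x₀) (𝓝 x₀) (𝓝 (x₀ - x₀)) := tendsto_id.sub_const x₀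
    rw [sub_self] at this
    exact this.mono_left nhdsWithin_le_nhds
  filter_upwards [h2.eventually h1, h] with x h3 h4
  rw [add_sub_cancel] at h3
  linarith [(abs_le.1 h3).1]

theorem upJet_of_flat {K : Set (EN N)} {w : EN N → ℝ} {C : ℝ} {m : ℕ} (hm : 2 ≤ m) (hC : 0 < C)
    (h : ∀ᶠ y in 𝓝[K] x, w y ≤ w x + C * (‖y - x‖ ^ 2) ^ m) : UpJet K w x 0 0 := by
  intro η hη
  have hev : ∀ᶠ y in 𝓝[K] x, C * ‖y - x‖ ^ 2 < η ∧ ‖y - x‖ ^ 2 < 1 := by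
    refine Filter.Eventually.filter_mono nhdsWithin_le_nhds ?_
    have h1 : Continuous fun y : EN N => C * ‖y - x‖ ^ 2 := by fun_prop
    have h2 : Continuous fun y : EN N => ‖y - x‖ ^ 2 := by fun_prop
    exact ((h1.tendsto x).eventually (gt_mem_nhds (by simpa using hη))).and
      ((h2.tendsto x).eventually (gt_mem_nhds (by simp)))
  filter_upwards [h, hev] with y h1 h2
  simp only [inner_zero_left, _root_.zero_apply]
  set s := ‖y - x‖ ^ 2 with hs
  have hs0 : 0 ≤ s := by positivity
  have h3 : s ^ m ≤ s ^ 2 := pow_le_pow_of_le_one hs0 h2.2.le hm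
  have h4 : C * s ^ m ≤ C * s ^ 2 := mul_le_mul_of_nonneg_left h3 hC.le
  have h5 : C * s ^ 2 ≤ η * s := by
    rw [sq, ← mul_assoc]; exact mul_le_mul_of_nonneg_right h2.1.le hs0
  linarith

/-- A function touched from below by a strict classical subsolution is a subsolution there. -/
theorem subAt_of_low {w : EN N → ℝ} {q : EN N} {Y : EN N →L[ℝ] EN N} (hx : x ∈ S.K)
    (hY : SymOp Y) (hq : q ≠ 0) (hl : LowJet S.K w x q Y)
    (hfr : x ∈ frontier S.Ω → ⟪q, gradient S.ρ x⟫ ≤ 0) (h : 0 ≤ S.H x q Y + z x (w x)) :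
    S.SubAt z w x := by
  refine ⟨fun p X hX hp hj hf => ?_, fun hΩ C hC hf => ?_⟩
  · rcases mem_K hx with hΩ | hF
    · obtain ⟨h1, h2⟩ := touch_interior hΩ hj hl
      rw [h1]
      linarith [H_mono hx hq hY hX h2]
    · have h1 := touch_boundary hF hj hl
      have h2 := (nv_pos_iff hF p).1 (hf hF)
      linarith [hfr hF]
  · exact absurd (touch_interior hΩ (upJet_of_flat S.hm hC hf) hl).1.symm hq

/-- The largest subsolution between two constants. -/
structure IsMaxSub (S : Setup N) (z : EN N → ℝ → ℝ) (k0 k1 : ℝ) (U : EN N → ℝ) : Prop where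
  sub : S.VSub z U
  lo : ∀ x ∈ S.K, k0 ≤ U x
  hi : ∀ x ∈ S.K, U x ≤ k1
  top : ∀ w, S.VSub z w → (∀ x ∈ S.K, k0 ≤ w x) → (∀ x ∈ S.K, w x ≤ k1) → ∀ x ∈ S.K, w x ≤ U x

theorem exists_maxSub (hz : S.ZCont z) {k0 k1 : ℝ} (hk : k0 ≤ k1) (h0 : ∀ x ∈ S.K, 0 ≤ z x k0) :
    ∃ U, S.IsMaxSub z k0 k1 U := by
  set 𝓕 : Set (EN N → ℝ) := {w | S.VSub z w ∧ (∀ x ∈ S.K, k0 ≤ w x) ∧ ∀ x ∈ S.K, w x ≤ k1} with hF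
  have hb : ∀ w ∈ 𝓕, ∀ y ∈ S.K, w y ≤ k1 := fun w hw => hw.2.2
  have hc : (fun _ => k0) ∈ 𝓕 := ⟨VSub_const h0, fun _ _ => le_rfl, fun _ _ => hk⟩
  have hne : 𝓕.Nonempty := ⟨_, hc⟩
  refine ⟨S.env 𝓕, ⟨env_usc hb hne, fun x hx => Approx.subAt hz hx fun ε hε => ?_⟩,
    fun x hx => le_env hb hc hx, fun x hx => env_le hb hne hx,
    fun w h1 h2 h3 x hx => le_env hb ⟨h1, h2, h3⟩ hx⟩
  obtain ⟨w, hw, y, hy, h1, h2⟩ := env_spec hne hx ε hε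
  exact ⟨w, z, hw.1, fun x' hx' => by linarith [le_env hb hw hx'], ⟨y, hy, h1, h2⟩,
    fun _ _ _ _ => by linarith⟩

/-- The largest subsolution admits no local modification raising it. -/
theorem IsMaxSub.no_bump {k0 k1 : ℝ} {U V : EN N → ℝ} (hU : S.IsMaxSub z k0 k1 U)
    (hVU : ∀ x ∈ S.K, V x ≤ U x) (happ : ∀ ε > 0, ∃ y ∈ S.K, ‖y - x₀‖ < ε ∧ U y < V x₀ + ε)
    {ψ : EN N → ℝ} (hψ : Continuous ψ) (hψ0 : ψ x₀ = V x₀) {δ κ₀ g : ℝ} (hδ : 0 < δ) (hκ₀ : 0 < κ₀)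
    (hg : 0 < g) (hann : ∀ x ∈ S.K, δ / 2 ≤ ‖x - x₀‖ → ‖x - x₀‖ < δ → ψ x + g ≤ V x)
    (hψ1 : ∀ x ∈ S.K, ‖x - x₀‖ < δ → ψ x + κ₀ ≤ k1)
    (hsub : ∀ κ, 0 < κ → κ ≤ κ₀ → ∀ x ∈ S.K, ‖x - x₀‖ < δ → ∀ w : EN N → ℝ, w x = ψ x + κ →
      (∀ᶠ y in 𝓝[S.K] x, ψ y + κ ≤ w y) → S.SubAt z w x) : False := by
  classical
  obtain ⟨κ, hκ, hk1, hk2⟩ : ∃ κ > 0, κ ≤ κ₀ ∧ κ ≤ g :=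
    ⟨min κ₀ g, by positivity, min_le_left _ _, min_le_right _ _⟩
  set w : EN N → ℝ := fun x => if ‖x - x₀‖ < δ then max (U x) (ψ x + κ) else U x with hw
  have w1 : ∀ x, ‖x - x₀‖ < δ → w x = max (U x) (ψ x + κ) := fun x hx => by simp [hw, hx]
  have w2 : ∀ x ∈ S.K, δ / 2 ≤ ‖x - x₀‖ → w x = U x := fun x hx h => by
    by_cases h2 : ‖x - x₀‖ < δ
    · rw [w1 x h2, max_eq_left]
      linarith [hann x hx h h2, hVU x hx]
    · simp [hw, h2]
  have wU : ∀ x, U x ≤ w x := fun x => by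
    by_cases h2 : ‖x - x₀‖ < δ
    · rw [w1 x h2]; exact le_max_left _ _
    · simp [hw, h2]
  have hcn : Continuous fun y : EN N => ‖y - x₀‖ := by fun_prop
  have near1 : ∀ x, ‖x - x₀‖ < δ → ∀ᶠ y in 𝓝[S.K] x, ‖y - x₀‖ < δ := fun x hx =>
    Filter.Eventually.filter_mono nhdsWithin_le_nhds (hcn.continuousAt.eventually (gt_mem_nhds hx))
  have near2 : ∀ x, ¬ ‖x - x₀‖ < δ → ∀ᶠ y in 𝓝[S.K] x, δ / 2 ≤ ‖y - x₀‖ := fun x hx =>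
    Filter.Eventually.filter_mono nhdsWithin_le_nhds
      ((hcn.continuousAt.eventually (lt_mem_nhds (by push Not at hx; linarith))).mono
        fun _ h => le_of_lt h)
  have hwsub : S.VSub z w := by
    refine ⟨fun x hx c hc => ?_, fun x hx => ?_⟩
    · have hc : w x < c := hc
      show ∀ᶠ y in 𝓝[S.K] x, w y < c
      by_cases h2 : ‖x - x₀‖ < δ
      · rw [w1 x h2, max_lt_iff] at hc
        have e2 : ∀ᶠ y in 𝓝[S.K] x, ψ y + κ < c :=
          Filter.Eventually.filter_mono nhdsWithin_le_nhds
            ((hψ.add_const κ).continuousAt.eventually (gt_mem_nhds hc.2))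
        filter_upwards [near1 x h2, hU.sub.1 x hx c hc.1, e2] with y h3 h4 h5
        rw [w1 y h3]; exact max_lt h4 h5
      · have : w x = U x := by simp [hw, h2]
        rw [this] at hc
        filter_upwards [near2 x h2, hU.sub.1 x hx c hc, self_mem_nhdsWithin] with y h3 h4 h5
        rw [w2 y h5 h3]; exact h4
    · by_cases he : w x = U x
      · exact (hU.sub.2 x hx).of_le (Eventually.of_forall wU) he
      · have h2 : ‖x - x₀‖ < δ := by
          by_contra h2
          exact he (by simp [hw, h2])
        refine hsub κ hκ hk1 x hx h2 w ?_ ?_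
        · rw [w1 x h2] at he ⊢
          exact (max_choice _ _).resolve_left he
        · filter_upwards [near1 x h2] with y h3
          rw [w1 y h3]; exact le_max_right _ _
  have hle := hU.top w hwsub (fun x hx => (hU.lo x hx).trans (wU x)) (fun x hx => by
    by_cases h2 : ‖x - x₀‖ < δ
    · rw [w1 x h2]; exact max_le (hU.hi x hx) (by linarith [hψ1 x hx h2])
    · simp only [hw, h2, if_false]; exact hU.hi x hx)
  obtain ⟨d, hd, hd2⟩ := Metric.continuous_iff.1 hψ x₀ (κ / 2) (by positivity)
  obtain ⟨y, hy, h1, h2⟩ := happ (min (κ / 2) (min d δ)) (by positivity)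
  have h3 := hd2 y (by
    rw [dist_eq_norm]; exact h1.trans_le ((min_le_right _ _).trans (min_le_left _ _)))
  rw [Real.dist_eq, hψ0] at h3
  have h4 := (abs_lt.1 h3).1
  have h5 := hle y hy
  rw [w1 y (h1.trans_le ((min_le_right _ _).trans (min_le_right _ _)))] at h5
  have h6 := (le_max_right _ _).trans h5
  linarith [min_le_left (κ / 2) (min d δ)]

theorem pw_neg (C : ℝ) (m : ℕ) (s : ℝ) : pw1 (-C) m s = -pw1 C m s ∧ pw2 (-C) m s = -pw2 C m s := by
  unfold pw1 pw2; constructor <;> ring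

theorem pw_small_neg (S : Setup N) {C : ℝ} (hC : 0 < C) {ε : ℝ} (hε : 0 < ε) : ∃ δ > 0, ∀ x ∈ S.K, ∀ y,
    x ≠ y → ‖x - y‖ < δ →
    |S.H x ((2 * pw1 (-C) S.m (‖x - y‖ ^ 2)) • (x - y))
      (radX (pw1 (-C) S.m (‖x - y‖ ^ 2)) (pw2 (-C) S.m (‖x - y‖ ^ 2)) (x - y))| ≤ ε := by
  obtain ⟨δ, hδ, h⟩ := pw_small S.dual hC hε
  refine ⟨δ, hδ, fun x hx y hxy hd => ?_⟩
  have h1 := h x hx y hxy hd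
  have hs : 0 < ‖x - y‖ ^ 2 := by have := norm_pos_iff.2 (sub_ne_zero.2 hxy); positivity
  have hp1 := pw1_pos hC S.hm hs
  have h2 := dual_H (S := S) (p := (2 * pw1 C S.m (‖x - y‖ ^ 2)) • (x - y)) hx
    (smul_ne_zero (by positivity) (sub_ne_zero.2 hxy))
    (radX_sym (pw1 C S.m (‖x - y‖ ^ 2)) (pw2 C S.m (‖x - y‖ ^ 2)) (x - y))
  have e1 : -((2 * pw1 C S.m (‖x - y‖ ^ 2)) • (x - y)) =
      (2 * pw1 (-C) S.m (‖x - y‖ ^ 2)) • (x - y) := by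
    rw [(pw_neg C _ _).1, ← neg_smul]; congr 1; ring
  have e2 : -radX (pw1 C S.m (‖x - y‖ ^ 2)) (pw2 C S.m (‖x - y‖ ^ 2)) (x - y) =
      radX (pw1 (-C) S.m (‖x - y‖ ^ 2)) (pw2 (-C) S.m (‖x - y‖ ^ 2)) (x - y) := by
    rw [(pw_neg C _ _).1, (pw_neg C _ _).2, radX, radX]
    module
  rw [e1, e2] at h2
  have h3 : S.dual.H x ((2 * pw1 C S.m (‖x - y‖ ^ 2)) • (x - y))
    (radX (pw1 C S.m (‖x - y‖ ^ 2)) (pw2 C S.m (‖x - y‖ ^ 2)) (x - y)) = _ := h2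
  rw [← abs_neg, ← h3]
  exact h1

theorem pos_near (hz : S.ZCont z) (hx₀ : x₀ ∈ S.K) {r₀ : ℝ} {q : EN N} {Y : EN N →L[ℝ] EN N}
    (hq : q ≠ 0) (hY : SymOp Y) (h : 0 < S.H x₀ q Y + z x₀ r₀) :
    ∃ d > 0, ∀ x ∈ S.K, ∀ r, ‖x - x₀‖ < d → |r - r₀| < d →
      0 < S.H x (q + Y (x - x₀)) Y + z x r := by
  have hfst : Tendsto (fun a : EN N × ℝ => a.1) (𝓝[S.K ×ˢ univ] (x₀, r₀)) (𝓝 x₀) :=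
    (continuous_fst.tendsto (x₀, r₀)).mono_left nhdsWithin_le_nhds
  have hpl : Tendsto (fun a : EN N × ℝ => q + Y (a.1 - x₀)) (𝓝[S.K ×ˢ univ] (x₀, r₀)) (𝓝 q) := by
    have h1 : Continuous fun y => q + Y (y - x₀) := by fun_prop
    have := (h1.tendsto x₀).comp hfst
    simpa [Function.comp_def] using this
  have hH := H_tendsto (S := S) hx₀ (eventually_nhdsWithin_of_forall fun a ha => ha.1) hfst hq hpl hY
    (Eventually.of_forall fun _ => hY) (tendsto_const_nhds (x := Y))
  have ht := (hH.add (hz (x₀, r₀) ⟨hx₀, mem_univ _⟩)).eventually (lt_mem_nhds h)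
  obtain ⟨d, hd, hd2⟩ := Metric.mem_nhdsWithin_iff.1 ht
  refine ⟨d, hd, fun x hx r h1 h2 => hd2 (a := (x, r)) ⟨?_, hx, mem_univ _⟩⟩
  rw [mem_ball, Prod.dist_eq, dist_eq_norm, Real.dist_eq]
  exact max_lt h1 h2

set_option maxHeartbeats 800000 in
theorem IsMaxSub.jet {k0 k1 : ℝ} {U V : EN N → ℝ} (hz : S.ZCont z) (hU : S.IsMaxSub z k0 k1 U)
    (hVU : ∀ x ∈ S.K, V x ≤ U x) (hx₀ : x₀ ∈ S.K)
    (happ : ∀ ε > 0, ∃ y ∈ S.K, ‖y - x₀‖ < ε ∧ U y < V x₀ + ε) (hlt : V x₀ < k1)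
    (hX : SymOp X) (hp : p ≠ 0) (hj : UpJet S.K (fun x => -V x) x₀ p X)
    (hfr : x₀ ∈ frontier S.Ω → 0 < ⟪p, S.nv x₀⟫) : 0 ≤ S.dual.H x₀ p X + -z x₀ (V x₀) := by
  refine jetSub_of_perturb (S := S.dual) hx₀ hX hp fun η hη => ?_
  by_contra hneg
  push Not at hneg
  set X' := X + η • ContinuousLinearMap.id ℝ (EN N) with hX'
  have hX's : SymOp X' := hX.add (SymOp.id.smul η)
  rw [dual_H hx₀ hp hX's] at hneg
  obtain ⟨d, hd, hpos⟩ := pos_near hz hx₀ (r₀ := V x₀) (neg_ne_zero.2 hp) hX's.neg (by linarith)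
  obtain ⟨d2, hd2, hbd⟩ := bd_near hx₀ hp fun hf => (nv_pos_iff hf p).1 (hfr hf)
  obtain ⟨d3, hd3, hup⟩ := Metric.mem_nhdsWithin_iff.1 (hj (η / 4) (by positivity))
  obtain ⟨q1, q2⟩ := quad_c2 hX's.neg (-p) x₀
  set φ : EN N → ℝ := fun x => ⟪-p, x - x₀⟫ + 1 / 2 * ⟪(-X') (x - x₀), x - x₀⟫ with hφ
  have hφc : Continuous φ := by simp only [hφ]; fun_prop
  have hgc : Continuous fun x => -p + (-X') (x - x₀) := by fun_prop
  have hφ0 : φ x₀ = 0 := by simp [hφ]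
  set κ₀ := min (d / 2) ((k1 - V x₀) / 2) with hκ₀
  have hκ₀p : 0 < κ₀ := lt_min (by positivity) (by linarith)
  have hk1 : κ₀ ≤ d / 2 := min_le_left _ _
  have hk2 : κ₀ ≤ (k1 - V x₀) / 2 := min_le_right _ _
  obtain ⟨d4, hd4, hφd⟩ := Metric.continuous_iff.1 hφc x₀ κ₀ hκ₀p
  obtain ⟨d5, hd5, hgd⟩ := Metric.continuous_iff.1 hgc x₀ d2 hd2
  obtain ⟨δ, hδ, l1, l2, l3, l4, l5⟩ : ∃ δ > 0, δ ≤ d ∧ δ ≤ d2 ∧ δ ≤ d3 ∧ δ ≤ d4 ∧ δ ≤ d5 :=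
    ⟨min d (min d2 (min d3 (min d4 d5))), by positivity, by simp, by simp, by simp, by simp, by simp⟩
  have hφs : ∀ x, ‖x - x₀‖ < δ → |φ x| < κ₀ := fun x hx => by
    have := hφd x (by rw [dist_eq_norm]; linarith)
    rwa [Real.dist_eq, hφ0, sub_zero] at this
  refine hU.no_bump hVU happ (ψ := fun x => V x₀ + φ x) (by fun_prop) (by simp [hφ0]) hδ hκ₀p
    (g := η / 4 * (δ / 2) ^ 2) (by positivity) (fun x hx h1 h2 => ?_) (fun x hx h1 => ?_)
    fun κ hκ hκ1 x hx h1 w hwx hw => ?_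
  · have h3 : -V x ≤ -V x₀ + ⟪p, x - x₀⟫ + 1 / 2 * ⟪X (x - x₀), x - x₀⟫ + η / 4 * ‖x - x₀‖ ^ 2 :=
      hup ⟨by rw [mem_ball, dist_eq_norm]; linarith, hx⟩
    have h4 : η / 4 * (δ / 2) ^ 2 ≤ η / 4 * ‖x - x₀‖ ^ 2 := by gcongr
    simp only [hφ, hX', _root_.add_apply, _root_.smul_apply, _root_.neg_apply,
      ContinuousLinearMap.id_apply,
      inner_add_left, inner_smul_left, inner_neg_left, conj_trivial, real_inner_self_eq_norm_sq]
    linarith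
  · linarith [(abs_lt.1 (hφs x h1)).2]
  · have h2 := abs_lt.1 (hφs x h1)
    have h3 := hpos x hx (w x) (by linarith) (by
      rw [hwx, abs_lt]; constructor <;> linarith [h2.1, h2.2])
    have hb := hbd x (-(-p + (-X') (x - x₀))) (by linarith) (by
      have := hgd x (by rw [dist_eq_norm]; linarith)
      rw [dist_eq_norm] at this
      simp only [sub_self, map_zero, add_zero] at this
      rw [← norm_neg]
      refine le_of_lt (lt_of_eq_of_lt (congrArg _ ?_) this)
      abel)
    refine subAt_of_low hx hX's.neg (neg_ne_zero.1 hb.2) (lowJet_of_c2 (φ := φ)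
      (g := fun x => -p + (-X') (x - x₀)) (Eventually.of_forall q1) (q2 x) ?_) (fun hf => ?_) h3.le
    · filter_upwards [hw] with y hy
      rw [hwx]; linarith
    · have := (nv_pos_iff hf _).1 (hb.1 hf)
      rw [inner_neg_left] at this
      linarith

set_option maxHeartbeats 800000 in
theorem IsMaxSub.flat {k0 k1 : ℝ} {U V : EN N → ℝ} (hz : S.ZCont z) (hU : S.IsMaxSub z k0 k1 U)
    (hVU : ∀ x ∈ S.K, V x ≤ U x) (hx₀ : x₀ ∈ S.Ω)
    (happ : ∀ ε > 0, ∃ y ∈ S.K, ‖y - x₀‖ < ε ∧ U y < V x₀ + ε) (hlt : V x₀ < k1)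
    {C : ℝ} (hC : 0 < C)
    (hj : ∀ᶠ y in 𝓝[S.K] x₀, -V y ≤ -V x₀ + C * (‖y - x₀‖ ^ 2) ^ S.m) : z x₀ (V x₀) ≤ 0 := by
  by_contra hneg
  push Not at hneg
  set ζ := z x₀ (V x₀) with hζ
  have hK := Ω_sub hx₀
  have hm := S.hm
  have hm0 : S.m ≠ 0 := by omega
  have hC1 : 0 < C + 1 := by positivity
  obtain ⟨d1, hd1, hsm⟩ := pw_small_neg S hC1 (ε := ζ / 4) (by positivity)
  have hzc : ∀ᶠ q in 𝓝[S.K ×ˢ univ] (x₀, V x₀), ζ / 2 < z q.1 q.2 :=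
    (hz (x₀, V x₀) ⟨hK, mem_univ _⟩).eventually (lt_mem_nhds (by dsimp; linarith))
  obtain ⟨d2, hd2, hzc2⟩ := Metric.mem_nhdsWithin_iff.1 hzc
  obtain ⟨r, hr, hrΩ⟩ := Metric.isOpen_iff.1 S.isOpen x₀ hx₀
  obtain ⟨d3, hd3, hup⟩ := Metric.mem_nhdsWithin_iff.1 hj
  set φ : EN N → ℝ := fun x => -(C + 1) * (‖x - x₀‖ ^ 2) ^ S.m with hφ
  have hφc : Continuous φ := by simp only [hφ]; fun_prop
  have hφ0 : φ x₀ = 0 := by simp [hφ, hm0]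
  set κ₀ := min (d2 / 2) ((k1 - V x₀) / 2) with hκ₀
  have hκ₀p : 0 < κ₀ := lt_min (by positivity) (by linarith)
  have hk1 : κ₀ ≤ d2 / 2 := min_le_left _ _
  have hk2 : κ₀ ≤ (k1 - V x₀) / 2 := min_le_right _ _
  obtain ⟨d4, hd4, hφd⟩ := Metric.continuous_iff.1 hφc x₀ κ₀ hκ₀p
  obtain ⟨δ, hδ, l1, l2, l3, l4, l5⟩ : ∃ δ > 0, δ ≤ d1 ∧ δ ≤ d2 ∧ δ ≤ d3 ∧ δ ≤ d4 ∧ δ ≤ r :=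
    ⟨min d1 (min d2 (min d3 (min d4 r))), by positivity, by simp, by simp, by simp, by simp, by simp⟩
  have hφs : ∀ x, ‖x - x₀‖ < δ → |φ x| < κ₀ := fun x hx => by
    have := hφd x (by rw [dist_eq_norm]; linarith)
    rwa [Real.dist_eq, hφ0, sub_zero] at this
  refine hU.no_bump hVU happ (ψ := fun x => V x₀ + φ x) (by fun_prop) (by simp [hφ0]) hδ hκ₀p
    (g := ((δ / 2) ^ 2) ^ S.m) (by positivity) (fun x hx h1 h2 => ?_) (fun x hx h1 => ?_)
    fun κ hκ hκ1 x hx h1 w hwx hw => ?_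
  · have h3 : -V x ≤ -V x₀ + C * (‖x - x₀‖ ^ 2) ^ S.m :=
      hup ⟨by rw [mem_ball, dist_eq_norm]; linarith, hx⟩
    have h4 : ((δ / 2) ^ 2) ^ S.m ≤ (‖x - x₀‖ ^ 2) ^ S.m := by gcongr
    simp only [hφ]
    linarith
  · linarith [(abs_lt.1 (hφs x h1)).2]
  · have h2 := abs_lt.1 (hφs x h1)
    have hzx : ζ / 2 < z x (w x) := by
      refine hzc2 (a := (x, w x)) ⟨?_, hx, mem_univ _⟩
      rw [mem_ball, Prod.dist_eq, dist_eq_norm, Real.dist_eq]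
      refine max_lt (by dsimp; linarith) ?_
      dsimp
      rw [hwx, abs_lt]; constructor <;> linarith [h2.1, h2.2]
    have hxΩ : x ∈ S.Ω := hrΩ (by rw [mem_ball, dist_eq_norm]; linarith)
    have hlow : ∀ᶠ y in 𝓝[S.K] x, w x + (φ y - φ x) ≤ w y := by
      filter_upwards [hw] with y hy
      rw [hwx]; linarith
    by_cases hxx : x = x₀
    · refine ⟨fun p X hX hp hj hfr => ?_, fun _ _ _ _ => by linarith⟩
      have hup2 : UpJet S.K (fun y => -w y) x 0 0 := upJet_of_flat hm hC1 (by
        filter_upwards [hlow] with y hy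
        rw [hxx] at hy ⊢
        rw [hφ0] at hy
        simp only [hφ] at hy
        linarith)
      have hl : LowJet S.K w x 0 0 := fun η hη => by
        filter_upwards [hup2 η hη] with y hy
        simp only [inner_zero_left, _root_.zero_apply] at hy ⊢
        linarith
      exact absurd (touch_interior hxΩ hj hl).1 hp
    · have hs : 0 < ‖x - x₀‖ ^ 2 := by have := norm_pos_iff.2 (sub_ne_zero.2 hxx); positivity
      have hp1 := pw1_pos hC1 S.hm hs
      obtain ⟨c1, c2⟩ := radial_c2 (f := fun s => -(C + 1) * s ^ S.m) (f' := pw1 (-(C + 1)) S.m)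
        (x₀ := x) (y := x₀) (Eventually.of_forall fun s => hasDerivAt_mul_pow _ s S.m)
        (hasDerivAt_mul_pow' _ _ S.m)
      refine subAt_of_low hx (radX_sym _ _ _) ?_ (lowJet_of_c2 c1 c2 hlow)
        (fun hf => absurd hf (not_frontier hxΩ)) ?_
      · refine smul_ne_zero ?_ (sub_ne_zero.2 hxx)
        rw [(pw_neg _ _ _).1]; linarith
      · have := (abs_le.1 (hsm x hx x₀ hxx (by linarith))).1
        exact (show (0:ℝ) ≤ -(ζ / 4) + ζ / 2 by linarith).trans (add_le_add this hzx.le)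

/-- Existence for strictly decreasing zeroth order terms, with constant barriers. -/
theorem perron (hz : S.ZCont z) (hanti : ∀ x ∈ S.K, StrictAnti (z x)) {k0 k1 : ℝ} (hk : k0 ≤ k1)
    (h0 : ∀ x ∈ S.K, 0 ≤ z x k0) (h1 : ∀ x ∈ S.K, z x k1 ≤ 0) :
    ∃ U, S.VSub z U ∧ S.VSuper z U ∧ ∀ x ∈ S.K, k0 ≤ U x ∧ U x ≤ k1 := by
  obtain ⟨U, hU⟩ := S.exists_maxSub hz hk h0
  set 𝓖 : Set (EN N → ℝ) := {fun x => -U x} with hG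
  have hb : ∀ w ∈ 𝓖, ∀ y ∈ S.K, w y ≤ -k0 := by
    rintro w rfl y hy; dsimp only; linarith [hU.lo y hy]
  have hne : 𝓖.Nonempty := ⟨_, rfl⟩
  set V : EN N → ℝ := fun x => -S.env 𝓖 x with hV
  have hVU : ∀ x ∈ S.K, V x ≤ U x := fun x hx => by
    have := le_env (S := S) hb (w := fun x => -U x) rfl hx
    simp only [hV]; linarith
  have hVl : ∀ x ∈ S.K, k0 ≤ V x := fun x hx => by
    have := env_le (S := S) hb hne hx
    simp only [hV]; linarith
  have happ : ∀ x ∈ S.K, ∀ ε > 0, ∃ y ∈ S.K, ‖y - x‖ < ε ∧ U y < V x + ε := fun x hx ε hε => by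
    obtain ⟨w, rfl, y, hy, h2, h3⟩ := env_spec (S := S) hne hx ε hε
    exact ⟨y, hy, h2, by simp only [hV]; linarith⟩
  have hVs : S.VSuper z V := by
    refine ⟨?_, fun x hx => ?_⟩
    · have := env_usc (S := S) hb hne
      have e : (fun x => -V x) = S.env 𝓖 := by funext x; simp [hV]
      rw [e]; exact this
    · rcases (hVU x hx).trans (hU.hi x hx) |>.eq_or_lt with he | hlt
      · refine subAt_of_min (S := S.dual) ?_ hx ?_
        · refine eventually_nhdsWithin_of_forall fun y hy => ?_
          have := (hVU y hy).trans (hU.hi y hy)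
          show -V x ≤ -V y
          linarith
        · simp only [neg_neg, he]; linarith [h1 x hx]
      · refine ⟨fun p X hX hp hj hfr => ?_, fun hΩ C hC hf => ?_⟩
        · simp only [neg_neg]
          exact hU.jet hz hVU hx (happ x hx) hlt hX hp hj hfr
        · simp only [neg_neg]
          have := hU.flat hz hVU hΩ (happ x hx) hlt hC hf
          linarith
  set M0 := max |k0| |k1| + 1 with hM0
  have hM0p : 0 < M0 := by positivity
  have habs : ∀ r, k0 ≤ r → r ≤ k1 → |r| ≤ M0 := fun r h2 h3 => by
    rw [abs_le]
    constructor <;> linarith [neg_abs_le k0, le_abs_self k1, le_max_left |k0| |k1|,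
      le_max_right |k0| |k1|]
  obtain ⟨Z0, hZ0⟩ : ∃ Z0, ∀ x ∈ S.K, ∀ r, |r| ≤ M0 → |z x r| ≤ Z0 := by
    obtain ⟨Z0, h⟩ := (S.isCompact_K.prod (isCompact_Icc (a := -M0) (b := M0))).exists_bound_of_continuousOn
      (hz.mono (prod_mono subset_rfl (subset_univ _)))
    exact ⟨Z0, fun x hx r hr => h (x, r) ⟨hx, abs_le.1 hr⟩⟩
  obtain ⟨L, hL, hest⟩ := S.main_est hM0p Z0
  have hUV : ∀ x ∈ S.K, U x = V x := fun x hx => by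
    have := hest z U V hz hanti hU.sub hVs (fun x hx => habs _ (hU.lo x hx) (hU.hi x hx))
      (fun x hx => habs _ (hVl x hx) ((hVU x hx).trans (hU.hi x hx))) hZ0 x hx x hx
    rw [sub_self, norm_zero, mul_zero] at this
    linarith [hVU x hx]
  refine ⟨U, hU.sub, ⟨fun x hx c hc => ?_, fun x hx => ?_⟩, fun x hx => ⟨hU.lo x hx, hU.hi x hx⟩⟩
  · have hc : -U x < c := hc
    rw [hUV x hx] at hc
    filter_upwards [hVs.1 x hx c hc, self_mem_nhdsWithin] with y h2 h3
    show -U y < c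
    rw [hUV y h3]; exact h2
  · refine (hVs.2 x hx).of_le (eventually_nhdsWithin_of_forall fun y hy => ?_) ?_
    · show -V y ≤ -U y
      rw [hUV y hy]
    · rw [hUV x hx]

end Setup

/-! ### Power nonlinearities: comparison, Lipschitz bounds, scaling and limits -/

/-- The odd power `|r|^α r`. -/
def sp (α r : ℝ) : ℝ := |r| ^ α * r

theorem sp_zero (α : ℝ) : sp α 0 = 0 := by simp [sp]

theorem sp_neg (α r : ℝ) : sp α (-r) = -sp α r := by simp [sp]

theorem sp_eq {α r : ℝ} (hα : -1 < α) (hr : 0 ≤ r) : sp α r = r ^ (1 + α) := by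
  rcases hr.eq_or_lt with rfl | h
  · rw [sp_zero, Real.zero_rpow (by linarith)]
  · rw [sp, abs_of_pos h, Real.rpow_add h, Real.rpow_one, mul_comm]

theorem sp_mul (α : ℝ) {t : ℝ} (ht : 0 < t) (r : ℝ) : sp α (t * r) = t ^ (1 + α) * sp α r := by
  rw [sp, sp, abs_mul, abs_of_pos ht, Real.mul_rpow ht.le (abs_nonneg _), Real.rpow_add ht,
    Real.rpow_one]
  ring

theorem sp_strictMono {α : ℝ} (hα : -1 < α) : StrictMono (sp α) := by
  refine strictMono_of_odd_strictMonoOn_nonneg (sp_neg α) fun x hx y hy hxy => ?_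
  rw [sp_eq hα hx, sp_eq hα hy]
  exact Real.rpow_lt_rpow hx hxy (by linarith)

theorem sp_nonneg {α r : ℝ} (hα : -1 < α) (hr : 0 ≤ r) : 0 ≤ sp α r := by
  rw [sp_eq hα hr]; exact Real.rpow_nonneg hr _

theorem sp_pos {α r : ℝ} (hα : -1 < α) (hr : 0 < r) : 0 < sp α r := by
  rw [sp_eq hα hr.le]; exact Real.rpow_pos_of_pos hr _

theorem sp_continuous {α : ℝ} (hα : -1 < α) : Continuous (sp α) := by
  refine continuous_iff_continuousAt.2 fun r => ?_
  by_cases hr : r = 0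
  · subst hr
    have h1 : Tendsto (fun r : ℝ => |r| ^ (α + 1)) (𝓝 0) (𝓝 0) := by
      have : ContinuousAt (fun r : ℝ => |r| ^ (α + 1)) 0 :=
        continuous_abs.continuousAt.rpow_const (Or.inr (by linarith))
      have h2 : (|(0 : ℝ)| ^ (α + 1) : ℝ) = 0 := by
        rw [abs_zero, Real.zero_rpow (by linarith)]
      rw [ContinuousAt, h2] at this; exact this
    rw [ContinuousAt, sp_zero, tendsto_zero_iff_norm_tendsto_zero]
    refine h1.congr fun r => ?_
    rw [sp, norm_mul, Real.norm_of_nonneg (Real.rpow_nonneg (abs_nonneg _) _), Real.norm_eq_abs]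
    by_cases hr : r = 0
    · subst hr; rw [abs_zero, Real.zero_rpow (by linarith)]; simp
    · rw [Real.rpow_add_one (abs_ne_zero.2 hr)]
  · exact (continuous_abs.continuousAt.rpow_const (Or.inl (abs_ne_zero.2 hr))).mul continuousAt_id

theorem exists_sp_ge {α : ℝ} (hα : -1 < α) (M : ℝ) : ∃ k > 0, M ≤ sp α k := by
  refine ⟨(max M 1) ^ (1 + α)⁻¹, by positivity, ?_⟩
  rw [sp_eq hα (by positivity), ← Real.rpow_mul (by positivity), inv_mul_cancel₀ (by linarith),
    Real.rpow_one]
  exact le_max_left _ _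

theorem exists_sp_le {α : ℝ} (hα : -1 < α) {ε : ℝ} (hε : 0 < ε) {δ : ℝ} (hδ : 0 < δ) :
    ∃ k > 0, k ≤ δ ∧ sp α k ≤ ε := by
  have h : ∀ᶠ r in 𝓝 (0 : ℝ), sp α r < ε :=
    (sp_continuous hα).continuousAt.eventually (gt_mem_nhds (by rwa [sp_zero]))
  obtain ⟨d, hd, h2⟩ := Metric.eventually_nhds_iff.1 h
  refine ⟨min (d / 2) δ, by positivity, min_le_right _ _, (h2 ?_).le⟩
  rw [Real.dist_eq, sub_zero, abs_of_pos (by positivity)]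
  linarith [min_le_left (d / 2) δ]

namespace Setup
variable {N : ℕ} {S : Setup N} {z z' : EN N → ℝ → ℝ} {u v : EN N → ℝ} {x x₀ y p : EN N}
  {X : EN N →L[ℝ] EN N}

theorem VSub.mono (h : S.VSub z u) (hz : ∀ x ∈ S.K, z x (u x) ≤ z' x (u x)) : S.VSub z' u := by
  refine ⟨h.1, fun x hx => ⟨fun p X hX hp hj hf => ?_, fun hΩ C hC hf => ?_⟩⟩
  · linarith [(h.2 x hx).1 p X hX hp hj hf, hz x hx]
  · linarith [(h.2 x hx).2 hΩ C hC hf, hz x hx]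

theorem VSuper.mono (h : S.VSuper z v) (hz : ∀ x ∈ S.K, z' x (v x) ≤ z x (v x)) :
    S.VSuper z' v :=
  VSub.mono h fun x hx => by simp only [neg_neg]; linarith [hz x hx]

theorem VSub.scale (h : S.VSub z u) {t : ℝ} (ht : 0 < t)
    (hz : ∀ x ∈ S.K, z' x (t * u x) = t ^ (1 + S.α) * z x (u x)) :
    S.VSub z' (fun x => t * u x) := by
  have hT : 0 < t ^ (1 + S.α) := Real.rpow_pos_of_pos ht _
  refine ⟨fun x hx c hc => ?_, fun x hx => ⟨fun p X hX hp hj hf => ?_, fun hΩ C hC hf => ?_⟩⟩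
  · have hc : t * u x < c := hc
    have h1 : u x < c / t := by rwa [lt_div_iff₀ ht, mul_comm]
    filter_upwards [h.1 x hx _ h1] with y hy
    have hy : u y < c / t := hy
    show t * u y < c
    rwa [lt_div_iff₀ ht, mul_comm] at hy
  · have hp' : t⁻¹ • p ≠ 0 := smul_ne_zero (inv_ne_zero ht.ne') hp
    have h1 := (h.2 x hx).1 (t⁻¹ • p) (t⁻¹ • X) (hX.smul _) hp' (fun η hη => ?_) (fun hF => ?_)
    · have h2 := H_hom hx hp' (hX.smul t⁻¹) ht
      rw [smul_smul, smul_smul, mul_inv_cancel₀ ht.ne', one_smul, one_smul] at h2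
      rw [hz x hx, h2, ← mul_add]
      exact mul_nonneg hT.le h1
    · filter_upwards [hj (t * η) (by positivity)] with y hy
      have h3 : t * u y ≤ t * (u x + ⟪t⁻¹ • p, y - x⟫ + 1 / 2 * ⟪(t⁻¹ • X) (y - x), y - x⟫
          + η * ‖y - x‖ ^ 2) := by
        refine hy.trans (le_of_eq ?_)
        rw [_root_.smul_apply, real_inner_smul_left, real_inner_smul_left]
        field_simp
      exact le_of_mul_le_mul_left h3 ht
    · rw [real_inner_smul_left]; exact mul_pos (inv_pos.2 ht) (hf hF)
  · rw [hz x hx]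
    refine mul_nonneg hT.le ((h.2 x hx).2 hΩ (C / t) (by positivity) ?_)
    filter_upwards [hf] with y hy
    have h3 : t * u y ≤ t * (u x + C / t * (‖y - x‖ ^ 2) ^ S.m) := by
      refine hy.trans (le_of_eq ?_)
      field_simp
    exact le_of_mul_le_mul_left h3 ht

theorem VSuper.scale (h : S.VSuper z v) {t : ℝ} (ht : 0 < t)
    (hz : ∀ x ∈ S.K, z' x (t * v x) = t ^ (1 + S.α) * z x (v x)) :
    S.VSuper z' (fun x => t * v x) := by
  have h1 := VSub.scale (S := S.dual) (z' := fun x r => -z' x (-r)) h ht (fun x hx => by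
    rw [mul_neg, neg_neg, neg_neg, hz x hx]
    show _ = t ^ (1 + S.α) * _
    ring)
  have e : (fun x => t * -v x) = fun x => -(t * v x) := by funext x; ring
  rw [e] at h1
  exact h1

variable (S) in
/-- The zeroth order term `-d(x)|r|^α r + f(x)`. -/
def zz (d f : EN N → ℝ) (x : EN N) (r : ℝ) : ℝ := -(d x) * sp S.α r + f x

variable {d f : EN N → ℝ}

theorem zz_cont (hd : ContinuousOn d S.K) (hf : ContinuousOn f S.K) : S.ZCont (S.zz d f) := by
  have h1 : ContinuousOn (fun q : EN N × ℝ => d q.1) (S.K ×ˢ univ) :=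
    hd.comp continuousOn_fst fun q hq => hq.1
  have h2 : ContinuousOn (fun q : EN N × ℝ => f q.1) (S.K ×ˢ univ) :=
    hf.comp continuousOn_fst fun q hq => hq.1
  have h3 : ContinuousOn (fun q : EN N × ℝ => sp S.α q.2) (S.K ×ˢ univ) :=
    ((sp_continuous S.hα).comp continuous_snd).continuousOn
  exact (h1.neg.mul h3).add h2

theorem zz_anti (hd : ∀ x ∈ S.K, 0 < d x) (x : EN N) (hx : x ∈ S.K) : StrictAnti (S.zz d f x) :=
  fun r s hrs => by
    have := mul_lt_mul_of_pos_left (sp_strictMono S.hα hrs) (hd x hx)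
    simp only [zz]; linarith

theorem zz_bound {D M Z : ℝ} (hD : ∀ x ∈ S.K, |d x| ≤ D) (hZ : ∀ x ∈ S.K, |f x| ≤ Z)
    (x : EN N) (hx : x ∈ S.K) (r : ℝ) (hr : |r| ≤ M) : |S.zz d f x r| ≤ D * sp S.α M + Z := by
  have h1 : |sp S.α r| ≤ sp S.α M := by
    rw [abs_le, ← sp_neg]
    exact ⟨(sp_strictMono S.hα).monotone (abs_le.1 hr).1, (sp_strictMono S.hα).monotone (abs_le.1 hr).2⟩
  refine (abs_add_le _ _).trans (add_le_add ?_ (hZ x hx))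
  rw [abs_mul, abs_neg]
  exact mul_le_mul (hD x hx) h1 (abs_nonneg _) ((abs_nonneg _).trans (hD x hx))

theorem bound_K {g : EN N → ℝ} (hg : ContinuousOn g S.K) : ∃ D > 0, ∀ x ∈ S.K, |g x| ≤ D := by
  obtain ⟨D, hD⟩ := S.isCompact_K.exists_bound_of_continuousOn hg
  exact ⟨max D 1, by positivity, fun x hx => (hD x hx).trans (le_max_left _ _)⟩

/-- Comparison principle. -/
theorem compare (hdc : ContinuousOn d S.K) (hd : ∀ x ∈ S.K, 0 < d x) (hf : ContinuousOn f S.K)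
    {M : ℝ} (hu : S.VSub (S.zz d f) u) (hv : S.VSuper (S.zz d f) v) (hub : ∀ x ∈ S.K, |u x| ≤ M)
    (hvb : ∀ x ∈ S.K, |v x| ≤ M) : ∀ x ∈ S.K, u x ≤ v x := by
  intro x hx
  obtain ⟨D, -, hD⟩ := bound_K hdc
  obtain ⟨Z, -, hZ⟩ := bound_K hf
  obtain ⟨L, hL, h⟩ := S.main_est (M0 := |M| + 1) (by positivity) (D * sp S.α (|M| + 1) + Z)
  have hM : M ≤ |M| + 1 := by linarith [le_abs_self M]
  have := h _ u v (zz_cont hdc hf) (zz_anti hd) hu hv (fun x hx => (hub x hx).trans hM)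
    (fun x hx => (hvb x hx).trans hM) (fun x hx r hr => zz_bound hD hZ x hx r hr) x hx x hx
  rw [sub_self, norm_zero, mul_zero] at this
  linarith

/-- Lipschitz bound with a constant depending on bounds only. -/
theorem lip_est (hdc : ContinuousOn d S.K) (hd : ∀ x ∈ S.K, 0 < d x) {M : ℝ} (hM : 0 < M) (Z : ℝ) :
    ∃ L > 0, ∀ f u : EN N → ℝ, ContinuousOn f S.K → (∀ x ∈ S.K, |f x| ≤ Z) →
      S.VSub (S.zz d f) u → S.VSuper (S.zz d f) u → (∀ x ∈ S.K, |u x| ≤ M) →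
      ∀ x ∈ S.K, ∀ y ∈ S.K, |u x - u y| ≤ L * ‖x - y‖ := by
  obtain ⟨D, -, hD⟩ := bound_K hdc
  obtain ⟨L, hL, h⟩ := S.main_est hM (D * sp S.α M + Z)
  refine ⟨3 * L, by positivity, fun f u hf hZ h1 h2 hb x hx y hy => ?_⟩
  have key := h _ u u (zz_cont hdc hf) (zz_anti hd) h1 h2 hb hb
    (fun x hx r hr => zz_bound hD hZ x hx r hr)
  rw [abs_le]
  have k1 := key x hx y hy
  have k2 := key y hy x hx
  rw [norm_sub_rev] at k2
  constructor <;> linarith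

theorem continuousOn_of_lip {L : ℝ} (h : ∀ x ∈ S.K, ∀ y ∈ S.K, |u x - u y| ≤ L * ‖x - y‖) :
    ContinuousOn u S.K := by
  refine (LipschitzOnWith.of_dist_le_mul (K := (|L|).toNNReal) fun x hx y hy => ?_).continuousOn
  rw [Real.dist_eq, dist_eq_norm, Real.coe_toNNReal _ (abs_nonneg L)]
  exact (h x hx y hy).trans (mul_le_mul_of_nonneg_right (le_abs_self L) (norm_nonneg _))

theorem limit_sub (hd : ContinuousOn d S.K) (hf : ContinuousOn f S.K) (hu : ContinuousOn u S.K)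
    (h : ∀ ε > 0, ∃ w g : EN N → ℝ, S.VSub (S.zz d g) w ∧
      ∀ x ∈ S.K, |w x - u x| ≤ ε ∧ |g x - f x| ≤ ε) : S.VSub (S.zz d f) u := by
  refine ⟨hu.upperSemicontinuousOn, fun x hx => Approx.subAt (zz_cont hd hf) hx fun ε hε => ?_⟩
  obtain ⟨w, g, h1, h2⟩ := h (ε / 2) (by positivity)
  refine ⟨w, _, h1, fun y hy => ?_, ⟨x, hx, by simpa using hε, ?_⟩, fun y hy r _ => ?_⟩
  · linarith [(abs_le.1 (h2 y hy).1).2]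
  · linarith [(abs_le.1 (h2 x hx).1).1]
  · simp only [zz]; linarith [(abs_le.1 (h2 y hy).2).2]

theorem zz_dual (d f : EN N → ℝ) :
    (fun x r => -S.zz d f x (-r)) = S.dual.zz d fun x => -f x := by
  funext x r
  show -(-d x * sp S.α (-r) + f x) = -d x * sp S.α r + -f x
  rw [sp_neg]; ring

theorem limit_super (hd : ContinuousOn d S.K) (hf : ContinuousOn f S.K) (hu : ContinuousOn u S.K)
    (h : ∀ ε > 0, ∃ w g : EN N → ℝ, S.VSuper (S.zz d g) w ∧
      ∀ x ∈ S.K, |w x - u x| ≤ ε ∧ |g x - f x| ≤ ε) : S.VSuper (S.zz d f) u := by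
  unfold VSuper
  rw [zz_dual]
  refine limit_sub (S := S.dual) hd hf.neg hu.neg fun ε hε => ?_
  obtain ⟨w, g, h1, h2⟩ := h ε hε
  unfold VSuper at h1
  rw [zz_dual] at h1
  refine ⟨_, _, h1, fun x hx => ?_⟩
  rw [neg_sub_neg, neg_sub_neg, abs_sub_comm, abs_sub_comm (f x)]
  exact h2 x hx

end Setup

/-! ### Solvability below the principal eigenvalue -/

namespace Setup
variable {N : ℕ} {S : Setup N} {u v c : EN N → ℝ}

theorem unif_of_eventually {U : ℕ → EN N → ℝ} (h : TendstoUniformlyOn U u atTop S.K) {ε : ℝ}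
    (hε : 0 < ε) : ∀ᶠ n in atTop, ∀ x ∈ S.K, |U n x - u x| ≤ ε := by
  filter_upwards [Metric.tendstoUniformlyOn_iff.1 h ε hε] with n hn x hx
  have := (hn x hx).le
  rwa [dist_comm, Real.dist_eq] at this

theorem sp_unif {U : ℕ → EN N → ℝ} (h : TendstoUniformlyOn U u atTop S.K) {M : ℝ}
    (hU : ∀ n, ∀ x ∈ S.K, |U n x| ≤ M) (hu : ∀ x ∈ S.K, |u x| ≤ M) :
    TendstoUniformlyOn (fun n x => sp S.α (U n x)) (fun x => sp S.α (u x)) atTop S.K := by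
  have h1 : UniformContinuousOn (sp S.α) (Icc (-M) M) :=
    isCompact_Icc.uniformContinuousOn_of_continuous (sp_continuous S.hα).continuousOn
  rw [Metric.uniformContinuousOn_iff] at h1
  rw [Metric.tendstoUniformlyOn_iff] at h ⊢
  intro ε hε
  obtain ⟨δ, hδ, h2⟩ := h1 ε hε
  filter_upwards [h δ hδ] with n hn x hx
  exact h2 _ (abs_le.1 (hu x hx)) _ (abs_le.1 (hU n x hx)) (hn x hx)

/-- A positive supersolution for `lam0` allows to solve the problem with right-hand side `-1` for
every `lam < lam0`, by monotone iteration below a large multiple of the supersolution. -/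
theorem exists_sol (hc : ContinuousOn c S.K) {lam lam0 : ℝ} (hlt : lam < lam0)
    (hv : S.VSuper (fun x r => (c x + lam0) * sp S.α r) v) (hpos : ∀ x ∈ S.K, 0 < v x)
    (hbd : ∃ M, ∀ x ∈ S.K, v x ≤ M) :
    ∃ u, ContinuousOn u S.K ∧ (∀ x ∈ S.K, 0 < u x) ∧
      S.VSub (fun x r => (c x + lam) * sp S.α r + 1) u ∧
      S.VSuper (fun x r => (c x + lam) * sp S.α r + 1) u := by
  have hα := S.hα
  have hmono : Monotone (sp S.α) := (sp_strictMono hα).monotone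
  have hne : S.K.Nonempty := S.conn.nonempty.closure
  obtain ⟨D0, hD0, hcD⟩ := bound_K hc
  set k := D0 + |lam| + 1 with hk
  set d : EN N → ℝ := fun x => k - c x with hd
  have hdc : ContinuousOn d S.K := continuousOn_const.sub hc
  have hd1 : ∀ x ∈ S.K, 1 ≤ d x := fun x hx => by
    simp only [hd, hk]; linarith [(abs_le.1 (hcD x hx)).2, abs_nonneg lam]
  have hdpos : ∀ x ∈ S.K, 0 < d x := fun x hx => by linarith [hd1 x hx]
  obtain ⟨D, hD, hdD⟩ := bound_K hdc
  set κ := lam + k with hκ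
  have hκ1 : 0 ≤ κ := by simp only [hκ, hk]; linarith [neg_abs_le lam]
  -- the large multiple `V` of `v`
  obtain ⟨v0, hv0, hvv0⟩ : ∃ v0 > 0, ∀ x ∈ S.K, v0 ≤ v x := by
    have h1 : UpperSemicontinuousOn (fun x => -v x) S.K := hv.1
    obtain ⟨x0, hx0, h2⟩ := h1.exists_isMaxOn hne S.isCompact_K
    exact ⟨v x0, hpos x0 hx0, fun x hx => neg_le_neg_iff.1 (h2 hx)⟩
  obtain ⟨k1, hk1, hk1'⟩ := exists_sp_ge hα (1 / (lam0 - lam))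
  have hgap : 0 < lam0 - lam := by linarith
  rw [div_le_iff₀ hgap] at hk1'
  set t := k1 / v0 with ht
  have htp : 0 < t := by positivity
  set V : EN N → ℝ := fun x => t * v x with hVdef
  have hVk : ∀ x ∈ S.K, k1 ≤ V x := fun x hx => by
    have := mul_le_mul_of_nonneg_left (hvv0 x hx) htp.le
    have e : t * v0 = k1 := by rw [ht]; field_simp
    rw [e] at this; exact this
  obtain ⟨M, hM, hVM⟩ : ∃ M > 0, ∀ x ∈ S.K, V x ≤ M := by
    obtain ⟨M, hM⟩ := hbd
    refine ⟨max (t * M) 1, by positivity, fun x hx => ?_⟩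
    exact (mul_le_mul_of_nonneg_left (hM x hx) htp.le).trans (le_max_left _ _)
  have hVs : S.VSuper (fun x r => (c x + lam) * sp S.α r + 1) V := by
    have h1 : S.VSuper (fun x r => (c x + lam0) * sp S.α r) V :=
      hv.scale htp fun x hx => by rw [sp_mul _ htp]; ring
    refine h1.mono fun x hx => ?_
    have h2 := mul_le_mul_of_nonneg_right (hmono (hVk x hx)) hgap.le
    linarith
  obtain ⟨ε, hε, hεk, hεD⟩ := exists_sp_le hα (ε := 1 / D) (by positivity) hk1
  rw [le_div_iff₀ hD] at hεD
  obtain ⟨L, hL, hlip⟩ := lip_est (S := S) hdc hdpos hM (1 + κ * sp S.α M)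
  set rhs : (EN N → ℝ) → EN N → ℝ := fun u x => 1 + κ * sp S.α (u x) with hrhs
  let P : (EN N → ℝ) → Prop := fun u => (∀ x ∈ S.K, ε ≤ u x ∧ u x ≤ V x) ∧
    ∀ x ∈ S.K, ∀ y ∈ S.K, |u x - u y| ≤ L * ‖x - y‖
  have hPc : ∀ u, P u → ContinuousOn u S.K := fun u hu => continuousOn_of_lip hu.2
  have hPM : ∀ u, P u → ∀ x ∈ S.K, |u x| ≤ M := fun u hu x hx => by
    rw [abs_le]; constructor <;> linarith [(hu.1 x hx).1, (hu.1 x hx).2, hVM x hx]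
  have hPs : ∀ u, P u → ∀ x ∈ S.K, 0 ≤ sp S.α (u x) := fun u hu x hx =>
    sp_nonneg hα (hε.le.trans (hu.1 x hx).1)
  have hrc : ∀ u, P u → ContinuousOn (rhs u) S.K := fun u hu =>
    continuousOn_const.add (continuousOn_const.mul ((sp_continuous hα).comp_continuousOn (hPc u hu)))
  have step : ∀ u, P u → ∃ u', P u' ∧ S.VSub (S.zz d (rhs u)) u' ∧ S.VSuper (S.zz d (rhs u)) u' := by
    intro u hu
    obtain ⟨k2, hk2, hk2'⟩ := exists_sp_ge hα (1 + κ * sp S.α M)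
    have q0 : ∀ x ∈ S.K, 0 ≤ S.zz d (rhs u) x ε := fun x hx => by
      have h6 := mul_nonneg hκ1 (hPs u hu x hx)
      have h7 := mul_le_mul_of_nonneg_right ((le_abs_self _).trans (hdD x hx)) (sp_pos hα hε).le
      simp only [zz, hrhs]
      linarith
    have q1 : ∀ x ∈ S.K, S.zz d (rhs u) x (max k2 ε) ≤ 0 := fun x hx => by
      have h5 := mul_le_mul_of_nonneg_left (hmono ((hu.1 x hx).2.trans (hVM x hx))) hκ1
      have h6 := hmono (le_max_left k2 ε)
      have h7 := mul_le_mul_of_nonneg_right (hd1 x hx) (sp_nonneg hα (hk2.le.trans (le_max_left k2 ε)))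
      simp only [zz, hrhs]
      linarith
    obtain ⟨U, h1, h2, h3⟩ := perron (S := S) (zz_cont hdc (hrc u hu)) (zz_anti hdpos)
      (le_max_right _ _) q0 q1
    have hUb : ∀ x ∈ S.K, |U x| ≤ max (max k2 ε) M := fun x hx => by
      rw [abs_of_nonneg (hε.le.trans (h3 x hx).1)]; exact (h3 x hx).2.trans (le_max_left _ _)
    have hVb : ∀ x ∈ S.K, |V x| ≤ max (max k2 ε) M := fun x hx => by
      rw [abs_of_nonneg (hk1.le.trans (hVk x hx))]; exact (hVM x hx).trans (le_max_right _ _)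
    have hUV : ∀ x ∈ S.K, U x ≤ V x := by
      refine compare hdc hdpos (hrc u hu) h1 (hVs.mono fun x hx => ?_) hUb hVb
      have h5 := mul_le_mul_of_nonneg_left (hmono (hu.1 x hx).2) hκ1
      simp only [zz, hd, hrhs]
      have : (c x + lam) * sp S.α (V x) = -(k - c x) * sp S.α (V x) + κ * sp S.α (V x) := by
        rw [hκ]; ring
      linarith
    have hb : ∀ x ∈ S.K, |rhs u x| ≤ 1 + κ * sp S.α M := fun x hx => by
      have h5 := mul_le_mul_of_nonneg_left (hmono ((hu.1 x hx).2.trans (hVM x hx))) hκ1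
      have h6 := mul_nonneg hκ1 (hPs u hu x hx)
      simp only [hrhs]
      rw [abs_of_nonneg (by linarith)]
      linarith
    refine ⟨U, ⟨fun x hx => ⟨(h3 x hx).1, hUV x hx⟩,
      hlip _ U (hrc u hu) hb h1 h2 fun x hx => ?_⟩, h1, h2⟩
    rw [abs_of_nonneg (hε.le.trans (h3 x hx).1)]; exact (hUV x hx).trans (hVM x hx)
  choose! g hg1 hg2 hg3 using step
  let U : ℕ → EN N → ℝ := fun n => Nat.rec (fun _ => ε) (fun _ w => g w) n
  have hUP : ∀ n, P (U n) := by
    intro n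
    induction n with
    | zero =>
      refine ⟨fun x hx => ⟨le_rfl, hεk.trans (hVk x hx)⟩, fun x _ y _ => ?_⟩
      show |ε - ε| ≤ _
      rw [sub_self, abs_zero]; positivity
    | succ n ih => exact hg1 _ ih
  have hsub : ∀ n, S.VSub (S.zz d (rhs (U n))) (U (n + 1)) := fun n => hg2 _ (hUP n)
  have hsup : ∀ n, S.VSuper (S.zz d (rhs (U n))) (U (n + 1)) := fun n => hg3 _ (hUP n)
  have hinc : ∀ n, ∀ x ∈ S.K, U n x ≤ U (n + 1) x := by
    intro n
    induction n with
    | zero => exact fun x hx => ((hUP 1).1 x hx).1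
    | succ n ih =>
      refine compare hdc hdpos (hrc _ (hUP (n + 1))) ((hsub n).mono fun x hx => ?_) (hsup (n + 1))
        (hPM _ (hUP (n + 1))) (hPM _ (hUP (n + 1 + 1)))
      have := mul_le_mul_of_nonneg_left (hmono (ih x hx)) hκ1
      simp only [zz, hrhs]
      linarith
  have hmon : ∀ x ∈ S.K, Monotone (U · x) := fun x hx => monotone_nat_of_le_succ fun n => hinc n x hx
  set w : EN N → ℝ := fun x => ⨆ n, U n x with hw
  have hlim : ∀ x ∈ S.K, Tendsto (U · x) atTop (𝓝 (w x)) := fun x hx =>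
    tendsto_atTop_ciSup (hmon x hx) ⟨M, by rintro _ ⟨n, rfl⟩; exact (abs_le.1 (hPM _ (hUP n) x hx)).2⟩
  have hwL : ∀ x ∈ S.K, ∀ y ∈ S.K, |w x - w y| ≤ L * ‖x - y‖ := fun x hx y hy =>
    le_of_tendsto ((hlim x hx).sub (hlim y hy)).abs (Eventually.of_forall fun n => (hUP n).2 x hx y hy)
  have hwc := continuousOn_of_lip hwL
  have hwε : ∀ x ∈ S.K, ε ≤ w x := fun x hx =>
    ge_of_tendsto (hlim x hx) (Eventually.of_forall fun n => ((hUP n).1 x hx).1)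
  have hwM : ∀ x ∈ S.K, |w x| ≤ M := fun x hx =>
    le_of_tendsto (hlim x hx).abs (Eventually.of_forall fun n => hPM _ (hUP n) x hx)
  have hunif : TendstoUniformlyOn U w atTop S.K :=
    Monotone.tendstoUniformlyOn_of_forall_tendsto S.isCompact_K (fun n => hPc _ (hUP n)) hmon hwc hlim
  have hunif2 := sp_unif hunif (fun n => hPM _ (hUP n)) hwM
  have hrw : ContinuousOn (rhs w) S.K :=
    continuousOn_const.add (continuousOn_const.mul ((sp_continuous hα).comp_continuousOn hwc))
  have happ : ∀ η > 0, ∃ n, ∀ x ∈ S.K, |U (n + 1) x - w x| ≤ η ∧ |rhs (U n) x - rhs w x| ≤ η := by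
    intro η hη
    have e1 := (tendsto_add_atTop_nat 1).eventually (unif_of_eventually hunif hη)
    have e2 := unif_of_eventually hunif2 (ε := η / (κ + 1)) (by positivity)
    obtain ⟨n, h1, h2⟩ := (e1.and e2).exists
    refine ⟨n, fun x hx => ⟨h1 x hx, ?_⟩⟩
    simp only [hrhs]
    rw [show 1 + κ * sp S.α (U n x) - (1 + κ * sp S.α (w x)) =
      κ * (sp S.α (U n x) - sp S.α (w x)) by ring, abs_mul, abs_of_nonneg hκ1]
    calc κ * |sp S.α (U n x) - sp S.α (w x)| ≤ (κ + 1) * (η / (κ + 1)) :=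
          mul_le_mul (by linarith) (h2 x hx) (abs_nonneg _) (by linarith)
      _ = η := by field_simp
  have hzz : ∀ x, S.zz d (rhs w) x (w x) = (c x + lam) * sp S.α (w x) + 1 := fun x => by
    simp only [zz, hd, hrhs, hκ]; ring
  refine ⟨w, hwc, fun x hx => hε.trans_le (hwε x hx), ?_, ?_⟩
  · refine (limit_sub hdc hrw hwc fun η hη => ?_).mono fun x _ => (hzz x).le
    obtain ⟨n, hn⟩ := happ η hη
    exact ⟨_, _, hsub n, hn⟩
  · refine (limit_super hdc hrw hwc fun η hη => ?_).mono fun x _ => (hzz x).ge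
    obtain ⟨n, hn⟩ := happ η hη
    exact ⟨_, _, hsup n, hn⟩

end Setup

/-! ### The radial barrier -/

/-- The profile `exp(-k s^m)` of the barrier as a function of `s = |x - y|²`. -/
def be (k : ℝ) (m : ℕ) (s : ℝ) : ℝ := Real.exp (-(k * s ^ m))

/-- First derivative of the profile. -/
def be1 (k : ℝ) (m : ℕ) (s : ℝ) : ℝ := -(k * (m * s ^ (m - 1))) * be k m s

/-- Second derivative of the profile. -/
def be2 (k : ℝ) (m : ℕ) (s : ℝ) : ℝ :=
  ((k * (m * s ^ (m - 1))) ^ 2 - k * (m * ((m - 1 : ℕ) * s ^ (m - 1 - 1)))) * be k m s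

theorem be_pos (k : ℝ) (m : ℕ) (s : ℝ) : 0 < be k m s := Real.exp_pos _

theorem be_deriv (k : ℝ) (m : ℕ) (s : ℝ) : HasDerivAt (be k m) (be1 k m s) s := by
  have h := ((hasDerivAt_mul_pow k s m).neg).exp
  refine h.congr_deriv ?_
  simp only [be1, be, Pi.neg_apply]; ring

theorem be1_deriv (k : ℝ) (m : ℕ) (s : ℝ) : HasDerivAt (be1 k m) (be2 k m s) s := by
  have h := ((hasDerivAt_mul_pow' k s m).neg).mul (be_deriv k m s)
  refine h.congr_deriv ?_
  simp only [be1, be2, Pi.neg_apply]; ring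

theorem be1_neg {k : ℝ} (hk : 0 < k) {m : ℕ} (hm : 2 ≤ m) {s : ℝ} (hs : 0 < s) : be1 k m s < 0 := by
  have : (0 : ℝ) < m := by exact_mod_cast (by omega : 0 < m)
  have := mul_pos (mul_pos hk (mul_pos this (pow_pos hs (m - 1)))) (be_pos k m s)
  simp only [be1]; linarith

theorem be2_mul {k : ℝ} {m : ℕ} (hm : 2 ≤ m) (s : ℝ) :
    be2 k m s * s = -be1 k m s * (k * m * s ^ m - (m - 1)) := by
  obtain ⟨j, rfl⟩ : ∃ j, m = j + 2 := ⟨m - 2, by omega⟩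
  simp only [be1, be2, show j + 2 - 1 = j + 1 by omega, show j + 1 - 1 = j by omega]
  push_cast
  ring

theorem be_anti {k : ℝ} (hk : 0 < k) {m : ℕ} (hm : m ≠ 0) {s t : ℝ} (hs : 0 ≤ s) (h : s < t) :
    be k m t < be k m s := by
  have := mul_lt_mul_of_pos_left (pow_lt_pow_left₀ h hs hm) hk
  simp only [be, Real.exp_lt_exp]; linarith

theorem be_le_one {k : ℝ} (hk : 0 < k) (m : ℕ) {s : ℝ} (hs : 0 ≤ s) : be k m s ≤ 1 := by
  have : 0 ≤ k * s ^ m := by positivity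
  rw [be, Real.exp_le_one_iff]; linarith

theorem be_continuous (k : ℝ) (m : ℕ) : Continuous (be k m) := by unfold be; fun_prop

namespace Setup
variable {N : ℕ} {S : Setup N} {z : EN N → ℝ → ℝ} {u v c : EN N → ℝ} {x y : EN N}

variable (S) in
/-- The operator evaluated on the barrier centred at `y`. -/
def BH (k : ℝ) (y x : EN N) : ℝ :=
  S.H x ((2 * be1 k S.m (‖x - y‖ ^ 2)) • (x - y))
    (radX (be1 k S.m (‖x - y‖ ^ 2)) (be2 k S.m (‖x - y‖ ^ 2)) (x - y))

/-- Lower bound for the operator on the barrier, where the profile is convex. -/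
theorem BH_lower {B : ℝ} (hB : ∀ x ∈ S.K, ‖S.b x‖ ≤ B) {k : ℝ} (hk : 0 < k) (hx : x ∈ S.K)
    (hxy : x ≠ y) (hcv : 0 ≤ k * S.m * (‖x - y‖ ^ 2) ^ S.m - (S.m - 1)) :
    (2 * ‖x - y‖) ^ S.α * (-be1 k S.m (‖x - y‖ ^ 2)) ^ (1 + S.α) *
      (4 * S.a * (k * S.m * (‖x - y‖ ^ 2) ^ S.m - (S.m - 1)) - 2 * S.A * N - 2 * B * ‖x - y‖)
      ≤ S.BH k y x := by
  have hw0 : x - y ≠ 0 := sub_ne_zero.2 hxy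
  unfold BH
  set w := x - y with hw
  have hwn : 0 < ‖w‖ := norm_pos_iff.2 hw0
  set s := ‖w‖ ^ 2 with hs
  have hsp : 0 < s := by positivity
  have hf1 := be1_neg hk S.hm hsp
  have hf2 := be2_mul (k := k) S.hm s
  set f1 := be1 k S.m s with hf1d
  set f2 := be2 k S.m s with hf2d
  set p := (2 * f1) • w with hp
  have hp0 : p ≠ 0 := smul_ne_zero (by linarith [mul_neg_of_pos_of_neg two_pos hf1]) hw0
  have hpn : ‖p‖ = 2 * (-f1) * ‖w‖ := by
    rw [hp, norm_smul, Real.norm_eq_abs, abs_of_neg (by linarith)]; ring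
  have hf2p : 0 ≤ f2 := by
    have : 0 ≤ f2 * s := by rw [hf2]; exact mul_nonneg (by linarith) hcv
    exact nonneg_of_mul_nonneg_left this hsp
  have hPsym : SymOp ((4 * f2) • rk w) := (rk_sym w).smul _
  have hP0 : ∀ v, 0 ≤ ⟪((4 * f2) • rk w) v, v⟫ := fun v => by
    rw [_root_.smul_apply, real_inner_smul_left, rk_quad]; positivity
  have h1 := Fo_sub_le hx hp0 (X := (2 * f1) • ContinuousLinearMap.id ℝ (EN N))
    (SymOp.id.smul _) (radX_sym f1 f2 w) hPsym hP0 le_rfl (by rw [smul_zero_op, add_zero]; rfl)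
  have h2 := Fo_abs (S := S) hx hp0 (SymOp.id.smul (2 * f1))
  have h3 : ‖(2 * f1) • ContinuousLinearMap.id ℝ (EN N)‖ ≤ 2 * (-f1) := by
    rw [norm_smul, Real.norm_eq_abs, abs_of_neg (by linarith)]
    have := mul_le_mul_of_nonneg_left (ContinuousLinearMap.norm_id_le (𝕜 := ℝ) (E := EN N))
      (show 0 ≤ -(2 * f1) by linarith)
    linarith
  have h4 : 4 * f2 * s ≤ (mat ((4 * f2) • rk w)).trace := by
    have := inner_le_trace hPsym hP0 w
    rw [_root_.smul_apply, real_inner_smul_left, rk_quad, real_inner_self_eq_norm_sq] at this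
    refine le_of_mul_le_mul_right ?_ hsp
    calc 4 * f2 * s * s = 4 * f2 * s ^ 2 := by ring
      _ ≤ _ := this
  have h5 := Bo_abs (S := S) x hp0
  rw [Real.rpow_add (norm_pos_iff.2 hp0), Real.rpow_one] at h5
  have hpa : 0 ≤ ‖p‖ ^ S.α := Real.rpow_nonneg (norm_nonneg _) _
  have h6 : ‖S.b x‖ * (‖p‖ * ‖p‖ ^ S.α) ≤ ‖p‖ ^ S.α * (B * (2 * (-f1) * ‖w‖)) := by
    rw [hpn.symm]
    have := mul_le_mul_of_nonneg_right (hB x hx) (mul_nonneg (norm_nonneg p) hpa)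
    linarith
  have hAN : 0 ≤ S.A * N := mul_nonneg S.A_pos.le (Nat.cast_nonneg _)
  have h7 : S.A * N * ‖p‖ ^ S.α * ‖(2 * f1) • ContinuousLinearMap.id ℝ (EN N)‖ ≤
      ‖p‖ ^ S.α * (S.A * N * (2 * (-f1))) := by
    have := mul_le_mul_of_nonneg_left h3 (mul_nonneg hAN hpa)
    linarith
  have h8 : ‖p‖ ^ S.α * (S.a * (4 * f2 * s)) ≤
      ‖p‖ ^ S.α * (S.a * (mat ((4 * f2) • rk w)).trace) :=
    mul_le_mul_of_nonneg_left (mul_le_mul_of_nonneg_left h4 S.a_pos.le) hpa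
  have e1 : (2 * ‖w‖) ^ S.α * (-f1) ^ (1 + S.α) = ‖p‖ ^ S.α * (-f1) := by
    have e0 : (2 * -f1 * ‖w‖) ^ S.α = (2 * ‖w‖) ^ S.α * (-f1) ^ S.α := by
      rw [show 2 * -f1 * ‖w‖ = (2 * ‖w‖) * (-f1) by ring,
        Real.mul_rpow (by positivity) (by linarith)]
    rw [hpn, e0, Real.rpow_add (by linarith : 0 < -f1), Real.rpow_one]
    ring
  rw [e1]
  have e2 : ‖p‖ ^ S.α * (-f1) * (4 * S.a * (k * S.m * s ^ S.m - (S.m - 1)) - 2 * S.A * N - 2 * B * ‖w‖)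
      = ‖p‖ ^ S.α * (S.a * (4 * f2 * s)) - ‖p‖ ^ S.α * (S.A * N * (2 * (-f1)))
        - ‖p‖ ^ S.α * (B * (2 * (-f1) * ‖w‖)) := by
    rw [show 4 * f2 * s = 4 * (f2 * s) by ring, hf2]; ring
  rw [e2, H]
  have h2' := (abs_le.1 h2).1
  have h5' := (abs_le.1 h5).1
  have h1' : S.Fo x p ((2 * f1) • ContinuousLinearMap.id ℝ (EN N)) - S.Fo x p (radX f1 f2 w) ≤
      -(‖p‖ ^ S.α * (S.a * (mat ((4 * f2) • rk w)).trace)) := by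
    refine h1.trans (le_of_eq ?_); ring
  linarith

/-- For large `k` the barrier is a strict subsolution on an annulus. -/
theorem barrier (S : Setup N) {s0 R : ℝ} (hs0 : 0 < s0) (hR : s0 < R) {K1 : ℝ} (hK1 : 0 ≤ K1) :
    ∃ k > 0, ∀ y, ∀ x ∈ S.K, s0 ≤ ‖x - y‖ → ‖x - y‖ ≤ R →
      K1 * be k S.m (‖x - y‖ ^ 2) ^ (1 + S.α) < S.BH k y x := by
  obtain ⟨B, hB0, hB⟩ := S.exists_b_bound
  have hα := S.hα
  have ha := S.a_pos
  have hm1 : (1 : ℝ) ≤ S.m := by exact_mod_cast (by have := S.hm; omega : 1 ≤ S.m)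
  have hRp : 0 < R := hs0.trans hR
  have hAN : 0 ≤ S.A * N := mul_nonneg S.A_pos.le (Nat.cast_nonneg _)
  set c0 := min ((2 * s0) ^ S.α) ((2 * R) ^ S.α) * ((s0 ^ 2) ^ (S.m - 1)) ^ (1 + S.α) with hc0
  have hc0p : 0 < c0 := by
    refine mul_pos (lt_min ?_ ?_) ?_ <;> exact Real.rpow_pos_of_pos (by positivity) _
  set T := (K1 + 1) / c0 with hT
  have hTp : 0 < T := by positivity
  set σ := (s0 ^ 2) ^ S.m with hσ
  have hσp : 0 < σ := by positivity
  set Q := (T + 2 * (S.A * N) + 2 * B * R) / (4 * S.a) + S.m with hQ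
  have hQp : 0 < Q := by positivity
  set k := max 1 (Q / σ) with hk
  have hk1 : 1 ≤ k := le_max_left _ _
  have hkp : 0 < k := by linarith
  have hkσ : Q ≤ k * σ := by rw [← div_le_iff₀ hσp]; exact le_max_right _ _
  refine ⟨k, hkp, fun y x hx h1 h2 => ?_⟩
  have hwn : 0 < ‖x - y‖ := by linarith
  have hxy : x ≠ y := sub_ne_zero.1 (norm_pos_iff.1 hwn)
  have hσs : σ ≤ (‖x - y‖ ^ 2) ^ S.m := by rw [hσ]; gcongr
  have hbr : Q ≤ k * S.m * (‖x - y‖ ^ 2) ^ S.m := by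
    calc Q ≤ k * σ := hkσ
      _ = k * 1 * σ := by ring
      _ ≤ k * S.m * (‖x - y‖ ^ 2) ^ S.m := by gcongr
  have hQm : (S.m : ℝ) ≤ Q := by
    have : 0 ≤ (T + 2 * (S.A * N) + 2 * B * R) / (4 * S.a) := by positivity
    rw [hQ]; linarith
  have hlow := BH_lower (S := S) hB hkp hx hxy (by linarith)
  set s := ‖x - y‖ ^ 2 with hs
  have hsp : 0 < s := by positivity
  have hE := be_pos k S.m s
  have hbracket : T ≤ 4 * S.a * (k * S.m * s ^ S.m - (S.m - 1)) - 2 * S.A * N - 2 * B * ‖x - y‖ := by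
    have e1 : 4 * S.a * Q = T + 2 * (S.A * N) + 2 * B * R + 4 * S.a * S.m := by
      rw [hQ]; field_simp
    have e2 := mul_le_mul_of_nonneg_left hbr (show 0 ≤ 4 * S.a by positivity)
    have e3 := mul_le_mul_of_nonneg_left h2 (show 0 ≤ 2 * B by positivity)
    linarith
  have hfac : c0 * be k S.m s ^ (1 + S.α) ≤ (2 * ‖x - y‖) ^ S.α * (-be1 k S.m s) ^ (1 + S.α) := by
    have e1 : -be1 k S.m s = (k * (S.m * s ^ (S.m - 1))) * be k S.m s := by simp only [be1]; ring
    rw [e1, Real.mul_rpow (by positivity) hE.le, ← mul_assoc]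
    refine mul_le_mul_of_nonneg_right ?_ (Real.rpow_nonneg hE.le _)
    refine mul_le_mul ?_ ?_ (by positivity) (by positivity)
    · rcases le_total 0 S.α with h | h
      · exact (min_le_left _ _).trans (Real.rpow_le_rpow (by positivity) (by linarith) h)
      · exact (min_le_right _ _).trans (Real.rpow_le_rpow_of_nonpos (by positivity) (by linarith) h)
    · refine Real.rpow_le_rpow (by positivity) ?_ (by linarith)
      calc (s0 ^ 2) ^ (S.m - 1) = 1 * (1 * (s0 ^ 2) ^ (S.m - 1)) := by ring
        _ ≤ k * (S.m * s ^ (S.m - 1)) := by rw [hs]; gcongr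
  have hEp : 0 < be k S.m s ^ (1 + S.α) := Real.rpow_pos_of_pos hE _
  calc K1 * be k S.m s ^ (1 + S.α) < (K1 + 1) * be k S.m s ^ (1 + S.α) := by
        exact mul_lt_mul_of_pos_right (by linarith) hEp
    _ = (c0 * be k S.m s ^ (1 + S.α)) * T := by rw [hT]; field_simp
    _ ≤ _ := mul_le_mul hfac hbracket hTp.le
        ((mul_pos hc0p hEp).le.trans hfac)
    _ ≤ _ := hlow

/-- The operator on the barrier is bounded near the centre. -/
theorem BH_bound (S : Setup N) {k R : ℝ} (hk : 0 < k) (hR : 0 < R) :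
    ∃ C > 0, ∀ y, ∀ x ∈ S.K, x ≠ y → ‖x - y‖ ≤ R → -C ≤ S.BH k y x := by
  obtain ⟨B, hB0, hB⟩ := S.exists_b_bound
  have hα := S.hα
  have hm1 : (1 : ℝ) ≤ S.m := by exact_mod_cast (by have := S.hm; omega : 1 ≤ S.m)
  have hAN : 0 ≤ S.A * N := mul_nonneg S.A_pos.le (Nat.cast_nonneg _)
  set C1 := 2 + 4 * (k * S.m * (R ^ 2) ^ S.m + S.m) with hC1
  have hC1p : 0 < C1 := by positivity
  set C2 := S.A * N * C1 + B * R + 1 with hC2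
  have hC2p : 0 < C2 := by positivity
  set e := (2 * (S.m : ℝ) - 1) * (1 + S.α) - 1 with he
  have hep : 0 < e := by have := S.hmα; linarith
  refine ⟨(2 * k * S.m) ^ (1 + S.α) * R ^ e * C2, by positivity, fun y x hx hxy hxR => ?_⟩
  have hw0 : x - y ≠ 0 := sub_ne_zero.2 hxy
  unfold BH
  set w := x - y with hw
  have hwn : 0 < ‖w‖ := norm_pos_iff.2 hw0
  set s := ‖w‖ ^ 2 with hs
  have hsp : 0 < s := by positivity
  have hf1 := be1_neg hk S.hm hsp
  have hf2 := be2_mul (k := k) S.hm s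
  set f1 := be1 k S.m s with hf1d
  set f2 := be2 k S.m s with hf2d
  set p := (2 * f1) • w with hp
  have hp0 : p ≠ 0 := smul_ne_zero (by linarith [mul_neg_of_pos_of_neg two_pos hf1]) hw0
  have hpn : ‖p‖ = 2 * (-f1) * ‖w‖ := by
    rw [hp, norm_smul, Real.norm_eq_abs, abs_of_neg (by linarith)]; ring
  have h1 := H_abs hB hx hp0 (radX_sym f1 f2 w)
  have hX : ‖radX f1 f2 w‖ ≤ C1 * (-f1) := by
    refine (radX_norm f1 f2 w).trans ?_
    have g1 : |f2| * s = (-f1) * |k * S.m * s ^ S.m - (S.m - 1)| := by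
      rw [← abs_of_pos hsp, ← abs_mul, abs_of_pos hsp, hf2, abs_mul, abs_of_pos (by linarith)]
    have g2 : |k * S.m * s ^ S.m - (S.m - 1)| ≤ k * S.m * (R ^ 2) ^ S.m + S.m := by
      have g3 : k * S.m * s ^ S.m ≤ k * S.m * (R ^ 2) ^ S.m := by rw [hs]; gcongr
      have g4 : 0 ≤ k * S.m * s ^ S.m := by positivity
      rw [abs_le]; constructor <;> linarith
    have g5 := mul_le_mul_of_nonneg_left g2 (show 0 ≤ -f1 by linarith)
    rw [abs_of_neg hf1, mul_assoc, ← hs, g1, hC1]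
    linarith
  have hpw : ‖p‖ ^ S.α * (S.A * N * ‖radX f1 f2 w‖ + B * ‖p‖) * ‖w‖ ≤ ‖p‖ ^ (1 + S.α) * C2 := by
    rw [Real.rpow_add (norm_pos_iff.2 hp0), Real.rpow_one]
    have g1 : (S.A * N * ‖radX f1 f2 w‖ + B * ‖p‖) * ‖w‖ ≤ ‖p‖ * C2 := by
      have g2 := mul_le_mul_of_nonneg_right (mul_le_mul_of_nonneg_left hX hAN) hwn.le
      have g3 := mul_le_mul_of_nonneg_left hxR (show 0 ≤ B * ‖p‖ by positivity)
      have g4 : S.A * N * (C1 * (-f1)) * ‖w‖ = S.A * N * C1 * ‖p‖ / 2 := by rw [hpn]; ring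
      have g5 : 0 ≤ S.A * N * C1 * ‖p‖ := by positivity
      have g6 : ‖p‖ * C2 = S.A * N * C1 * ‖p‖ + B * ‖p‖ * R + ‖p‖ := by rw [hC2]; ring
      rw [g6]
      linarith [norm_nonneg p]
    have := mul_le_mul_of_nonneg_left g1 (Real.rpow_nonneg (norm_nonneg p) S.α)
    linarith
  have hple : ‖p‖ ≤ 2 * k * S.m * ‖w‖ ^ (2 * (S.m : ℝ) - 1) := by
    have g1 : -f1 ≤ k * (S.m * s ^ (S.m - 1)) := by
      have := mul_le_mul_of_nonneg_left (be_le_one hk S.m hsp.le)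
        (show 0 ≤ k * (S.m * s ^ (S.m - 1)) by positivity)
      simp only [hf1d, be1]; linarith
    have g2 : s ^ (S.m - 1) * ‖w‖ = ‖w‖ ^ (2 * (S.m : ℝ) - 1) := by
      rw [hs, ← pow_mul, ← pow_succ, ← Real.rpow_natCast]
      congr 1
      have := S.hm
      obtain ⟨j, hj⟩ : ∃ j, S.m = j + 1 := ⟨S.m - 1, by omega⟩
      rw [hj]; push_cast [Nat.add_sub_cancel]; ring
    rw [hpn, ← g2]
    have := mul_le_mul_of_nonneg_right g1 hwn.le
    linarith
  have hpp : ‖p‖ ^ (1 + S.α) ≤ (2 * k * S.m) ^ (1 + S.α) * R ^ e * ‖w‖ := by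
    calc ‖p‖ ^ (1 + S.α) ≤ (2 * k * S.m * ‖w‖ ^ (2 * (S.m : ℝ) - 1)) ^ (1 + S.α) :=
          Real.rpow_le_rpow (norm_nonneg _) hple (by linarith)
      _ = (2 * k * S.m) ^ (1 + S.α) * (‖w‖ ^ e * ‖w‖) := by
          rw [Real.mul_rpow (by positivity) (by positivity), ← Real.rpow_mul hwn.le,
            ← Real.rpow_add_one hwn.ne', he, sub_add_cancel]
      _ ≤ (2 * k * S.m) ^ (1 + S.α) * (R ^ e * ‖w‖) := by
          refine mul_le_mul_of_nonneg_left (mul_le_mul_of_nonneg_right ?_ hwn.le) (by positivity)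
          exact Real.rpow_le_rpow hwn.le hxR hep.le
      _ = _ := by ring
  have hfin : |S.H x p (radX f1 f2 w)| ≤ (2 * k * S.m) ^ (1 + S.α) * R ^ e * C2 := by
    refine le_of_mul_le_mul_right ?_ hwn
    calc |S.H x p (radX f1 f2 w)| * ‖w‖ ≤ _ := mul_le_mul_of_nonneg_right h1 hwn.le
      _ ≤ ‖p‖ ^ (1 + S.α) * C2 := hpw
      _ ≤ (2 * k * S.m) ^ (1 + S.α) * R ^ e * ‖w‖ * C2 := mul_le_mul_of_nonneg_right hpp hC2p.le
      _ = _ := by ring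
  exact (abs_le.1 hfin).1

/-- A supersolution touched from below by a multiple of the barrier. -/
theorem touch_barrier (hv : S.VSuper z v) (hx : x ∈ S.K) (hxy : x ≠ y) {k t : ℝ} (hk : 0 < k)
    (ht : 0 < t) (hfr : x ∈ frontier S.Ω → 0 < ⟪x - y, S.nv x⟫)
    (h : ∀ᶠ x' in 𝓝[S.K] x,
      v x + t * (be k S.m (‖x' - y‖ ^ 2) - be k S.m (‖x - y‖ ^ 2)) ≤ v x') :
    t ^ (1 + S.α) * S.BH k y x + z x (v x) ≤ 0 := by
  have hw0 : x - y ≠ 0 := sub_ne_zero.2 hxy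
  have hsp : 0 < ‖x - y‖ ^ 2 := by have := norm_pos_iff.2 hw0; positivity
  have hf1 := be1_neg hk S.hm hsp
  have hj := upJet_radial (K := S.K) (u := fun x => -v x) (x₀ := x) (y := y)
    (f := fun s => -t * be k S.m s) (f' := fun s => -t * be1 k S.m s)
    (f2 := -t * be2 k S.m (‖x - y‖ ^ 2))
    (Eventually.of_forall fun s => (be_deriv k S.m s).const_mul (-t))
    ((be1_deriv k S.m _).const_mul (-t)) (h.mono fun x' h' => by linarith)
  have hq0 : (2 * (-t * be1 k S.m (‖x - y‖ ^ 2))) • (x - y) ≠ 0 := by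
    refine smul_ne_zero ?_ hw0
    have := mul_pos_of_neg_of_neg (neg_lt_zero.2 ht) hf1
    linarith
  have hY : SymOp ((2 * (-t * be1 k S.m (‖x - y‖ ^ 2))) • ContinuousLinearMap.id ℝ (EN N) +
    (4 * (-t * be2 k S.m (‖x - y‖ ^ 2))) • rk (x - y)) := radial_sym _ _ _
  have h1 := (hv.2 x hx).1 _ _ hY hq0 hj (fun hF => ?_)
  · rw [dual_H hx hq0 hY] at h1
    simp only [neg_neg] at h1
    have e1 : -((2 * (-t * be1 k S.m (‖x - y‖ ^ 2))) • (x - y)) =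
        t • ((2 * be1 k S.m (‖x - y‖ ^ 2)) • (x - y)) := by module
    have e2 : -((2 * (-t * be1 k S.m (‖x - y‖ ^ 2))) • ContinuousLinearMap.id ℝ (EN N) +
        (4 * (-t * be2 k S.m (‖x - y‖ ^ 2))) • rk (x - y)) =
        t • radX (be1 k S.m (‖x - y‖ ^ 2)) (be2 k S.m (‖x - y‖ ^ 2)) (x - y) := by
      unfold radX; module
    have hp0 : (2 * be1 k S.m (‖x - y‖ ^ 2)) • (x - y) ≠ 0 := smul_ne_zero (by linarith) hw0
    rw [e1, e2, H_hom hx hp0 (radX_sym _ _ _) ht] at h1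
    unfold BH
    linarith
  · rw [real_inner_smul_left]
    refine mul_pos ?_ (hfr hF)
    have := mul_pos_of_neg_of_neg (neg_lt_zero.2 ht) hf1
    linarith

theorem touch_center (hv : S.VSuper z v) (hy : y ∈ S.Ω) {k t : ℝ} (hk : 0 < k) (ht : 0 < t)
    (h : ∀ᶠ x' in 𝓝[S.K] y,
      v y + t * (be k S.m (‖x' - y‖ ^ 2) - be k S.m (‖y - y‖ ^ 2)) ≤ v x') : z y (v y) ≤ 0 := by
  have h1 := (hv.2 y (Ω_sub hy)).2 hy (t * k) (by positivity) (h.mono fun x' h' => ?_)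
  · simp only [neg_neg] at h1; linarith
  · show -v x' ≤ -v y + t * k * (‖x' - y‖ ^ 2) ^ S.m
    have e1 : be k S.m (‖y - y‖ ^ 2) = 1 := by
      have := S.hm
      rw [be, sub_self, norm_zero, zero_pow two_ne_zero, zero_pow (by omega)]; simp
    have e2 : 1 - k * (‖x' - y‖ ^ 2) ^ S.m ≤ be k S.m (‖x' - y‖ ^ 2) := by
      have := Real.add_one_le_exp (-(k * (‖x' - y‖ ^ 2) ^ S.m))
      rw [be]; linarith
    have e3 := mul_le_mul_of_nonneg_left e2 ht.le
    rw [e1] at h'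
    linarith

end Setup

/-! ### Boundedness of the admissible parameters -/

namespace Setup
variable {N : ℕ} {S : Setup N} {z : EN N → ℝ → ℝ} {u v w c : EN N → ℝ} {x y : EN N}

theorem be_dist_continuous (k : ℝ) (m : ℕ) (y : EN N) :
    Continuous fun x : EN N => be k m (‖x - y‖ ^ 2) :=
  (be_continuous k m).comp (by fun_prop)

/-- Comparison with a barrier in an interior ball bounds the parameters `lam` for which a positive
supersolution exists. -/
theorem lam_bound (hc : ContinuousOn c S.K) : ∃ Λ : ℝ, ∀ lam u, ContinuousOn u S.K →
    (∀ x ∈ S.K, 0 < u x) → S.VSuper (fun x r => (c x + lam) * sp S.α r + 1) u → lam ≤ Λ := by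
  have hα := S.hα
  have hm0 : S.m ≠ 0 := by have := S.hm; omega
  obtain ⟨y, hy⟩ := S.conn.nonempty
  obtain ⟨R0, hR0, hball⟩ := Metric.isOpen_iff.1 S.isOpen y hy
  set R := R0 / 2 with hR
  have hRp : 0 < R := by positivity
  have hcb : closedBall y R ⊆ S.Ω := (closedBall_subset_ball (by linarith)).trans hball
  obtain ⟨k, hk, hbar⟩ := S.barrier (s0 := R / 2) (R := R) (by positivity) (by linarith) le_rfl
  obtain ⟨C, hC, hCb⟩ := S.BH_bound hk hRp
  obtain ⟨D, hD, hDb⟩ := bound_K hc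
  set η : EN N → ℝ := fun x => be k S.m (‖x - y‖ ^ 2) - be k S.m (R ^ 2) with hη
  set η0 := be k S.m ((R / 2) ^ 2) - be k S.m (R ^ 2) with hη0
  have hη0p : 0 < η0 := sub_pos.2 (be_anti hk hm0 (by positivity)
    (by gcongr; linarith))
  have hη0α : 0 < η0 ^ (1 + S.α) := Real.rpow_pos_of_pos hη0p _
  refine ⟨D + C / η0 ^ (1 + S.α) + 1, fun lam u huc hup hu => ?_⟩
  by_contra hcon
  push Not at hcon
  have hηc : Continuous η := (be_dist_continuous k S.m y).sub continuous_const
  have hsub : closedBall y R ⊆ S.K := hcb.trans Ω_sub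
  obtain ⟨x, hxm, hmax⟩ := (isCompact_closedBall y R).exists_isMaxOn
    ⟨y, mem_closedBall_self hRp.le⟩
    (f := fun x => η x / u x) (hηc.continuousOn.div (huc.mono hsub) fun x hx => (hup x (hsub hx)).ne')
  have hxΩ : x ∈ S.Ω := hcb hxm
  have hxK : x ∈ S.K := Ω_sub hxΩ
  have hux := hup x hxK
  have hyη : 0 < η y := by
    refine sub_pos.2 (be_anti hk hm0 (by positivity) ?_)
    rw [sub_self, norm_zero, zero_pow two_ne_zero]; exact pow_pos hRp 2
  have hηx : 0 < η x := by
    have h1 : η y / u y ≤ η x / u x := hmax (mem_closedBall_self hRp.le)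
    have h2 := (div_pos hyη (hup y (Ω_sub hy))).trans_le h1
    exact (div_pos_iff_of_pos_right hux).1 h2
  have hxR : ‖x - y‖ < R := by
    by_contra h
    push Not at h
    rcases h.eq_or_lt with h | h
    · simp only [hη, ← h, sub_self, lt_irrefl] at hηx
    · have := be_anti hk hm0 (sq_nonneg R) (show R ^ 2 < ‖x - y‖ ^ 2 by gcongr)
      simp only [hη] at hηx; linarith
  set t := u x / η x with ht
  have htp : 0 < t := div_pos hux hηx
  have htη : t * η x = u x := div_mul_cancel₀ _ hηx.ne'
  have hnear : ∀ᶠ x' in 𝓝[S.K] x,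
      u x + t * (be k S.m (‖x' - y‖ ^ 2) - be k S.m (‖x - y‖ ^ 2)) ≤ u x' := by
    refine mem_nhdsWithin_of_mem_nhds (Filter.mem_of_superset
      (isOpen_ball.mem_nhds (show x ∈ ball y R by rwa [mem_ball, dist_eq_norm])) fun x' hx' => ?_)
    have hx'' := ball_subset_closedBall hx'
    have h1 : η x' / u x' ≤ η x / u x := hmax hx''
    rw [div_le_div_iff₀ (hup x' (hsub hx'')) hux] at h1
    have h2 : t * η x' ≤ u x' := by
      rw [ht, div_mul_eq_mul_div, div_le_iff₀ hηx]; linarith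
    have h3 : be k S.m (‖x' - y‖ ^ 2) - be k S.m (‖x - y‖ ^ 2) = η x' - η x := by
      simp only [hη]; ring
    show u x + t * (be k S.m (‖x' - y‖ ^ 2) - be k S.m (‖x - y‖ ^ 2)) ≤ u x'
    rw [h3, mul_sub, htη]; linarith
  have hCη : 0 < C / η0 ^ (1 + S.α) := by positivity
  have hcl : C / η0 ^ (1 + S.α) ≤ c x + lam := by
    have := (abs_le.1 (hDb x hxK)).1; linarith
  have hcl0 : 0 < c x + lam := by linarith
  rcases eq_or_ne x y with hxy | hxy
  · rw [hxy] at hnear hcl0 hux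
    have := touch_center hu hy hk htp hnear
    have h2 := mul_pos hcl0 (sp_pos S.hα hux)
    linarith
  · have h1 := touch_barrier hu hxK hxy hk htp (fun h => absurd h (not_frontier hxΩ)) hnear
    have h2 : sp S.α (u x) = t ^ (1 + S.α) * sp S.α (η x) := by rw [← htη, sp_mul _ htp]
    have htα : 0 < t ^ (1 + S.α) := Real.rpow_pos_of_pos htp _
    have h3 : 0 ≤ S.BH k y x + (c x + lam) * sp S.α (η x) := by
      rcases le_total (R / 2) ‖x - y‖ with h | h
      · have h4 := hbar y x hxK h hxR.le
        rw [zero_mul] at h4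
        have h5 := mul_pos hcl0 (sp_pos S.hα hηx)
        linarith
      · have h4 := hCb y x hxK hxy hxR.le
        have h5 : η0 ≤ η x := by
          rcases h.eq_or_lt with h | h
          · simp only [hη, hη0, h, le_refl]
          · have := be_anti hk hm0 (sq_nonneg _) (show ‖x - y‖ ^ 2 < (R / 2) ^ 2 by gcongr)
            simp only [hη, hη0]; linarith
        have h6 : η0 ^ (1 + S.α) ≤ sp S.α (η x) := by
          rw [← sp_eq S.hα hη0p.le]; exact (sp_strictMono S.hα).monotone h5
        have h7 := mul_le_mul hcl h6 hη0α.le hcl0.le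
        rw [div_mul_cancel₀ _ hη0α.ne'] at h7
        linarith
    have h8 := mul_nonneg htα.le h3
    simp only [h2] at h1
    linarith

/-! ### The strong maximum principle and Hopf's lemma -/

/-- A nonnegative supersolution that is positive on a ball dominates a multiple of the barrier
vanishing on the boundary of a concentric larger ball. -/
theorem growth {s0 R K1 : ℝ} (hs0 : 0 < s0) (hR : s0 < R) (hball : ball y R ⊆ S.Ω)
    (hwc : ContinuousOn w S.K) (hw0 : ∀ x ∈ S.K, 0 ≤ w x) (hwp : ∀ x ∈ closedBall y s0, 0 < w x)
    (hw : S.VSuper z w) (hK1 : 0 ≤ K1) (hz : ∀ x ∈ S.K, -K1 * sp S.α (w x) ≤ z x (w x)) :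
    ∃ k > 0, ∃ t > 0, (∀ x ∈ S.K, ‖x - y‖ ≤ R →
      t * (be k S.m (‖x - y‖ ^ 2) - be k S.m (R ^ 2)) ≤ w x) ∧
      ∀ x ∈ S.K, s0 ≤ ‖x - y‖ → ‖x - y‖ ≤ R → 0 < S.BH k y x := by
  have hα := S.hα
  have hm0 : S.m ≠ 0 := by have := S.hm; omega
  have hRp : 0 < R := hs0.trans hR
  obtain ⟨k, hk, hbar⟩ := S.barrier hs0 hR hK1
  have hsub : closedBall y R ⊆ S.K := by
    rw [← closure_ball y hRp.ne']; exact closure_mono hball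
  have hs0R : closedBall y s0 ⊆ S.K := (closedBall_subset_closedBall hR.le).trans hsub
  obtain ⟨x1, hx1, hmin1⟩ := (isCompact_closedBall y s0).exists_isMinOn
    ⟨y, mem_closedBall_self hs0.le⟩ (hwc.mono hs0R)
  set t := w x1 with ht
  have htp : 0 < t := hwp x1 hx1
  set η : EN N → ℝ := fun x => be k S.m (‖x - y‖ ^ 2) - be k S.m (R ^ 2) with hη
  have hηc : Continuous η := (be_dist_continuous k S.m y).sub continuous_const
  have hbp : ∀ x ∈ S.K, s0 ≤ ‖x - y‖ → ‖x - y‖ ≤ R → 0 < S.BH k y x := fun x hx h1 h2 =>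
    (mul_nonneg hK1 (Real.rpow_nonneg (be_pos _ _ _).le _)).trans_lt (hbar y x hx h1 h2)
  refine ⟨k, hk, t, htp, ?_, hbp⟩
  obtain ⟨x, hxm, hmin⟩ := (isCompact_closedBall y R).exists_isMinOn
    ⟨y, mem_closedBall_self hRp.le⟩ (f := fun x => w x - t * η x)
    ((hwc.mono hsub).sub (hηc.const_mul t).continuousOn)
  have hxK := hsub hxm
  suffices h : 0 ≤ w x - t * η x by
    intro x' hx' hx'R
    have h1 : w x - t * η x ≤ w x' - t * η x' :=
      hmin (show x' ∈ closedBall y R by rwa [mem_closedBall, dist_eq_norm])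
    show t * η x' ≤ w x'
    linarith
  by_contra hneg
  push Not at hneg
  have hη1 : η x < be k S.m (‖x - y‖ ^ 2) := by
    have := be_pos k S.m (R ^ 2); simp only [hη]; linarith
  have hb1 := be_le_one hk S.m (sq_nonneg ‖x - y‖)
  have hxs : s0 < ‖x - y‖ := by
    by_contra h
    push Not at h
    have h1 : t ≤ w x := hmin1 (show x ∈ closedBall y s0 by rwa [mem_closedBall, dist_eq_norm])
    have h2 := mul_lt_mul_of_pos_left (hη1.trans_le hb1) htp
    linarith
  have hηx : 0 < η x := by
    have h1 : 0 < t * η x := by have := hw0 x hxK; linarith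
    exact pos_of_mul_pos_right h1 htp.le
  have hxR : ‖x - y‖ < R := by
    rw [mem_closedBall, dist_eq_norm] at hxm
    rcases hxm.eq_or_lt with h | h
    · simp only [hη, h, sub_self, lt_irrefl] at hηx
    · exact h
  have hxb : x ∈ ball y R := by rwa [mem_ball, dist_eq_norm]
  have hxy : x ≠ y := sub_ne_zero.1 (norm_pos_iff.1 (hs0.trans hxs))
  have hnear : ∀ᶠ x' in 𝓝[S.K] x,
      w x + t * (be k S.m (‖x' - y‖ ^ 2) - be k S.m (‖x - y‖ ^ 2)) ≤ w x' := by
    refine mem_nhdsWithin_of_mem_nhds (Filter.mem_of_superset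
      (isOpen_ball.mem_nhds hxb) fun x' hx' => ?_)
    have h1 : w x - t * η x ≤ w x' - t * η x' := hmin (ball_subset_closedBall hx')
    have h3 : be k S.m (‖x' - y‖ ^ 2) - be k S.m (‖x - y‖ ^ 2) = η x' - η x := by
      simp only [hη]; ring
    show w x + t * (be k S.m (‖x' - y‖ ^ 2) - be k S.m (‖x - y‖ ^ 2)) ≤ w x'
    rw [h3, mul_sub]; linarith
  have h1 := touch_barrier hw hxK hxy hk htp (fun h => absurd h (not_frontier (hball hxb))) hnear
  have h2 := hbar y x hxK hxs.le hxR.le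
  have htα : 0 < t ^ (1 + S.α) := Real.rpow_pos_of_pos htp _
  have h3 := mul_lt_mul_of_pos_left h2 htα
  have hbe := be_pos k S.m (‖x - y‖ ^ 2)
  have h4 : sp S.α (w x) ≤ t ^ (1 + S.α) * be k S.m (‖x - y‖ ^ 2) ^ (1 + S.α) := by
    rw [← sp_eq S.hα hbe.le, ← sp_mul _ htp]
    refine (sp_strictMono S.hα).monotone ?_
    have := mul_lt_mul_of_pos_left hη1 htp
    linarith
  have h5 := mul_le_mul_of_nonneg_left h4 hK1
  have h6 := hz x hxK
  linarith

/-- A nonnegative supersolution which is not identically zero is positive up to the boundary. -/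
theorem strong_max {K1 : ℝ} (hwc : ContinuousOn w S.K) (hw0 : ∀ x ∈ S.K, 0 ≤ w x)
    (hne : ∃ x ∈ S.K, w x ≠ 0) (hw : S.VSuper z w) (hK1 : 0 ≤ K1)
    (hz : ∀ x ∈ S.K, -K1 * sp S.α (w x) ≤ z x (w x)) : ∀ x ∈ S.K, 0 < w x := by
  have hm0 : S.m ≠ 0 := by have := S.hm; omega
  have hopen : IsOpen (S.Ω ∩ w ⁻¹' Ioi 0) :=
    (hwc.mono Ω_sub).isOpen_inter_preimage S.isOpen isOpen_Ioi
  -- positivity at some point of `Ω`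
  obtain ⟨x1, hx1, hw1⟩ : ∃ x ∈ S.Ω, 0 < w x := by
    by_contra hcon
    push Not at hcon
    obtain ⟨x, hx, hxne⟩ := hne
    refine hxne ?_
    have : EqOn w (fun _ => 0) S.K :=
      (show EqOn w (fun _ => 0) S.Ω from fun x hx =>
        le_antisymm (hcon x hx) (hw0 x (Ω_sub hx))).of_subset_closure hwc
        continuousOn_const Ω_sub le_rfl
    exact this hx
  have hclosed : ∀ x0 ∈ S.Ω, x0 ∈ closure (S.Ω ∩ w ⁻¹' Ioi 0) → 0 < w x0 := by
    intro x0 hx0 hcl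
    obtain ⟨r', hr', hball⟩ := Metric.isOpen_iff.1 S.isOpen x0 hx0
    set r := r' / 3 with hr
    have hrp : 0 < r := by positivity
    obtain ⟨y, ⟨hyΩ, hyw⟩, hyd⟩ := Metric.mem_closure_iff.1 hcl r hrp
    obtain ⟨s', hs', hsb⟩ := Metric.isOpen_iff.1 hopen y ⟨hyΩ, hyw⟩
    have hsp : 0 < min (s' / 2) r := lt_min (by positivity) hrp
    have hb2 : ball y (2 * r) ⊆ S.Ω := (ball_subset_ball' (by
      rw [dist_comm]; linarith)).trans hball
    obtain ⟨k, hk, t, ht, hlow, -⟩ := growth (y := y) (s0 := min (s' / 2) r) (R := 2 * r) hsp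
      (by have := min_le_right (s' / 2) r; linarith) hb2 hwc hw0
      (fun x hx => (hsb (closedBall_subset_ball
        (by have := min_le_left (s' / 2) r; linarith) hx)).2) hw hK1 hz
    rw [dist_eq_norm] at hyd
    have h1 := hlow x0 (Ω_sub hx0) (by linarith)
    have h2 := be_anti hk hm0 (sq_nonneg _) (show ‖x0 - y‖ ^ 2 < (2 * r) ^ 2 by
      have : ‖x0 - y‖ < 2 * r := by linarith
      gcongr)
    have h3 := mul_pos ht (sub_pos.2 h2)
    linarith
  have hΩpos : ∀ x ∈ S.Ω, 0 < w x := by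
    have h := S.conn.isPreconnected.subset_of_closure_inter_subset hopen ⟨x1, hx1, hx1, hw1⟩
      fun x hx => ⟨hx.2, hclosed x hx.2 hx.1⟩
    exact fun x hx => (h hx).2
  intro x0 hx0
  by_contra hcon
  have hwx0 : w x0 = 0 := le_antisymm (not_lt.1 hcon) (hw0 x0 hx0)
  have hfr : x0 ∈ frontier S.Ω := by
    rw [S.isOpen.frontier_eq]
    exact ⟨hx0, fun h => hcon (hΩpos x0 h)⟩
  obtain ⟨R0, hR0, hball⟩ := interior_ball hfr
  set y := x0 - R0 • gradient S.ρ x0 with hy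
  set R := R0 * ‖gradient S.ρ x0‖ with hR
  have hxy : x0 - y = R0 • gradient S.ρ x0 := by rw [hy]; abel
  have hnorm : ‖x0 - y‖ = R := by
    rw [hxy, norm_smul, Real.norm_eq_abs, abs_of_pos hR0]
  have hgr : 0 < ⟪gradient S.ρ x0, S.nv x0⟫ := by
    rw [nv_pos_iff hfr, real_inner_self_eq_norm_sq]
    have := norm_pos_iff.2 (S.hρ.2.2.2 x0 hfr).1
    positivity
  have hg0 : gradient S.ρ x0 ≠ 0 := by
    intro h; rw [h, inner_zero_left] at hgr; exact lt_irrefl _ hgr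
  have hRp : 0 < R := mul_pos hR0 (norm_pos_iff.2 hg0)
  obtain ⟨k, hk, t, ht, hlow, hpos⟩ := growth (y := y) (s0 := R / 2) (R := R) (by positivity)
    (by linarith) hball hwc hw0
    (fun x hx => hΩpos x (hball (closedBall_subset_ball (by linarith) hx))) hw hK1 hz
  have hne : x0 ≠ y := sub_ne_zero.1 (norm_pos_iff.1 (by rw [hnorm]; exact hRp))
  have hnear : ∀ᶠ x' in 𝓝[S.K] x0,
      w x0 + t * (be k S.m (‖x' - y‖ ^ 2) - be k S.m (‖x0 - y‖ ^ 2)) ≤ w x' := by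
    refine eventually_nhdsWithin_of_forall fun x' hx' => ?_
    rw [hwx0, zero_add, hnorm]
    rcases le_or_gt ‖x' - y‖ R with h | h
    · exact hlow x' hx' h
    · have h1 := be_anti hk hm0 (sq_nonneg R) (show R ^ 2 < ‖x' - y‖ ^ 2 by gcongr)
      have h2 := mul_pos ht (sub_pos.2 h1)
      have := hw0 x' hx'
      linarith
  have h1 := touch_barrier hw hx0 hne hk ht
    (fun _ => by rw [hxy, real_inner_smul_left]; exact mul_pos hR0 hgr) hnear
  have h2 := hpos x0 hx0 (by rw [hnorm]; linarith) hnorm.le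
  have h3 := hz x0 hx0
  have h4 := mul_pos (Real.rpow_pos_of_pos ht (1 + S.α)) h2
  rw [hwx0] at h1 h3
  rw [sp_zero, mul_zero] at h3
  linarith

end Setup

/-! ### The eigenfunction -/

namespace Setup
variable {N : ℕ} {S : Setup N} {u v w c : EN N → ℝ} {x y : EN N}

/-- Uniformly bounded and equi-Lipschitz sequences on the closed domain have uniformly convergent
subsequences. -/
theorem exists_subseq {W : ℕ → EN N → ℝ} {L : ℝ} (hW : ∀ n, ∀ x ∈ S.K, |W n x| ≤ 1)
    (hlip : ∀ n, ∀ x ∈ S.K, ∀ y ∈ S.K, |W n x - W n y| ≤ L * ‖x - y‖) :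
    ∃ w, ∃ φ : ℕ → ℕ, StrictMono φ ∧ TendstoUniformlyOn (fun n => W (φ n)) w atTop S.K := by
  classical
  haveI : CompactSpace S.K := isCompact_iff_compactSpace.1 S.isCompact_K
  let B : ℕ → BoundedContinuousFunction S.K ℝ := fun n =>
    BoundedContinuousFunction.mkOfCompact
      ⟨fun x => W n x, (continuousOn_of_lip (hlip n)).domRestrict⟩
  have hB : ∀ n x, B n x = W n x := fun n x => rfl
  have hcomp : IsCompact (closure (range B)) := by
    refine BoundedContinuousFunction.arzela_ascoli (Icc (-1) 1) isCompact_Icc _ ?_ ?_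
    · rintro _ x ⟨n, rfl⟩
      exact abs_le.1 (hW n x x.2)
    · refine equicontinuous_of_continuity_modulus (fun r => L * r) ?_ _ ?_
      · have : Tendsto (fun r : ℝ => L * r) (𝓝 0) (𝓝 (L * 0)) :=
          (continuous_const.mul continuous_id).tendsto 0
        rwa [mul_zero] at this
      · rintro x y ⟨_, n, rfl⟩
        show dist (B n x) (B n y) ≤ _
        rw [hB, hB, Real.dist_eq, Subtype.dist_eq, dist_eq_norm]
        exact hlip n x x.2 y y.2
  obtain ⟨f, -, φ, hφ, hlim⟩ := hcomp.tendsto_subseq (fun n => subset_closure (mem_range_self n))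
  refine ⟨fun x => if h : x ∈ S.K then f ⟨x, h⟩ else 0, φ, hφ, ?_⟩
  rw [BoundedContinuousFunction.tendsto_iff_tendstoUniformly, Metric.tendstoUniformly_iff] at hlim
  rw [Metric.tendstoUniformlyOn_iff]
  intro ε hε
  filter_upwards [hlim ε hε] with n hn x hx
  have := hn ⟨x, hx⟩
  rw [dif_pos hx]
  exact this

variable (S) in
/-- The parameters for which a bounded positive supersolution exists, in terms of jets. -/
def adm (c : EN N → ℝ) : Set ℝ :=
  {lam | ∃ v, S.VSuper (fun x r => (c x + lam) * sp S.α r) v ∧ (∀ x ∈ S.K, 0 < v x) ∧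
    ∃ M, ∀ x ∈ S.K, v x ≤ M}

theorem coef_cont (hc : ContinuousOn c S.K) (lam : ℝ) :
    S.ZCont (fun x r => (c x + lam) * sp S.α r) := by
  have h1 : ContinuousOn (fun q : EN N × ℝ => c q.1) (S.K ×ˢ univ) :=
    hc.comp continuousOn_fst fun q hq => hq.1
  have h3 : ContinuousOn (fun q : EN N × ℝ => sp S.α q.2) (S.K ×ˢ univ) :=
    ((sp_continuous S.hα).comp continuous_snd).continuousOn
  exact (h1.add continuousOn_const).mul h3

theorem lamBarSet_eq (hc : ContinuousOn c S.K) : lamBarSet S.Ω S.nv S.F S.b c S.α = S.adm c := by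
  ext lam
  have e : (fun (x : EN N) (r : ℝ) => (c x + lam) * |r| ^ S.α * r) =
      fun x r => (c x + lam) * sp S.α r := by
    funext x r; rw [sp, mul_assoc]
  simp only [lamBarSet, adm, mem_ofPred_eq, e]
  constructor
  · rintro ⟨v, h1, h2, h3, h4⟩
    exact ⟨v, VSuper_of_IsSuperSol (coef_cont hc lam) h1 h4, h2, h3⟩
  · rintro ⟨v, h1, h2, h3⟩
    have h4 : UpperSemicontinuousOn (fun x => -v x) S.K := h1.1
    refine ⟨v, ?_, h2, h3, IsSuperSol_of_VSuper h1⟩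
    have h5 : LowerSemicontinuousOn (fun x => -(-v x)) S.K := h4.neg
    simp only [neg_neg] at h5
    exact h5

theorem adm_nonempty (hc : ContinuousOn c S.K) : (S.adm c).Nonempty := by
  obtain ⟨D, hD, hcD⟩ := bound_K hc
  refine ⟨-D, fun _ => 1, ?_, fun _ _ => one_pos, 1, fun _ _ => le_rfl⟩
  refine VSub_const (S := S.dual) fun x hx => ?_
  have h1 := (abs_le.1 (hcD x hx)).2
  have h2 := mul_nonneg (show 0 ≤ D - c x by linarith) (sp_pos S.hα one_pos).le
  simp only [neg_neg]
  linarith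

theorem adm_bddAbove (hc : ContinuousOn c S.K) : BddAbove (S.adm c) := by
  obtain ⟨Λ, hΛ⟩ := lam_bound hc
  refine ⟨Λ, ?_⟩
  rintro lam ⟨v, h1, h2, h3⟩
  refine le_of_forall_lt fun lam' h => ?_
  obtain ⟨lam1, h4, h5⟩ := exists_between h
  obtain ⟨u, hu1, hu2, -, hu3⟩ := exists_sol hc h5 h1 h2 h3
  exact h4.trans_le (hΛ lam1 u hu1 hu2 hu3)

set_option maxHeartbeats 1600000 in
/-- At the supremum of the admissible parameters there is a positive Lipschitz solution: the
normalized solutions with right-hand side `-1` for smaller parameters blow up before normalization,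
so that the right-hand side disappears in the limit. -/
theorem eigen (hc : ContinuousOn c S.K) {lam0 : ℝ} (hlub : IsLUB (S.adm c) lam0) :
    ∃ w, ∃ L : ℝ, 0 < L ∧ (∀ x ∈ S.K, 0 < w x) ∧
      (∀ x ∈ S.K, ∀ y ∈ S.K, |w x - w y| ≤ L * ‖x - y‖) ∧
      S.VSub (fun x r => (c x + lam0) * sp S.α r) w ∧
      S.VSuper (fun x r => (c x + lam0) * sp S.α r) w := by
  have hα := S.hα
  have hmono : Monotone (sp S.α) := (sp_strictMono hα).monotone
  have hne : S.K.Nonempty := S.conn.nonempty.closure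
  have hsp1 : sp S.α 1 = 1 := by rw [sp_eq hα zero_le_one, Real.one_rpow]
  obtain ⟨D, hD, hcD⟩ := bound_K hc
  set δ : ℕ → ℝ := fun n => 1 / ((n : ℝ) + 1) with hδ
  have hδp : ∀ n, 0 < δ n := fun n => by simp only [hδ]; positivity
  have hδ1 : ∀ n, δ n ≤ 1 := fun n => by
    simp only [hδ]; rw [div_le_one (by positivity)]; linarith [(Nat.cast_nonneg n : (0 : ℝ) ≤ n)]
  have hδ0 : Tendsto δ atTop (𝓝 0) := tendsto_one_div_add_atTop_nhds_zero_nat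
  have hsol : ∀ n, ∃ u, ContinuousOn u S.K ∧ (∀ x ∈ S.K, 0 < u x) ∧
      S.VSub (fun x r => (c x + (lam0 - δ n)) * sp S.α r + 1) u ∧
      S.VSuper (fun x r => (c x + (lam0 - δ n)) * sp S.α r + 1) u := by
    intro n
    obtain ⟨lam', ⟨v, h1, h2, h3⟩, h4, -⟩ := hlub.exists_between (show lam0 - δ n < lam0 by
      linarith [hδp n])
    exact exists_sol hc h4 h1 h2 h3
  choose U hUc hUp hUsub hUsup using hsol
  have hmax : ∀ n, ∃ x ∈ S.K, ∀ x' ∈ S.K, U n x' ≤ U n x := fun n => by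
    obtain ⟨x, hx, h⟩ := S.isCompact_K.exists_isMaxOn hne (hUc n)
    exact ⟨x, hx, fun x' hx' => h hx'⟩
  choose xm hxm hxmax using hmax
  have hMp : ∀ n, 0 < U n (xm n) := fun n => hUp n _ (hxm n)
  have hblow : ∀ n, 1 ≤ 2 * δ n * sp S.α (U n (xm n)) := by
    intro n
    by_contra hcon
    push Not at hcon
    have : lam0 + δ n ∈ S.adm c := by
      refine ⟨U n, (hUsup n).mono fun x hx => ?_, hUp n, _, hxmax n⟩
      have h1 := mul_le_mul_of_nonneg_left (hmono (hxmax n x hx)) (hδp n).le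
      linarith
    have := hlub.1 this
    linarith [hδp n]
  set t : ℕ → ℝ := fun n => (U n (xm n))⁻¹ with ht
  have htp : ∀ n, 0 < t n := fun n => inv_pos.2 (hMp n)
  set e : ℕ → ℝ := fun n => t n ^ (1 + S.α) with he
  have hep : ∀ n, 0 < e n := fun n => Real.rpow_pos_of_pos (htp n) _
  have heδ : ∀ n, e n ≤ 2 * δ n := by
    intro n
    have h1 : e n * sp S.α (U n (xm n)) = 1 := by
      simp only [he]
      rw [← sp_mul _ (htp n), show t n * U n (xm n) = 1 from inv_mul_cancel₀ (hMp n).ne', hsp1]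
    have h2 := mul_le_mul_of_nonneg_left (hblow n) (hep n).le
    have h3 : e n * (2 * δ n * sp S.α (U n (xm n))) = 2 * δ n * (e n * sp S.α (U n (xm n))) := by
      ring
    rw [h3, h1] at h2
    linarith
  set W : ℕ → EN N → ℝ := fun n x => t n * U n x with hW
  have hWm : ∀ n, W n (xm n) = 1 := fun n => inv_mul_cancel₀ (hMp n).ne'
  have hWp : ∀ n, ∀ x ∈ S.K, 0 < W n x := fun n x hx => mul_pos (htp n) (hUp n x hx)
  have hW1 : ∀ n, ∀ x ∈ S.K, W n x ≤ 1 := fun n x hx => by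
    rw [← hWm n]; exact mul_le_mul_of_nonneg_left (hxmax n x hx) (htp n).le
  have hWa : ∀ n, ∀ x ∈ S.K, |W n x| ≤ 1 := fun n x hx => by
    rw [abs_of_pos (hWp n x hx)]; exact hW1 n x hx
  have hWc : ∀ n, ContinuousOn (W n) S.K := fun n => continuousOn_const.mul (hUc n)
  have hsW0 : ∀ n, ∀ x ∈ S.K, 0 ≤ sp S.α (W n x) := fun n x hx => (sp_pos hα (hWp n x hx)).le
  have hsW1 : ∀ n, ∀ x ∈ S.K, sp S.α (W n x) ≤ 1 := fun n x hx => by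
    have := hmono (hW1 n x hx); rwa [hsp1] at this
  have hscale : ∀ n, ∀ x ∈ S.K, (c x + (lam0 - δ n)) * sp S.α (t n * U n x) + e n =
      t n ^ (1 + S.α) * ((c x + (lam0 - δ n)) * sp S.α (U n x) + 1) := fun n x _ => by
    rw [sp_mul _ (htp n)]; ring
  have hWsub : ∀ n, S.VSub (fun x r => (c x + (lam0 - δ n)) * sp S.α r + e n) (W n) := fun n =>
    (hUsub n).scale (htp n) (hscale n)
  have hWsup : ∀ n, S.VSuper (fun x r => (c x + (lam0 - δ n)) * sp S.α r + e n) (W n) := fun n =>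
    (hUsup n).scale (htp n) (hscale n)
  -- proper form of the equations, with the eigenvalue term frozen in the right-hand side
  set k := D + 1 with hk
  set d : EN N → ℝ := fun x => k - c x with hd
  have hdc : ContinuousOn d S.K := continuousOn_const.sub hc
  have hdp : ∀ x ∈ S.K, 0 < d x := fun x hx => by
    have := (abs_le.1 (hcD x hx)).2
    simp only [hd, hk]; linarith
  set f : ℕ → EN N → ℝ := fun n x => (lam0 - δ n + k) * sp S.α (W n x) + e n with hf
  have hzW : ∀ n x, S.zz d (f n) x (W n x) = (c x + (lam0 - δ n)) * sp S.α (W n x) + e n :=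
    fun n x => by simp only [zz, hd, hf]; ring
  have hfc : ∀ n, ContinuousOn (f n) S.K := fun n =>
    (continuousOn_const.mul ((sp_continuous hα).comp_continuousOn (hWc n))).add continuousOn_const
  have hWsub' : ∀ n, S.VSub (S.zz d (f n)) (W n) := fun n =>
    (hWsub n).mono fun x _ => (hzW n x).ge
  have hWsup' : ∀ n, S.VSuper (S.zz d (f n)) (W n) := fun n =>
    (hWsup n).mono fun x _ => (hzW n x).le
  have hfb : ∀ n, ∀ x ∈ S.K, |f n x| ≤ |lam0| + k + 3 := by
    intro n x hx
    have h1 : |lam0 - δ n + k| ≤ |lam0| + k + 1 := by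
      have := hδp n; have := hδ1 n; have := le_abs_self lam0; have := neg_abs_le lam0
      rw [abs_le]; constructor <;> linarith
    have h2 : |(lam0 - δ n + k) * sp S.α (W n x)| ≤ (|lam0| + k + 1) * 1 := by
      rw [abs_mul, abs_of_nonneg (hsW0 n x hx)]
      exact mul_le_mul h1 (hsW1 n x hx) (hsW0 n x hx) (by positivity)
    have h3 := abs_add_le ((lam0 - δ n + k) * sp S.α (W n x)) (e n)
    rw [abs_of_pos (hep n)] at h3
    have := heδ n; have := hδ1 n
    simp only [hf]; linarith
  obtain ⟨L, hL, hlip⟩ := lip_est (S := S) hdc hdp one_pos (|lam0| + k + 3)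
  have hWL := fun n => hlip (f n) (W n) (hfc n) (hfb n) (hWsub' n) (hWsup' n) (hWa n)
  obtain ⟨w, φ, hφ, hunif⟩ := exists_subseq hWa hWL
  have hlim : ∀ x ∈ S.K, Tendsto (fun n => W (φ n) x) atTop (𝓝 (w x)) := fun x hx =>
    hunif.tendsto_at hx
  have hwL : ∀ x ∈ S.K, ∀ y ∈ S.K, |w x - w y| ≤ L * ‖x - y‖ := fun x hx y hy =>
    le_of_tendsto ((hlim x hx).sub (hlim y hy)).abs (Eventually.of_forall fun n => hWL (φ n) x hx y hy)
  have hwc := continuousOn_of_lip hwL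
  have hw0 : ∀ x ∈ S.K, 0 ≤ w x := fun x hx =>
    ge_of_tendsto (hlim x hx) (Eventually.of_forall fun n => (hWp (φ n) x hx).le)
  have hwa : ∀ x ∈ S.K, |w x| ≤ 1 := fun x hx =>
    le_of_tendsto (hlim x hx).abs (Eventually.of_forall fun n => hWa (φ n) x hx)
  have hne0 : ∃ x ∈ S.K, w x ≠ 0 := by
    obtain ⟨n, hn⟩ := (unif_of_eventually hunif (ε := 1 / 2) (by norm_num)).exists
    refine ⟨xm (φ n), hxm _, fun h0 => ?_⟩
    have h1 : |W (φ n) (xm (φ n)) - w (xm (φ n))| ≤ 1 / 2 := hn _ (hxm _)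
    rw [hWm, h0] at h1
    norm_num at h1
  have hunif2 := sp_unif hunif (fun n => hWa (φ n)) hwa
  set g : EN N → ℝ := fun x => (lam0 + k) * sp S.α (w x) with hg
  have hgc : ContinuousOn g S.K :=
    continuousOn_const.mul ((sp_continuous hα).comp_continuousOn hwc)
  have happ : ∀ η > 0, ∃ n, ∀ x ∈ S.K, |W n x - w x| ≤ η ∧ |f n x - g x| ≤ η := by
    intro η hη
    set κ := |lam0 + k| with hκ
    have hκ0 : 0 ≤ κ := abs_nonneg _
    have e1 := unif_of_eventually hunif hη
    have e2 := unif_of_eventually hunif2 (ε := η / 2 / (κ + 1)) (by positivity)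
    have e3 : ∀ᶠ n in atTop, δ (φ n) < η / 6 :=
      (hδ0.comp hφ.tendsto_atTop).eventually (gt_mem_nhds (by positivity))
    obtain ⟨n, ⟨h1, h2⟩, h3⟩ := ((e1.and e2).and e3).exists
    refine ⟨φ n, fun x hx => ⟨h1 x hx, ?_⟩⟩
    have h4 : |(lam0 + k) * (sp S.α (W (φ n) x) - sp S.α (w x))| ≤ η / 2 := by
      rw [abs_mul]
      calc κ * |sp S.α (W (φ n) x) - sp S.α (w x)| ≤ (κ + 1) * (η / 2 / (κ + 1)) :=
            mul_le_mul (by linarith) (h2 x hx) (abs_nonneg _) (by linarith)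
        _ = η / 2 := by field_simp
    have h5 := mul_le_mul_of_nonneg_left (hsW1 (φ n) x hx) (hδp (φ n)).le
    have h6 := mul_nonneg (hδp (φ n)).le (hsW0 (φ n) x hx)
    have h7 := heδ (φ n)
    have h8 := hep (φ n)
    have h9 : f (φ n) x - g x = (lam0 + k) * (sp S.α (W (φ n) x) - sp S.α (w x))
        - δ (φ n) * sp S.α (W (φ n) x) + e (φ n) := by simp only [hf, hg]; ring
    obtain ⟨h10, h11⟩ := abs_le.1 h4
    rw [h9, abs_le]
    constructor <;> linarith
  have hzz : ∀ x, S.zz d g x (w x) = (c x + lam0) * sp S.α (w x) := fun x => by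
    simp only [zz, hd, hg]; ring
  have hsub : S.VSub (fun x r => (c x + lam0) * sp S.α r) w := by
    refine (limit_sub hdc hgc hwc fun η hη => ?_).mono fun x _ => (hzz x).le
    obtain ⟨n, hn⟩ := happ η hη
    exact ⟨_, _, hWsub' n, hn⟩
  have hsup : S.VSuper (fun x r => (c x + lam0) * sp S.α r) w := by
    refine (limit_super hdc hgc hwc fun η hη => ?_).mono fun x _ => (hzz x).ge
    obtain ⟨n, hn⟩ := happ η hη
    exact ⟨_, _, hWsup' n, hn⟩
  refine ⟨w, L, hL, ?_, hwL, hsub, hsup⟩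
  refine strong_max (K1 := D + |lam0|) hwc hw0 hne0 hsup (by positivity) fun x hx => ?_
  refine mul_le_mul_of_nonneg_right ?_ (sp_nonneg hα (hw0 x hx))
  have := (abs_le.1 (hcD x hx)).1
  have := neg_abs_le lam0
  linarith

end Setup

/-- Theorem `esistautof`: existence of a positive Lipschitz principal
eigenfunction corresponding to `λ̄`. -/
theorem stmt17 {N : ℕ} (Ω : Set (EN N)) (nv : EN N → EN N) (hΩ : IsC2Domain Ω nv)
    (α a A C₁ θ C₂ ν : ℝ) (hα : -1 < α)
    (F : EN N → EN N → Mat N → ℝ)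
    (hF1 : CondF1 Ω α F) (hF2 : CondF2 Ω α a A F)
    (hF3 : CondF3 Ω α C₁ θ F) (hF4 : CondF4 Ω α C₂ ν F)
    (b : EN N → EN N) (c : EN N → ℝ)
    (hbc : ContinuousOn b (closure Ω)) (hcc : ContinuousOn c (closure Ω)) :
    ∃ φ : EN N → ℝ, ContinuousOn φ (closure Ω) ∧ (∀ x ∈ closure Ω, 0 < φ x) ∧
      (∃ K : ℝ≥0, LipschitzOnWith K φ (closure Ω)) ∧
      IsSubSol Ω F b α
        (fun x r => (c x + sSup (lamBarSet Ω nv F b c α)) * |r| ^ α * r)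
        (fun _ => 0) (BNeu nv) φ ∧
      IsSuperSol Ω F b α
        (fun x r => (c x + sSup (lamBarSet Ω nv F b c α)) * |r| ^ α * r)
        (fun _ => 0) (BNeu nv) φ := by
  obtain ⟨h1, h2, h3, ρ, hρ⟩ := hΩ
  obtain ⟨j, hj⟩ := exists_nat_gt (1 / (1 + α))
  have hα1 : 0 < 1 + α := by linarith
  let S : Setup N :=
    { Ω := Ω, nv := nv, ρ := ρ, F := F, b := b, α := α, a := a, A := A, C₁ := C₁, θ := θ, C₂ := C₂,
      ν := ν, m := j + 2, isOpen := h1, conn := h2, bdd := h3, hρ := hρ, hα := hα, hF1 := hF1,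
      hF2 := hF2, hF3 := hF3, hF4 := hF4, hb := hbc, hm := by omega
      hmα := by
        rw [div_lt_iff₀ hα1] at hj
        have h4 : (j : ℝ) ≤ 2 * ((j + 2 : ℕ) : ℝ) - 1 := by
          push_cast; linarith [(Nat.cast_nonneg j : (0 : ℝ) ≤ j)]
        exact hj.trans_le (mul_le_mul_of_nonneg_right h4 hα1.le) }
  have hc : ContinuousOn c S.K := hcc
  have hset : lamBarSet Ω nv F b c α = S.adm c := Setup.lamBarSet_eq (S := S) hc
  obtain ⟨w, L, hL, hpos, hlip, hsub, hsup⟩ := Setup.eigen (S := S) hc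
    (isLUB_csSup (Setup.adm_nonempty hc) (Setup.adm_bddAbove hc))
  have e : (fun (x : EN N) (r : ℝ) => (c x + sSup (lamBarSet Ω nv F b c α)) * |r| ^ α * r) =
      fun x r => (c x + sSup (S.adm c)) * sp S.α r := by
    funext x r; rw [hset, sp, mul_assoc]
  rw [e]
  refine ⟨w, Setup.continuousOn_of_lip (S := S) hlip, hpos, ⟨L.toNNReal, ?_⟩,
    Setup.IsSubSol_of_VSub hsub, Setup.IsSuperSol_of_VSuper hsup⟩
  refine LipschitzOnWith.of_dist_le_mul fun x hx y hy => ?_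
  rw [Real.dist_eq, dist_eq_norm, Real.coe_toNNReal _ hL.le]
  exact hlip x hx y hy
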